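/- Let Γ = SL(2, ℤ[√−2]), viewed as a group of 2×2 complex matrices via the inclusion ℤ[√−2] ⊂ ℂ. For d ∈ ℕ let E_d be the complex representation of Γ on the space of polynomials in ℂ[X, Y, Z, W] which are homogeneous of degree d in the pair (X, Y) and homogeneous of degree d in the pair (Z, W), where γ ∈ Γ acts by (γ · f)(v, w) = f(γ⁻¹ v, \overline{γ}⁻¹ w), with v = (X, Y), w = (Z, W), and \overline{γ} the entrywise complex conjugate of γ (so E_d ≅ Sym^d ⊗ \overline{Sym}^d). Then there exist real constants c > 0 and C > 0 such that for every integer d ≥ 1: c · d ≤ dim_ℂ H^1(Γ, E_d) ≤ C · d^{15/8}. -/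

import Mathlib

/-!
Throughout, `E_d` is replaced by the space of `(d + 1) × (d + 1)` complex matrices, the coefficients
of bihomogeneous forms (`matRepEquiv`), and `dim H¹` is computed as
`dim Z¹ - dim E_d + dim E_d^Γ` (`finrank_H1`). The prime `3` splits in `ℤ[√-2]`.

**Upper bound.** Let `SS` be the subgroup generated by the upper unipotents `t, u` with entries
`1, √-2` and the lower unipotents `l, x` with entries `1 + √-2, (1 + √-2) √-2`.

* Independent complex cocycles of `SS` are transferred to `ℚ₃` along the embedding with `√-2 ≡ 1`
  modulo `3` (`exists_proj`, `CocMat_transfer`). They are bounded there (`CocMat_bound`), so that they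
  have as many independent reductions modulo `3` (`exists_reduction`). In the conjugate embedding
  `1 + √-2` is divisible by `3`, hence the second factor of `E_d` acts modulo `3` by upper unipotents,
  and the space of reductions is filtered by `d + 1` spaces of cocycles of the first factor alone
  (`RedCoc_lead`, `rank_filtration`, `padic_bound`).
* Reductions of integral forms of degree `d < 3 ^ n` are functions on `(ℤ/3^n)²` (`form_cong`),
  vanishing at imprimitive vectors and invariant under scalars `1 + 3 μ`. In such a space `L` of
  functions, with `n = 2 p`, the cocycles have dimension at most `dim L + 9 · 3^p + 3` (`rank_CocL`).
  Indeed `√-2 ≡ 4` modulo `9`, so that `u` and `x` act as powers `t^(4+9k)` and `l^(4+9k)`; the values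
  of a cocycle at `u t^(-(4+9k))` and `x l^(-(4+9k))` are invariants of `t` and of `l`, which are
  counted by orbits (`finrank_UInv_upper`, `finrank_UInv_lower`). If these values and three scalars
  vanish, the cocycle is a coboundary (`coc_coboundary`).
* The last assertion is group theory. The relations between the four unipotents become the
  relations `UpRel` between `t` and `l`. These force the normal closure `R` of `t³, l³` to be powerful
  with three generators (`upB_core`, `comm_le_of_core`), so the layers of its lower exponent-`3`
  series are spanned by powers of three elements (`lowP_span`). Deep enough in the series the cocycle
  is zero (`coc_kill`), and descending along the series it vanishes at `(1,0)` on the stabiliser of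
  `(1,0)` (`stab_descent`). Since primitive vectors form one orbit (`up_transitive`), it is a
  coboundary (`up_coboundary`).
* Cocycles of the full group vanishing on `SS` form a space of dimension at most `d + 1` (`ker_res`,
  `FixGl_finrank`). Choosing `p` with `d < 3^(2p) ≤ 9 d` gives
  `dim H¹ ≤ (d + 1) (9 · 3^p + 5) ≤ 64 d^(3/2)`, which is stronger than required.

**Lower bound.** The Euclidean algorithm gives the presentation
`a² = (t a)³ = (u⁻¹ a u a)² = [t, u] = 1` of `PSL(2, ℤ[√-2])` (`lifting`).

* From the presentation, triples `(e, z, y)` with `e` fixed by `gk`, `z` by `ga`, `y` by `gv` and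
  `z = y + e - u e` give cocycles (`cocycle_exists`), and those which are coboundaries come from pairs
  of vectors fixed by two finite subgroups of order `24` and `8` (`coc_kernel`).
* In the whole of `E_d` the resulting count of classes vanishes to leading order. On eigenspaces of
  the swap of the two factors of `E_d`, twisted by `u⁻¹` where necessary (`tw`), the dimensions follow
  from the averaging formula (`fixW_trace`, `FW_finrank`), and for one of the two signs
  `12 dim H¹ ≥ d - 10` (`dim_ineq`, `H1_count`, `H1_lower`).
* For small `d`, the cocycle attached to `(0, f, f)` with `f` the `d`-th power of the determinant is
  not a coboundary, because no nonzero form is invariant under `a`, `t` and `u⁻¹ a u` (`EB_zero`). So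
  `dim H¹ ≥ 1` (`one_le_H1`), and altogether `d ≤ 22 dim H¹`.
-/

noncomputable section

open MvPolynomial

/-- The embedding `ℤ[√-2] → ℂ` sending `√-2` to `i·√2`. -/
def sqrtm2Embed : (ℤ√(-2 : ℤ)) →+* ℂ :=
  Zsqrtd.lift ⟨Complex.I * (Real.sqrt 2 : ℝ), by
    have h2 : ((Real.sqrt 2 : ℝ) : ℂ) * ((Real.sqrt 2 : ℝ) : ℂ) = 2 := by
      rw [← Complex.ofReal_mul, Real.mul_self_sqrt (by norm_num)]
      norm_num
    push_cast
    calc Complex.I * (Real.sqrt 2 : ℂ) * (Complex.I * (Real.sqrt 2 : ℂ))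
        = Complex.I * Complex.I * ((Real.sqrt 2 : ℂ) * (Real.sqrt 2 : ℂ)) := by ring
      _ = -2 := by rw [Complex.I_mul_I, h2]; ring⟩

/-- The complex-conjugate embedding `ℤ[√-2] → ℂ`. -/
def sqrtm2EmbedBar : (ℤ√(-2 : ℤ)) →+* ℂ := (starRingEnd ℂ).comp sqrtm2Embed

/-- The Bianchi group `Γ = SL(2, ℤ[√-2])`. -/
abbrev Bianchi2 : Type := Matrix.SpecialLinearGroup (Fin 2) (ℤ√(-2 : ℤ))

/-- The weight function on the four variables `X, Y, Z, W` recording the bidegree: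
`X, Y` have weight `(1,0)` and `Z, W` have weight `(0,1)`. -/
def biWeight : Fin 4 → ℕ × ℕ := ![(1, 0), (1, 0), (0, 1), (0, 1)]

/-- `E_d`: the space of polynomials in `ℂ[X, Y, Z, W]` homogeneous of degree `d` in
`(X, Y)` and of degree `d` in `(Z, W)` (so `E_d ≅ Sym^d ⊗ conj(Sym^d)`). -/
def Ed (d : ℕ) : Submodule ℂ (MvPolynomial (Fin 4) ℂ) :=
  weightedHomogeneousSubmodule ℂ biWeight (d, d)

/-- The substitution attached to `γ ∈ SL(2, ℤ[√-2])`: with `v = (X, Y)`, `w = (Z, W)`,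
it substitutes `(v, w) ↦ (γ⁻¹ v, conj(γ)⁻¹ w)`, where `γ` is viewed as a complex matrix
via `sqrtm2Embed` and `conj(γ)` is its entrywise complex conjugate. -/
def bianchiSubst (γ : Bianchi2) : Fin 4 → MvPolynomial (Fin 4) ℂ :=
  let g : Matrix (Fin 2) (Fin 2) ℂ := ((Matrix.SpecialLinearGroup.map sqrtm2Embed γ)⁻¹ :
    Matrix.SpecialLinearGroup (Fin 2) ℂ)
  let h : Matrix (Fin 2) (Fin 2) ℂ := ((Matrix.SpecialLinearGroup.map sqrtm2EmbedBar γ)⁻¹ :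
    Matrix.SpecialLinearGroup (Fin 2) ℂ)
  ![C (g 0 0) * X 0 + C (g 0 1) * X 1,
    C (g 1 0) * X 0 + C (g 1 1) * X 1,
    C (h 0 0) * X 2 + C (h 0 1) * X 3,
    C (h 1 0) * X 2 + C (h 1 1) * X 3]

lemma bianchiSubst_one : bianchiSubst 1 = X := by
  funext i
  fin_cases i <;> simp [bianchiSubst, Matrix.one_apply]

set_option maxHeartbeats 2000000 in
lemma bianchiSubst_mul (γ δ : Bianchi2) :
    (fun i => aeval (bianchiSubst γ) (bianchiSubst δ i)) = bianchiSubst (γ * δ) := by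
  have hco : ∀ (A B : Matrix.SpecialLinearGroup (Fin 2) ℂ)
      (i j : Fin 2), ((A * B : Matrix.SpecialLinearGroup (Fin 2) ℂ) : Matrix (Fin 2) (Fin 2) ℂ) i j
        = ((A : Matrix (Fin 2) (Fin 2) ℂ) * (B : Matrix (Fin 2) (Fin 2) ℂ)) i j :=
    fun _ _ _ _ => rfl
  have e2 : ∀ (w x y z : MvPolynomial (Fin 4) ℂ), (![w, x, y, z] : Fin 4 → _) 2 = y :=
    fun _ _ _ _ => rfl
  have e3 : ∀ (w x y z : MvPolynomial (Fin 4) ℂ), (![w, x, y, z] : Fin 4 → _) 3 = z :=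
    fun _ _ _ _ => rfl
  funext i
  fin_cases i
  · show aeval (bianchiSubst γ) (bianchiSubst δ 0) = bianchiSubst (γ * δ) 0
    simp only [bianchiSubst, map_mul, mul_inv_rev, hco, Matrix.mul_apply, Fin.sum_univ_two,
      Matrix.cons_val_zero, Matrix.cons_val_one, Matrix.head_cons, map_add, aeval_X, aeval_C,
      algebraMap_eq]
    ring
  · show aeval (bianchiSubst γ) (bianchiSubst δ 1) = bianchiSubst (γ * δ) 1
    simp only [bianchiSubst, map_mul, mul_inv_rev, hco, Matrix.mul_apply, Fin.sum_univ_two,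
      Matrix.cons_val_zero, Matrix.cons_val_one, Matrix.head_cons, map_add, aeval_X, aeval_C,
      algebraMap_eq]
    ring
  · show aeval (bianchiSubst γ) (bianchiSubst δ 2) = bianchiSubst (γ * δ) 2
    simp only [bianchiSubst, e2, map_mul, mul_inv_rev, hco, Matrix.mul_apply, Fin.sum_univ_two,
      Matrix.cons_val_zero, Matrix.cons_val_one, Matrix.head_cons, map_add, aeval_X, aeval_C,
      algebraMap_eq]
    simp only [e2, e3]
    ring
  · show aeval (bianchiSubst γ) (bianchiSubst δ 3) = bianchiSubst (γ * δ) 3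
    simp only [bianchiSubst, e3, map_mul, mul_inv_rev, hco, Matrix.mul_apply, Fin.sum_univ_two,
      Matrix.cons_val_zero, Matrix.cons_val_one, Matrix.head_cons, map_add, aeval_X, aeval_C,
      algebraMap_eq]
    simp only [e2, e3]
    ring

lemma pow_isWeightedHomogeneous {σ R M : Type*} [CommSemiring R] [AddCommMonoid M]
    {w : σ → M} {φ : MvPolynomial σ R} {m : M}
    (hφ : φ.IsWeightedHomogeneous w m) (n : ℕ) :
    (φ ^ n).IsWeightedHomogeneous w (n • m) := by
  induction n with
  | zero => simpa using isWeightedHomogeneous_C w (1 : R)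
  | succ n ih =>
      rw [pow_succ, succ_nsmul]
      exact ih.mul hφ

/-- Substituting weighted-homogeneous polynomials of the corresponding weights into a
weighted-homogeneous polynomial preserves the weighted degree. -/
lemma aeval_isWeightedHomogeneous {σ R M : Type*} [CommSemiring R] [AddCommMonoid M]
    (w : σ → M) (g : σ → MvPolynomial σ R)
    (hg : ∀ i, (g i).IsWeightedHomogeneous w (w i))
    {f : MvPolynomial σ R} {m : M} (hf : f.IsWeightedHomogeneous w m) :
    (aeval g f).IsWeightedHomogeneous w m := by
  rw [← mem_weightedHomogeneousSubmodule]
  nth_rewrite 1 [f.as_sum]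
  rw [map_sum]
  apply Submodule.sum_mem
  intro v hv
  rw [aeval_monomial, mem_weightedHomogeneousSubmodule]
  have h2 : IsWeightedHomogeneous w (v.prod fun i k => g i ^ k)
      (∑ i ∈ v.support, v i • w i) := by
    rw [Finsupp.prod]
    exact IsWeightedHomogeneous.prod v.support _ _ fun i _ => pow_isWeightedHomogeneous (hg i) _
  have hw : (∑ i ∈ v.support, v i • w i) = Finsupp.weight w v := by
    rw [Finsupp.weight_apply, Finsupp.sum]
  have hm : Finsupp.weight w v = m := hf (by simpa using hv)
  have := (isWeightedHomogeneous_C (R := R) w (coeff v f)).mul h2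
  rw [zero_add, hw, hm] at this
  simpa [algebraMap_eq] using this

lemma bianchiSubst_isWeightedHomogeneous (γ : Bianchi2) (i : Fin 4) :
    (bianchiSubst γ i).IsWeightedHomogeneous biWeight (biWeight i) := by
  have hx : ∀ (a b : ℂ) (j k : Fin 4), biWeight j = biWeight k →
      IsWeightedHomogeneous biWeight (C a * X j + C b * X k) (biWeight j) := by
    intro a b j k hjk
    have h1 := (isWeightedHomogeneous_C biWeight a).mul (isWeightedHomogeneous_X ℂ biWeight j)
    have h2 := (isWeightedHomogeneous_C biWeight b).mul (isWeightedHomogeneous_X ℂ biWeight k)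
    rw [zero_add] at h1 h2
    rw [← hjk] at h2
    exact h1.add h2
  fin_cases i
  · exact hx _ _ 0 1 rfl
  · exact hx _ _ 0 1 rfl
  · exact hx _ _ 2 3 rfl
  · exact hx _ _ 2 3 rfl

/-- The substitution `(v, w) ↦ (γ⁻¹ v, conj(γ)⁻¹ w)` preserves bihomogeneity of
bidegree `(d, d)`. -/
lemma bianchiSubst_mem (d : ℕ) (γ : Bianchi2) :
    ∀ f ∈ Ed d, (aeval (bianchiSubst γ)).toLinearMap f ∈ Ed d := fun f hf =>
  aeval_isWeightedHomogeneous biWeight _ (bianchiSubst_isWeightedHomogeneous γ) hf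

/-- The representation of `SL(2, ℤ[√-2])` on `E_d`, with
`(γ · f)(v, w) = f(γ⁻¹ v, conj(γ)⁻¹ w)`. -/
def EdRep (d : ℕ) : Representation ℂ Bianchi2 (Ed d) where
  toFun γ := ((aeval (bianchiSubst γ)).toLinearMap).restrict (bianchiSubst_mem d γ)
  map_one' := by
    apply LinearMap.ext
    intro x
    apply Subtype.ext
    show (aeval (bianchiSubst 1)) (x : MvPolynomial (Fin 4) ℂ) = (x : MvPolynomial (Fin 4) ℂ)
    rw [bianchiSubst_one, aeval_X_left_apply]
  map_mul' := by
    intro γ δ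
    apply LinearMap.ext
    intro x
    apply Subtype.ext
    show (aeval (bianchiSubst (γ * δ))) (x : MvPolynomial (Fin 4) ℂ) =
      (aeval (bianchiSubst γ)) ((aeval (bianchiSubst δ)) (x : MvPolynomial (Fin 4) ℂ))
    rw [comp_aeval_apply, bianchiSubst_mul]

set_option linter.all false

open scoped commutatorElement

/-! ### Relations between two unipotents modulo cubes -/

/-- Word computations in a group of class at most two, with generators `T, L, p` of order `3`, up
to central elements `A, B, C, m, n`; here `A, B, C` are the commutators of the generators, `q` is
determined by `p q T L = 1`, and `m, n` are error terms measuring by how much `q m` and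
`L T L⁻¹ n` differ from `q` and `L T L⁻¹`. -/
lemma upB_words {Q : Type*} [Group Q] (T L p A B C m n : Q)
    (hLT : L * T = T * (L * A)) (hpT : p * T = T * (p * B)) (hpL : p * L = L * (p * C))
    (hA : ∀ x ∈ ({T, L, p, B, C, m, n} : Set Q), A * x = x * A)
    (hB : ∀ x ∈ ({T, L, p, C, m, n} : Set Q), B * x = x * B)
    (hC : ∀ x ∈ ({T, L, p, m, n} : Set Q), C * x = x * C)
    (hm : ∀ x ∈ ({T, L, p, n} : Set Q), m * x = x * m)
    (hn : ∀ x ∈ ({T, L, p} : Set Q), n * x = x * n)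
    (t3 : T ^ 3 = 1) (l3 : L ^ 3 = 1) (p3 : p ^ 3 = 1) (a3 : A ^ 3 = 1) (b3 : B ^ 3 = 1)
    (c3 : C ^ 3 = 1) (m3 : m ^ 3 = 1) (n3 : n ^ 3 = 1) (q : Q) (hq : p * q * T * L = 1) :
    q⁻¹ * T⁻¹ * q * T = B⁻¹ * A⁻¹ ∧ q⁻¹ * p⁻¹ * q * p = B * C ∧
    L⁻¹ * (q * m)⁻¹ * L * (q * m) = C * A⁻¹ ∧
    (L * T * L⁻¹ * n)⁻¹ * (q * m)⁻¹ * (L * T * L⁻¹ * n) * (q * m) = A * B ∧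
    (L * T * L⁻¹ * n)⁻¹ * L⁻¹ * (L * T * L⁻¹ * n) * L = A⁻¹ ∧
    ((q * m * (p * n) * L * T = 1) → m * n * A * B * C = 1) ∧
    (q * m) * (q * m) * L * ((q * m) * (q * m))⁻¹ = p * T * L * T⁻¹ * p⁻¹ ∧
    (q * m) * (L * T * L⁻¹) * (q * m)⁻¹ = p * p * T * (p * p)⁻¹ := by
  have inv : ∀ x : Q, x ^ 3 = 1 → x⁻¹ = x * x := fun x hx => by
    rw [inv_eq_iff_mul_eq_one, ← hx]; simp [pow_succ, mul_assoc]
  have cu : ∀ x : Q, x ^ 3 = 1 → ∀ y, x * (x * (x * y)) = y := fun x hx y => by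
    calc x * (x * (x * y)) = x ^ 3 * y := by simp [pow_succ, mul_assoc]
      _ = y := by rw [hx, one_mul]
  have as : ∀ a b : Q, a * b = b * a → ∀ y, a * (b * y) = b * (a * y) := fun a b h y => by
    rw [← mul_assoc, h, mul_assoc]
  simp only [Set.mem_insert_iff, Set.mem_singleton_iff, forall_eq_or_imp, forall_eq] at *
  obtain ⟨hA1, hA2, hA3, hA4, hA5, hA6, hA7⟩ := hA
  obtain ⟨hB1, hB2, hB3, hB4, hB5, hB6⟩ := hB
  obtain ⟨hC1, hC2, hC3, hC4, hC5⟩ := hC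
  obtain ⟨hm1, hm2, hm3, hm4⟩ := hm
  obtain ⟨hn1, hn2, hn3⟩ := hn
  have LT : ∀ y, L * (T * y) = T * (L * (A * y)) := fun y => by
    rw [← mul_assoc, hLT]; simp only [mul_assoc]
  have pT : ∀ y, p * (T * y) = T * (p * (B * y)) := fun y => by
    rw [← mul_assoc, hpT]; simp only [mul_assoc]
  have pL : ∀ y, p * (L * y) = L * (p * (C * y)) := fun y => by
    rw [← mul_assoc, hpL]; simp only [mul_assoc]
  have hq' : q = p⁻¹ * L⁻¹ * T⁻¹ := by
    rw [← mul_right_inj p, ← mul_left_inj T, ← mul_left_inj L, hq]; simp [mul_assoc]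
  have go : ∀ x y : Q, (∀ z, x * z = y * z) → x = y := fun x y h => by simpa using h 1
  have mT := as _ _ hA1; have mL := as _ _ hA2; have mp := as _ _ hA3
  subst hq'
  refine ⟨?_, ?_, ?_, ?_, ?_, ?_, ?_, ?_⟩
  case refine_6 =>
    intro h
    rw [← h]
    symm
    apply go; intro z
    simp only [mul_inv_rev, inv_inv, inv T t3, inv L l3, inv p p3, inv A a3, inv B b3, inv C c3, inv m m3,
      inv n n3, mul_assoc, LT, pT, pL, mT, mL, mp, as _ _ hA4, as _ _ hA5, as _ _ hA6, as _ _ hA7,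
      as _ _ hB1, as _ _ hB2, as _ _ hB3, as _ _ hB4, as _ _ hB5, as _ _ hB6, as _ _ hC1,
      as _ _ hC2, as _ _ hC3, as _ _ hC4, as _ _ hC5, as _ _ hm1, as _ _ hm2, as _ _ hm3,
      as _ _ hm4, as _ _ hn1, as _ _ hn2, as _ _ hn3, cu T t3, cu L l3, cu p p3, cu A a3, cu B b3,
      cu C c3, cu m m3, cu n n3]
  all_goals
    apply go; intro z
    simp only [mul_inv_rev, inv_inv, inv T t3, inv L l3, inv p p3, inv A a3, inv B b3, inv C c3, inv m m3,
      inv n n3, mul_assoc, LT, pT, pL, mT, mL, mp, as _ _ hA4, as _ _ hA5, as _ _ hA6, as _ _ hA7,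
      as _ _ hB1, as _ _ hB2, as _ _ hB3, as _ _ hB4, as _ _ hB5, as _ _ hB6, as _ _ hC1,
      as _ _ hC2, as _ _ hC3, as _ _ hC4, as _ _ hC5, as _ _ hm1, as _ _ hm2, as _ _ hm3,
      as _ _ hm4, as _ _ hn1, as _ _ hn2, as _ _ hn3, cu T t3, cu L l3, cu p p3, cu A a3, cu B b3,
      cu C c3, cu m m3, cu n n3]

/-- The relations of `UpRel` linearised over `𝔽₃`: `x`, `y` stand for `t³`, `l³` in an elementary
abelian group on which conjugation by `t` and `l` is given by operators of order `3` satisfying the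
braid relation. The conclusion determines the operators on the span of the orbit of `x`. -/
lemma upA_module {M : Type*} [AddCommGroup M] (t l : M →+ M) (h3 : ∀ x : M, 3 • x = 0)
    (ht : ∀ x, t (t (t x)) = x) (hl : ∀ x, l (l (l x)) = x)
    (hb : ∀ x, l (t (l x)) = t (l (t x))) (x y : M) (hx : t x = x) 
    (e1 : l x + l (l x) + y + x = 0) (e2 : t y + t (t y) + x + y = 0) :
    t (l x) = y ∧ t y = l (l x) ∧ t (l (l x)) = l x ∧ l (t (t (l x))) = x := by
  have tinj : Function.Injective t := fun a b h => by rw [← ht a, ← ht b, h]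
  have linj : Function.Injective l := fun a b h => by rw [← hl a, ← hl b, h]
  let z : M →+ M := (t.comp (l.comp t)).comp (t.comp (l.comp t))
  have zt : ∀ v, z v = t (l (t (t (l (t v))))) := fun v => rfl
  have Dt : ∀ v, t (l (t (t v))) = l (t (l (t v))) := fun v => (hb _).symm
  have Dl : ∀ v, t (l (t (l v))) = t (t (l (t v))) := fun v => by rw [hb]
  have zlc : ∀ v, z (l v) = l (z v) := fun v => by rw [zt, zt, Dl, Dt]
  have ztc : ∀ v, z (t v) = t (z v) := fun v =>
    calc z (t v) = t (l (t (t (l (t (t v)))))) := rfl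
      _ = t (l (t (l (t (l (t v)))))) := by rw [Dt v]
      _ = t (t (l (t (t (l (t v)))))) := Dl _
  have z1 : ∀ v, z v = l (t (t (l (t (t v))))) := fun v => tinj (by rw [← ztc, zt])
  have zl : ∀ v, z v = l (t (l (l (t (l v))))) := fun v =>
    calc z v = t (l (t (t (l (t v))))) := rfl
      _ = l (t (l (t (l (t v))))) := (hb _).symm
      _ = _ := by rw [← hb v]
  have z2 : ∀ v, z v = t (l (l (t (l (l v))))) := fun v => linj (by rw [← zlc, zl])
  have zz : ∀ v, z (z v) = v := fun v => by rw [z2 v, z1, ht, hl, ht, hl]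
  have k1 : ∀ v, z (l v) = t (l (l (t v))) := fun v => by rw [z2, hl]
  have kx : t (l (l x)) = z (l x) := by rw [k1, hx]
  have kx2 : t (t (l x)) = z (l (l x)) := by
    apply tinj; rw [ht, ← ztc, kx, zz]
  have kx3 : t (t (l (l x))) = z (t (l x)) := by rw [kx, ztc]
  have hy' : y = -(x + l x + l (l x)) := by
    rw [eq_neg_iff_add_eq_zero, ← e1]; abel
  have hA : x = (l x + l (l x) + t (l x)) + z (l x + l (l x) + t (l x)) := by
    have : x = -(y + t y + t (t y)) := by rw [eq_neg_iff_add_eq_zero, ← e2]; abel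
    nth_rewrite 1 [this]
    simp only [hy', map_neg, map_add, kx, kx2, hx, ← ztc]
    rw [← sub_eq_zero, ← h3 x]
    abel
  have zx : z x = x := by
    nth_rewrite 1 [hA]; rw [map_add, zz, add_comm]; exact hA.symm
  have zlx : z (l x) = l x := by rw [zlc, zx]
  have zllx : z (l (l x)) = l (l x) := by rw [zlc, zlx]
  have ztlx : z (t (l x)) = t (l x) := by rw [ztc, zlx]
  rw [zlx] at kx; rw [zllx] at kx2
  have r1 : t (l x) = y := by
    rw [map_add, map_add, zlx, zllx, ztlx] at hA
    rw [hy', eq_neg_iff_add_eq_zero]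
    have := h3 (l x + l (l x) + t (l x))
    have h' : l x + l (l x) + t (l x) + x = 3 • (l x + l (l x) + t (l x)) := by
      nth_rewrite 4 [hA]; abel
    rw [← this, ← h']; abel
  refine ⟨r1, by rw [← r1, kx2], kx, by rw [kx2, hl]⟩

/-- Linear algebra for the three basic commutators `az, ap, zp` of an extension of class two: the
action of `t` and `l` on them and the relation among the error terms `μ, ν` force `az = 0`. -/
lemma upB_module {M : Type*} [AddCommGroup M] (t l : M →+ M) (h3 : ∀ x : M, 3 • x = 0)
    (hz : ∀ x, t (l (l x)) = l (t (t x)))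
    (ht : ∀ x, t (t (t x)) = x) (hl : ∀ x, l (l (l x)) = x)
    (az ap zp μ ν : M)
    (laz : l az = -az + zp) (lap : l ap = az + ap) (lzp : l zp = -az)
    (taz : t az = ap) (tap : t ap = - az - ap) (tzp : t zp = ap + zp)
    (f1 : l (t μ) = t μ) (f2 : t (l ν) = l ν) (e3 : μ + ν = az + ap + zp) : az = 0 := by
  have h3' : ∀ x : M, x + x + x = 0 := fun x => by rw [← h3 x]; abel
  have e4 : t μ + l (l ν) = 0 + (-az+ap+zp) := by
    have e5 : t (l (l (l ν))) = l (l ν) := by rw [hz, f2, f2]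
    rw [hl] at e5
    rw [← e5, ← map_add, e3, map_add, map_add, taz, tap, tzp]
    abel
  have e6 : l (l (l ν)) = l (l ν) + (l (-az+ap+zp) - (-az+ap+zp)) := by
    have := congrArg l e4
    rw [map_add, f1, zero_add] at this
    rw [zero_add] at e4
    rw [← this, ← e4]; abel
  rw [hl] at e6
  have e6' : ν = l (l ν) - az + zp := by
    nth_rewrite 1 [e6]
    simp only [map_add, map_neg, laz, lap, lzp]
    rw [← sub_eq_zero, ← h3 (az - zp)]; abel
  have e7 : l ν = ν - zp := by
    nth_rewrite 1 [e6']
    simp only [map_add, map_sub, hl, laz, lzp]; abel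
  have e8 := hz (l ν)
  rw [hl, f2, f2] at e8
  have e9 : l (l ν) = l ν + az := by
    calc l (l ν) = (l (l ν) - az + zp) + az - zp := by abel
      _ = ν + az - zp := by rw [← e6']
      _ = l ν + az := by rw [e7]; abel
  have e10 : ν = l ν + zp := by rw [e7]; abel
  rw [e10, map_add, f2, tzp, ← e10, e9] at e8
  have e11 : ap + zp = az := by simpa using e8
  have e12 : - az - ap + (ap + zp) = ap := by rw [← tap, ← tzp, ← map_add, e11, taz]
  rw [e11] at e12
  have e13 : -az - ap + az = -ap := by abel
  rw [e13] at e12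
  have e14 := neg_eq_iff_add_eq_zero.mp e12
  have e15 := h3' ap
  rw [e14, zero_add] at e15
  rw [← ht az, taz, e15, map_zero, map_zero]

/-- Conjugation by `g` on the normal subgroup `R`, written additively. -/
def conjAdd {Q : Type*} [Group Q] (R : Subgroup Q) [R.Normal] (g : Q) :
    Additive R →+ Additive R := MonoidHom.toAdditive (MulAut.conjNormal g : MulAut R).toMonoidHom

lemma conjAdd_apply {Q : Type*} [Group Q] (R : Subgroup Q) [R.Normal] (g : Q) (x : Additive R) :
    ((Additive.toMul (conjAdd R g x) : R) : Q) = g * (Additive.toMul x : R) * g⁻¹ := by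
  exact MulAut.conjNormal_apply g (Additive.toMul x)

/-- If `R` contains `t³`, `l³` and is elementary abelian, the relations of `UpRel` determine the
conjugation action of `t` and `l` on `t³`, `l³` and `l t³ l⁻¹` -/
lemma upA_core {Q : Type*} [Group Q] (R : Subgroup Q) [R.Normal] (t l : Q) (hT : t ^ 3 ∈ R)
    (hL : l ^ 3 ∈ R) (hcomm : ∀ x ∈ R, ∀ y ∈ R, x * y = y * x) (hexp : ∀ x ∈ R, x ^ 3 = 1)
    (r0 : l * t ^ 4 * l = t * l ^ 4 * t) (r1 : (l * t ^ 3) ^ 3 = 1) (r2 : (t * l ^ 3) ^ 3 = 1) :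
    t * (l * t ^ 3 * l⁻¹) * t⁻¹ = l ^ 3 ∧ t * l ^ 3 * t⁻¹ = l * (l * t ^ 3 * l⁻¹) * l⁻¹ ∧
    t * (l * (l * t ^ 3 * l⁻¹) * l⁻¹) * t⁻¹ = l * t ^ 3 * l⁻¹ ∧
    l * (t * (t * (l * t ^ 3 * l⁻¹) * t⁻¹) * t⁻¹) * l⁻¹ = t ^ 3 := by
  let _ : AddCommGroup (Additive R) :=
    { (inferInstance : AddGroup (Additive R)) with
      add_comm := fun a b => by
        apply Additive.toMul.injective
        exact Subtype.ext (hcomm _ (Additive.toMul a).2 _ (Additive.toMul b).2) }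
  have ext : ∀ a b : Additive R, ((Additive.toMul a : R) : Q) = (Additive.toMul b : R) → a = b :=
    fun a b h => Additive.toMul.injective (Subtype.ext h)
  have key := upA_module (M := Additive R) (conjAdd R t) (conjAdd R l)
    (fun x => ext _ _ (by simpa using hexp _ (Additive.toMul x).2))
    (fun x => ext _ _ (by
      simp only [conjAdd_apply]
      have := hcomm _ hT _ (Additive.toMul x).2
      calc _ = t ^ 3 * (Additive.toMul x : R) * (t ^ 3)⁻¹ := by simp [pow_succ, mul_assoc]
        _ = _ := by rw [this]; simp [pow_succ, mul_assoc]))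
    (fun x => ext _ _ (by
      simp only [conjAdd_apply]
      have := hcomm _ hL _ (Additive.toMul x).2
      calc _ = l ^ 3 * (Additive.toMul x : R) * (l ^ 3)⁻¹ := by simp [pow_succ, mul_assoc]
        _ = _ := by rw [this]; simp [pow_succ, mul_assoc]))
    (fun x => ext _ _ (by
      simp only [conjAdd_apply]
      have h1 := hcomm _ hT _ (conjAdd R l x).toMul.2
      have h2 := hcomm _ hL _ (conjAdd R t x).toMul.2
      simp only [conjAdd_apply] at h1 h2
      calc _ = (l * t) * ((l * (Additive.toMul x : R) * l⁻¹) * t ^ 3 * (t ^ 3)⁻¹) * (l * t)⁻¹ := by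
            simp [pow_succ, mul_assoc]
        _ = (l * t ^ 4 * l) * (Additive.toMul x : R) * (l * t ^ 4 * l)⁻¹ := by rw [← h1]; simp [pow_succ, mul_assoc]
        _ = (t * l) * (l ^ 3 * (t * (Additive.toMul x : R) * t⁻¹) * (l ^ 3)⁻¹) * (t * l)⁻¹ := by
            rw [r0]; simp [pow_succ, mul_assoc]
        _ = _ := by rw [h2]; simp [pow_succ, mul_assoc]))
    (Additive.ofMul ⟨t ^ 3, hT⟩) (Additive.ofMul ⟨l ^ 3, hL⟩)
    (ext _ _ (by simp only [conjAdd_apply, toMul_ofMul]; simp [pow_succ, mul_assoc]))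
    (ext _ _ (by
      simp only [conjAdd_apply, toMul_ofMul, toMul_add, Subgroup.coe_mul, toMul_zero,
        Subgroup.coe_one]
      rw [← r1]; simp [pow_succ, mul_assoc]))
    (ext _ _ (by
      simp only [conjAdd_apply, toMul_ofMul, toMul_add, Subgroup.coe_mul, toMul_zero,
        Subgroup.coe_one]
      rw [← r2]; simp [pow_succ, mul_assoc]))
  obtain ⟨k1, k2, k3, k4⟩ := key
  have f : ∀ {a b : Additive R}, a = b → ((Additive.toMul a : R) : Q) = (Additive.toMul b : R) :=
    fun h => by rw [h]
  have k1 := f k1; have k2 := f k2; have k3 := f k3; have k4 := f k4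
  simp only [conjAdd_apply, toMul_ofMul] at k1 k2 k3 k4
  exact ⟨k1, k2, k3, k4⟩

/-- The relations satisfied by `t`, `l` when `u = t^(4+9k)` and `x = l^(4+9k)` are substituted in the
relations `l u l = t x t`, `(l u t⁻¹)³ = 1`, `(t x l⁻¹)³ = 1` of the four unipotents. -/
structure UpRel {Q : Type*} [Group Q] (t l : Q) (k : ℕ) : Prop where
  r0 : l * t ^ (4 + 9 * k) * l = t * l ^ (4 + 9 * k) * t
  r1 : (l * t ^ (3 + 9 * k)) ^ 3 = 1
  r2 : (t * l ^ (3 + 9 * k)) ^ 3 = 1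

lemma UpRel.map {Q Q' : Type*} [Group Q] [Group Q'] {t l : Q} {k : ℕ} (h : UpRel t l k)
    (f : Q →* Q') : UpRel (f t) (f l) k := by
  obtain ⟨h0, h1, h2⟩ := h
  constructor
  · simpa using congrArg f h0
  · simpa using congrArg f h1
  · simpa using congrArg f h2

lemma UpRel.core {Q : Type*} [Group Q] (R : Subgroup Q) [R.Normal] {t l : Q} {k : ℕ}
    (h : UpRel t l k) (hT : t ^ 3 ∈ R)
    (hL : l ^ 3 ∈ R) (hcomm : ∀ x ∈ R, ∀ y ∈ R, x * y = y * x) (hexp : ∀ x ∈ R, x ^ 3 = 1) :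
    t * (l * t ^ 3 * l⁻¹) * t⁻¹ = l ^ 3 ∧ t * l ^ 3 * t⁻¹ = l * (l * t ^ 3 * l⁻¹) * l⁻¹ ∧
    t * (l * (l * t ^ 3 * l⁻¹) * l⁻¹) * t⁻¹ = l * t ^ 3 * l⁻¹ ∧
    l * (t * (t * (l * t ^ 3 * l⁻¹) * t⁻¹) * t⁻¹) * l⁻¹ = t ^ 3 := by
  obtain ⟨h0, h1, h2⟩ := h
  have ht9 : t ^ (9 * k) = 1 := by
    rw [show 9 * k = 3 * 3 * k by ring, pow_mul, pow_mul, hexp _ hT, one_pow]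
  have hl9 : l ^ (9 * k) = 1 := by
    rw [show 9 * k = 3 * 3 * k by ring, pow_mul, pow_mul, hexp _ hL, one_pow]
  rw [pow_add, pow_add, ht9, hl9, mul_one, mul_one] at h0
  rw [pow_add, ht9, mul_one] at h1
  rw [pow_add, hl9, mul_one] at h2
  exact upA_core R t l hT hL hcomm hexp h0 h1 h2

/-- The normal closure of `t³` and `l³`. -/
def upR {Q : Type*} [Group Q] (t l : Q) : Subgroup Q := Subgroup.normalClosure {t ^ 3, l ^ 3}

instance {Q : Type*} [Group Q] (t l : Q) : (upR t l).Normal := Subgroup.normalClosure_normal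

lemma tmem_upR {Q : Type*} [Group Q] (t l : Q) : t ^ 3 ∈ upR t l :=
  Subgroup.subset_normalClosure (by simp)

lemma lmem_upR {Q : Type*} [Group Q] (t l : Q) : l ^ 3 ∈ upR t l :=
  Subgroup.subset_normalClosure (by simp)

/-- If `upR t l` is elementary abelian, it is spanned by `t³`, `l³` and `l t³ l⁻¹`. -/
lemma upA_gen_core {Q : Type*} [Group Q] {t l : Q} {k : ℕ} (h : UpRel t l k)
    (hgen : Subgroup.closure {t, l} = ⊤)
    (hcomm : ∀ x ∈ upR t l, ∀ y ∈ upR t l, x * y = y * x) (hexp : ∀ x ∈ upR t l, x ^ 3 = 1) :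
    ∀ r ∈ upR t l, ∃ a b c : ℕ, r = (t ^ 3) ^ a * (l ^ 3) ^ b * (l * t ^ 3 * l⁻¹) ^ c := by
  have hT := tmem_upR t l
  have hL := lmem_upR t l
  have hT1 : l * t ^ 3 * l⁻¹ ∈ upR t l := (inferInstance : (upR t l).Normal).conj_mem _ hT l
  obtain ⟨k1, k2, k3, k4⟩ := h.core (upR t l) hT hL hcomm hexp
  set T := t ^ 3 with hTd
  set L := l ^ 3 with hLd
  set T1 := l * T * l⁻¹ with hT1d
  clear_value T1 T L
  let H : Subgroup Q :=
    { carrier := {r | ∃ a b c : ℕ, r = T ^ a * L ^ b * T1 ^ c}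
      one_mem' := ⟨0, 0, 0, by simp⟩
      mul_mem' := by
        rintro _ _ ⟨a, b, c, rfl⟩ ⟨a', b', c', rfl⟩
        refine ⟨a + a', b + b', c + c', ?_⟩
        have c1 : Commute L T := hcomm _ hL _ hT
        have c2 : Commute T1 T := hcomm _ hT1 _ hT
        have c3 : Commute T1 L := hcomm _ hT1 _ hL
        have e1 := (c2.pow_pow c a').eq
        have e2 := (c3.pow_pow c b').eq
        have e3 := (c1.pow_pow b a').eq
        calc T ^ a * L ^ b * T1 ^ c * (T ^ a' * L ^ b' * T1 ^ c')
            = T ^ a * L ^ b * (T1 ^ c * T ^ a') * L ^ b' * T1 ^ c' := by simp only [mul_assoc]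
          _ = T ^ a * (L ^ b * T ^ a') * (T1 ^ c * L ^ b') * T1 ^ c' := by
              rw [e1]; simp only [mul_assoc]
          _ = _ := by rw [e2, e3]; simp only [pow_add, mul_assoc]
      inv_mem' := by
        rintro x ⟨a, b, c, hx⟩
        have hxR : x ∈ upR t l := by
          rw [hx]; exact mul_mem (mul_mem (pow_mem hT _) (pow_mem hL _)) (pow_mem hT1 _)
        have hinv : x⁻¹ = x ^ 2 := by
          rw [inv_eq_iff_mul_eq_one, ← pow_succ']; exact hexp _ hxR
        have c1 : Commute L T := hcomm _ hL _ hT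
        have c2 : Commute T1 T := hcomm _ hT1 _ hT
        have c3 : Commute T1 L := hcomm _ hT1 _ hL
        refine ⟨2 * a, 2 * b, 2 * c, ?_⟩
        rw [hinv, hx, Commute.mul_pow, Commute.mul_pow, ← pow_mul, ← pow_mul, ← pow_mul,
          mul_comm a, mul_comm b, mul_comm c]
        · exact (c1.pow_pow _ _).symm
        · exact Commute.mul_left (c2.pow_pow _ _).symm (c3.pow_pow _ _).symm }
  have mT : T ∈ H := ⟨1, 0, 0, by simp⟩
  have mL : L ∈ H := ⟨0, 1, 0, by simp⟩
  have mT1 : T1 ∈ H := ⟨0, 0, 1, by simp⟩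
  have hHR : ∀ x ∈ H, x ∈ upR t l := by
    rintro x ⟨a, b, c, hx⟩
    rw [hx]; exact mul_mem (mul_mem (pow_mem hT _) (pow_mem hL _)) (pow_mem hT1 _)
  have e1 : T1 * (l * T1 * l⁻¹) * L * T = 1 := by
    have h1 := h.r1
    rw [pow_add, show t ^ (9 * k) = 1 by
      rw [show 9 * k = 3 * 3 * k by ring, pow_mul, pow_mul, ← hTd, hexp _ hT, one_pow], mul_one] at h1
    rw [← h1, hT1d, hTd, hLd]; simp [pow_succ, mul_assoc]
  have mT2 : l * T1 * l⁻¹ ∈ H := by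
    have : l * T1 * l⁻¹ = T1⁻¹ * T⁻¹ * L⁻¹ := by
      rw [← mul_left_inj L, ← mul_left_inj T, ← mul_right_inj T1]
      rw [← mul_assoc, ← mul_assoc, e1]; simp
    rw [this]
    exact mul_mem (mul_mem (inv_mem mT1) (inv_mem mT)) (inv_mem mL)
  have ct : ∀ x ∈ H, t * x * t⁻¹ ∈ H := by
    rintro x ⟨a, b, c, rfl⟩
    rw [← conj_mul, ← conj_mul, ← conj_pow, ← conj_pow, ← conj_pow, k1, k2]
    refine mul_mem (mul_mem (pow_mem ?_ _) (pow_mem mT2 _)) (pow_mem mL _)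
    rw [show t * T * t⁻¹ = T by rw [hTd]; simp [pow_succ, mul_assoc]]; exact mT
  have cl : ∀ x ∈ H, l * x * l⁻¹ ∈ H := by
    rintro x ⟨a, b, c, rfl⟩
    rw [← conj_mul, ← conj_mul, ← conj_pow, ← conj_pow, ← conj_pow, ← hT1d]
    refine mul_mem (mul_mem (pow_mem mT1 _) (pow_mem ?_ _)) (pow_mem mT2 _)
    rw [show l * L * l⁻¹ = L by rw [hLd]; simp [pow_succ, mul_assoc]]; exact mL
  have ct' : ∀ x ∈ H, t⁻¹ * x * t ∈ H := by
    intro x hx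
    have e := hcomm _ hT _ (hHR x hx)
    have : t⁻¹ * x * t = t * (t * x * t⁻¹) * t⁻¹ := by
      calc t⁻¹ * x * t = t⁻¹ * (x * T) * T⁻¹ * t := by simp [mul_assoc]
        _ = _ := by rw [← e, hTd]; simp [pow_succ, mul_assoc]
    rw [this]; exact ct _ (ct _ hx)
  have cl' : ∀ x ∈ H, l⁻¹ * x * l ∈ H := by
    intro x hx
    have e := hcomm _ hL _ (hHR x hx)
    have : l⁻¹ * x * l = l * (l * x * l⁻¹) * l⁻¹ := by
      calc l⁻¹ * x * l = l⁻¹ * (x * L) * L⁻¹ * l := by simp [mul_assoc]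
        _ = _ := by rw [← e, hLd]; simp [pow_succ, mul_assoc]
    rw [this]; exact cl _ (cl _ hx)
  have hN : H.Normal := by
    constructor
    intro x hx g
    have hg : g ∈ Subgroup.closure {t, l} := by rw [hgen]; trivial
    revert x
    induction hg using Subgroup.closure_induction_left with
    | one => intro x hx; simpa using hx
    | mul_left y hy g _ ih =>
      intro x hx
      have := ih x hx
      rw [show y * g * x * (y * g)⁻¹ = y * (g * x * g⁻¹) * y⁻¹ by simp [mul_assoc]]
      rcases hy with rfl | rfl
      · exact ct _ this
      · exact cl _ this
    | inv_mul_cancel y hy g _ ih =>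
      intro x hx
      have := ih x hx
      rw [show y⁻¹ * g * x * (y⁻¹ * g)⁻¹ = y⁻¹ * (g * x * g⁻¹) * y by simp [mul_assoc]]
      rcases hy with rfl | rfl
      · exact ct' _ this
      · exact cl' _ this
  have : upR t l ≤ H := Subgroup.normalClosure_le_normal (by
    rintro x (rfl | rfl)
    · rw [← hTd]; exact mT
    · rw [← hLd]; exact mL)
  intro r hr
  exact this hr

lemma map_upR {Q Q' : Type*} [Group Q] [Group Q'] (f : Q →* Q') (hf : Function.Surjective f)
    (t l : Q) : (upR t l).map f = upR (f t) (f l) := by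
  rw [upR, Subgroup.map_normalClosure _ _ hf, upR, Set.image_pair, map_pow, map_pow]

lemma map_gen {Q Q' : Type*} [Group Q] [Group Q'] (f : Q →* Q') (hf : Function.Surjective f)
    {t l : Q} (h : Subgroup.closure {t, l} = ⊤) : Subgroup.closure {f t, f l} = ⊤ := by
  rw [← Set.image_pair, ← MonoidHom.map_closure, h, ← MonoidHom.range_eq_map,
    MonoidHom.range_eq_top.2 hf]

/-- The conclusions of `upA_core` and `upA_gen_core` modulo a normal subgroup `K` containing the
commutators and the cubes of `upR t l`. -/
lemma upA_mod {Q : Type*} [Group Q] {t l : Q} {k : ℕ} (h : UpRel t l k)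
    (hgen : Subgroup.closure {t, l} = ⊤) (K : Subgroup Q) [K.Normal]
    (hcomm : ∀ x ∈ upR t l, ∀ y ∈ upR t l, ⁅x, y⁆ ∈ K) (hexp : ∀ x ∈ upR t l, x ^ 3 ∈ K) :
    (let π := QuotientGroup.mk' K
     (π t * (π l * π t ^ 3 * (π l)⁻¹) * (π t)⁻¹ = π l ^ 3 ∧
      π t * π l ^ 3 * (π t)⁻¹ = π l * (π l * π t ^ 3 * (π l)⁻¹) * (π l)⁻¹ ∧
      π t * (π l * (π l * π t ^ 3 * (π l)⁻¹) * (π l)⁻¹) * (π t)⁻¹ = π l * π t ^ 3 * (π l)⁻¹ ∧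
      π l * (π t * (π t * (π l * π t ^ 3 * (π l)⁻¹) * (π t)⁻¹) * (π t)⁻¹) * (π l)⁻¹ = π t ^ 3) ∧
      (∀ x ∈ upR t l, ∀ y ∈ upR t l, π x * π y = π y * π x)) ∧
    ∀ r ∈ upR t l, ∃ a b c : ℕ, ∃ z ∈ K,
      r = (t ^ 3) ^ a * (l ^ 3) ^ b * (l * t ^ 3 * l⁻¹) ^ c * z := by
  have hs := QuotientGroup.mk'_surjective K
  have ker : ∀ x, x ∈ K → QuotientGroup.mk' K x = 1 := fun x hx =>
    (QuotientGroup.eq_one_iff x).2 hx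
  have hc : ∀ x ∈ upR t l, ∀ y ∈ upR t l, QuotientGroup.mk' K x * QuotientGroup.mk' K y =
      QuotientGroup.mk' K y * QuotientGroup.mk' K x := fun x hx y hy => by
    have := ker _ (hcomm x hx y hy)
    rwa [map_commutatorElement, commutatorElement_eq_one_iff_mul_comm] at this
  have hc' : ∀ x ∈ upR (QuotientGroup.mk' K t) (QuotientGroup.mk' K l), ∀ y ∈
      upR (QuotientGroup.mk' K t) (QuotientGroup.mk' K l), x * y = y * x := by
    rw [← map_upR _ hs]
    rintro _ ⟨x, hx, rfl⟩ _ ⟨y, hy, rfl⟩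
    exact hc x hx y hy
  have he' : ∀ x ∈ upR (QuotientGroup.mk' K t) (QuotientGroup.mk' K l), x ^ 3 = 1 := by
    rw [← map_upR _ hs]
    rintro _ ⟨x, hx, rfl⟩
    rw [← map_pow]; exact ker _ (hexp x hx)
  have h' := h.map (QuotientGroup.mk' K)
  refine ⟨⟨h'.core _ (tmem_upR _ _) (lmem_upR _ _) hc' he', hc⟩, ?_⟩
  intro r hr
  obtain ⟨a, b, c, e⟩ := upA_gen_core h' (map_gen _ hs hgen) hc' he' (QuotientGroup.mk' K r) (by
    rw [← map_upR _ hs]; exact ⟨r, hr, rfl⟩)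
  refine ⟨a, b, c, ((t ^ 3) ^ a * (l ^ 3) ^ b * (l * t ^ 3 * l⁻¹) ^ c)⁻¹ * r, ?_,
    (mul_inv_cancel_left _ _).symm⟩
  rw [← QuotientGroup.eq]
  change QuotientGroup.mk' K _ = QuotientGroup.mk' K r
  rw [e]; simp only [map_mul, map_pow, map_inv]

set_option maxHeartbeats 1000000 in
/-- If `upR t l` has exponent `3` and nilpotency class at most two, it is commutative. Its commutator
subgroup is spanned by the commutators of three generators, which vanish by `upB_module`. -/
lemma upB_core {Q : Type*} [Group Q] {t l : Q} {k : ℕ} (h : UpRel t l k)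
    (hgen : Subgroup.closure {t, l} = ⊤) (hexp : ∀ x ∈ upR t l, x ^ 3 = 1)
    (hcl : ∀ x ∈ upR t l, ∀ y ∈ upR t l, ∀ z ∈ upR t l, ⁅x, y⁆ * z = z * ⁅x, y⁆) :
    ∀ x ∈ upR t l, ∀ y ∈ upR t l, x * y = y * x := by
  set R := upR t l with hR
  have RN : R.Normal := inferInstance
  let Z : Subgroup Q := ⁅R, R⁆
  have ZN : Z.Normal := inferInstance
  have ZR : Z ≤ R := Subgroup.commutator_le_left R R
  have ZC : ∀ z ∈ Z, ∀ x ∈ R, z * x = x * z := by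
    intro z hz x hx
    have : Z ≤ Subgroup.centralizer {x} := by
      rw [Subgroup.commutator_le]
      intro a ha b hb
      rw [Subgroup.mem_centralizer_singleton_iff]
      exact (hcl a ha b hb x hx)
    exact (Subgroup.mem_centralizer_singleton_iff.1 (this hz))
  have hcK : ∀ x ∈ R, ∀ y ∈ R, ⁅x, y⁆ ∈ Z := fun x hx y hy =>
    Subgroup.commutator_mem_commutator hx hy
  obtain ⟨⟨⟨k1, k2, k3, k4⟩, kc⟩, kg⟩ := upA_mod h hgen Z hcK
    (fun x hx => by rw [hexp x hx]; exact Z.one_mem)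
  have hT : t ^ 3 ∈ R := tmem_upR t l
  have hL : l ^ 3 ∈ R := lmem_upR t l
  have cR : ∀ g x, x ∈ R → g * x * g⁻¹ ∈ R := fun g x hx => RN.conj_mem x hx g
  have cZ : ∀ g x, x ∈ Z → g * x * g⁻¹ ∈ Z := fun g x hx => ZN.conj_mem x hx g
  have eqZ : ∀ x y, QuotientGroup.mk' Z x = QuotientGroup.mk' Z y → x⁻¹ * y ∈ Z := fun x y e =>
    QuotientGroup.eq.1 e
  -- elements
  obtain ⟨T, eT⟩ : ∃ T, T = t ^ 3 := ⟨_, rfl⟩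
  obtain ⟨L, eL⟩ : ∃ L, L = l ^ 3 := ⟨_, rfl⟩
  obtain ⟨T1, eT1⟩ : ∃ T1, T1 = l * T * l⁻¹ := ⟨_, rfl⟩
  obtain ⟨T2, eT2⟩ : ∃ T2, T2 = l * T1 * l⁻¹ := ⟨_, rfl⟩
  obtain ⟨p, ep⟩ : ∃ p, p = t * L * t⁻¹ := ⟨_, rfl⟩
  obtain ⟨q, eq⟩ : ∃ q, q = t * p * t⁻¹ := ⟨_, rfl⟩
  rw [← eT, ← eL, ← eT1] at kg
  rw [← eT] at hT
  rw [← eL] at hL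
  have hT1 : T1 ∈ R := by rw [eT1]; exact cR _ _ hT
  have hT2 : T2 ∈ R := by rw [eT2]; exact cR _ _ hT1
  have hp : p ∈ R := by rw [ep]; exact cR _ _ hL
  have hq : q ∈ R := by rw [eq]; exact cR _ _ hp
  obtain ⟨π, eπ⟩ : ∃ π, π = QuotientGroup.mk' Z := ⟨_, rfl⟩
  rw [← eπ] at k1 k2 k3 k4 kc eqZ
  have πT : π T = π t ^ 3 := by rw [eT, map_pow]
  have πL : π L = π l ^ 3 := by rw [eL, map_pow]
  have πT1 : π T1 = π l * π T * (π l)⁻¹ := by rw [eT1]; simp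
  have πT2 : π T2 = π l * π T1 * (π l)⁻¹ := by rw [eT2]; simp
  have πp : π p = π t * π L * (π t)⁻¹ := by rw [ep]; simp
  have πq : π q = π t * π p * (π t)⁻¹ := by rw [eq]; simp
  rw [← πT, ← πT1, ← πL] at k1
  rw [← πT, ← πT1, ← πT2, ← πL, ← πp] at k2
  rw [← πT, ← πT1, ← πT2, ← k2, ← πq] at k3
  rw [← πT, ← πT1, k1, ← πp, k2] at k4
  obtain ⟨m, em⟩ : ∃ m, m = q⁻¹ * T1 := ⟨_, rfl⟩
  obtain ⟨n, en⟩ : ∃ n, n = p⁻¹ * T2 := ⟨_, rfl⟩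
  have hm : m ∈ Z := by rw [em]; exact eqZ _ _ k3
  have hn : n ∈ Z := by rw [en]; exact eqZ _ _ k2
  have eT1' : T1 = q * m := by rw [em]; simp
  have eT2' : T2 = p * n := by rw [en]; simp
  have nab : ∀ {x y}, π x = π y → ∃ z ∈ Z, y = x * z := fun {x y} e => ⟨x⁻¹ * y, eqZ _ _ e, by simp⟩
  -- commuting facts
  obtain ⟨A, eA⟩ : ∃ A, A = L⁻¹ * T⁻¹ * L * T := ⟨_, rfl⟩
  obtain ⟨B, eB⟩ : ∃ B, B = p⁻¹ * T⁻¹ * p * T := ⟨_, rfl⟩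
  obtain ⟨C, eC⟩ : ∃ C, C = p⁻¹ * L⁻¹ * p * L := ⟨_, rfl⟩
  have cm : ∀ x ∈ R, ∀ y ∈ R, x⁻¹ * y⁻¹ * x * y ∈ Z := fun x hx y hy => by
    have := hcK x⁻¹ (inv_mem hx) y⁻¹ (inv_mem hy)
    rwa [commutatorElement_def, inv_inv, inv_inv] at this
  have hA : A ∈ Z := by rw [eA]; exact cm _ hL _ hT
  have hB : B ∈ Z := by rw [eB]; exact cm _ hp _ hT
  have hC : C ∈ Z := by rw [eC]; exact cm _ hp _ hL
  have r2' : p * q * T * L = 1 := by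
    have h1 := h.r2
    rw [pow_add, show l ^ (9 * k) = 1 by
      rw [show 9 * k = 3 * 3 * k by ring, pow_mul, pow_mul, ← eL, hexp _ hL, one_pow], mul_one] at h1
    rw [← h1, eq, ep, eT, eL]; simp [pow_succ, mul_assoc]
  have r1' : q * m * (p * n) * L * T = 1 := by
    have h1 := h.r1
    rw [pow_add, show t ^ (9 * k) = 1 by
      rw [show 9 * k = 3 * 3 * k by ring, pow_mul, pow_mul, ← eT, hexp _ hT, one_pow], mul_one] at h1
    rw [← eT1', ← eT2', ← h1, eT2, eT1, eT, eL]; simp [pow_succ, mul_assoc]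
  have r0' : l * t ^ 4 * l = t * l ^ 4 * t := by
    have h0 := h.r0
    rwa [pow_add, pow_add, show t ^ (9 * k) = 1 by
      rw [show 9 * k = 3 * 3 * k by ring, pow_mul, pow_mul, ← eT, hexp _ hT, one_pow],
      show l ^ (9 * k) = 1 by
      rw [show 9 * k = 3 * 3 * k by ring, pow_mul, pow_mul, ← eL, hexp _ hL, one_pow],
      mul_one, mul_one] at h0
  have words : ∀ n' ∈ Z, _ := fun n' hn' => upB_words T L p A B C m n'
    (by rw [eA]; simp [mul_assoc]) (by rw [eB]; simp [mul_assoc]) (by rw [eC]; simp [mul_assoc])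
    (by rintro x (rfl | rfl | rfl | rfl | rfl | rfl | rfl) <;>
      exact ZC _ hA _ (by first | assumption | (apply ZR; assumption)))
    (by rintro x (rfl | rfl | rfl | rfl | rfl | rfl) <;>
      exact ZC _ hB _ (by first | assumption | (apply ZR; assumption)))
    (by rintro x (rfl | rfl | rfl | rfl | rfl) <;>
      exact ZC _ hC _ (by first | assumption | (apply ZR; assumption)))
    (by rintro x (rfl | rfl | rfl | rfl) <;>
      exact ZC _ hm _ (by first | assumption | (apply ZR; assumption)))
    (by rintro x (rfl | rfl | rfl) <;>
      exact ZC _ hn' _ (by first | assumption | (apply ZR; assumption)))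
    (hexp _ hT) (hexp _ hL) (hexp _ hp) (hexp _ (ZR hA)) (hexp _ (ZR hB)) (hexp _ (ZR hC))
    (hexp _ (ZR hm)) (hexp _ (ZR hn')) q r2'
  have tT : t * T * t⁻¹ = T := by rw [eT]; simp [pow_succ, mul_assoc]
  have lL : l * L * l⁻¹ = L := by rw [eL]; simp [pow_succ, mul_assoc]
  have tq : t * q * t⁻¹ = T * L * T⁻¹ := by rw [eq, ep, eT]; simp [pow_succ, mul_assoc]
  have lT2 : l * T2 * l⁻¹ = L * T * L⁻¹ := by rw [eT2, eT1, eL]; simp [pow_succ, mul_assoc]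
  have hlp : l * p * l⁻¹ = L * T * L⁻¹ * (l * n * l⁻¹)⁻¹ := by
    rw [← lT2, eT2']; simp [mul_assoc]
  have htT1 : t * T1 * t⁻¹ = T * L * T⁻¹ * (t * m * t⁻¹) := by
    rw [← tq, eT1']; simp [mul_assoc]
  have w1 := words _ (inv_mem (cZ l _ hn))
  have w2 := words _ hn
  rw [← hlp] at w1
  rw [← eT1'] at w1 w2
  obtain ⟨w11, w12, w13, w14, w15, -, w17, w18⟩ := w1
  obtain ⟨-, -, -, -, -, w26, -, -⟩ := w2
  rw [eT1'] at w26
  have w26 := w26 r1'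
  have d3 : ∀ x ∈ R, t * (t * (t * x * t⁻¹) * t⁻¹) * t⁻¹ = T * x * T⁻¹ := fun x _ => by
    rw [eT]; simp [pow_succ, mul_assoc]
  have hlR : ∀ g x, x ∈ R → π (g * x * g⁻¹) = π g * π x * (π g)⁻¹ := fun g x _ => by simp
  -- the two twisted conjugations agree on `R` modulo `Z`
  let φ : Q →* Q ⧸ Z := π.comp (MulAut.conj (t * l * l)).toMonoidHom
  let ψ : Q →* Q ⧸ Z := π.comp (MulAut.conj (l * t * t)).toMonoidHom
  have hφ : ∀ x, φ x = π (t * (l * (l * x * l⁻¹) * l⁻¹) * t⁻¹) := fun x => by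
    simp [φ, mul_assoc]
  have hψ : ∀ x, ψ x = π (l * (t * (t * x * t⁻¹) * t⁻¹) * l⁻¹) := fun x => by
    simp [ψ, mul_assoc]
  have hπZ : ∀ z ∈ Z, π z = 1 := fun z hz => by rw [eπ]; exact (QuotientGroup.eq_one_iff z).2 hz
  have e1 : φ T = ψ T := by
    rw [hφ, hψ, ← eT1, ← eT2, tT, tT, ← eT1]
    rw [hlR _ _ hT2, ← k2, ← πq, k3]
  have e2 : φ L = ψ L := by
    rw [hφ, hψ, lL, lL, ← ep, ← eq, hlR _ _ hq, k3, k2, πT2]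
  have e3 : φ T1 = ψ T1 := by
    have c := kc L hL T hT
    rw [hφ, hψ, ← eT2, lT2, hlR _ _ (cR _ _ hT), hlR _ _ hT, hlR l _ (cR _ _ (cR _ _ hT1)),
      hlR t _ (cR _ _ hT1), hlR t _ hT1, k1, ← πp, k2, k4, c, mul_inv_cancel_right, ← hlR _ _ hT, tT]
  have e4 : ∀ z ∈ Z, φ z = ψ z := fun z hz => by
    rw [hφ, hψ, hπZ _ (cZ _ _ (cZ _ _ (cZ _ _ hz))), hπZ _ (cZ _ _ (cZ _ _ (cZ _ _ hz)))]
  have e5 : ∀ x ∈ R, φ x = ψ x := by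
    intro x hx
    obtain ⟨a, b, c, z, hz, rfl⟩ := kg x hx
    simp only [map_mul, map_pow, e1, e2, e3, e4 z hz]
  have e6 : ∀ z ∈ Z, t * (l * (l * z * l⁻¹) * l⁻¹) * t⁻¹ = l * (t * (t * z * t⁻¹) * t⁻¹) * l⁻¹ := by
    let H : Subgroup Q := (MulAut.conj (t * l * l)).toMonoidHom.eqLocus (MulAut.conj (l * t * t)).toMonoidHom
    have : Z ≤ H := by
      rw [Subgroup.commutator_le]
      intro a ha b hb
      change (MulAut.conj (t * l * l)).toMonoidHom ⁅a, b⁆ = (MulAut.conj (l * t * t)).toMonoidHom ⁅a, b⁆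
      have e := eqZ _ _ (e5 a ha)
      have e' := eqZ _ _ (e5 b hb)
      have ha' : (MulAut.conj (t * l * l)).toMonoidHom a ∈ R := cR _ _ ha
      have hb' : (MulAut.conj (t * l * l)).toMonoidHom b ∈ R := cR _ _ hb
      rw [map_commutatorElement, map_commutatorElement]
      obtain ⟨z, hz, ez⟩ : ∃ z ∈ Z, (MulAut.conj (l * t * t)).toMonoidHom a = (MulAut.conj (t * l * l)).toMonoidHom a * z :=
        ⟨_, e, (mul_inv_cancel_left _ _).symm⟩
      obtain ⟨z', hz', ez'⟩ : ∃ z ∈ Z, (MulAut.conj (l * t * t)).toMonoidHom b = (MulAut.conj (t * l * l)).toMonoidHom b * z :=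
        ⟨_, e', (mul_inv_cancel_left _ _).symm⟩
      rw [ez, ez']
      generalize (MulAut.conj (t * l * l)).toMonoidHom a = x at *
      generalize (MulAut.conj (t * l * l)).toMonoidHom b = y at *
      rw [commutatorElement_def, commutatorElement_def]
      calc x * y * x⁻¹ * y⁻¹ = x * y * (x⁻¹ * y⁻¹) := by simp [mul_assoc]
        _ = x * y * (z * z' * z⁻¹ * z'⁻¹) * (x⁻¹ * y⁻¹) := by rw [ZC z hz z' (ZR hz')]; simp [mul_assoc]
        _ = x * (y * z) * z' * z⁻¹ * (z'⁻¹ * x⁻¹) * y⁻¹ := by simp only [mul_assoc]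
        _ = x * (z * y) * z' * z⁻¹ * (x⁻¹ * z'⁻¹) * y⁻¹ := by
            rw [ZC z hz y hb', ZC _ (inv_mem hz') x⁻¹ (inv_mem ha')]
        _ = _ := by simp [mul_assoc]
    intro z hz
    have := this hz
    change (MulAut.conj (t * l * l)).toMonoidHom z = (MulAut.conj (l * t * t)).toMonoidHom z at this
    simpa [mul_assoc] using this
  let _ : AddCommGroup (Additive Z) :=
    { (inferInstance : AddGroup (Additive Z)) with
      add_comm := fun a b => by
        apply Additive.toMul.injective
        exact Subtype.ext (ZC _ (Additive.toMul a).2 _ (ZR (Additive.toMul b).2)) }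
  have ext : ∀ a b : Additive Z, ((Additive.toMul a : Z) : Q) = (Additive.toMul b : Z) → a = b :=
    fun a b h => Additive.toMul.injective (Subtype.ext h)
  have cj : ∀ g a b : Q, g * (a⁻¹ * b⁻¹ * a * b) * g⁻¹ =
      (g * a * g⁻¹)⁻¹ * (g * b * g⁻¹)⁻¹ * (g * a * g⁻¹) * (g * b * g⁻¹) := fun g a b => by
    simp [mul_assoc]
  have lA : l * A * l⁻¹ = C * A⁻¹ := by rw [← w13, eA, cj, lL, ← eT1]
  have lB : l * B * l⁻¹ = A * B := by rw [← w14, eB, cj, ← eT1]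
  have lC : l * C * l⁻¹ = A⁻¹ := by rw [← w15, eC, cj, lL]
  have tA : t * A * t⁻¹ = B := by rw [eB, eA, cj, tT, ← ep]
  have tB : t * B * t⁻¹ = B⁻¹ * A⁻¹ := by rw [← w11, eB, cj, tT, ← eq]
  have tC : t * C * t⁻¹ = B * C := by rw [← w12, eC, cj, ← eq, ← ep]
  have ci : ∀ g x : Q, g * x⁻¹ * g⁻¹ = (g * x * g⁻¹)⁻¹ := fun g x => by simp [mul_assoc]
  have f1 : l * (t * m * t⁻¹) * l⁻¹ = t * m * t⁻¹ := by
    have ctm := cZ t _ hm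
    have e : l * (T * (t * T1 * t⁻¹) * T⁻¹) * l⁻¹ = p * (t * T1 * t⁻¹) * p⁻¹ := by
      have : (l * t ^ 4 * l) * T * (l * t ^ 4 * l)⁻¹ = (t * l ^ 4 * t) * T * (t * l ^ 4 * t)⁻¹ := by
        rw [r0']
      calc _ = (l * t ^ 4 * l) * T * (l * t ^ 4 * l)⁻¹ := by
            rw [eT1, eT]; simp [pow_succ, mul_assoc]
        _ = _ := this
        _ = (t * L * l) * (t * T * t⁻¹) * (t * L * l)⁻¹ := by rw [eL]; simp [pow_succ, mul_assoc]
        _ = _ := by rw [tT, eT1, ep]; simp [mul_assoc]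
    have x1 : l * (T * (t * T1 * t⁻¹) * T⁻¹) * l⁻¹ =
        (T1 * T1 * L * (T1 * T1)⁻¹) * (l * (t * m * t⁻¹) * l⁻¹) := by
      have c := ZC _ ctm _ (inv_mem hT)
      calc _ = l * (T * (T * L * T⁻¹ * ((t * m * t⁻¹) * T⁻¹))) * l⁻¹ := by
            rw [htT1]; simp only [mul_assoc]
        _ = _ := by rw [c, eT1]; nth_rewrite 2 [← lL]; simp [mul_assoc]
    have x2 : p * (t * T1 * t⁻¹) * p⁻¹ = (p * T * L * T⁻¹ * p⁻¹) * (t * m * t⁻¹) := by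
      have c := ZC _ ctm _ (inv_mem hp)
      calc _ = p * (T * L * T⁻¹ * ((t * m * t⁻¹) * p⁻¹)) := by
            rw [htT1]; simp only [mul_assoc]
        _ = _ := by rw [c]; simp only [mul_assoc]
    rw [x1, x2, w17] at e
    exact mul_left_cancel e
  have f2 : t * (l * n * l⁻¹) * t⁻¹ = l * n * l⁻¹ := by
    have cln := inv_mem (cZ l _ hn)
    have e : T1 * (l * p * l⁻¹) * T1⁻¹ = t * (L * (l * p * l⁻¹) * L⁻¹) * t⁻¹ := by
      have : (l * t ^ 4 * l) * L * (l * t ^ 4 * l)⁻¹ = (t * l ^ 4 * t) * L * (t * l ^ 4 * t)⁻¹ := by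
        rw [r0']
      calc _ = (l * T * t) * (l * L * l⁻¹) * (l * T * t)⁻¹ := by
            rw [lL, eT1, ep]; simp [mul_assoc]
        _ = (l * t ^ 4 * l) * L * (l * t ^ 4 * l)⁻¹ := by
            rw [eT]; simp [pow_succ, mul_assoc]
        _ = _ := this
        _ = _ := by rw [ep, eL]; simp [pow_succ, mul_assoc]
    have x1 : T1 * (l * p * l⁻¹) * T1⁻¹ = T1 * (L * T * L⁻¹) * T1⁻¹ * (l * n * l⁻¹)⁻¹ := by
      have c := ZC _ cln _ (inv_mem hT1)
      calc _ = T1 * (L * T * L⁻¹) * ((l * n * l⁻¹)⁻¹ * T1⁻¹) := by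
            rw [hlp]; simp only [mul_assoc]
        _ = _ := by rw [c]; simp only [mul_assoc]
    have x2 : t * (L * (l * p * l⁻¹) * L⁻¹) * t⁻¹ = p * p * T * (p * p)⁻¹ * (t * (l * n * l⁻¹) * t⁻¹)⁻¹ := by
      have c := ZC _ cln _ (inv_mem hL)
      calc _ = t * (L * (L * T * L⁻¹ * ((l * n * l⁻¹)⁻¹ * L⁻¹))) * t⁻¹ := by
            rw [hlp]; simp only [mul_assoc]
        _ = _ := by rw [c, ep]; nth_rewrite 2 [← tT]; simp [mul_assoc]
    rw [x1, x2, w18] at e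
    exact (inv_injective (mul_left_cancel e)).symm
  have key := upB_module (M := Additive Z) (conjAdd Z t) (conjAdd Z l)
    (fun x => ext _ _ (by simpa using hexp _ (ZR (Additive.toMul x).2)))
    (fun x => ext _ _ (by simp only [conjAdd_apply]; exact e6 _ x.toMul.2))
    (fun x => ext _ _ (by
      simp only [conjAdd_apply]
      rw [d3 _ (ZR x.toMul.2), ← ZC _ x.toMul.2 _ hT]; simp))
    (fun x => ext _ _ (by
      simp only [conjAdd_apply]
      have : ∀ x, l * (l * (l * x * l⁻¹) * l⁻¹) * l⁻¹ = L * x * L⁻¹ := fun x => by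
        rw [eL]; simp [pow_succ, mul_assoc]
      rw [this, ← ZC _ x.toMul.2 _ hL]; simp))
    (Additive.ofMul ⟨A⁻¹, inv_mem hA⟩) (Additive.ofMul ⟨B⁻¹, inv_mem hB⟩)
    (Additive.ofMul ⟨C⁻¹, inv_mem hC⟩) (Additive.ofMul ⟨m, hm⟩) (Additive.ofMul ⟨n, hn⟩)
    (ext _ _ (by simp only [conjAdd_apply, toMul_ofMul, toMul_add, toMul_neg, toMul_sub, div_eq_mul_inv, Subgroup.coe_mul, Subgroup.coe_inv, inv_inv, toMul_zero, Subgroup.coe_one]; rw [ci, lA]; simp [mul_assoc]))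
    (ext _ _ (by simp only [conjAdd_apply, toMul_ofMul, toMul_add, toMul_neg, toMul_sub, div_eq_mul_inv, Subgroup.coe_mul, Subgroup.coe_inv, inv_inv, toMul_zero, Subgroup.coe_one]; rw [ci, lB, ZC A hA B (ZR hB)]; simp [mul_assoc]))
    (ext _ _ (by simp only [conjAdd_apply, toMul_ofMul, toMul_add, toMul_neg, toMul_sub, div_eq_mul_inv, Subgroup.coe_mul, Subgroup.coe_inv, inv_inv, toMul_zero, Subgroup.coe_one]; rw [ci, lC, inv_inv]))
    (ext _ _ (by simp only [conjAdd_apply, toMul_ofMul, toMul_add, toMul_neg, toMul_sub, div_eq_mul_inv, Subgroup.coe_mul, Subgroup.coe_inv, inv_inv, toMul_zero, Subgroup.coe_one]; rw [ci, tA]))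
    (ext _ _ (by simp only [conjAdd_apply, toMul_ofMul, toMul_add, toMul_neg, toMul_sub, div_eq_mul_inv, Subgroup.coe_mul, Subgroup.coe_inv, inv_inv, toMul_zero, Subgroup.coe_one]; rw [ci, tB]; simp [mul_assoc]))
    (ext _ _ (by simp only [conjAdd_apply, toMul_ofMul, toMul_add, toMul_neg, toMul_sub, div_eq_mul_inv, Subgroup.coe_mul, Subgroup.coe_inv, inv_inv, toMul_zero, Subgroup.coe_one]; rw [ci, tC, ZC B hB C (ZR hC)]; simp [mul_assoc]))
    (ext _ _ (by simp only [conjAdd_apply, toMul_ofMul, toMul_add, toMul_neg, toMul_sub, div_eq_mul_inv, Subgroup.coe_mul, Subgroup.coe_inv, inv_inv, toMul_zero, Subgroup.coe_one]; exact f1))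
    (ext _ _ (by simp only [conjAdd_apply, toMul_ofMul, toMul_add, toMul_neg, toMul_sub, div_eq_mul_inv, Subgroup.coe_mul, Subgroup.coe_inv, inv_inv, toMul_zero, Subgroup.coe_one]; exact f2))
    (ext _ _ (by
      simp only [conjAdd_apply, toMul_ofMul, toMul_add, toMul_neg, toMul_sub, div_eq_mul_inv, Subgroup.coe_mul, Subgroup.coe_inv, inv_inv, toMul_zero, Subgroup.coe_one]
      rw [← mul_left_inj A, ← mul_left_inj B, ← mul_left_inj C, w26, mul_assoc _ A B,
        ZC A hA B (ZR hB), mul_assoc, mul_assoc _ _ C, ZC A hA C (ZR hC),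
        ← mul_assoc B C, ZC B hB C (ZR hC)]
      simp [mul_assoc]))
  have key : A = 1 := by
    have := congrArg (fun x : Additive Z => ((Additive.toMul x : Z) : Q)) key
    simpa using this
  have hB1 : B = 1 := by rw [← tA, key]; simp
  have hC1 : C = 1 := by
    have := lA
    rw [key] at this
    simpa using this.symm
  have cLT : L * T = T * L := by
    have : L * T = T * L * A := by rw [eA]; simp [mul_assoc]
    rw [this, key, mul_one]
  have cpT : p * T = T * p := by
    have : p * T = T * p * B := by rw [eB]; simp [mul_assoc]
    rw [this, hB1, mul_one]
  have cpL : p * L = L * p := by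
    have : p * L = L * p * C := by rw [eC]; simp [mul_assoc]
    rw [this, hC1, mul_one]
  have cT1L : T1 * L = L * T1 := by
    have := w13
    rw [hC1, key] at this
    calc T1 * L = L * T1 * (L⁻¹ * T1⁻¹ * L * T1)⁻¹ := by simp [mul_assoc]
      _ = _ := by rw [this]; simp
  have cqT : q * T = T * q := by
    have := w11
    rw [hB1, key] at this
    calc q * T = T * q * (q⁻¹ * T⁻¹ * q * T) := by simp [mul_assoc]
      _ = _ := by rw [this]; simp
  have cT1T : T1 * T = T * T1 := by rw [eT1', mul_assoc, ZC m hm T hT, ← mul_assoc, cqT, mul_assoc]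
  have fin : ∀ x ∈ R, ∀ y ∈ R, x * y = y * x := by
    have cc : ∀ w, T * w = w * T → L * w = w * L → T1 * w = w * T1 → ∀ x ∈ R, w ∈ R → x * w = w * x := by
      intro w h1 h2 h3 x hx hw
      obtain ⟨a, b, c, z, hz, rfl⟩ := kg x hx
      have h1 : Commute T w := h1
      have h2 : Commute L w := h2
      have h3 : Commute T1 w := h3
      exact (((h1.pow_left a).mul_left (h2.pow_left b)).mul_left (h3.pow_left c)).mul_left (ZC z hz w hw)
    have aT := fun x hx => cc T rfl cLT cT1T x hx hT
    have aL := fun x hx => cc L cLT.symm rfl cT1L x hx hL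
    have aT1 := fun x hx => cc T1 cT1T.symm cT1L.symm rfl x hx hT1
    intro x hx y hy
    exact cc y (aT y hy).symm (aL y hy).symm (aT1 y hy).symm x hx hy
  exact fin

/-! ### Powerful 3-groups and the lower exponent-3 series -/

/-- The subgroup generated by the cubes of the elements of `P`. -/
def cub {Q : Type*} [Group Q] (P : Subgroup Q) : Subgroup Q := Subgroup.closure {x | ∃ y ∈ P, x = y ^ 3}

instance {Q : Type*} [Group Q] (P : Subgroup Q) [P.Normal] : (cub P).Normal := by
  constructor
  intro x hx g
  have : (cub P) ≤ (cub P).comap (MulAut.conj g).toMonoidHom := by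
    rw [cub, Subgroup.closure_le]
    rintro _ ⟨y, hy, rfl⟩
    refine Subgroup.subset_closure ⟨g * y * g⁻¹, ‹P.Normal›.conj_mem y hy g, ?_⟩
    simp [MulAut.conj_apply, conj_pow]
  exact this hx

lemma pow_mem_cub {Q : Type*} [Group Q] {P : Subgroup Q} {x : Q} (h : x ∈ P) : x ^ 3 ∈ cub P :=
  Subgroup.subset_closure ⟨x, h, rfl⟩

lemma cub_le {Q : Type*} [Group Q] {P K : Subgroup Q} (h : ∀ x ∈ P, x ^ 3 ∈ K) : cub P ≤ K := by
  rw [cub, Subgroup.closure_le]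
  rintro _ ⟨y, hy, rfl⟩
  exact h y hy

/-- The normal closure `R` of `t³` and `l³` is powerful up to `[[R,R],R]`: apply `upB_core` in the
quotient by the right-hand side. -/
lemma comm_le_of_core {Q : Type*} [Group Q] {t l : Q} {k : ℕ} (h : UpRel t l k)
    (hgen : Subgroup.closure {t, l} = ⊤) :
    ⁅upR t l, upR t l⁆ ≤ cub (upR t l) ⊔ ⁅⁅upR t l, upR t l⁆, upR t l⁆ := by
  set K := cub (upR t l) ⊔ ⁅⁅upR t l, upR t l⁆, upR t l⁆ with hK
  have hs := QuotientGroup.mk'_surjective K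
  have ker : ∀ x, x ∈ K → QuotientGroup.mk' K x = 1 := fun x hx =>
    (QuotientGroup.eq_one_iff x).2 hx
  have := upB_core (h.map (QuotientGroup.mk' K)) (map_gen _ hs hgen) (by
      rw [← map_upR _ hs]
      rintro _ ⟨x, hx, rfl⟩
      rw [← map_pow]; exact ker _ (le_sup_left (a := cub (upR t l)) (pow_mem_cub hx))) (by
      rw [← map_upR _ hs]
      rintro _ ⟨x, hx, rfl⟩ _ ⟨y, hy, rfl⟩ _ ⟨z, hz, rfl⟩
      rw [← commutatorElement_eq_one_iff_mul_comm, ← map_commutatorElement, ← map_commutatorElement]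
      exact ker _ (le_sup_right (a := cub (upR t l)) (Subgroup.commutator_mem_commutator
        (Subgroup.commutator_mem_commutator hx hy) hz)))
  rw [Subgroup.commutator_le]
  intro x hx y hy
  rw [← map_upR _ hs] at this
  have := this _ ⟨x, hx, rfl⟩ _ ⟨y, hy, rfl⟩
  rw [← commutatorElement_eq_one_iff_mul_comm, ← map_commutatorElement] at this
  exact (QuotientGroup.eq_one_iff _).1 this

/-- The lower exponent-`3` central series of `R`. -/
def lowP {Q : Type*} [Group Q] (R : Subgroup Q) : ℕ → Subgroup Q
  | 0 => R
  | i + 1 => cub (lowP R i) ⊔ ⁅lowP R i, R⁆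

section lowP
variable {Q : Type*} [Group Q] (R : Subgroup Q) [R.Normal]

instance lowP_normal (i : ℕ) : (lowP R i).Normal := by
  induction i with
  | zero => exact ‹R.Normal›
  | succ i ih => exact (inferInstance : (cub (lowP R i) ⊔ ⁅lowP R i, R⁆).Normal)

lemma lowP_pow {i : ℕ} {x : Q} (h : x ∈ lowP R i) : x ^ 3 ∈ lowP R (i + 1) :=
  le_sup_left (a := cub (lowP R i)) (pow_mem_cub h)

lemma lowP_comm {i : ℕ} {x y : Q} (h : x ∈ lowP R i) (hy : y ∈ R) : ⁅x, y⁆ ∈ lowP R (i + 1) :=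
  le_sup_right (a := cub (lowP R i)) (Subgroup.commutator_mem_commutator h hy)

lemma lowP_succ_le (i : ℕ) : lowP R (i + 1) ≤ lowP R i :=
  sup_le (cub_le fun _ hx => pow_mem hx 3) (Subgroup.commutator_le_left _ _)

lemma lowP_anti : Antitone (lowP R) := antitone_nat_of_succ_le (lowP_succ_le R)

lemma lowP_le (i : ℕ) : lowP R i ≤ R := lowP_anti R (Nat.zero_le i)

/-- If `[R,R] ≤ R³[[R,R],R]` then each term is generated by cubes modulo the second next one. -/
lemma lowP_powerful (h : ⁅R, R⁆ ≤ cub R ⊔ ⁅⁅R, R⁆, R⁆) (i : ℕ) :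
    lowP R (i + 1) ≤ cub (lowP R i) ⊔ lowP R (i + 2) := by
  induction i with
  | zero =>
    refine sup_le le_sup_left (h.trans (sup_le le_sup_left (le_trans ?_ le_sup_right)))
    rw [Subgroup.commutator_le]
    intro x hx y hy
    exact lowP_comm R (i := 1) (le_sup_right (a := cub R) hx) hy
  | succ i ih =>
    refine sup_le le_sup_left ?_
    set K := cub (lowP R (i + 1)) ⊔ lowP R (i + 1 + 2) with hK
    have hs := QuotientGroup.mk'_surjective K
    obtain ⟨π, hπ⟩ : ∃ π, π = QuotientGroup.mk' K := ⟨_, rfl⟩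
    have ker : ∀ x, x ∈ K → π x = 1 := fun x hx => by
      rw [hπ]; exact (QuotientGroup.eq_one_iff x).2 hx
    have ker' : ∀ x, π x = 1 → x ∈ K := fun x hx => by
      rw [hπ] at hx; exact (QuotientGroup.eq_one_iff x).1 hx
    have c3 : ∀ x ∈ lowP R (i + 1), π x ^ 3 = 1 := fun x hx => by
      rw [← map_pow]; exact ker _ (le_sup_left (a := cub (lowP R (i + 1))) (pow_mem_cub hx))
    have cc : ∀ x ∈ lowP R (i + 2), ∀ y ∈ R, π x * π y = π y * π x := fun x hx y hy => by
      rw [← commutatorElement_eq_one_iff_mul_comm, ← map_commutatorElement]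
      exact ker _ (le_sup_right (a := cub (lowP R (i + 1))) (lowP_comm R hx hy))
    let H : Subgroup Q := (Subgroup.centralizer (π '' R)).comap π
    have hH : lowP R (i + 1) ≤ H := by
      refine ih.trans (sup_le (cub_le ?_) ?_)
      · intro x hx
        have hxR := lowP_le R i hx
        rw [Subgroup.mem_comap, Subgroup.mem_centralizer_iff]
        rintro _ ⟨y, hy, rfl⟩
        obtain ⟨z, hz⟩ : ∃ z, z = ⁅x, y⁆ := ⟨_, rfl⟩
        have mz : z ∈ lowP R (i + 1) := by rw [hz]; exact lowP_comm R hx hy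
        have hzR := lowP_le R _ mz
        obtain ⟨w, hw⟩ : ∃ w, w = ⁅z, x⁆⁻¹ := ⟨_, rfl⟩
        have mw : w ∈ lowP R (i + 2) := by rw [hw]; exact inv_mem (lowP_comm R mz hxR)
        have w3 := c3 w (lowP_succ_le R _ mw)
        have z3 := c3 z mz
        have wx := cc w mw x hxR
        have wz := cc w mw z hzR
        have e1 : π x * π y = π z * (π y * π x) := by
          rw [hz, commutatorElement_def]; simp [mul_assoc]
        have e2 : π x * π z = π w * (π z * π x) := by
          rw [hw, commutatorElement_def]; simp [mul_assoc]
        rw [map_pow]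
        generalize π x = X at *
        generalize π y = Y at *
        generalize π z = Z at *
        generalize π w = W at *
        have as : ∀ {a b c : Q ⧸ K}, a * b = c → ∀ d, a * (b * d) = c * d := fun h d => by
          rw [← mul_assoc, h]
        have w3' : ∀ d, W * (W * (W * d)) = d := fun d => by
          have : W * (W * (W * d)) = W ^ 3 * d := by simp [pow_succ, mul_assoc]
          rw [this, w3, one_mul]
        have z3' : ∀ d, Z * (Z * (Z * d)) = d := fun d => by
          have : Z * (Z * (Z * d)) = Z ^ 3 * d := by simp [pow_succ, mul_assoc]
          rw [this, z3, one_mul]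
        calc Y * X ^ 3 = W * (W * (W * (Z * (Z * (Z * (Y * (X * (X * X)))))))) := by
              rw [w3', z3']; simp [pow_succ, mul_assoc]
          _ = X * (X * (X * Y)) := by
              simp only [e1, e2, as e1, as e2, mul_assoc, as wx.symm, as wz.symm, wx.symm, wz.symm]
          _ = _ := by simp [pow_succ, mul_assoc]
      · intro x hx
        rw [Subgroup.mem_comap, Subgroup.mem_centralizer_iff]
        rintro _ ⟨y, hy, rfl⟩
        exact (cc x hx y hy).symm
    rw [Subgroup.commutator_le]
    intro x hx y hy
    refine ker' _ ?_
    rw [map_commutatorElement, commutatorElement_eq_one_iff_mul_comm]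
    exact ((Subgroup.mem_centralizer_iff.1 (hH hx)) _ ⟨y, hy, rfl⟩).symm

lemma mul_cube {G : Type*} [Group G] {x y c : G} (h : y * x = x * y * c) (hx : c * x = x * c)
    (hy : c * y = y * c) (h3 : c ^ 3 = 1) : (x * y) ^ 3 = x ^ 3 * y ^ 3 := by
  have as : ∀ {a b c : G}, a * b = c → ∀ d, a * (b * d) = c * d := fun h d => by
    rw [← mul_assoc, h]
  have c3 : ∀ d, c * (c * (c * d)) = d := fun d => by
    have : c * (c * (c * d)) = c ^ 3 * d := by simp [pow_succ, mul_assoc]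
    rw [this, h3, one_mul]
  calc (x * y) ^ 3 = x * (y * (x * (y * (x * y)))) := by simp [pow_succ, mul_assoc]
    _ = x * (x * (x * (y * (y * (y * (c * (c * (c * 1)))))))) := by
      simp only [as h, h, mul_assoc, as hx, as hy, hx, hy, mul_one]
    _ = _ := by rw [c3]; simp [pow_succ, mul_assoc]

/-- Each layer of the series is spanned by powers of three fixed elements. -/
lemma lowP_span (h : ⁅R, R⁆ ≤ cub R ⊔ ⁅⁅R, R⁆, R⁆) (T L H : Q) (hT : T ∈ R) (hL : L ∈ R) (hH : H ∈ R)
    (h0 : ∀ x ∈ R, ∃ a b c : ℤ, ∃ z ∈ lowP R 1, x = T ^ a * L ^ b * H ^ c * z) (i : ℕ) :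
    (T ^ 3 ^ i ∈ lowP R i ∧ L ^ 3 ^ i ∈ lowP R i ∧ H ^ 3 ^ i ∈ lowP R i) ∧
    ∀ x ∈ lowP R i, ∃ a b c : ℤ, ∃ z ∈ lowP R (i + 1),
      x = (T ^ 3 ^ i) ^ a * (L ^ 3 ^ i) ^ b * (H ^ 3 ^ i) ^ c * z := by
  induction i with
  | zero => simpa using ⟨⟨hT, hL, hH⟩, h0⟩
  | succ i ih =>
    obtain ⟨⟨mT, mL, mH⟩, ih⟩ := ih
    simp only [pow_succ _ i, pow_mul]
    generalize T ^ 3 ^ i = T at *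
    generalize L ^ 3 ^ i = L at *
    generalize H ^ 3 ^ i = H at *
    have mT' := lowP_pow R mT
    have mL' := lowP_pow R mL
    have mH' := lowP_pow R mH
    refine ⟨⟨mT', mL', mH'⟩, ?_⟩
    set K := lowP R (i + 1 + 1) with hK
    obtain ⟨π, hπ⟩ : ∃ π, π = QuotientGroup.mk' K := ⟨_, rfl⟩
    have ker : ∀ x, x ∈ K → π x = 1 := fun x hx => by
      rw [hπ]; exact (QuotientGroup.eq_one_iff x).2 hx
    have cc : ∀ x ∈ lowP R (i + 1), ∀ y ∈ R, Commute (π x) (π y) := fun x hx y hy => by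
      rw [← commutatorElement_eq_one_iff_commute, ← map_commutatorElement]
      exact ker _ (lowP_comm R hx hy)
    have c3 : ∀ x ∈ lowP R (i + 1), π x ^ 3 = 1 := fun x hx => by
      rw [← map_pow]; exact ker _ (lowP_pow R hx)
    have mc : ∀ x ∈ lowP R i, ∀ y ∈ lowP R i, π (x * y) ^ 3 = π x ^ 3 * π y ^ 3 := fun x hx y hy => by
      rw [map_mul]
      have hc : ⁅y⁻¹, x⁻¹⁆ ∈ lowP R (i + 1) := lowP_comm R (inv_mem hy) (inv_mem (lowP_le R i hx))
      refine mul_cube (c := π ⁅y⁻¹, x⁻¹⁆) ?_ ?_ ?_ ?_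
      · rw [← map_mul, ← map_mul, ← map_mul, commutatorElement_def]; simp [mul_assoc]
      · exact cc _ hc _ (lowP_le R i hx)
      · exact cc _ hc _ (lowP_le R i hy)
      · exact c3 _ hc
    have rT := lowP_le R _ mT'
    have rL := lowP_le R _ mL'
    have rH := lowP_le R _ mH'
    have cTL := cc _ mT' _ rL
    have cTH := cc _ mT' _ rH
    have cLH := cc _ mL' _ rH
    let S : Subgroup Q :=
      { carrier := {x | ∃ a b c : ℤ, π x = π (T ^ 3) ^ a * π (L ^ 3) ^ b * π (H ^ 3) ^ c}
        one_mem' := ⟨0, 0, 0, by simp⟩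
        mul_mem' := by
          rintro x y ⟨a, b, c, e⟩ ⟨a', b', c', e'⟩
          refine ⟨a + a', b + b', c + c', ?_⟩
          rw [map_mul, e, e', zpow_add, zpow_add, zpow_add]
          generalize π (T ^ 3) = X at *
          generalize π (L ^ 3) = Y at *
          generalize π (H ^ 3) = Z at *
          have q1 := (cTL.zpow_zpow a' b).eq
          have q2 := (cTH.zpow_zpow a' c).eq
          have q3 := (cLH.zpow_zpow b' c).eq
          calc X ^ a * Y ^ b * Z ^ c * (X ^ a' * Y ^ b' * Z ^ c')
              = X ^ a * Y ^ b * (Z ^ c * X ^ a') * Y ^ b' * Z ^ c' := by simp only [mul_assoc]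
            _ = X ^ a * (Y ^ b * X ^ a') * (Z ^ c * Y ^ b') * Z ^ c' := by
              rw [← q2]; simp only [mul_assoc]
            _ = _ := by rw [← q1, ← q3]; simp only [mul_assoc]
        inv_mem' := by
          rintro x ⟨a, b, c, e⟩
          refine ⟨-a, -b, -c, ?_⟩
          rw [map_inv, e, zpow_neg, zpow_neg, zpow_neg]
          have q1 := (cTL.zpow_zpow a b)
          have q2 := (cTH.zpow_zpow a c)
          have q3 := (cLH.zpow_zpow b c)
          rw [(q2.mul_left q3).eq, q1.eq]
          simp [mul_assoc] }
    have hS : lowP R (i + 1) ≤ S := by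
      refine (lowP_powerful R h i).trans (sup_le (cub_le ?_) ?_)
      · intro x hx
        obtain ⟨a, b, c, z, hz, rfl⟩ := ih x hx
        refine ⟨a, b, c, ?_⟩
        have hz' := lowP_succ_le R i hz
        have aT := zpow_mem mT a
        have aL := zpow_mem mL b
        have aH := zpow_mem mH c
        rw [map_pow, mc _ (mul_mem (mul_mem aT aL) aH) _ hz', mc _ (mul_mem aT aL) _ aH, mc _ aT _ aL,
          c3 z hz, mul_one]
        simp only [map_zpow, map_pow, ← zpow_natCast, ← zpow_mul, mul_comm]
      · intro x hx
        exact ⟨0, 0, 0, by simpa using ker x hx⟩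
    intro x hx
    obtain ⟨a, b, c, e⟩ := hS hx
    refine ⟨a, b, c, ((T ^ 3) ^ a * (L ^ 3) ^ b * (H ^ 3) ^ c)⁻¹ * x, ?_, (mul_inv_cancel_left _ _).symm⟩
    rw [← QuotientGroup.eq_one_iff]
    change QuotientGroup.mk' K _ = 1
    rw [← hπ, map_mul, e]
    simp only [map_inv, map_mul, map_zpow, inv_mul_cancel]
end lowP

/-! ### Vanishing of cocycles on layers of the series -/

/-- A finite `3`-group cannot act on a nonzero finite elementary abelian `3`-group `W` with
`W` spanned by the elements `w - g w`. -/
lemma pgroup_coinv {G W : Type*} [Group G] [Finite G] (hG : IsPGroup 3 G) [AddCommGroup W]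
    [Module (ZMod 3) W] [Finite W] (α : G →* AddMonoid.End W)
    (h : ∀ w : W, w ∈ AddSubgroup.closure {x : W | ∃ g w', x = w' - α g w'}) (w : W) : w = 0 := by
  by_contra hw
  let act : MulAction G (W →+ ZMod 3) :=
    { smul := fun g ψ => ψ.comp (α g⁻¹)
      one_smul := fun ψ => by
        change ψ.comp (α 1⁻¹) = ψ
        rw [inv_one, map_one]; rfl
      mul_smul := fun g g' ψ => by
        change ψ.comp (α (g * g')⁻¹) = (ψ.comp (α g'⁻¹)).comp (α g⁻¹)
        rw [mul_inv_rev, map_mul]; rfl }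
  have hfin : Finite (W →+ ZMod 3) := DFunLike.finite _
  obtain ⟨ψ, hψ⟩ : ∃ ψ : Module.Dual (ZMod 3) W, ψ w ≠ 0 := by
    by_contra hc
    push Not at hc
    exact hw ((Module.forall_dual_apply_eq_zero_iff (ZMod 3) w).1 hc)
  have h3 : 3 ∣ Nat.card (W →+ ZMod 3) := by
    have : addOrderOf (ψ.toAddMonoidHom) = 3 := by
      apply addOrderOf_eq_prime
      · ext x
        change 3 • ψ x = 0
        rw [nsmul_eq_mul]
        exact zero_mul _
      · intro h0
        exact hψ (DFunLike.congr_fun h0 w)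
    exact (dvd_of_eq this.symm).trans (addOrderOf_dvd_natCard _)
  obtain ⟨χ, hχ, hne⟩ := hG.exists_fixed_point_of_prime_dvd_card_of_fixed_point (W →+ ZMod 3) h3
    (a := 0) (fun g => by change (0 : W →+ ZMod 3).comp _ = 0; ext; rfl)
  apply hne
  ext x
  suffices χ x = 0 from this.symm
  refine AddSubgroup.closure_induction (p := fun x _ => χ x = 0) ?_ ?_ ?_ ?_ (h x)
  · rintro _ ⟨g, w', rfl⟩
    have : χ (α g⁻¹⁻¹ w') = χ w' := DFunLike.congr_fun (hχ g⁻¹) w'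
    rw [inv_inv] at this
    rw [map_sub, this, sub_self]
  · exact map_zero χ
  · intro x y _ _ hx hy
    rw [map_add, hx, hy, add_zero]
  · intro x _ hx
    rw [map_neg, hx, neg_zero]

open Matrix in
/-- Matrices congruent to the identity modulo `3 ^ i`. -/
def congD (A : Type*) [CommRing A] (i : ℕ) : Subgroup (Matrix.SpecialLinearGroup (Fin 2) A) where
  carrier := {g | ∃ B : Matrix (Fin 2) (Fin 2) A, (g : Matrix (Fin 2) (Fin 2) A) = 1 + (3 : A) ^ i • B}
  one_mem' := ⟨0, by simp⟩
  mul_mem' := by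
    rintro a b ⟨B, hB⟩ ⟨C, hC⟩
    refine ⟨B + C + (3 : A) ^ i • (B * C), ?_⟩
    rw [Matrix.SpecialLinearGroup.coe_mul, hB, hC]
    simp only [mul_add, add_mul, mul_one, one_mul, smul_add, Matrix.smul_mul, Matrix.mul_smul]
    abel
  inv_mem' := by
    rintro a ⟨B, hB⟩
    refine ⟨-(B * (a⁻¹ : Matrix.SpecialLinearGroup (Fin 2) A)), ?_⟩
    have h : (a : Matrix (Fin 2) (Fin 2) A) * ((a⁻¹ : Matrix.SpecialLinearGroup (Fin 2) A) : Matrix _ _ A) = 1 := by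
      rw [← Matrix.SpecialLinearGroup.coe_mul, mul_inv_cancel, Matrix.SpecialLinearGroup.coe_one]
    nth_rewrite 1 [hB] at h
    rw [add_mul, one_mul] at h
    rw [smul_neg, ← sub_eq_add_neg, eq_sub_iff_add_eq, ← Matrix.smul_mul]
    exact h

section congD
variable {A : Type*} [CommRing A]

instance congD_normal (i : ℕ) : (congD A i).Normal := by
  constructor
  rintro a ⟨B, hB⟩ g
  refine ⟨g * B * (g⁻¹ : Matrix.SpecialLinearGroup (Fin 2) A), ?_⟩
  rw [Matrix.SpecialLinearGroup.coe_mul, Matrix.SpecialLinearGroup.coe_mul, hB]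
  have h : (g : Matrix (Fin 2) (Fin 2) A) * ((g⁻¹ : Matrix.SpecialLinearGroup (Fin 2) A) : Matrix _ _ A) = 1 := by
      rw [← Matrix.SpecialLinearGroup.coe_mul, mul_inv_cancel, Matrix.SpecialLinearGroup.coe_one]
  rw [mul_add, add_mul, mul_one, h, Matrix.mul_smul, Matrix.smul_mul]

lemma congD_cube {i : ℕ} {g} (h : g ∈ congD A (i + 1)) : g ^ 3 ∈ congD A (i + 2) := by
  obtain ⟨B, hB⟩ := h
  refine ⟨B + (3 : A) ^ (i + 1) • B ^ 2 + (3 : A) ^ (2 * i + 1) • B ^ 3, ?_⟩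
  rw [Matrix.SpecialLinearGroup.coe_pow, hB]
  generalize hc : (3 : A) ^ (i + 1) = c
  have e : ((1 : Matrix (Fin 2) (Fin 2) A) + c • B) ^ 3 = 1 + (3 * c) • B + (3 * c ^ 2) • B ^ 2 + (c ^ 3) • B ^ 3 := by
    simp only [pow_succ, pow_zero, one_mul, mul_add, add_mul, mul_one, Matrix.smul_mul, Matrix.mul_smul,
      smul_smul, ← mul_assoc]
    module
  have e1 : 3 * c = 3 ^ (i + 2) := by rw [← hc]; ring
  have e2 : 3 * c ^ 2 = 3 ^ (i + 2) * c := by rw [← hc]; ring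
  have e3 : c ^ 3 = 3 ^ (i + 2) * 3 ^ (2 * i + 1) := by rw [← hc]; ring
  rw [e, e1, e2, e3]
  simp only [smul_add, smul_smul, add_assoc]

lemma congD_comm {i : ℕ} {g h} (hg : g ∈ congD A i) (hh : h ∈ congD A 1) : ⁅g, h⁆ ∈ congD A (i + 1) := by
  obtain ⟨B, hB⟩ := hg
  obtain ⟨C, hC⟩ := hh
  refine ⟨(B * C - C * B) * (g⁻¹ * h⁻¹ : Matrix.SpecialLinearGroup (Fin 2) A).1, ?_⟩
  have e1 : (h * g : Matrix.SpecialLinearGroup (Fin 2) A).1 *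
      (g⁻¹ * h⁻¹ : Matrix.SpecialLinearGroup (Fin 2) A).1 = 1 := by
    rw [← Matrix.SpecialLinearGroup.coe_mul, show h * g * (g⁻¹ * h⁻¹) = 1 by simp [mul_assoc],
      Matrix.SpecialLinearGroup.coe_one]
  have e2 : (g * h : Matrix.SpecialLinearGroup (Fin 2) A).1 =
      (h * g : Matrix.SpecialLinearGroup (Fin 2) A).1 + (3 : A) ^ (i + 1) • (B * C - C * B) := by
    rw [Matrix.SpecialLinearGroup.coe_mul, Matrix.SpecialLinearGroup.coe_mul, hB, hC]
    simp only [mul_add, add_mul, mul_one, one_mul, smul_add, Matrix.smul_mul, Matrix.mul_smul,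
      smul_sub, smul_smul, pow_one]
    rw [show (3 : A) * 3 ^ i = 3 ^ (i + 1) by ring, show (3 : A) ^ i * 3 = 3 ^ (i + 1) by ring]
    abel
  rw [commutatorElement_def, show g * h * g⁻¹ * h⁻¹ = (g * h) * (g⁻¹ * h⁻¹) by simp [mul_assoc],
    Matrix.SpecialLinearGroup.coe_mul, e2, add_mul, e1, Matrix.smul_mul]

lemma congD_anti (i : ℕ) : congD A (i + 1) ≤ congD A i := by
  rintro g ⟨B, hB⟩
  refine ⟨(3 : A) • B, ?_⟩
  rw [hB, smul_smul, pow_succ]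

lemma lowP_congD {Q : Type*} [Group Q] (R : Subgroup Q) [R.Normal]
    (ρ : Q →* Matrix.SpecialLinearGroup (Fin 2) A) (h : ∀ r ∈ R, ρ r ∈ congD A 1) (i : ℕ) :
    ∀ r ∈ lowP R i, ρ r ∈ congD A (i + 1) := by
  induction i with
  | zero => exact h
  | succ i ih =>
    have : lowP R (i + 1) ≤ (congD A (i + 1 + 1)).comap ρ := by
      refine sup_le (cub_le fun x hx => ?_) ?_
      · rw [Subgroup.mem_comap, map_pow]; exact congD_cube (ih x hx)
      · rw [Subgroup.commutator_le]
        intro x hx y hy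
        rw [Subgroup.mem_comap, map_commutatorElement]
        exact congD_comm (ih x hx) (h y hy)
    exact this

lemma upR_congD {Q : Type*} [Group Q] (t l : Q)
    (ρ : Q →* Matrix.SpecialLinearGroup (Fin 2) A) (ϖ : A)
    (ht : (ρ t : Matrix (Fin 2) (Fin 2) A) = !![1, 1; 0, 1])
    (hl : (ρ l : Matrix (Fin 2) (Fin 2) A) = !![1, 0; ϖ, 1]) : ∀ r ∈ upR t l, ρ r ∈ congD A 1 := by
  have : upR t l ≤ (congD A 1).comap ρ := by
    apply Subgroup.normalClosure_le_normal
    rintro _ (rfl | rfl)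
    · change ρ (t ^ 3) ∈ congD A 1
      refine ⟨!![0, 1; 0, 0], ?_⟩
      rw [map_pow, Matrix.SpecialLinearGroup.coe_pow, ht]
      ext i j; fin_cases i <;> fin_cases j <;> simp [pow_succ, Matrix.mul_apply] ; norm_num
    · change ρ (l ^ 3) ∈ congD A 1
      refine ⟨!![0, 0; ϖ, 0], ?_⟩
      rw [map_pow, Matrix.SpecialLinearGroup.coe_pow, hl]
      ext i j; fin_cases i <;> fin_cases j <;> simp [pow_succ, Matrix.mul_apply] ; ring
  exact this
end congD

lemma congD_pgroup (n : ℕ) : IsPGroup 3 (congD (ZMod (3 ^ n)) 1) := by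
  intro g
  have key : ∀ i, (g : Matrix.SpecialLinearGroup (Fin 2) (ZMod (3 ^ n))) ^ 3 ^ i ∈ congD (ZMod (3 ^ n)) (i + 1) := by
    intro i
    induction i with
    | zero => simpa using g.2
    | succ i ih => rw [pow_succ, pow_mul]; exact congD_cube ih
  refine ⟨n, ?_⟩
  apply Subtype.ext
  obtain ⟨B, hB⟩ := key n
  have : (3 : ZMod (3 ^ n)) ^ n = 0 := by exact_mod_cast ZMod.natCast_self (3 ^ n)
  rw [pow_succ, this] at hB
  apply Subtype.ext
  rw [SubmonoidClass.coe_pow, hB]; simp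

/-- Version of `pgroup_coinv` for a stable subspace `W`. -/
lemma pgroup_coinv_sub {G M : Type*} [Group G] [Finite G] (hG : IsPGroup 3 G) [AddCommGroup M]
    [Module (ZMod 3) M] [Finite M] (α : G →* AddMonoid.End M) (W : AddSubgroup M)
    (hst : ∀ g, ∀ w ∈ W, α g w ∈ W)
    (h : W ≤ AddSubgroup.closure {x : M | ∃ g, ∃ w' ∈ W, x = w' - α g w'}) : W = ⊥ := by
  let W' : Submodule (ZMod 3) M := AddSubgroup.toZModSubmodule 3 W
  have mem : ∀ x, x ∈ W' ↔ x ∈ W := fun x => Iff.rfl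
  let β : G →* AddMonoid.End W' :=
    { toFun := fun g =>
        { toFun := fun x => ⟨α g x, hst g x x.2⟩
          map_zero' := Subtype.ext (map_zero (α g))
          map_add' := fun x y => Subtype.ext (map_add (α g) (x : M) (y : M)) }
      map_one' := by ext x; change α 1 x = x; rw [map_one]; rfl
      map_mul' := fun g g' => by ext x; change α (g * g') x = α g (α g' x); rw [map_mul]; rfl }
  have hβ : ∀ g x, ((β g x : W') : M) = α g x := fun _ _ => rfl
  have key := pgroup_coinv (W := W') hG β (by
    intro w
    have hcl : AddSubgroup.closure {x : M | ∃ g, ∃ w' ∈ W, x = w' - α g w'} ≤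
        (AddSubgroup.closure {x : W' | ∃ g w', x = w' - β g w'}).map W'.subtype.toAddMonoidHom := by
      rw [AddSubgroup.closure_le]
      rintro _ ⟨g, w', hw', rfl⟩
      exact ⟨⟨w', hw'⟩ - β g ⟨w', hw'⟩, AddSubgroup.subset_closure ⟨g, _, rfl⟩, rfl⟩
    obtain ⟨y, hy, hyw⟩ := hcl (h w.2)
    rwa [show w = y from Subtype.ext hyw.symm])
  rw [eq_bot_iff]
  intro x hx
  exact congrArg Subtype.val (key ⟨x, hx⟩)

section U5a
variable {Q : Type*} [Group Q] (R : Subgroup Q) [R.Normal] {V : Type*} [Finite V]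
  {S : Type*} [Group S] [Finite S] [MulAction S V] (ρ : Q →* S) (f : Q → V → ZMod 3)
  (hf : ∀ g h v, f (g * h) v = f g v + f h ((ρ g)⁻¹ • v))

include hf in
lemma coc_one : f 1 = 0 := by
  ext v
  have := hf 1 1 v
  simpa using this

include hf in
/-- The cocycle kills a layer which acts trivially, because the layers are generated by cubes
modulo the next one and a `3`-group acts on the image. -/
lemma coc_kill (hR : ⁅R, R⁆ ≤ cub R ⊔ ⁅⁅R, R⁆, R⁆) (n : ℕ) 
    (hp : IsPGroup 3 (R.map ρ))
    (h0 : ∀ x ∈ lowP R n, ρ x = 1) : ∀ x ∈ lowP R (n + 1), f x = 0 := by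
  have hom : ∀ x ∈ lowP R n, ∀ y, f (x * y) = f x + f y := fun x hx y => by
    ext v; rw [hf, h0 x hx]; simp
  have homi : ∀ x ∈ lowP R n, f x⁻¹ = - f x := fun x hx => by
    have := hom x hx x⁻¹
    rw [mul_inv_cancel, coc_one ρ f hf] at this
    exact (neg_eq_of_add_eq_zero_right this.symm).symm
  have conj : ∀ x ∈ lowP R n, ∀ g, f (g * x * g⁻¹) = fun v => f x ((ρ g)⁻¹ • v) := fun x hx g => by
    ext v
    have := hf g g⁻¹ v
    rw [mul_inv_cancel, coc_one ρ f hf] at this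
    rw [hf, hf, map_mul, h0 x hx, mul_one]
    simp only [Pi.zero_apply] at this
    linear_combination -this
  let Wi : ℕ → AddSubgroup (V → ZMod 3) := fun i =>
    { carrier := {w | ∃ x ∈ lowP R (n + i), f x = w}
      zero_mem' := ⟨1, one_mem _, coc_one ρ f hf⟩
      add_mem' := by
        rintro _ _ ⟨x, hx, rfl⟩ ⟨y, hy, rfl⟩
        exact ⟨x * y, mul_mem hx hy, hom x (lowP_anti R (Nat.le_add_right _ _) hx) y⟩
      neg_mem' := by
        rintro _ ⟨x, hx, rfl⟩
        exact ⟨x⁻¹, inv_mem hx, homi x (lowP_anti R (Nat.le_add_right _ _) hx)⟩ }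
  -- a subgroup on which `f` is controlled by an additive subgroup
  let pre : AddSubgroup (V → ZMod 3) → Subgroup Q := fun W =>
    { carrier := {x | x ∈ lowP R n ∧ f x ∈ W}
      one_mem' := ⟨one_mem _, by rw [coc_one ρ f hf]; exact zero_mem _⟩
      mul_mem' := by
        rintro x y ⟨hx, hx'⟩ ⟨hy, hy'⟩
        exact ⟨mul_mem hx hy, by rw [hom x hx]; exact add_mem hx' hy'⟩
      inv_mem' := by
        rintro x ⟨hx, hx'⟩
        exact ⟨inv_mem hx, by rw [homi x hx]; exact neg_mem hx'⟩ }
  have cub0 : ∀ x ∈ lowP R n, f (x ^ 3) = 0 := fun x hx => by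
    rw [pow_succ, pow_two, mul_assoc, hom x hx, hom x hx]
    ext v
    have : ∀ a : ZMod 3, a + (a + a) = 0 := by decide
    exact this _
  have s1 : lowP R (n + 1) ≤ pre (Wi 2) := by
    refine (lowP_powerful R hR n).trans (sup_le (cub_le fun x hx => ⟨pow_mem hx 3, ?_⟩) ?_)
    · rw [cub0 x hx]; exact zero_mem _
    · exact fun x hx => ⟨lowP_anti R (by omega) hx, x, hx, rfl⟩
  let α : R.map ρ →* AddMonoid.End (V → ZMod 3) :=
    { toFun := fun g => 
        { toFun := fun φ v => φ ((g : S)⁻¹ • v)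
          map_zero' := rfl
          map_add' := fun _ _ => rfl }
      map_one' := by ext φ v; change φ ((1 : S)⁻¹ • v) = φ v; simp
      map_mul' := fun g g' => by
        ext φ v
        change φ (((g : S) * (g' : S))⁻¹ • v) = φ ((g' : S)⁻¹ • (g : S)⁻¹ • v)
        rw [mul_inv_rev, mul_smul] }
  have hα : ∀ (g : R.map ρ) φ, α g φ = fun v => φ ((g : S)⁻¹ • v) := fun _ _ => rfl
  have s2 : Wi 1 = ⊥ := by
    refine pgroup_coinv_sub hp α (Wi 1) ?_ ?_
    · rintro ⟨_, r, hr, rfl⟩ _ ⟨x, hx, rfl⟩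
      refine ⟨r * x * r⁻¹, (lowP_normal R _).conj_mem _ hx _, ?_⟩
      rw [conj x (lowP_succ_le R n hx)]
      rfl
    · rintro _ ⟨x, hx, rfl⟩
      have h2 : lowP R (n + 2) ≤ 
          pre (AddSubgroup.closure {x | ∃ g, ∃ w' ∈ Wi 1, x = w' - α g w'}) := by
        refine sup_le (cub_le fun x hx => ?_) ?_
        · have hx := lowP_succ_le R n hx
          exact ⟨pow_mem hx 3, by rw [cub0 x hx]; exact zero_mem _⟩
        · rw [Subgroup.commutator_le]
          intro x hx r hr
          have hx' := lowP_succ_le R n hx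
          have hn := (lowP_normal R n).conj_mem _ (inv_mem hx') r
          have e : ⁅x, r⁆ = x * (r * x⁻¹ * r⁻¹) := by rw [commutatorElement_def]; simp [mul_assoc]
          refine ⟨by rw [e]; exact mul_mem hx' hn, AddSubgroup.subset_closure
            ⟨⟨ρ r, r, hr, rfl⟩, f x, ⟨x, hx, rfl⟩, ?_⟩⟩
          rw [e, hom x hx', conj _ (inv_mem hx'), homi x hx', hα]
          ext v
          simp [sub_eq_add_neg]
      obtain ⟨y, hy, hyx⟩ := (s1 hx).2
      rw [← hyx]
      exact (h2 hy).2
  intro x hx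
  have : f x ∈ Wi 1 := ⟨x, hx, rfl⟩
  rw [s2] at this
  exact this
end U5a

/-- Coset representatives of `⟨x⟩` in the group `⟨x, y | x³, y³, xyx = yxy⟩ ≅ SL(2,𝔽₃)`, indexed
by the first column. -/
def upRep {G : Type*} [Group G] (x y : G) (p : ZMod 3 × ZMod 3) : G :=
  if p = (1, 2) then y else if p = (1, 1) then y * y else if p = (0, 2) then x * y else
  if p = (2, 2) then x * (x * y) else if p = (2, 1) then x * (y * y) else
  if p = (0, 1) then x * (x * (y * y)) else if p = (2, 0) then y * (x * (x * y)) else 1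

lemma upRep_mul {G : Type*} [Group G] {x y : G} (hx : x ^ 3 = 1) (hy : y ^ 3 = 1)
    (hb : y * x * y = x * y * x) (p : ZMod 3 × ZMod 3) :
    (∃ a : ℕ, x * upRep x y p = upRep x y (p.1 + p.2, p.2) * x ^ a) ∧
    (p ≠ 0 → ∃ a : ℕ, y * upRep x y p = upRep x y (p.1, p.2 - p.1) * x ^ a) := by
  have x3 : x * (x * x) = 1 := by rw [← hx]; simp [pow_succ, mul_assoc]
  have y3 : y * (y * y) = 1 := by rw [← hy]; simp [pow_succ, mul_assoc]
  have x3' : ∀ d, x * (x * (x * d)) = d := fun d => by rw [← mul_assoc x x d, ← mul_assoc, x3, one_mul]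
  have b : y * (x * y) = x * (y * x) := by simpa [mul_assoc] using hb
  have b' : ∀ d, y * (x * (y * d)) = x * (y * (x * d)) := fun d => by
    simpa [mul_assoc] using congrArg (· * d) b
  have y3' : ∀ d, y * (y * (y * d)) = d := fun d => by rw [← mul_assoc y y d, ← mul_assoc, y3, one_mul]
  have xi : x⁻¹ = x * x := by rw [inv_eq_iff_mul_eq_one]; exact x3
  have yi : y⁻¹ = y * y := by rw [inv_eq_iff_mul_eq_one]; exact y3
  have i1 : x * (y * (x * (x * y))) = y * (x * (x * (y * x))) := by rw [← b', b]
  have i2 : y * (x * (y * y)) = x * (x * (y * x)) := by rw [b', b]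
  have i3 : y * (x * (x * (y * y))) = x * (x * (y * (y * x))) := by
    have : y * x⁻¹ * y⁻¹ = x⁻¹ * y⁻¹ * x := by
      rw [mul_inv_eq_iff_eq_mul, eq_comm, mul_assoc, mul_assoc, inv_mul_eq_iff_eq_mul, inv_mul_eq_iff_eq_mul]
      rw [← mul_assoc x y, ← mul_assoc y (x * y), eq_mul_inv_iff_mul_eq]; simpa [mul_assoc] using b.symm
    simpa [xi, yi, mul_assoc] using this
  have i4 : y * (y * (x * (x * y))) = x * (y * (y * (x * x))) := by
    have : y⁻¹ * x⁻¹ * y = x * y⁻¹ * x⁻¹ := by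
      rw [eq_mul_inv_iff_mul_eq, mul_assoc, mul_assoc, inv_mul_eq_iff_eq_mul, inv_mul_eq_iff_eq_mul]
      rw [← mul_assoc y, ← mul_assoc, ← mul_assoc, eq_mul_inv_iff_mul_eq]
      simpa [mul_assoc] using b
    simpa [xi, yi, mul_assoc] using this
  obtain ⟨p1, p2⟩ := p
  have d : ∀ q : ZMod 3 × ZMod 3, q = (0,0) ∨ q = (0,1) ∨ q = (0,2) ∨ q = (1,0) ∨ q = (1,1) ∨ q = (1,2)
    ∨ q = (2,0) ∨ q = (2,1) ∨ q = (2,2) := by decide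
  have ex : ∀ (a : ℕ) {u v : G}, u = v * x ^ a → ∃ a : ℕ, u = v * x ^ a := fun a _ _ h => ⟨a, h⟩
  have v0 : upRep x y (0, 0) = 1 := rfl
  have v1 : upRep x y (0, 1) = x * (x * (y * y)) := rfl
  have v2 : upRep x y (0, 2) = x * y := rfl
  have v3 : upRep x y (1, 0) = 1 := rfl
  have v4 : upRep x y (1, 1) = y * y := rfl
  have v5 : upRep x y (1, 2) = y := rfl
  have v6 : upRep x y (2, 0) = y * (x * (x * y)) := rfl
  have v7 : upRep x y (2, 1) = x * (y * y) := rfl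
  have v8 : upRep x y (2, 2) = x * (x * y) := rfl
  rcases d (p1, p2) with h | h | h | h | h | h | h | h | h <;> obtain ⟨rfl, rfl⟩ := Prod.mk.inj h <;>
    constructor
  · exact ex 1 (by change x * upRep x y (0, 0) = upRep x y (0, 0) * _; rw [v0]; simp)
  · exact fun h => (h rfl).elim
  · exact ex 0 (by change x * upRep x y (0, 1) = upRep x y (1, 1) * _; rw [v1, v4, x3']; simp)
  · exact fun _ => ex 1 (by change y * upRep x y (0, 1) = upRep x y (0, 1) * _; rw [v1, i3]; simp [mul_assoc])
  · exact ex 0 (by change x * upRep x y (0, 2) = upRep x y (2, 2) * _; rw [v2, v8]; simp)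
  · exact fun _ => ex 1 (by change y * upRep x y (0, 2) = upRep x y (0, 2) * _; rw [v2, b]; simp [mul_assoc])
  · exact ex 1 (by change x * upRep x y (1, 0) = upRep x y (1, 0) * _; rw [v3]; simp)
  · exact fun _ => ex 0 (by change y * upRep x y (1, 0) = upRep x y (1, 2) * _; rw [v3, v5]; simp)
  · exact ex 0 (by change x * upRep x y (1, 1) = upRep x y (2, 1) * _; rw [v4, v7]; simp)
  · exact fun _ => ex 0 (by change y * upRep x y (1, 1) = upRep x y (1, 0) * _; rw [v4, v3, y3]; simp)
  · exact ex 0 (by change x * upRep x y (1, 2) = upRep x y (0, 2) * _; rw [v5, v2]; simp)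
  · exact fun _ => ex 0 (by change y * upRep x y (1, 2) = upRep x y (1, 1) * _; rw [v5, v4]; simp)
  · exact ex 1 (by change x * upRep x y (2, 0) = upRep x y (2, 0) * _; rw [v6, i1]; simp [mul_assoc])
  · exact fun _ => ex 2 (by change y * upRep x y (2, 0) = upRep x y (2, 1) * _; rw [v6, v7, i4]; simp [pow_succ, mul_assoc])
  · exact ex 0 (by change x * upRep x y (2, 1) = upRep x y (0, 1) * _; rw [v7, v1]; simp)
  · exact fun _ => ex 1 (by change y * upRep x y (2, 1) = upRep x y (2, 2) * _; rw [v7, v8, i2]; simp [mul_assoc])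
  · exact ex 0 (by change x * upRep x y (2, 2) = upRep x y (1, 2) * _; rw [v8, v5, x3']; simp)
  · exact fun _ => ex 0 (by change y * upRep x y (2, 2) = upRep x y (2, 0) * _; rw [v8, v6]; simp)

/-- If the first column of `ρ g` is `(1,0)` modulo `3`, then `g ∈ ⟨t⟩R`. -/
lemma up_coset {Q : Type*} [Group Q] {t l : Q} {k : ℕ} (h : UpRel t l k)
    (hgen : Subgroup.closure {t, l} = ⊤) (c : Q → ZMod 3 × ZMod 3) (c1 : c 1 = (1, 0))
    (hne : ∀ g, c g ≠ 0)
    (ct : ∀ g, c (t * g) = ((c g).1 + (c g).2, (c g).2)) (cl : ∀ g, c (l * g) = ((c g).1, (c g).2 - (c g).1))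
    (g : Q) (hg : c g = (1, 0)) : ∃ a : ℕ, ∃ r ∈ upR t l, g = t ^ a * r := by
  obtain ⟨π, hπ⟩ : ∃ π, π = QuotientGroup.mk' (upR t l) := ⟨_, rfl⟩
  have ker : ∀ x, π x = 1 ↔ x ∈ upR t l := fun x => by
    rw [hπ]; exact QuotientGroup.eq_one_iff x
  have t3 : π t ^ 3 = 1 := by rw [← map_pow]; exact (ker _).2 (tmem_upR t l)
  have l3 : π l ^ 3 = 1 := by rw [← map_pow]; exact (ker _).2 (lmem_upR t l)
  have hb : π l * π t * π l = π t * π l * π t := by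
    have := congrArg π h.r0
    simp only [map_mul, map_pow] at this
    have e : ∀ x : Q ⧸ upR t l, x ^ 3 = 1 → x ^ (4 + 9 * k) = x := fun x hx => by
      rw [show 4 + 9 * k = 3 * (1 + 3 * k) + 1 by ring, pow_succ, pow_mul, hx, one_pow, one_mul]
    rwa [e _ t3, e _ l3] at this
  have key := upRep_mul t3 l3 hb
  have st : ∀ g, (∃ a : ℕ, π g = upRep (π t) (π l) (c g) * π t ^ a) →
      ∃ a : ℕ, π (t * g) = upRep (π t) (π l) (c (t * g)) * π t ^ a := by
    rintro g ⟨a, ha⟩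
    obtain ⟨b, hb⟩ := (key (c g)).1
    exact ⟨b + a, by rw [map_mul, ha, ← mul_assoc, hb, ct, pow_add, mul_assoc]⟩
  have sl : ∀ g, (∃ a : ℕ, π g = upRep (π t) (π l) (c g) * π t ^ a) →
      ∃ a : ℕ, π (l * g) = upRep (π t) (π l) (c (l * g)) * π t ^ a := by
    rintro g ⟨a, ha⟩
    obtain ⟨b, hb⟩ := (key (c g)).2 (hne g)
    exact ⟨b + a, by rw [map_mul, ha, ← mul_assoc, hb, cl, pow_add, mul_assoc]⟩
  have t3' : ∀ g, π (t⁻¹ * g) = π (t * (t * g)) := fun g => by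
    simp only [map_mul, map_inv]
    rw [inv_mul_eq_iff_eq_mul, ← mul_assoc, ← mul_assoc, ← pow_two, ← pow_succ, t3, one_mul]
  have l3' : ∀ g, π (l⁻¹ * g) = π (l * (l * g)) := fun g => by
    simp only [map_mul, map_inv]
    rw [inv_mul_eq_iff_eq_mul, ← mul_assoc, ← mul_assoc, ← pow_two, ← pow_succ, l3, one_mul]
  have dec1 : ∀ p : ZMod 3 × ZMod 3, ((p.1 + p.2 + p.2 + p.2, p.2) : ZMod 3 × ZMod 3) = p := by decide
  have dec2 : ∀ p : ZMod 3 × ZMod 3, ((p.1, p.2 - p.1 - p.1 - p.1) : ZMod 3 × ZMod 3) = p := by decide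
  have ct' : ∀ g, c (t⁻¹ * g) = c (t * (t * g)) := fun g => by
    have := ct (t⁻¹ * g)
    rw [mul_inv_cancel_left] at this
    rw [ct, ct, this]
    exact (dec1 _).symm
  have cl' : ∀ g, c (l⁻¹ * g) = c (l * (l * g)) := fun g => by
    have := cl (l⁻¹ * g)
    rw [mul_inv_cancel_left] at this
    rw [cl, cl, this]
    exact (dec2 _).symm
  have all : ∀ g, ∃ a : ℕ, π g = upRep (π t) (π l) (c g) * π t ^ a := by
    intro g
    have hmem : g ∈ Subgroup.closure {t, l} := by rw [hgen]; trivial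
    induction hmem using Subgroup.closure_induction_left with
    | one => exact ⟨0, by rw [c1, show upRep (π t) (π l) (1, 0) = 1 from rfl]; simp⟩
    | mul_left x hx y _ ih =>
      rcases hx with rfl | rfl
      · exact st _ ih
      · exact sl _ ih
    | inv_mul_cancel x hx y _ ih =>
      rcases hx with rfl | rfl
      · rw [t3', ct']; exact st _ (st _ ih)
      · rw [l3', cl']; exact sl _ (sl _ ih)
  obtain ⟨a, ha⟩ := all g
  rw [hg, show upRep (π t) (π l) (1, 0) = 1 from rfl, one_mul] at ha
  refine ⟨a, (t ^ a)⁻¹ * g, ?_, by simp⟩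
  rw [← ker, map_mul, map_inv, map_pow, ha, inv_mul_cancel]

/-! ### Descent to a stabiliser -/

section descent
variable {Q : Type*} [Group Q] {m : ℕ} (ρ : Q →* Matrix.SpecialLinearGroup (Fin 2) (ZMod (3 ^ (m + 1))))

/-- The stabiliser of the vector `(1,0)` up to scalars congruent to `1` modulo `3`. -/
def stabE : Subgroup Q where
  carrier := {g | (ρ g).1 1 0 = 0 ∧ ∃ μ, (ρ g).1 0 0 = 1 + 3 * μ}
  one_mem' := ⟨by simp, 0, by simp⟩
  mul_mem' := by
    rintro g h ⟨h1, μ, h2⟩ ⟨h3, ν, h4⟩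
    refine ⟨?_, μ + ν + 3 * μ * ν, ?_⟩
    · rw [map_mul, Matrix.SpecialLinearGroup.coe_mul, Matrix.mul_apply, Fin.sum_univ_two, h1, h3]; ring
    · rw [map_mul, Matrix.SpecialLinearGroup.coe_mul, Matrix.mul_apply, Fin.sum_univ_two, h2, h3, h4]; ring
  inv_mem' := by
    rintro g ⟨h1, μ, h2⟩
    have hd := (ρ g).2
    rw [Matrix.det_fin_two, h1, h2, mul_zero, sub_zero] at hd
    refine ⟨?_, -μ * (ρ g).1 1 1, ?_⟩
    · rw [map_inv, Matrix.SpecialLinearGroup.coe_inv, Matrix.adjugate_fin_two]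
      change -((ρ g).1 1 0) = 0
      rw [h1, neg_zero]
    · rw [map_inv, Matrix.SpecialLinearGroup.coe_inv, Matrix.adjugate_fin_two]
      change (ρ g).1 1 1 = _
      linear_combination hd

variable (f : Q → (Fin 2 → ZMod (3 ^ (m + 1))) → ZMod 3)
  (hf : ∀ g h v, f (g * h) v = f g v + f h (((ρ g)⁻¹).1.mulVec v))
  (hsc : ∀ g v (μ : ZMod (3 ^ (m + 1))), f g ((1 + 3 * μ) • v) = f g v)

/-- The part of the stabiliser where the cocycle vanishes at `(1,0)`. -/
def stabK : Subgroup Q where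
  carrier := {g | g ∈ stabE ρ ∧ f g ![1, 0] = 0}
  one_mem' := ⟨one_mem _, by have := hf 1 1 ![1, 0]; simpa using this⟩
  mul_mem' := by
    rintro g h ⟨h1, h2⟩ ⟨h3, h4⟩
    refine ⟨mul_mem h1 h3, ?_⟩
    obtain ⟨e1, μ, e2⟩ := inv_mem h1
    rw [map_inv] at e1 e2
    have : ((ρ g)⁻¹).1.mulVec ![1, 0] = (1 + 3 * μ) • ![1, 0] := by
      ext i; fin_cases i
      · simpa [Matrix.mulVec, dotProduct, -Matrix.SpecialLinearGroup.coe_inv] using e2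
      · simpa [Matrix.mulVec, dotProduct, -Matrix.SpecialLinearGroup.coe_inv] using e1
    rw [hf, this, hsc, h2, h4, add_zero]
  inv_mem' := by
    rintro g ⟨h1, h2⟩
    refine ⟨inv_mem h1, ?_⟩
    obtain ⟨e1, μ, e2⟩ := h1
    have h0 := hf 1 1 ![1, 0]
    have := hf g⁻¹ g ![1, 0]
    have e : ((ρ g⁻¹)⁻¹).1.mulVec ![1, 0] = (1 + 3 * μ) • ![1, 0] := by
      rw [map_inv, inv_inv]
      ext i; fin_cases i
      · simpa [Matrix.mulVec, dotProduct] using e2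
      · simpa [Matrix.mulVec, dotProduct] using e1
    rw [e, hsc, h2, inv_mul_cancel, add_zero] at this
    rw [← this]; simpa using h0

lemma three_dvd_of (m i : ℕ) (hi : i + 2 ≤ m + 1) (b : ℤ) (x : ZMod (3 ^ (m + 1)))
    (h : (3 : ZMod (3 ^ (m + 1))) ^ (i + 1) * (b + 3 * x) = 0) : (3 : ℤ) ∣ b := by
  obtain ⟨x, rfl⟩ := ZMod.intCast_surjective x
  have : (((3 : ℤ) ^ (i + 1) * (b + 3 * x) : ℤ) : ZMod (3 ^ (m + 1))) = 0 := by
    push_cast; exact h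
  rw [ZMod.intCast_zmod_eq_zero_iff_dvd] at this
  obtain ⟨c, hc⟩ : (3 : ℤ) ^ (i + 2) ∣ 3 ^ (i + 1) * (b + 3 * x) := by
    refine dvd_trans (pow_dvd_pow 3 hi) ?_
    exact_mod_cast this
  have : b + 3 * x = 3 * c := by
    have h3 : (3 : ℤ) ^ (i + 1) ≠ 0 := by positivity
    apply mul_left_cancel₀ h3
    rw [hc, pow_succ _ (i + 1)]; ring
  exact ⟨c - x, by linarith⟩

include hf hsc in
/-- A cocycle vanishing at `(1,0)` on `t`, on `l^(3j) l t³ l⁻¹` and on `l^(3^(m+1))` vanishes at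
`(1,0)` on the whole stabiliser. An element of the stabiliser is corrected by these elements layer by
layer along the lower exponent-`3` series of `upR t l`, deep enough in which the cocycle is zero. The
choice of `j` makes the second element fix `(1,0)` up to a scalar. -/
lemma stab_descent {t l : Q} {k : ℕ} (h : UpRel t l k)
    (hgen : Subgroup.closure {t, l} = ⊤) (ϖ ϖ' : ZMod (3 ^ (m + 1))) (hϖ : ϖ = -1 + 3 * ϖ')
    (ht : (ρ t).1 = !![1, 1; 0, 1]) (hl : (ρ l).1 = !![1, 0; ϖ, 1])
    (j : ℕ) (hj : (j : ZMod (3 ^ (m + 1))) * (1 - 3 * ϖ) = ϖ)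
    (f1 : f t ![1, 0] = 0) (f2 : f ((l ^ 3) ^ j * (l * t ^ 3 * l⁻¹)) ![1, 0] = 0)
    (f3 : f (l ^ 3 ^ (m + 1)) ![1, 0] = 0) : stabE ρ ≤ stabK ρ f hf hsc := by
  obtain ⟨R, hR⟩ : ∃ R, R = upR t l := ⟨_, rfl⟩
  have hRn : R.Normal := by rw [hR]; infer_instance
  have hpow : ⁅R, R⁆ ≤ cub R ⊔ ⁅⁅R, R⁆, R⁆ := by rw [hR]; exact comm_le_of_core h hgen
  obtain ⟨H, hH⟩ : ∃ H, H = (l ^ 3) ^ j * (l * t ^ 3 * l⁻¹) := ⟨_, rfl⟩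
  have three0 : (3 : (ZMod (3 ^ (m + 1)))) ^ (m + 1) = 0 := by exact_mod_cast ZMod.natCast_self (3 ^ (m + 1))
  have tR : t ^ 3 ∈ R := by rw [hR]; exact tmem_upR t l
  have lR : l ^ 3 ∈ R := by rw [hR]; exact lmem_upR t l
  have HR : H ∈ R := by rw [hH]; exact mul_mem (pow_mem lR j) (hRn.conj_mem _ tR l)
  have cong := lowP_congD R ρ (by rw [hR]; exact upR_congD t l ρ ϖ ht hl)
  have lowm : ∀ x ∈ lowP R m, ρ x = 1 := fun x hx => by
    obtain ⟨B, hB⟩ := cong m x hx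
    apply Subtype.ext
    rw [hB, three0]; simp
  have kill : ∀ x ∈ lowP R (m + 1), f x = 0 := by
    let act : MulAction (Matrix.SpecialLinearGroup (Fin 2) (ZMod (3 ^ (m + 1)))) (Fin 2 → (ZMod (3 ^ (m + 1)))) :=
      { smul := fun g v => g.1.mulVec v
        one_smul := fun v => by change (1 : Matrix.SpecialLinearGroup (Fin 2) (ZMod (3 ^ (m + 1)))).1.mulVec v = v; simp
        mul_smul := fun g g' v => by
          change (g * g').1.mulVec v = g.1.mulVec (g'.1.mulVec v)
          rw [Matrix.mulVec_mulVec]; rfl }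
    refine coc_kill R ρ f hf hpow m ?_ lowm
    refine (congD_pgroup (m + 1)).of_injective (Subgroup.inclusion ?_) (Subgroup.inclusion_injective _)
    rintro _ ⟨r, hr, rfl⟩
    exact cong 0 r hr
  have tpow : ∀ a : ℕ, ((ρ t) ^ a).1 = !![1, (a : (ZMod (3 ^ (m + 1)))); 0, 1] := fun a => by
    induction a with
    | zero => ext i j; fin_cases i <;> fin_cases j <;> simp
    | succ a ih =>
      rw [pow_succ (ρ t) a, Matrix.SpecialLinearGroup.coe_mul, ih, ht]
      ext i j; fin_cases i <;> fin_cases j <;> simp [Matrix.mul_apply, add_comm]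
  have lpow : ∀ a : ℕ, ((ρ l) ^ a).1 = !![1, 0; a * ϖ, 1] := fun a => by
    induction a with
    | zero => ext i j; fin_cases i <;> fin_cases j <;> simp
    | succ a ih =>
      rw [pow_succ (ρ l) a, Matrix.SpecialLinearGroup.coe_mul, ih, hl]
      ext i j; fin_cases i <;> fin_cases j <;> simp [Matrix.mul_apply, add_mul]
  have linv : ((ρ l)⁻¹).1 = !![1, 0; -ϖ, 1] := by
    rw [Matrix.SpecialLinearGroup.coe_inv, Matrix.adjugate_fin_two, hl]; simp
  have lzpow : ∀ a : ℤ, ((ρ l) ^ a).1 = !![1, 0; a * ϖ, 1] := fun a => by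
    obtain ⟨a, rfl | rfl⟩ := Int.eq_nat_or_neg a
    · rw [zpow_natCast, lpow]; simp
    · rw [zpow_neg, zpow_natCast, Matrix.SpecialLinearGroup.coe_inv, Matrix.adjugate_fin_two, lpow]; simp
  set K := stabK ρ f hf hsc with hK
  have tK : t ∈ K := ⟨⟨by rw [ht]; rfl, 0, by rw [ht]; simp⟩, f1⟩
  have HK : H ∈ K := by
    refine ⟨?_, by rw [hH]; exact f2⟩
    have : (ρ H).1 = !![1 - 3 * ϖ, 3; 0, 1 + 9 * j * ϖ + 3 * ϖ] := by
      rw [hH]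
      simp only [map_mul, map_pow, map_inv, Matrix.SpecialLinearGroup.coe_mul]
      rw [tpow, hl, linv, ← pow_mul, lpow]
      ext i j
      fin_cases i <;> fin_cases j <;> simp [Matrix.mul_apply]
      · ring
      · linear_combination 3 * ϖ * hj
      · ring
    exact ⟨by rw [this]; rfl, -ϖ, by rw [this]; change 1 - 3 * ϖ = _; ring⟩
  have KE : K ≤ stabE ρ := fun x hx => hx.1
  have LK : l ^ 3 ^ (m + 1) ∈ K := by
    refine ⟨?_, f3⟩
    have : (ρ (l ^ 3 ^ (m + 1))).1 = !![1, 0; 0, 1] := by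
      rw [map_pow, lpow]; push_cast; rw [three0, zero_mul]
    exact ⟨by rw [this]; rfl, 0, by rw [this]; simp⟩
  have h0 : ∀ x ∈ R, ∃ a b c : ℤ, ∃ z ∈ lowP R 1, x = (t ^ 3) ^ a * (l ^ 3) ^ b * H ^ c * z := by
    intro x hx
    have hcomm : ∀ x ∈ R, ∀ y ∈ R, ⁅x, y⁆ ∈ lowP R 1 := fun x hx y hy => lowP_comm R (i := 0) hx hy
    obtain ⟨a, b, c, z, hz, e⟩ := (upA_mod h hgen (lowP R 1) (by rw [← hR]; exact hcomm)
      (by rw [← hR]; exact fun x hx => lowP_pow R (i := 0) hx)).2 x (by rw [← hR]; exact hx)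
    refine ⟨a, b - j * c, c, ((t ^ 3) ^ (a : ℤ) * (l ^ 3) ^ ((b : ℤ) - j * c) * H ^ (c : ℤ))⁻¹ * x, ?_, (mul_inv_cancel_left _ _).symm⟩
    obtain ⟨π, hπ⟩ : ∃ π, π = QuotientGroup.mk' (lowP R 1) := ⟨_, rfl⟩
    have ker : ∀ x, π x = 1 ↔ x ∈ lowP R 1 := fun x => by
      rw [hπ]; exact QuotientGroup.eq_one_iff x
    rw [← ker, map_mul, map_inv, inv_mul_eq_one, e, map_mul π _ z, (ker z).2 hz, mul_one]
    simp only [map_mul, map_zpow, map_pow]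
    have hHc : π H = (π l ^ 3) ^ j * (π l * π t ^ 3 * (π l)⁻¹) := by rw [hH]; simp
    have cm : Commute (π l ^ 3) (π l * π t ^ 3 * (π l)⁻¹) := by
      rw [← commutatorElement_eq_one_iff_commute]
      have := hcomm _ lR _ (hRn.conj_mem _ tR l)
      rw [← ker, map_commutatorElement] at this
      simpa using this
    rw [hHc, (cm.pow_left j).mul_zpow, zpow_natCast, zpow_natCast, zpow_natCast, ← zpow_natCast, ← pow_mul, ← zpow_natCast (π l ^ 3) (j * c),
      mul_assoc, mul_assoc, ← mul_assoc ((π l ^ 3) ^ ((b : ℤ) - j * c)), ← zpow_add]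
    push_cast
    rw [sub_add_cancel, zpow_natCast, zpow_natCast, ← mul_assoc]
    simp only [map_inv, mul_assoc]
  have span := lowP_span R hpow (t ^ 3) (l ^ 3) H tR lR HR h0
  have main : ∀ s i, i + s = m + 1 → ∀ g ∈ lowP R i, g ∈ stabE ρ → g ∈ K := by
    intro s
    induction s with
    | zero =>
      intro i hi g hg hgE
      refine ⟨hgE, ?_⟩
      rw [kill g (by rwa [← hi])]; rfl
    | succ s ih =>
      intro i hi g hg hgE
      obtain ⟨⟨mT, mL, mH⟩, sp⟩ := span i
      obtain ⟨a, b, c, z, hz, e⟩ := sp g hg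
      have TK : ((t ^ 3) ^ 3 ^ i) ^ a ∈ K := zpow_mem (pow_mem (pow_mem tK _) _) _
      have HK₂ : (H ^ 3 ^ i) ^ c ∈ K := zpow_mem (pow_mem HK _) _
      obtain ⟨Hc, hHc⟩ : ∃ Hc, Hc = (H ^ 3 ^ i) ^ c := ⟨_, rfl⟩
      obtain ⟨Tc, hTc⟩ : ∃ Tc, Tc = ((t ^ 3) ^ 3 ^ i) ^ a := ⟨_, rfl⟩
      obtain ⟨Lc, hLc⟩ : ∃ Lc, Lc = ((l ^ 3) ^ 3 ^ i) ^ b := ⟨_, rfl⟩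
      rw [← hHc] at HK₂
      rw [← hTc] at TK
      rw [← hHc, ← hTc, ← hLc] at e
      have hz' : Hc * z * Hc⁻¹ ∈ lowP R (i + 1) := (lowP_normal R _).conj_mem _ hz _
      obtain ⟨z', hz'e⟩ : ∃ z', z' = Hc * z * Hc⁻¹ := ⟨_, rfl⟩
      rw [← hz'e] at hz'
      have e' : g = Tc * (Lc * z') * Hc := by rw [e, hz'e]; simp [mul_assoc]
      have e'' : Tc⁻¹ * g * Hc⁻¹ = Lc * z' := by rw [e']; simp [mul_assoc]
      have mE : Lc * z' ∈ stabE ρ := by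
        rw [← e'']
        exact mul_mem (mul_mem (inv_mem (KE TK)) hgE) (inv_mem (KE HK₂))
      have goal : Lc * z' ∈ K := by
        rcases Nat.eq_zero_or_pos s with hs | hs
        · have hLK : Lc ∈ K := by
            rw [hLc, ← pow_mul, ← pow_succ', show i + 1 = m + 1 by omega]
            exact zpow_mem LK _
          refine mul_mem hLK (ih (i + 1) (by omega) z' hz' ?_)
          have := mul_mem (inv_mem (KE hLK)) mE
          rwa [inv_mul_cancel_left] at this
        · obtain ⟨B, hB⟩ := cong (i + 1) z' hz'
          have mE' := mE
          obtain ⟨e1, -⟩ := mE'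
          have hL : (ρ Lc).1 = !![1, 0; 3 ^ (i + 1) * b * ϖ, 1] := by
            rw [hLc, ← pow_mul, ← pow_succ', ← zpow_natCast, ← zpow_mul, map_zpow, lzpow]
            push_cast; rfl
          rw [map_mul, Matrix.SpecialLinearGroup.coe_mul, hL, hB] at e1
          have e2 : 3 ^ (i + 1) * b * ϖ * (1 + 3 ^ (i + 2) * B 0 0) + 3 ^ (i + 2) * B 1 0 = 0 := by
            simpa [Matrix.mul_apply, Fin.sum_univ_two] using e1
          obtain ⟨b', rfl⟩ := three_dvd_of m i (by omega) b
            (-(b * ϖ' + b * ϖ * 3 ^ (i + 1) * B 0 0 + B 1 0)) (by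
              rw [hϖ] at e2 ⊢
              rw [pow_succ _ (i + 1)] at e2
              linear_combination -e2)
          refine ih (i + 1) (by omega) _ (mul_mem ?_ hz') mE
          rw [hLc, zpow_mul, zpow_ofNat]
          have : ((l ^ 3) ^ 3 ^ (i + 1)) ∈ lowP R (i + 1) := (span (i + 1)).1.2.1
          have := zpow_mem this b'
          rwa [pow_succ 3 i, pow_mul] at this
      rw [e']
      exact mul_mem (mul_mem TK goal) HK₂
  -- reduction to `R`
  have d3 : 3 ∣ 3 ^ (m + 1) := dvd_pow_self 3 (by omega)
  let red : (ZMod (3 ^ (m + 1))) →+* ZMod 3 := ZMod.castHom d3 (ZMod 3)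
  have r3 : red 3 = 0 := by rw [map_ofNat]; rfl
  have rϖ : red ϖ = -1 := by rw [hϖ]; simp [r3]
  intro g hg
  obtain ⟨a, r, hr, e⟩ := up_coset h hgen (fun g => (red ((ρ g).1 0 0), red ((ρ g).1 1 0)))
    (by simp) (fun g hg => by
      have hd := congrArg red (ρ g).2
      rw [Matrix.det_fin_two] at hd
      have h1 : red ((ρ g).1 0 0) = 0 := congrArg Prod.fst hg
      have h2 : red ((ρ g).1 1 0) = 0 := congrArg Prod.snd hg
      simp only [map_sub, map_mul, map_one, h1, h2] at hd
      simp at hd) (fun g => by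
      rw [map_mul, Matrix.SpecialLinearGroup.coe_mul, ht]
      simp [Matrix.mul_apply, Fin.sum_univ_two]) (fun g => by
      rw [map_mul, Matrix.SpecialLinearGroup.coe_mul, hl]
      simp [Matrix.mul_apply, Fin.sum_univ_two, rϖ]
      ring) g (by
      obtain ⟨e1, μ, e2⟩ := hg
      rw [e1, e2]; simp [r3])
  rw [e]
  have tE := pow_mem (KE tK) a
  refine mul_mem (pow_mem tK a) (main (m + 1) 0 (by omega) r (by rw [hR]; exact hr) ?_)
  have := mul_mem (inv_mem tE) hg
  rwa [e, inv_mul_cancel_left] at this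

lemma isUnit_of_not_three_mul (m : ℕ) (x : ZMod (3 ^ (m + 1))) (h : ¬ ∃ w, x = 3 * w) : IsUnit x := by
  obtain ⟨a, rfl⟩ := ZMod.natCast_zmod_surjective x
  rw [ZMod.isUnit_iff_coprime]
  refine Nat.Coprime.pow_right _ (((Nat.Prime.coprime_iff_not_dvd Nat.prime_three).2 ?_).symm)
  rintro ⟨b, rfl⟩
  exact h ⟨b, by push_cast; ring⟩

lemma isUnit_one_add_three (m : ℕ) (y : ZMod (3 ^ (m + 1))) : IsUnit (-1 + 3 * y) := by
  apply isUnit_of_not_three_mul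
  rintro ⟨w, hw⟩
  have d3 : 3 ∣ 3 ^ (m + 1) := dvd_pow_self 3 (by omega)
  have := congrArg (ZMod.castHom d3 (ZMod 3)) hw
  have r3 : ZMod.castHom d3 (ZMod 3) 3 = 0 := by rw [map_ofNat]; rfl
  rw [map_add, map_mul, map_mul, r3, map_neg, map_one] at this
  simp at this

/-- Primitive vectors are in one orbit. -/
lemma up_transitive {t l : Q} (ϖ ϖ' : ZMod (3 ^ (m + 1))) (hϖ : ϖ = -1 + 3 * ϖ')
    (ht : (ρ t).1 = !![1, 1; 0, 1]) (hl : (ρ l).1 = !![1, 0; ϖ, 1])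
    (v : Fin 2 → ZMod (3 ^ (m + 1))) (hv : ¬ ∃ w, v = (3 : ZMod (3 ^ (m + 1))) • w) :
    ∃ g, (ρ g).1.mulVec ![1, 0] = v := by
  have hu : IsUnit ϖ := by rw [hϖ]; exact isUnit_one_add_three m ϖ'
  have tv : ∀ (a : ℕ) p q, (ρ (t ^ a)).1.mulVec ![p, q] = ![p + a * q, q] := fun a p q => by
    induction a with
    | zero => simp
    | succ a ih =>
      rw [pow_succ' t a, map_mul, Matrix.SpecialLinearGroup.coe_mul, ← Matrix.mulVec_mulVec, ih, ht]
      ext i; fin_cases i <;> simp [Matrix.mulVec, dotProduct]; ring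
  have lv : ∀ (a : ℕ) p q, (ρ (l ^ a)).1.mulVec ![p, q] = ![p, q + a * ϖ * p] := fun a p q => by
    induction a with
    | zero => simp
    | succ a ih =>
      rw [pow_succ' l a, map_mul, Matrix.SpecialLinearGroup.coe_mul, ← Matrix.mulVec_mulVec, ih, hl]
      ext i; fin_cases i <;> simp [Matrix.mulVec, dotProduct]; ring
  have unit : ∀ p q : ZMod (3 ^ (m + 1)), IsUnit p → ∃ g, (ρ g).1.mulVec ![1, 0] = ![p, q] := by
    intro p q hp
    obtain ⟨i, hi⟩ := hu.exists_right_inv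
    obtain ⟨i', hi'⟩ := hp.exists_right_inv
    refine ⟨l ^ ((q - ϖ) * i * i').val * (t ^ ((p - 1) * i).val * l ^ 1), ?_⟩
    simp only [map_mul, Matrix.SpecialLinearGroup.coe_mul]
    rw [← Matrix.mulVec_mulVec, ← Matrix.mulVec_mulVec, lv, tv, lv]
    simp only [ZMod.natCast_val, ZMod.cast_id', id_eq, Nat.cast_one]
    have e1 : 1 + (p - 1) * i * (0 + 1 * ϖ * 1) = p := by linear_combination (p - 1) * hi
    rw [e1]
    have e2 : 0 + 1 * ϖ * 1 + (q - ϖ) * i * i' * ϖ * p = q := by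
      linear_combination (q - ϖ) * (i' * p) * hi + (q - ϖ) * hi'
    rw [e2]
  by_cases h0 : ∃ w, v 0 = 3 * w
  · have h1 : ¬ ∃ w, v 0 + v 1 = 3 * w := by
      rintro ⟨w, hw⟩
      obtain ⟨w', hw'⟩ := h0
      refine hv ⟨![w', w - w'], ?_⟩
      ext i; fin_cases i
      · simpa using hw'
      · simp; linear_combination hw - hw'
    obtain ⟨g, hg⟩ := unit (v 0 + v 1) (v 1) (isUnit_of_not_three_mul m _ h1)
    refine ⟨t⁻¹ * g, ?_⟩
    rw [map_mul, Matrix.SpecialLinearGroup.coe_mul, ← Matrix.mulVec_mulVec, hg, map_inv,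
      Matrix.SpecialLinearGroup.coe_inv, Matrix.adjugate_fin_two, ht]
    ext i; fin_cases i <;> simp [Matrix.mulVec, dotProduct]
  · obtain ⟨g, hg⟩ := unit (v 0) (v 1) (isUnit_of_not_three_mul m _ h0)
    exact ⟨g, by rw [hg]; ext i; fin_cases i <;> rfl⟩

include hf hsc in
/-- A cocycle with values in functions on primitive vectors, vanishing at `(1,0)` on `t`, on
`l ^ 3 ^ n` and on one further element, is a coboundary. -/
theorem up_coboundary {t l : Q} {k : ℕ} (h : UpRel t l k)
    (hgen : Subgroup.closure {t, l} = ⊤) (ϖ ϖ' : ZMod (3 ^ (m + 1))) (hϖ : ϖ = -1 + 3 * ϖ')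
    (ht : (ρ t).1 = !![1, 1; 0, 1]) (hl : (ρ l).1 = !![1, 0; ϖ, 1])
    (hz : ∀ g v, f g ((3 : ZMod (3 ^ (m + 1))) • v) = 0)
    (j : ℕ) (hj : (j : ZMod (3 ^ (m + 1))) * (1 - 3 * ϖ) = ϖ)
    (f1 : f t ![1, 0] = 0) (f2 : f ((l ^ 3) ^ j * (l * t ^ 3 * l⁻¹)) ![1, 0] = 0)
    (f3 : f (l ^ 3 ^ (m + 1)) ![1, 0] = 0) :
    ∃ x : (Fin 2 → ZMod (3 ^ (m + 1))) → ZMod 3, (∀ v, x ((3 : ZMod (3 ^ (m + 1))) • v) = 0) ∧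
      (∀ v (μ : ZMod (3 ^ (m + 1))), x ((1 + 3 * μ) • v) = x v) ∧
      ∀ g v, f g v = x (((ρ g)⁻¹).1.mulVec v) - x v := by
  classical
  have hS := stab_descent ρ f hf hsc h hgen ϖ ϖ' hϖ ht hl j hj f1 f2 f3
  have hT := up_transitive ρ ϖ ϖ' hϖ ht hl
  set y : Fin 2 → ZMod (3 ^ (m + 1)) := ![1, 0] with hy
  have inv1 : ∀ (A : Matrix.SpecialLinearGroup (Fin 2) (ZMod (3 ^ (m + 1)))) v, A⁻¹.1.mulVec (A.1.mulVec v) = v := fun A v => by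
    rw [Matrix.mulVec_mulVec, ← Matrix.SpecialLinearGroup.coe_mul, inv_mul_cancel]; simp
  have inv2 : ∀ (A : Matrix.SpecialLinearGroup (Fin 2) (ZMod (3 ^ (m + 1)))) v, A.1.mulVec (A⁻¹.1.mulVec v) = v := fun A v => by
    rw [Matrix.mulVec_mulVec, ← Matrix.SpecialLinearGroup.coe_mul, mul_inv_cancel]; simp
  have indep : ∀ g h (μ : ZMod (3 ^ (m + 1))) v, (ρ g).1.mulVec y = v → (ρ h).1.mulVec y = (1 + 3 * μ) • v →
      f h ((1 + 3 * μ) • v) = f g v := by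
    intro g h μ v hg hh
    have hs : (ρ (g⁻¹ * h)).1.mulVec y = (1 + 3 * μ) • y := by
      rw [map_mul, Matrix.SpecialLinearGroup.coe_mul, ← Matrix.mulVec_mulVec, hh, Matrix.mulVec_smul, ← hg,
        map_inv, inv1]
    have mem : g⁻¹ * h ∈ stabE ρ := by
      refine ⟨?_, μ, ?_⟩
      · simpa [hy, Matrix.mulVec, dotProduct, -map_mul] using congrFun hs 1
      · simpa [hy, Matrix.mulVec, dotProduct, -map_mul] using congrFun hs 0
    have := hf g (g⁻¹ * h) ((1 + 3 * μ) • v)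
    have hy0 : f (g⁻¹ * h) y = 0 := (hS mem).2
    rw [mul_inv_cancel_left, Matrix.mulVec_smul, hsc, hsc, ← hg, inv1, hsc, hy0, add_zero] at this
    rw [← hg]; rw [hsc]; exact this
  let P : (Fin 2 → ZMod (3 ^ (m + 1))) → Prop := fun v => ∃ w, v = (3 : ZMod (3 ^ (m + 1))) • w
  let e : (Fin 2 → ZMod (3 ^ (m + 1))) → ZMod 3 := fun v =>
    if hv : P v then 0 else f (Classical.choose (hT v hv)) v
  have e0 : ∀ v, P v → e v = 0 := fun v hv => dif_pos hv
  have e1 : ∀ v, ¬ P v → ∀ g, (ρ g).1.mulVec y = v → e v = f g v := fun v hv g hg => by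
    have : e v = f (Classical.choose (hT v hv)) v := dif_neg hv
    rw [this]
    have := indep g (Classical.choose (hT v hv)) 0 v hg (by
      rw [Classical.choose_spec (hT v hv)]; simp)
    simpa using this
  have Pmul : ∀ (A : Matrix.SpecialLinearGroup (Fin 2) (ZMod (3 ^ (m + 1)))) v, P (A.1.mulVec v) ↔ P v := by
    have one : ∀ (A : Matrix.SpecialLinearGroup (Fin 2) (ZMod (3 ^ (m + 1)))) v, P v → P (A.1.mulVec v) := by
      rintro A _ ⟨w, rfl⟩
      exact ⟨A.1.mulVec w, by rw [Matrix.mulVec_smul]⟩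
    exact fun A v => ⟨fun hv => by simpa only [inv1] using one A⁻¹ _ hv, one A v⟩
  have Psc : ∀ (μ : ZMod (3 ^ (m + 1))) v, P v ↔ P ((1 + 3 * μ) • v) := by
    intro μ v
    constructor
    · rintro ⟨w, rfl⟩; exact ⟨(1 + 3 * μ) • w, by rw [smul_comm]⟩
    · rintro ⟨w, hw⟩
      refine ⟨w - μ • v, ?_⟩
      rw [smul_sub, ← hw, smul_smul, add_smul, one_smul, add_sub_cancel_right]
  refine ⟨fun v => - e v, fun v => by show - e _ = 0; rw [e0 _ ⟨v, rfl⟩, neg_zero], fun v μ => ?_, fun g v => ?_⟩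
  · show - e _ = - e _
    by_cases hv : P v
    · rw [e0 v hv, e0 _ ((Psc μ v).1 hv)]
    · obtain ⟨g, hg⟩ := hT v hv
      obtain ⟨h, hh⟩ := hT _ (fun hc => hv ((Psc μ v).2 hc))
      rw [e1 v hv g hg, e1 _ (fun hc => hv ((Psc μ v).2 hc)) h hh, indep g h μ v hg hh]
  · show _ = - e _ - - e _
    by_cases hv : P v
    · rw [e0 v hv, e0 _ ((Pmul _ v).2 hv)]
      obtain ⟨w, rfl⟩ := hv
      rw [hz, sub_self]
    · have hv' : ¬ P ((ρ g)⁻¹.1.mulVec v) := fun hc => hv ((Pmul _ v).1 hc)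
      obtain ⟨h, hh⟩ := hT _ hv'
      rw [e1 _ hv' h hh, e1 v hv (g * h) (by
        rw [map_mul, Matrix.SpecialLinearGroup.coe_mul, ← Matrix.mulVec_mulVec, hh, inv2]), hf]
      ring
end descent

/-! ### Symmetric powers -/

/-- Matrix of a linear substitution on binary forms of degree `d`. -/
def symMat {R : Type*} [CommRing R] (d : ℕ) (A : Matrix (Fin 2) (Fin 2) R) :
    Matrix (Fin (d + 1)) (Fin (d + 1)) R :=
  Matrix.of fun i k => ((Polynomial.C (A 0 0) * Polynomial.X + Polynomial.C (A 0 1)) ^ (k : ℕ) *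
    (Polynomial.C (A 1 0) * Polynomial.X + Polynomial.C (A 1 1)) ^ (d - k)).coeff i

/-- The vector of monomials of degree `d`. -/
def mon {R : Type*} [CommRing R] (d : ℕ) (v : Fin 2 → R) : Fin (d + 1) → R :=
  fun i => v 0 ^ (i : ℕ) * v 1 ^ (d - i)

lemma hom_step {R : Type*} [CommRing R] (n : ℕ) (p : Polynomial R) (hp : p.natDegree ≤ n)
    (a b x y : R) :
    ∑ i ∈ Finset.range (n + 1 + 1), (p * (Polynomial.C a * Polynomial.X + Polynomial.C b)).coeff i * (x ^ i * y ^ (n + 1 - i))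
      = (∑ i ∈ Finset.range (n + 1), p.coeff i * (x ^ i * y ^ (n - i))) * (a * x + b * y) := by
  have e : ∀ i, (p * (Polynomial.C a * Polynomial.X + Polynomial.C b)).coeff i * (x ^ i * y ^ (n + 1 - i))
      = a * ((p * Polynomial.X).coeff i * (x ^ i * y ^ (n + 1 - i))) + b * (p.coeff i * (x ^ i * y ^ (n + 1 - i))) := by
    intro i
    rw [mul_add, ← mul_assoc p, mul_comm p (Polynomial.C a), mul_assoc (Polynomial.C a), Polynomial.coeff_add,
      Polynomial.coeff_C_mul, Polynomial.coeff_mul_C]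
    ring
  rw [Finset.sum_congr rfl fun i _ => e i, Finset.sum_add_distrib, ← Finset.mul_sum, ← Finset.mul_sum]
  have s1 : ∀ F : ℕ → R, ∑ i ∈ Finset.range (n + 1 + 1), F i = ∑ i ∈ Finset.range (n + 1), F (i + 1) + F 0 :=
    fun F => Finset.sum_range_succ' F (n + 1)
  have s2 : ∀ F : ℕ → R, ∑ i ∈ Finset.range (n + 1 + 1), F i = ∑ i ∈ Finset.range (n + 1), F i + F (n + 1) :=
    fun F => Finset.sum_range_succ F (n + 1)
  rw [s1, s2]
  rw [Polynomial.coeff_eq_zero_of_natDegree_lt (by omega : p.natDegree < n + 1)]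
  simp only [Polynomial.coeff_mul_X, Polynomial.mul_coeff_zero, Polynomial.coeff_X_zero, mul_zero, zero_mul, add_zero]
  rw [mul_add, Finset.sum_mul, Finset.sum_mul, Finset.mul_sum, Finset.mul_sum]
  congr 1
  · refine Finset.sum_congr rfl fun i hi => ?_
    rw [Nat.add_sub_add_right, pow_succ]; ring
  · refine Finset.sum_congr rfl fun i hi => ?_
    rw [Nat.sub_add_comm (by simpa [Nat.lt_succ_iff] using hi), pow_succ]; ring

lemma natDegree_lin {R : Type*} [CommRing R] (a b : R) (k : ℕ) :
    ((Polynomial.C a * Polynomial.X + Polynomial.C b) ^ k).natDegree ≤ k :=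
  (Polynomial.natDegree_pow_le).trans (by
    simpa using Nat.mul_le_mul_left k (Polynomial.natDegree_linear_le (a := a) (b := b)))

lemma hom_pow {R : Type*} [CommRing R] (a b c e x y : R) (k l : ℕ) :
    ∑ i ∈ Finset.range (k + l + 1), ((Polynomial.C a * Polynomial.X + Polynomial.C b) ^ k * (Polynomial.C c * Polynomial.X + Polynomial.C e) ^ l).coeff i
      * (x ^ i * y ^ (k + l - i)) = (a * x + b * y) ^ k * (c * x + e * y) ^ l := by
  induction l with
  | zero =>
    simp only [pow_zero, mul_one, add_zero]
    induction k with
    | zero => simp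
    | succ k ih => 
      rw [pow_succ, hom_step k _ (natDegree_lin a b k), ih, pow_succ]
  | succ l ih =>
    rw [pow_succ, ← mul_assoc, ← add_assoc k l 1, hom_step (k + l) _ ?_, ih, pow_succ, mul_assoc]
    exact Polynomial.natDegree_mul_le.trans (add_le_add (natDegree_lin a b k) (natDegree_lin c e l))

lemma mon_symMat {R : Type*} [CommRing R] (d : ℕ) (A : Matrix (Fin 2) (Fin 2) R) (v : Fin 2 → R) :
    Matrix.vecMul (mon d v) (symMat d A) = mon d (A.mulVec v) := by
  funext k
  have hk : (k : ℕ) + (d - k) = d := by omega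
  have := hom_pow (A 0 0) (A 0 1) (A 1 0) (A 1 1) (v 0) (v 1) k (d - k)
  rw [hk] at this
  simp only [Matrix.vecMul, dotProduct, mon, symMat, Matrix.of_apply, Matrix.mulVec, Fin.sum_univ_two]
  rw [← this, Finset.sum_range]
  exact Finset.sum_congr rfl fun i _ => mul_comm _ _

lemma symMat_map {R S : Type*} [CommRing R] [CommRing S] (φ : R →+* S) (d : ℕ) (A : Matrix (Fin 2) (Fin 2) R) :
    (symMat d A).map φ = symMat d (A.map φ) := by
  ext i k
  simp only [symMat, Matrix.map_apply, Matrix.of_apply]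
  rw [← Polynomial.coeff_map]
  simp

lemma symMat_upper {R : Type*} [CommRing R] (d : ℕ) (b : R) (i k : Fin (d + 1)) (h : k ≤ i) :
    symMat d !![1, b; 0, 1] i k = if i = k then 1 else 0 := by
  simp only [symMat, Matrix.of_apply]
  simp only [Matrix.cons_val', Matrix.cons_val_zero, Matrix.cons_val_fin_one, Matrix.cons_val_one, map_one, one_mul,
    map_zero, zero_mul, zero_add, one_pow, mul_one]
  rw [Polynomial.coeff_X_add_C_pow]
  split_ifs with e
  · subst e; simp
  · rw [Nat.choose_eq_zero_of_lt (lt_of_le_of_ne h (fun hh => e (Fin.ext hh.symm)))]; simp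

/-! ### Reduction of spaces of 3-adic functions -/

/-- A nonzero bounded `ℚ_3`-valued function attains its maximal norm. -/
lemma exists_max_norm {X : Type*} (v : X → ℚ_[3]) (hv : v ≠ 0) (B : ℝ) (hB : ∀ x, ‖v x‖ ≤ B) :
    ∃ x₀, v x₀ ≠ 0 ∧ ∀ x, ‖v x‖ ≤ ‖v x₀‖ := by
  obtain ⟨x₁, hx₁⟩ := Function.ne_iff.1 hv
  have hx₁ : v x₁ ≠ 0 := hx₁
  obtain ⟨N, hN⟩ := pow_unbounded_of_one_lt B (by norm_num : (1 : ℝ) < 3)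
  obtain ⟨z, ⟨x₀, h0, hz⟩, hmin⟩ := Int.exists_least_of_bdd
    (P := fun z => ∃ x, v x ≠ 0 ∧ (v x).valuation = z) ⟨-N, by
      rintro z ⟨x, hx, rfl⟩
      by_contra hlt
      have h1 := hB x
      rw [Padic.norm_eq_zpow_neg_valuation hx] at h1
      have h2 : ((3 : ℕ) : ℝ) ^ ((N : ℤ)) ≤ ((3 : ℕ) : ℝ) ^ (-(v x).valuation) :=
        zpow_le_zpow_right₀ (by norm_num) (by omega)
      rw [zpow_natCast] at h2
      push_cast at h1 h2
      linarith⟩ ⟨_, x₁, hx₁, rfl⟩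
  refine ⟨x₀, h0, fun x => ?_⟩
  by_cases hx : v x = 0
  · rw [hx, norm_zero]; exact norm_nonneg _
  · rw [Padic.norm_eq_zpow_neg_valuation hx, Padic.norm_eq_zpow_neg_valuation h0]
    have := hmin _ ⟨x, hx, rfl⟩
    exact zpow_le_zpow_right₀ (by norm_num) (by omega)

/-- In a finite-dimensional space of bounded `ℚ_3`-valued functions there are as many integral
elements with independent reductions modulo `3` as the dimension. -/
lemma exists_reduction {X : Type*} (r : ℕ) : ∀ (S : Submodule ℚ_[3] (X → ℚ_[3])) [FiniteDimensional ℚ_[3] S],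
    Module.finrank ℚ_[3] S = r → (∀ v ∈ S, ∃ B : ℝ, ∀ x, ‖v x‖ ≤ B) →
    ∃ v : Fin r → X → ℤ_[3], (∀ i, (fun x => (v i x : ℚ_[3])) ∈ S) ∧
      LinearIndependent (ZMod 3) (fun i x => PadicInt.toZMod (v i x)) := by
  induction r with
  | zero => exact fun S _ _ _ => ⟨Fin.elim0, fun i => i.elim0, linearIndependent_empty_type⟩
  | succ r ih =>
    intro S _ hr hb
    have hpos : 0 < Module.finrank ℚ_[3] S := by omega
    obtain ⟨⟨w, hwS⟩, hw⟩ := Module.finrank_pos_iff_exists_ne_zero.1 hpos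
    have hw0 : w ≠ 0 := fun h => hw (Subtype.ext h)
    obtain ⟨B, hB⟩ := hb w hwS
    obtain ⟨x₀, h0, hmax⟩ := exists_max_norm w hw0 B hB
    have hbdd : ∀ x, ‖(w x₀)⁻¹ * w x‖ ≤ 1 := fun x => by
      rw [norm_mul, norm_inv]
      exact inv_mul_le_one_of_le₀ (hmax x) (norm_nonneg _)
    let S' : Submodule ℚ_[3] (X → ℚ_[3]) := S ⊓ LinearMap.ker (LinearMap.proj x₀)
    have hle : S' ≤ S := inf_le_left
    haveI : FiniteDimensional ℚ_[3] S' := Submodule.finiteDimensional_of_le hle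
    let ev : S →ₗ[ℚ_[3]] ℚ_[3] := (LinearMap.proj x₀).comp S.subtype
    have hsurj : Function.Surjective ev := by
      intro c
      refine ⟨(c * (w x₀)⁻¹) • ⟨w, hwS⟩, ?_⟩
      show (c * (w x₀)⁻¹) * w x₀ = c
      rw [mul_assoc, inv_mul_cancel₀ h0, mul_one]
    have hker : Module.finrank ℚ_[3] (LinearMap.ker ev) = r := by
      have := LinearMap.finrank_range_add_finrank_ker ev
      rw [LinearMap.range_eq_top.2 hsurj, finrank_top, Module.finrank_self] at this
      omega
    have hS' : Module.finrank ℚ_[3] S' = r := by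
      rw [← hker]
      have : S' = (LinearMap.ker ev).map S.subtype := by
        ext y
        simp only [S', Submodule.mem_inf, Submodule.mem_map]
        constructor
        · rintro ⟨h1, h2⟩; exact ⟨⟨y, h1⟩, h2, rfl⟩
        · rintro ⟨⟨z, hz⟩, h2, rfl⟩; exact ⟨hz, h2⟩
      rw [this]
      exact LinearEquiv.finrank_eq (Submodule.equivSubtypeMap S (LinearMap.ker ev)).symm
    obtain ⟨v, hv, hli⟩ := ih S' hS' (fun v hv => hb v (hle hv))
    let v0 : X → ℤ_[3] := fun x => ⟨(w x₀)⁻¹ * w x, hbdd x⟩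
    refine ⟨Fin.cons v0 v, ?_, ?_⟩
    · refine Fin.cases ?_ (fun i => hle (hv i))
      exact S.smul_mem (w x₀)⁻¹ hwS
    · have : (fun (i : Fin (r + 1)) x => PadicInt.toZMod ((Fin.cons v0 v : Fin (r + 1) → X → ℤ_[3]) i x))
          = Fin.cons (fun x => PadicInt.toZMod (v0 x)) (fun i x => PadicInt.toZMod (v i x)) := by
        funext i; refine Fin.cases rfl (fun i => rfl) i
      rw [this, linearIndependent_finCons]
      refine ⟨hli, fun hmem => ?_⟩
      have hz : ∀ i, v i x₀ = 0 := fun i => by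
        have := (hv i).2
        exact Subtype.ext this
      have : Submodule.span (ZMod 3) (Set.range fun i x => PadicInt.toZMod (v i x)) ≤
          LinearMap.ker (LinearMap.proj x₀ : (X → ZMod 3) →ₗ[ZMod 3] ZMod 3) := by
        rw [Submodule.span_le]
        rintro _ ⟨i, rfl⟩
        show PadicInt.toZMod (v i x₀) = 0
        rw [hz, map_zero]
      have h1 : PadicInt.toZMod (v0 x₀) = 0 := this hmem
      have h2 : v0 x₀ = 1 := Subtype.ext (inv_mul_cancel₀ h0)
      rw [h2, map_one] at h1
      exact one_ne_zero h1

/-- Independence of reductions implies independence. -/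
lemma linearIndependent_of_reduction {X : Type*} {ι : Type*} [Finite ι] (v : ι → X → ℤ_[3])
    (h : LinearIndependent (ZMod 3) (fun i x => PadicInt.toZMod (v i x))) :
    LinearIndependent ℚ_[3] (fun i x => (v i x : ℚ_[3])) := by
  classical
  cases nonempty_fintype ι
  rw [Fintype.linearIndependent_iff]
  intro a ha
  by_contra hne
  push Not at hne
  obtain ⟨i₁, hi₁⟩ := hne
  obtain ⟨i₀, h0, hmax⟩ := exists_max_norm a (fun h => hi₁ (congrFun h i₁)) (∑ i, ‖a i‖)
    (fun i => Finset.single_le_sum (f := fun i => ‖a i‖) (fun _ _ => norm_nonneg _) (Finset.mem_univ i))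
  let b : ι → ℤ_[3] := fun i => ⟨(a i₀)⁻¹ * a i, by
    rw [norm_mul, norm_inv]
    exact inv_mul_le_one_of_le₀ (hmax i) (norm_nonneg _)⟩
  have hb : ∀ x, ∑ i, b i * v i x = 0 := fun x => by
    apply Subtype.ext
    have := congrFun ha x
    simp only [Finset.sum_apply, Pi.smul_apply, smul_eq_mul, Pi.zero_apply] at this
    show ((∑ i, b i * v i x : ℤ_[3]) : ℚ_[3]) = 0
    rw [PadicInt.coe_sum]
    show ∑ i, ((b i * v i x : ℤ_[3]) : ℚ_[3]) = 0
    simp only [PadicInt.coe_mul]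
    show ∑ i, ((a i₀)⁻¹ * a i) * (v i x : ℚ_[3]) = 0
    simp only [mul_assoc]
    rw [← Finset.mul_sum, this, mul_zero]
  have := Fintype.linearIndependent_iff.1 h (fun i => PadicInt.toZMod (b i)) (by
    funext x
    simp only [Finset.sum_apply, Pi.smul_apply, smul_eq_mul, Pi.zero_apply]
    rw [← map_zero (PadicInt.toZMod (p := 3)), ← hb x, map_sum]
    simp only [map_mul]) i₀
  have h1 : b i₀ = 1 := Subtype.ext (inv_mul_cancel₀ h0)
  rw [h1, map_one] at this
  exact one_ne_zero this

/-! ### The embedding into the 3-adic numbers -/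

/-- A square root of `-2` in `ℤ_3` congruent to `1`. -/
lemma exists_sqrtm2 : ∃ z : ℤ_[3], z * z = -2 ∧ PadicInt.toZMod z = 1 := by
  obtain ⟨z, hz, hz1, -⟩ := hensels_lemma (p := 3) (F := (Polynomial.X ^ 2 + Polynomial.C 2 : Polynomial ℤ_[3])) (a := 1) (by
    have e1 : (Polynomial.aeval (1 : ℤ_[3])) (Polynomial.X ^ 2 + Polynomial.C 2 : Polynomial ℤ_[3]) = ((3 : ℕ) : ℤ_[3]) := by
      simp; norm_num
    have e2 : (Polynomial.aeval (1 : ℤ_[3])) (Polynomial.derivative (Polynomial.X ^ 2 + Polynomial.C 2 : Polynomial ℤ_[3])) = ((2 : ℕ) : ℤ_[3]) := by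
      simp; norm_num
    rw [e1, e2, PadicInt.norm_p, (PadicInt.norm_natCast_eq_one_iff).2 (by norm_num)]
    norm_num)
  have h1 : z * z = -2 := by
    simp at hz; linear_combination hz
  refine ⟨z, h1, ?_⟩
  have e2 : (Polynomial.aeval (1 : ℤ_[3])) (Polynomial.derivative (Polynomial.X ^ 2 + Polynomial.C 2 : Polynomial ℤ_[3])) = ((2 : ℕ) : ℤ_[3]) := by
      simp; norm_num
  rw [e2, (PadicInt.norm_natCast_eq_one_iff).2 (by norm_num)] at hz1
  have : z - 1 ∈ IsLocalRing.maximalIdeal ℤ_[3] := by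
    rw [IsLocalRing.mem_maximalIdeal, PadicInt.mem_nonunits]; exact hz1
  rw [← PadicInt.ker_toZMod, RingHom.mem_ker, map_sub, map_one, sub_eq_zero] at this
  exact this

/-- A `ℤ[√-2]`-linear projection `ℂ → ℚ_3`. -/
lemma exists_proj : ∃ (φ : ℤ√(-2 : ℤ) →+* ℤ_[3]) (ρ : ℂ →+ ℚ_[3]),
    PadicInt.toZMod (φ ⟨0, 1⟩) = 1 ∧ ρ 1 = 1 ∧ ∀ x z, ρ (sqrtm2Embed x * z) = (φ x : ℚ_[3]) * ρ z := by
  obtain ⟨ζ, hζ, hζ1⟩ := exists_sqrtm2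
  let P : Polynomial ℚ := Polynomial.X ^ 2 + Polynomial.C 2
  have hP : P.natDegree = 2 := by simp only [P]; compute_degree!
  haveI : Fact (Irreducible P) := ⟨by
    refine (Polynomial.irreducible_iff_roots_eq_zero_of_degree_le_three (by omega) (by omega)).2 ?_
    rw [Multiset.eq_zero_iff_forall_notMem]
    intro a ha
    have := (Polynomial.mem_roots'.1 ha).2
    simp [P] at this
    nlinarith [sq_nonneg a]⟩
  have hω : sqrtm2Embed ⟨0, 1⟩ * sqrtm2Embed ⟨0, 1⟩ = -2 := by
    rw [← map_mul]
    have : (⟨0, 1⟩ : ℤ√(-2 : ℤ)) * ⟨0, 1⟩ = -2 := by ext <;> simp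
    rw [this, map_neg, neg_inj]; exact map_ofNat sqrtm2Embed 2
  let i : AdjoinRoot P →+* ℂ := AdjoinRoot.lift (algebraMap ℚ ℂ) (sqrtm2Embed ⟨0, 1⟩) (by
    simp [P]; linear_combination hω)
  let ψ : AdjoinRoot P →+* ℚ_[3] := AdjoinRoot.lift (algebraMap ℚ ℚ_[3]) (ζ : ℚ_[3]) (by
    have := congrArg (fun x : ℤ_[3] => (x : ℚ_[3])) hζ
    have h2 : ((2 : ℤ_[3]) : ℚ_[3]) = 2 := map_ofNat PadicInt.Coe.ringHom 2
    simp [P]; push_cast at this; rw [h2] at this; linear_combination this)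
  let φ : ℤ√(-2 : ℤ) →+* ℤ_[3] := Zsqrtd.lift ⟨ζ, by rw [hζ]; simp⟩
  let κ : ℤ√(-2 : ℤ) →+* AdjoinRoot P := Zsqrtd.lift ⟨AdjoinRoot.root P, by
    have := AdjoinRoot.eval₂_root P
    simp [P] at this
    push_cast
    linear_combination this⟩
  have hi : ∀ x, i (κ x) = sqrtm2Embed x := fun x => by
    have : i.comp κ = sqrtm2Embed := by
      apply Zsqrtd.hom_ext
      show i (κ ⟨0, 1⟩) = _
      simp [κ, i, Zsqrtd.lift]; rfl
    exact congrArg (fun h => h x) this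
  have hψ : ∀ x, ψ (κ x) = (φ x : ℚ_[3]) := fun x => by
    have : ψ.comp κ = (PadicInt.Coe.ringHom).comp φ := by
      apply Zsqrtd.hom_ext
      show ψ (κ ⟨0, 1⟩) = ((φ ⟨0, 1⟩ : ℤ_[3]) : ℚ_[3])
      simp [κ, φ, ψ, Zsqrtd.lift]
    exact congrArg (fun h => h x) this
  let _ : Algebra (AdjoinRoot P) ℂ := i.toAlgebra
  obtain ⟨p, hp⟩ := LinearMap.exists_leftInverse_of_injective (Algebra.linearMap (AdjoinRoot P) ℂ)
    (LinearMap.ker_eq_bot.2 i.injective)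
  refine ⟨φ, ψ.toAddMonoidHom.comp p.toAddMonoidHom, ?_, ?_, ?_⟩
  · simpa [φ, Zsqrtd.lift] using hζ1
  · have : p 1 = 1 := by
      have := congrArg (fun h => h 1) hp
      simpa using this
    show ψ (p 1) = 1
    rw [this, map_one]
  · intro x z
    show ψ (p (sqrtm2Embed x * z)) = _ * ψ (p z)
    rw [← hi, ← hψ, ← map_mul]
    congr 1
    exact p.map_smul (κ x) z

/-! ### Reductions of forms modulo 3 -/

/-- The vanishing `3 ^ n`-th difference of a polynomial of degree `< 3 ^ n`, modulo `3`. -/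
lemma poly_cong (n : ℕ) (P : Polynomial ℚ_[3]) (hP : P.natDegree < 3 ^ n) (h : ℕ → ℤ_[3])
    (hh : ∀ s : ℕ, (h s : ℚ_[3]) = P.eval (s : ℚ_[3])) :
    PadicInt.toZMod (h (3 ^ n)) = PadicInt.toZMod (h 0) := by
  have odd : Odd (3 ^ n) := Odd.pow (by decide)
  have hch : ∀ k, k ≠ 0 → k ≠ 3 ^ n → 3 ∣ (3 ^ n).choose k := fun k h0 h1 =>
    Nat.Prime.dvd_choose_pow Nat.prime_three h0 h1
  generalize 3 ^ n = N at *
  obtain ⟨M, rfl⟩ : ∃ M, N = M + 1 := ⟨N - 1, by omega⟩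
  have e := fwdDiff_iter_eq_sum_shift (1 : ℚ_[3]) (P.eval) (M + 1) 0
  rw [Polynomial.fwdDiff_iter_eq_zero_of_degree_lt hP] at e
  have e2 : ∑ k ∈ Finset.range (M + 1 + 1), ((-1 : ℤ_[3]) ^ (M + 1 - k) * ((M + 1).choose k : ℤ_[3])) * h k = 0 := by
    apply Subtype.ext
    show PadicInt.Coe.ringHom _ = PadicInt.Coe.ringHom 0
    rw [map_sum, map_zero]
    refine Eq.trans (Finset.sum_congr rfl fun k _ => ?_) e.symm
    rw [map_mul, map_mul, map_pow, map_neg, map_one, map_natCast]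
    show _ * (h k : ℚ_[3]) = _
    rw [hh]
    simp
  have e3 := congrArg PadicInt.toZMod e2
  rw [map_zero, map_sum, Finset.sum_range_succ, Finset.sum_range_succ'] at e3
  rw [Finset.sum_eq_zero] at e3
  · simp at e3
    rw [Odd.neg_one_pow odd] at e3
    linear_combination e3
  · intro k hk
    obtain ⟨b, hb⟩ := hch (k + 1) (by omega) (by have := Finset.mem_range.1 hk; omega)
    rw [hb, map_mul, map_mul]
    have : PadicInt.toZMod (p := 3) ((3 * b : ℕ) : ℤ_[3]) = 0 := by
      rw [map_natCast]; push_cast; rw [show (3 : ZMod 3) = 0 from rfl, zero_mul]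
    rw [this]; ring

/-- The value of the form with coefficients `c`. -/
def formVal (d : ℕ) (c : Fin (d + 1) → ℚ_[3]) (v : Fin 2 → ℤ_[3]) : ℚ_[3] :=
  mon d (fun i => (v i : ℚ_[3])) ⬝ᵥ c

lemma formVal_smul (d : ℕ) (c : Fin (d + 1) → ℚ_[3]) (a : ℤ_[3]) (v : Fin 2 → ℤ_[3]) :
    formVal d c (a • v) = (a : ℚ_[3]) ^ d * formVal d c v := by
  simp only [formVal, dotProduct, mon, Finset.mul_sum]
  refine Finset.sum_congr rfl fun i _ => ?_
  simp only [Pi.smul_apply, smul_eq_mul, PadicInt.coe_mul, mul_pow]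
  have : (a : ℚ_[3]) ^ d = (a : ℚ_[3]) ^ (i : ℕ) * (a : ℚ_[3]) ^ (d - i) := by
    rw [← pow_add]; congr 1; omega
  rw [this]; ring

/-- Reductions of integral-valued forms of degree `d < 3 ^ n` are functions modulo `3 ^ n`. -/
lemma form_cong (d n : ℕ) (hd : d < 3 ^ n) (c : Fin (d + 1) → ℚ_[3]) (g : (Fin 2 → ℤ_[3]) → ℤ_[3])
    (hg : ∀ v, (g v : ℚ_[3]) = formVal d c v) (v w : Fin 2 → ℤ_[3]) :
    PadicInt.toZMod (g (v + (3 ^ n : ℤ_[3]) • w)) = PadicInt.toZMod (g v) := by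
  let P : Polynomial ℚ_[3] := ∑ i : Fin (d + 1), Polynomial.C (c i) *
    ((Polynomial.C (w 0 : ℚ_[3]) * Polynomial.X + Polynomial.C (v 0 : ℚ_[3])) ^ (i : ℕ) *
     (Polynomial.C (w 1 : ℚ_[3]) * Polynomial.X + Polynomial.C (v 1 : ℚ_[3])) ^ (d - i))
  have hP : P.natDegree < 3 ^ n := by
    refine lt_of_le_of_lt (Polynomial.natDegree_sum_le_of_forall_le _ _ (n := d) fun i _ => ?_) hd
    refine (Polynomial.natDegree_C_mul_le _ _).trans (Polynomial.natDegree_mul_le.trans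
      ((add_le_add (natDegree_lin _ _ _) (natDegree_lin _ _ _)).trans ?_))
    omega
  have := poly_cong n P hP (fun s => g (v + (s : ℤ_[3]) • w)) (fun s => by
    rw [hg]
    simp only [P, formVal, dotProduct, mon, Polynomial.eval_finset_sum]
    refine Finset.sum_congr rfl fun i _ => ?_
    simp
    ring)
  simpa using this

/-! ### Orbit counting -/

/-- Functions modulo `3 ^ n` vanishing on imprimitive vectors and invariant under scaling by
`1 + 3 μ`. -/
def USub (n : ℕ) : Submodule (ZMod 3) ((Fin 2 → ZMod (3 ^ n)) → ZMod 3) where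
  carrier := {φ | (∀ v, φ ((3 : ZMod (3 ^ n)) • v) = 0) ∧
    ∀ (v) (μ : ZMod (3 ^ n)), φ ((1 + 3 * μ) • v) = φ v}
  add_mem' := fun {a b} ha hb => ⟨fun v => by simp [ha.1, hb.1], fun v μ => by simp [ha.2, hb.2]⟩
  zero_mem' := ⟨fun v => rfl, fun v μ => rfl⟩
  smul_mem' := fun c a ha => ⟨fun v => by simp [ha.1], fun v μ => by simp [ha.2]⟩

/-- Elements of `USub` invariant under a linear substitution. -/
def UInv (n : ℕ) (A : Matrix (Fin 2) (Fin 2) (ZMod (3 ^ n))) : Submodule (ZMod 3) ((Fin 2 → ZMod (3 ^ n)) → ZMod 3) where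
  carrier := {φ | φ ∈ USub n ∧ ∀ v, φ (A.mulVec v) = φ v}
  add_mem' := fun {a b} ha hb => ⟨add_mem ha.1 hb.1, fun v => congrArg₂ (· + ·) (ha.2 v) (hb.2 v)⟩
  zero_mem' := ⟨zero_mem _, fun v => rfl⟩
  smul_mem' := fun c a ha => ⟨Submodule.smul_mem _ c ha.1, fun v => congrArg (c * ·) (ha.2 v)⟩

lemma one_add_three_inv (n : ℕ) (y : ZMod (3 ^ n)) : ∃ μ, (1 + 3 * μ) * (1 + 3 * y) = 1 := by
  have hn : IsNilpotent (3 * y) := ⟨n, by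
    rw [mul_pow]
    have : ((3 : ZMod (3 ^ n)) ^ n) = ((3 ^ n : ℕ) : ZMod (3 ^ n)) := by push_cast; rfl
    rw [this, ZMod.natCast_self, zero_mul]⟩
  obtain ⟨i, hi⟩ := hn.isUnit_one_add.exists_right_inv
  exact ⟨- y * i, by linear_combination (-3 * y) * hi⟩

/-- The sign `1` or `-1` attached to a Boolean. -/
def sgB {R : Type*} [Ring R] (e : Bool) : R := if e then 1 else -1

lemma unit_scale (n c : ℕ) (hc : ¬ 3 ∣ c) :
    ∃ (e : Bool) (μ : ZMod (3 ^ n)), (1 + 3 * μ) * (c : ZMod (3 ^ n)) = sgB e := by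
  rcases (by omega : c % 3 = 1 ∨ c % 3 = 2) with h | h
  · obtain ⟨μ, hμ⟩ := one_add_three_inv n ((c / 3 : ℕ) : ZMod (3 ^ n))
    refine ⟨true, μ, ?_⟩
    have hc' : (c : ZMod (3 ^ n)) = 1 + 3 * ((c / 3 : ℕ) : ZMod (3 ^ n)) := by
      have : c = 1 + 3 * (c / 3) := by omega
      conv_lhs => rw [this]
      push_cast; rfl
    rw [hc', hμ]; rfl
  · obtain ⟨μ, hμ⟩ := one_add_three_inv n (-((c / 3 + 1 : ℕ) : ZMod (3 ^ n)))
    refine ⟨false, μ, ?_⟩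
    have hc' : (c : ZMod (3 ^ n)) = -(1 + 3 * (-((c / 3 + 1 : ℕ) : ZMod (3 ^ n)))) := by
      have : c + 1 = 3 * (c / 3 + 1) := by omega
      have := congrArg (fun x : ℕ => (x : ZMod (3 ^ n))) this
      push_cast at this ⊢
      linear_combination this
    rw [hc', mul_neg, hμ]; rfl

/-- Vectors meeting every orbit of primitive vectors modulo `3 ^ (2 * p)` under translations
`!![1, 1; 0, 1]` and scalars `1 + 3 μ`: the vectors `(x, ± 3^j)` with `j < p` and `x < 3^j`, where
translation changes `x` by multiples of `3^j`, and the vectors `(± 1, 3^p y)`. -/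
def repT (p : ℕ) : Bool × ((Σ j : Fin p, Fin (3 ^ (j : ℕ))) ⊕ Fin (3 ^ p)) → Fin 2 → ZMod (3 ^ (2 * p))
  | (e, Sum.inl ⟨j, x⟩) => ![((x : ℕ) : ZMod (3 ^ (2 * p))), sgB e * 3 ^ (j : ℕ)]
  | (e, Sum.inr y) => ![sgB e, 3 ^ p * ((y : ℕ) : ZMod (3 ^ (2 * p)))]

lemma repT_eq_zero (p : ℕ) (hp : 1 ≤ p) (φ : (Fin 2 → ZMod (3 ^ (2 * p))) → ZMod 3)
    (hφ : φ ∈ UInv (2 * p) !![1, 1; 0, 1]) (h0 : ∀ r, φ (repT p r) = 0) : φ = 0 := by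
  obtain ⟨⟨h3, hsc⟩, ht⟩ := hφ
  have shN : ∀ (k : ℕ) a b, φ ![a + k * b, b] = φ ![a, b] := fun k a b => by
    induction k with
    | zero => simp
    | succ k ih =>
      rw [← ih, ← ht ![a + k * b, b]]
      congr 1
      ext i; fin_cases i <;> simp [Matrix.mulVec, dotProduct]; ring
  have sh : ∀ (k a b), φ ![a + k * b, b] = φ ![a, b] := fun k a b => by
    have := shN k.val a b
    rwa [ZMod.natCast_zmod_val] at this
  have hsq : (3 : ZMod (3 ^ (2 * p))) ^ p * 3 ^ p = 0 := by
    rw [← pow_add, ← two_mul]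
    have : ((3 : ZMod (3 ^ (2 * p))) ^ (2 * p)) = ((3 ^ (2 * p) : ℕ) : ZMod (3 ^ (2 * p))) := by push_cast; rfl
    rw [this, ZMod.natCast_self]
  have sq : ∀ e : Bool, (sgB e : ZMod (3 ^ (2 * p))) * sgB e = 1 := by
    intro e; cases e <;> simp [sgB]
  funext v
  have hv : v = ![((v 0).val : ZMod (3 ^ (2 * p))), ((v 1).val : ZMod (3 ^ (2 * p)))] := by
    ext i; fin_cases i <;> simp
  generalize (v 0).val = a at hv
  generalize (v 1).val = b at hv
  subst hv
  show φ _ = 0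
  by_cases hb : 3 ^ p ∣ b
  · obtain ⟨y, rfl⟩ := hb
    by_cases ha : 3 ∣ a
    · obtain ⟨x, rfl⟩ := ha
      rw [← h3 ![(x : ZMod (3 ^ (2 * p))), 3 ^ (p - 1) * y]]
      congr 1
      ext i; fin_cases i
      · simp
      · obtain ⟨q, rfl⟩ : ∃ q, p = q + 1 := ⟨p - 1, by omega⟩
        simp [pow_succ]; ring
    · obtain ⟨e, μ, hμ⟩ := unit_scale (2 * p) a ha
      rw [← hsc _ μ]
      obtain ⟨z, hz⟩ : ∃ z : ℕ, (1 + 3 * μ) * (y : ZMod (3 ^ (2 * p))) = z :=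
        ⟨((1 + 3 * μ) * (y : ZMod (3 ^ (2 * p)))).val, (ZMod.natCast_zmod_val _).symm⟩
      rw [← h0 (e, Sum.inr ⟨z % 3 ^ p, Nat.mod_lt _ (by positivity)⟩)]
      congr 1
      ext i; fin_cases i
      · simpa [repT] using hμ
      · have := congrArg (fun x : ℕ => (x : ZMod (3 ^ (2 * p)))) (Nat.mod_add_div z (3 ^ p))
        simp [repT]
        push_cast at this
        linear_combination 3 ^ p * hz - 3 ^ p * this + ((z / 3 ^ p : ℕ) : ZMod (3 ^ (2 * p))) * hsq
  · have hb0 : b ≠ 0 := fun h => hb (h ▸ dvd_zero _)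
    obtain ⟨j, c, hc, rfl⟩ := Nat.exists_eq_pow_mul_and_not_dvd hb0 3 (by norm_num)
    have hj : j < p := by
      by_contra hj
      exact hb ((pow_dvd_pow 3 (by omega)).mul_right c)
    obtain ⟨e, μ, hμ⟩ := unit_scale (2 * p) c hc
    rw [← hsc _ μ]
    obtain ⟨z, hz⟩ : ∃ z : ℕ, (1 + 3 * μ) * (a : ZMod (3 ^ (2 * p))) = z :=
      ⟨((1 + 3 * μ) * (a : ZMod (3 ^ (2 * p)))).val, (ZMod.natCast_zmod_val _).symm⟩
    rw [← h0 (e, Sum.inl ⟨⟨j, hj⟩, ⟨z % 3 ^ j, Nat.mod_lt _ (by positivity)⟩⟩)]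
    simp only [repT]
    rw [← sh (sgB e * ((z / 3 ^ j : ℕ) : ZMod (3 ^ (2 * p))))]
    have := congrArg (fun x : ℕ => (x : ZMod (3 ^ (2 * p)))) (Nat.mod_add_div z (3 ^ j))
    push_cast at this
    congr 1
    ext i; fin_cases i
    · simp
      linear_combination hz - this - 3 ^ j * ((z / 3 ^ j : ℕ) : ZMod (3 ^ (2 * p))) * sq e
    · simp
      linear_combination 3 ^ j * hμ

lemma sum_three_pow (p : ℕ) : 2 * ∑ j : Fin p, 3 ^ (j : ℕ) + 1 = 3 ^ p := by
  induction p with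
  | zero => simp
  | succ p ih => rw [Fin.sum_univ_castSucc]; simp only [Fin.val_castSucc, Fin.val_last]; rw [pow_succ]; omega

lemma finrank_UInv_upper (p : ℕ) (hp : 1 ≤ p) :
    Module.finrank (ZMod 3) (UInv (2 * p) !![1, 1; 0, 1]) ≤ 3 * 3 ^ p := by
  let ev : UInv (2 * p) !![1, 1; 0, 1] →ₗ[ZMod 3] (Bool × ((Σ j : Fin p, Fin (3 ^ (j : ℕ))) ⊕ Fin (3 ^ p)) → ZMod 3) :=
    (LinearMap.funLeft (ZMod 3) (ZMod 3) (repT p)).comp (Submodule.subtype _)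
  have hinj : Function.Injective ev := by
    rw [← LinearMap.ker_eq_bot, LinearMap.ker_eq_bot']
    rintro ⟨φ, hφ⟩ h
    exact Subtype.ext (repT_eq_zero p hp φ hφ (fun r => congrFun h r))
  refine (LinearMap.finrank_le_finrank_of_injective hinj).trans ?_
  rw [Module.finrank_fintype_fun_eq_card]
  simp only [Fintype.card_prod, Fintype.card_bool, Fintype.card_sum, Fintype.card_sigma, Fintype.card_fin]
  have := sum_three_pow p
  omega

lemma finrank_UInv_lower (p : ℕ) (hp : 1 ≤ p) (ϖ : ZMod (3 ^ (2 * p))) (hϖ : IsUnit ϖ) :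
    Module.finrank (ZMod 3) (UInv (2 * p) !![1, 0; ϖ, 1]) ≤ 3 * 3 ^ p := by
  refine le_trans ?_ (finrank_UInv_upper p hp)
  let sw : (Fin 2 → ZMod (3 ^ (2 * p))) → (Fin 2 → ZMod (3 ^ (2 * p))) := fun v => ![v 1, v 0]
  have key : ∀ φ ∈ UInv (2 * p) !![1, 0; ϖ, 1], (fun v => φ (sw v)) ∈ UInv (2 * p) !![1, 1; 0, 1] := by
    rintro φ ⟨⟨h3, hsc⟩, hl⟩
    have ss : ∀ (a : ZMod (3 ^ (2 * p))) v, sw (a • v) = a • sw v := fun a v => by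
      ext i; fin_cases i <;> simp [sw]
    have shN : ∀ (k : ℕ) a b, φ ![a, b + k * ϖ * a] = φ ![a, b] := fun k a b => by
      induction k with
      | zero => simp
      | succ k ih =>
        rw [← ih, ← hl ![a, b + k * ϖ * a]]
        congr 1
        ext i; fin_cases i <;> simp [Matrix.mulVec, dotProduct]; ring
    refine ⟨⟨fun v => by simp only [ss]; exact h3 _, fun v μ => by simp only [ss]; exact hsc _ _⟩, fun v => ?_⟩
    obtain ⟨i, hi⟩ := hϖ.exists_left_inv
    have := shN i.val (v 1) (v 0)
    rw [ZMod.natCast_zmod_val, hi, one_mul] at this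
    simp only [sw]
    rw [← this]
    congr 1
    ext i; fin_cases i <;> simp [Matrix.mulVec, dotProduct]
  let f : UInv (2 * p) !![1, 0; ϖ, 1] →ₗ[ZMod 3] UInv (2 * p) !![1, 1; 0, 1] :=
    (LinearMap.funLeft (ZMod 3) (ZMod 3) sw).restrict key
  refine LinearMap.finrank_le_finrank_of_injective (f := f) ?_
  rw [← LinearMap.ker_eq_bot, LinearMap.ker_eq_bot']
  rintro ⟨φ, hφ⟩ h
  apply Subtype.ext
  funext v
  have := congrFun (congrArg Subtype.val h) (sw v)
  have e : sw (sw v) = v := by ext i; fin_cases i <;> simp [sw]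
  change φ (sw (sw v)) = 0 at this
  rw [e] at this
  exact this

/-! ### Coboundaries for four generators -/

section descentQ
variable {S : Type*} [Group S] {m : ℕ} (ρ : S →* Matrix.SpecialLinearGroup (Fin 2) (ZMod (3 ^ (m + 1))))
  (f : S → (Fin 2 → ZMod (3 ^ (m + 1))) → ZMod 3)
  (hf : ∀ g h v, f (g * h) v = f g v + f h (((ρ g)⁻¹).1.mulVec v))

include hf in
lemma coc_one' (v) : f 1 v = 0 := by
  have := hf 1 1 v
  simpa using this

/-- The subgroup of elements acting trivially on which a cocycle vanishes is normal. -/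
def cocKer : Subgroup S where
  carrier := {g | ρ g = 1 ∧ ∀ v, f g v = 0}
  one_mem' := ⟨map_one _, coc_one' ρ f hf⟩
  mul_mem' := fun {a b} ha hb => ⟨by rw [map_mul, ha.1, hb.1, one_mul], fun v => by
    rw [hf, ha.2, hb.2, add_zero]⟩
  inv_mem' := fun {a} ha => ⟨by rw [map_inv, ha.1, inv_one], fun v => by
    have := hf a⁻¹ a v
    rw [inv_mul_cancel, coc_one' ρ f hf, ha.2, add_zero] at this
    exact this.symm⟩

lemma cocKer_normal : (cocKer ρ f hf).Normal := ⟨fun n hn g => ⟨by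
    rw [map_mul, map_mul, hn.1, mul_one, ← map_mul, mul_inv_cancel, map_one], fun v => by
    have h1 := hf g g⁻¹ v
    rw [mul_inv_cancel, coc_one' ρ f hf] at h1
    rw [hf, hf, hn.2, map_mul, hn.1, mul_one, add_zero]
    exact h1.symm⟩⟩

include hf in
/-- A cocycle of a group generated by `t, u, l, x`, with values in functions modulo `3^(m+1)`, is a
coboundary once it vanishes on `u t^(-(4+9k))` and `x l^(-(4+9k))` and at `(1,0)` on three elements.
Dividing by `cocKer` reduces to `u = t^(4+9k)`, `x = l^(4+9k)`, where `up_coboundary` applies. -/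
theorem coc_coboundary {t u l x : S} {k : ℕ} (hgen : Subgroup.closure {t, u, l, x} = ⊤)
    (r3 : (l * (u * t⁻¹)) ^ 3 = 1)
    (r4 : (t * (x * l⁻¹)) ^ 3 = 1) (r0 : l * u * l = t * x * t)
    (ϖ ϖ' : ZMod (3 ^ (m + 1))) (hϖ : ϖ = -1 + 3 * ϖ')
    (ht : (ρ t).1 = !![1, 1; 0, 1]) (hl : (ρ l).1 = !![1, 0; ϖ, 1])
    (hu : ρ u = ρ t ^ (4 + 9 * k)) (hx : ρ x = ρ l ^ (4 + 9 * k))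
    (hU : ∀ g, f g ∈ USub (m + 1))
    (j : ℕ) (hj : (j : ZMod (3 ^ (m + 1))) * (1 - 3 * ϖ) = ϖ)
    (k1 : f (u * (t ^ (4 + 9 * k))⁻¹) = 0) (k2 : f (x * (l ^ (4 + 9 * k))⁻¹) = 0)
    (f1 : f t ![1, 0] = 0) (f2 : f ((l ^ 3) ^ j * (l * t ^ 3 * l⁻¹)) ![1, 0] = 0)
    (f3 : f (l ^ 3 ^ (m + 1)) ![1, 0] = 0) :
    ∃ y ∈ USub (m + 1), ∀ g v, f g v = y (((ρ g)⁻¹).1.mulVec v) - y v := by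
  let N := cocKer ρ f hf
  haveI : N.Normal := cocKer_normal ρ f hf
  let ρ' : S ⧸ N →* Matrix.SpecialLinearGroup (Fin 2) (ZMod (3 ^ (m + 1))) := QuotientGroup.lift N ρ fun a ha => ha.1
  let f' : S ⧸ N → (Fin 2 → ZMod (3 ^ (m + 1))) → ZMod 3 := fun q => f q.out
  have hf' : ∀ g : S, f' (g : S ⧸ N) = f g := by
    intro g
    obtain ⟨h, hh⟩ := QuotientGroup.mk_out_eq_mul N g
    funext v
    show f (Quotient.out (g : S ⧸ N)) v = f g v
    rw [hh, hf, h.2.2, add_zero]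
  have hρ' : ∀ g : S, ρ' (g : S ⧸ N) = ρ g := fun g => rfl
  have eu : (u : S ⧸ N) = (t : S ⧸ N) ^ (4 + 9 * k) := by
    have : u * (t ^ (4 + 9 * k))⁻¹ ∈ N := ⟨by rw [map_mul, map_inv, map_pow, hu, mul_inv_cancel], fun v => congrFun k1 v⟩
    have h1 := (QuotientGroup.eq_one_iff _).2 this
    rw [QuotientGroup.mk_mul, QuotientGroup.mk_inv, mul_inv_eq_one] at h1
    rw [h1, QuotientGroup.mk_pow]
  have ex : (x : S ⧸ N) = (l : S ⧸ N) ^ (4 + 9 * k) := by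
    have : x * (l ^ (4 + 9 * k))⁻¹ ∈ N := ⟨by rw [map_mul, map_inv, map_pow, hx, mul_inv_cancel], fun v => congrFun k2 v⟩
    have h1 := (QuotientGroup.eq_one_iff _).2 this
    rw [QuotientGroup.mk_mul, QuotientGroup.mk_inv, mul_inv_eq_one] at h1
    rw [h1, QuotientGroup.mk_pow]
  have pw : ∀ y : S ⧸ N, y ^ (4 + 9 * k) * y⁻¹ = y ^ (3 + 9 * k) := fun y => by
    rw [show 4 + 9 * k = (3 + 9 * k) + 1 by ring, pow_succ, mul_inv_cancel_right]
  have rel : UpRel (t : S ⧸ N) (l : S ⧸ N) k := by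
    refine ⟨?_, ?_, ?_⟩
    · have := congrArg (QuotientGroup.mk (s := N)) r0
      simp only [QuotientGroup.mk_mul] at this
      rwa [eu, ex] at this
    · have := congrArg (QuotientGroup.mk (s := N)) r3
      simp only [QuotientGroup.mk_mul, QuotientGroup.mk_pow, QuotientGroup.mk_inv] at this
      rw [eu, pw] at this
      exact this
    · have := congrArg (QuotientGroup.mk (s := N)) r4
      simp only [QuotientGroup.mk_mul, QuotientGroup.mk_pow, QuotientGroup.mk_inv] at this
      rw [ex, pw] at this
      exact this
  have gen : Subgroup.closure {(t : S ⧸ N), (l : S ⧸ N)} = ⊤ := by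
    rw [eq_top_iff, ← Subgroup.map_top_of_surjective _ (QuotientGroup.mk'_surjective N), ← hgen,
      MonoidHom.map_closure, Subgroup.closure_le]
    have mt : (t : S ⧸ N) ∈ Subgroup.closure {(t : S ⧸ N), (l : S ⧸ N)} := Subgroup.subset_closure (by simp)
    have ml : (l : S ⧸ N) ∈ Subgroup.closure {(t : S ⧸ N), (l : S ⧸ N)} := Subgroup.subset_closure (by simp)
    rintro _ ⟨y, hy, rfl⟩
    simp only [Set.mem_insert_iff, Set.mem_singleton_iff] at hy
    rcases hy with rfl | rfl | rfl | rfl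
    · exact mt
    · show ((_ : S) : S ⧸ N) ∈ _
      rw [eu]; exact pow_mem mt _
    · exact ml
    · show ((_ : S) : S ⧸ N) ∈ _
      rw [ex]; exact pow_mem ml _
  obtain ⟨y, y1, y2, y3⟩ := up_coboundary ρ' f' (by
      intro g h v
      induction g using QuotientGroup.induction_on with | H g => ?_
      induction h using QuotientGroup.induction_on with | H h => ?_
      rw [← QuotientGroup.mk_mul, hf', hf', hf', hρ', hf])
    (by intro g v μ; exact (hU _).2 v μ) rel gen ϖ ϖ' hϖ ht hl
    (by intro g v; exact (hU _).1 v) j hj (by rw [hf']; exact f1)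
    (by rw [← QuotientGroup.mk_pow, ← QuotientGroup.mk_pow, ← QuotientGroup.mk_pow, ← QuotientGroup.mk_mul, ← QuotientGroup.mk_inv, ← QuotientGroup.mk_mul, ← QuotientGroup.mk_mul, hf']; exact f2)
    (by rw [← QuotientGroup.mk_pow, hf']; exact f3)
  exact ⟨y, ⟨y1, y2⟩, fun g v => by
    have h3 := y3 (g : S ⧸ N) v
    rw [hf'] at h3
    exact h3⟩
end descentQ

/-! ### Rank of spaces of cocycles -/

instance neZero_three_pow (n : ℕ) : NeZero (3 ^ n) := ⟨by positivity⟩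

section rankcoc
variable {S : Type} [Group S] {m : ℕ} (ρ : S →* Matrix.SpecialLinearGroup (Fin 2) (ZMod (3 ^ (m + 1))))

/-- Cocycles with values in a space of functions modulo `3 ^ (m + 1)`. -/
def CocL (L : Submodule (ZMod 3) ((Fin 2 → ZMod (3 ^ (m + 1))) → ZMod 3)) :
    Submodule (ZMod 3) (S → (Fin 2 → ZMod (3 ^ (m + 1))) → ZMod 3) where
  carrier := {f | (∀ g h v, f (g * h) v = f g v + f h (((ρ g)⁻¹).1.mulVec v)) ∧ ∀ g, f g ∈ L}
  add_mem' := fun {a b} ha hb => ⟨fun g h v => by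
    simp only [Pi.add_apply, ha.1 g h, hb.1 g h]; ring, fun g => add_mem (ha.2 g) (hb.2 g)⟩
  zero_mem' := ⟨fun _ _ _ => by simp, fun _ => zero_mem _⟩
  smul_mem' := fun c a ha => ⟨fun g h v => by
    simp only [Pi.smul_apply, ha.1 g h, smul_add], fun g => Submodule.smul_mem _ c (ha.2 g)⟩

lemma coc_central {L : Submodule (ZMod 3) ((Fin 2 → ZMod (3 ^ (m + 1))) → ZMod 3)}
    {f : S → (Fin 2 → ZMod (3 ^ (m + 1))) → ZMod 3} (hf : f ∈ CocL ρ L) (hL : L ≤ USub (m + 1))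
    {z t : S} (hz : ρ z = 1) (hzt : z * t = t * z) : f z ∈ UInv (m + 1) (ρ t).1 := by
  refine ⟨hL (hf.2 z), fun v => ?_⟩
  have h1 := hf.1 z t ((ρ t).1.mulVec v)
  have h2 := hf.1 t z ((ρ t).1.mulVec v)
  rw [hzt, h2, hz] at h1
  rw [Matrix.mulVec_mulVec, ← Matrix.SpecialLinearGroup.coe_mul, inv_mul_cancel] at h1
  simp only [inv_one, Matrix.SpecialLinearGroup.coe_one, Matrix.one_mulVec] at h1
  linear_combination -h1

/-- The space of cocycles with values in `L` has dimension at most `dim L + 2 bT + bL + 3`. A cocycle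
`f` is sent to `f (u t^(-(4+9k)))`, `f (x l^(-(4+9k)))` and three scalars. The two functions are
invariant under `t` and `l` respectively, because `u` commutes with `t` and `x` with `l`, and so lie
in spaces of dimension at most `bT` and `bL`. The kernel consists of coboundaries of functions `y`
with `t y - y ∈ L`, a space of dimension at most `dim L + bT`. -/
theorem rank_CocL (L : Submodule (ZMod 3) ((Fin 2 → ZMod (3 ^ (m + 1))) → ZMod 3)) (hL : L ≤ USub (m + 1))
    {t u l x : S} {k : ℕ} (hgen : Subgroup.closure {t, u, l, x} = ⊤)
    (r1 : t * u = u * t) (r2 : l * x = x * l)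
    (r3 : (l * (u * t⁻¹)) ^ 3 = 1)
    (r4 : (t * (x * l⁻¹)) ^ 3 = 1) (r0 : l * u * l = t * x * t)
    (ϖ ϖ' : ZMod (3 ^ (m + 1))) (hϖ : ϖ = -1 + 3 * ϖ')
    (ht : (ρ t).1 = !![1, 1; 0, 1]) (hl : (ρ l).1 = !![1, 0; ϖ, 1])
    (hu : ρ u = ρ t ^ (4 + 9 * k)) (hx : ρ x = ρ l ^ (4 + 9 * k))
    (j : ℕ) (hj : (j : ZMod (3 ^ (m + 1))) * (1 - 3 * ϖ) = ϖ) (bT bL : ℕ)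
    (hT : Module.finrank (ZMod 3) (UInv (m + 1) !![1, 1; 0, 1]) ≤ bT)
    (hB : Module.finrank (ZMod 3) (UInv (m + 1) !![1, 0; ϖ, 1]) ≤ bL) :
    Module.rank (ZMod 3) (CocL ρ L) ≤ ((Module.finrank (ZMod 3) L + 2 * bT + bL + 3 : ℕ) : Cardinal) := by
  have hz1 : ρ (u * (t ^ (4 + 9 * k))⁻¹) = 1 := by rw [map_mul, map_inv, map_pow, hu, mul_inv_cancel]
  have hz2 : ρ (x * (l ^ (4 + 9 * k))⁻¹) = 1 := by rw [map_mul, map_inv, map_pow, hx, mul_inv_cancel]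
  have c1 : u * (t ^ (4 + 9 * k))⁻¹ * t = t * (u * (t ^ (4 + 9 * k))⁻¹) := by
    have : Commute t (u * (t ^ (4 + 9 * k))⁻¹) :=
      Commute.mul_right r1 (((Commute.refl t).pow_right _).inv_right)
    exact this.eq.symm
  have c2 : x * (l ^ (4 + 9 * k))⁻¹ * l = l * (x * (l ^ (4 + 9 * k))⁻¹) := by
    have : Commute l (x * (l ^ (4 + 9 * k))⁻¹) :=
      Commute.mul_right r2 (((Commute.refl l).pow_right _).inv_right)
    exact this.eq.symm
  -- the obstruction map
  let Φ : CocL ρ L →ₗ[ZMod 3] (UInv (m + 1) !![1, 1; 0, 1]) × (UInv (m + 1) !![1, 0; ϖ, 1]) × (Fin 3 → ZMod 3) :=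
    { toFun := fun f => (⟨f.1 _, by have := coc_central ρ f.2 hL hz1 c1; rwa [ht] at this⟩,
        ⟨f.1 _, by have := coc_central ρ f.2 hL hz2 c2; rwa [hl] at this⟩,
        ![f.1 t ![1, 0], f.1 ((l ^ 3) ^ j * (l * t ^ 3 * l⁻¹)) ![1, 0], f.1 (l ^ 3 ^ (m + 1)) ![1, 0]])
      map_add' := fun a b => by
        refine Prod.ext (Subtype.ext rfl) (Prod.ext (Subtype.ext rfl) ?_)
        funext i; fin_cases i <;> rfl
      map_smul' := fun c a => by
        refine Prod.ext (Subtype.ext rfl) (Prod.ext (Subtype.ext rfl) ?_)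
        funext i; fin_cases i <;> rfl }
  -- functions whose `t`-difference lies in `L`
  let D : ((Fin 2 → ZMod (3 ^ (m + 1))) → ZMod 3) →ₗ[ZMod 3] (S → (Fin 2 → ZMod (3 ^ (m + 1))) → ZMod 3) :=
    { toFun := fun y g v => y (((ρ g)⁻¹).1.mulVec v) - y v
      map_add' := fun a b => by funext g v; simp only [Pi.add_apply]; ring
      map_smul' := fun c a => by funext g v; simp only [Pi.smul_apply, smul_eq_mul, RingHom.id_apply]; ring }
  let W : Submodule (ZMod 3) ((Fin 2 → ZMod (3 ^ (m + 1))) → ZMod 3) :=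
    USub (m + 1) ⊓ L.comap ((LinearMap.proj t).comp D)
  have hW : Module.finrank (ZMod 3) W ≤ Module.finrank (ZMod 3) L + bT := by
    let q : W →ₗ[ZMod 3] L := ((LinearMap.proj t).comp (D.comp W.subtype)).codRestrict L fun y => y.2.2
    have h1 := q.finrank_range_add_finrank_ker
    have h2 : Module.finrank (ZMod 3) (LinearMap.range q) ≤ Module.finrank (ZMod 3) L := Submodule.finrank_le _
    have h3 : Module.finrank (ZMod 3) (LinearMap.ker q) ≤ Module.finrank (ZMod 3) (UInv (m + 1) !![1, 1; 0, 1]) := by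
      refine LinearMap.finrank_le_finrank_of_injective (f := (W.subtype.comp (LinearMap.ker q).subtype).codRestrict _ ?_) ?_
      · rintro ⟨⟨y, hy⟩, hq⟩
        refine ⟨hy.1, fun v => ?_⟩
        have h4 := congrFun (congrArg Subtype.val hq) ((ρ t).1.mulVec v)
        have h5 : y (((ρ t)⁻¹).1.mulVec ((ρ t).1.mulVec v)) - y ((ρ t).1.mulVec v) = 0 := h4
        rw [Matrix.mulVec_mulVec, ← Matrix.SpecialLinearGroup.coe_mul, inv_mul_cancel,
          Matrix.SpecialLinearGroup.coe_one, Matrix.one_mulVec, ht] at h5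
        exact (sub_eq_zero.1 h5).symm
      · intro a b h
        have h' : (a.1.1 : (Fin 2 → ZMod (3 ^ (m + 1))) → ZMod 3) = b.1.1 := congrArg (fun z => (z : UInv (m + 1) !![1, 1; 0, 1]).1) h
        exact Subtype.ext (Subtype.ext h')
    omega
  have hker : (LinearMap.ker Φ).map (CocL ρ L).subtype ≤ W.map D := by
    rintro _ ⟨⟨f, hf⟩, hk, rfl⟩
    have hk' : Φ ⟨f, hf⟩ = 0 := hk
    have e1 := congrArg Subtype.val (congrArg Prod.fst hk')
    have e2 := congrArg Subtype.val (congrArg (fun q => q.2.1) hk')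
    have e3 := congrArg (fun q => q.2.2) hk'
    obtain ⟨y, hy, hfy⟩ := coc_coboundary ρ f hf.1 hgen r3 r4 r0 ϖ ϖ' hϖ ht hl hu hx
      (fun g => hL (hf.2 g)) j hj e1 e2 (congrFun e3 0) (congrFun e3 1) (congrFun e3 2)
    have hD : D y = f := by funext g v; exact (hfy g v).symm
    refine ⟨y, ⟨hy, ?_⟩, hD⟩
    show D y t ∈ L
    rw [hD]; exact hf.2 t
  have k1 : Module.rank (ZMod 3) (LinearMap.ker Φ) ≤ ((Module.finrank (ZMod 3) L + bT : ℕ) : Cardinal) := by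
    rw [LinearEquiv.rank_eq (Submodule.equivMapOfInjective (CocL ρ L).subtype Subtype.val_injective (LinearMap.ker Φ))]
    refine (Submodule.rank_mono hker).trans ?_
    refine (rank_map_le D W).trans ?_
    rw [← Module.finrank_eq_rank]
    exact_mod_cast hW
  have k2 : Module.rank (ZMod 3) (LinearMap.range Φ) ≤ ((bT + (bL + 3) : ℕ) : Cardinal) := by
    refine (Submodule.rank_le _).trans ?_
    rw [← Module.finrank_eq_rank, Module.finrank_prod, Module.finrank_prod, Module.finrank_fin_fun]
    exact_mod_cast Nat.add_le_add hT (Nat.add_le_add_right hB 3)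
  rw [← LinearMap.rank_range_add_rank_ker Φ]
  refine (add_le_add k2 k1).trans ?_
  rw [← Nat.cast_add]
  exact_mod_cast (by omega)
end rankcoc

/-! ### Filtrations and cocycles of matrices -/

/-- Dimension bound for a space of vectors whose leading components lie in a fixed space. -/
lemma rank_filtration {K M : Type} [Field K] [AddCommGroup M] [Module K M] (Z : Submodule K M) (z : ℕ)
    (hZ : Module.rank K Z ≤ (z : Cardinal)) (N : ℕ) : ∀ (V : Submodule K (Fin N → M)),
    (∀ Φ ∈ V, ∀ i, (∀ k, i < k → Φ k = 0) → Φ i ∈ Z) → Module.rank K V ≤ ((N * z : ℕ) : Cardinal) := by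
  induction N with
  | zero =>
    intro V _
    haveI : Subsingleton V := ⟨fun a b => Subtype.ext (Subsingleton.elim _ _)⟩
    rw [rank_subsingleton']; simp
  | succ N ih =>
    intro V hV
    let q : V →ₗ[K] Z := ((LinearMap.proj (Fin.last N)).comp V.subtype).codRestrict Z fun Φ =>
      hV Φ.1 Φ.2 _ fun k hk => absurd hk (not_lt_of_ge (Fin.le_last k))
    let R : (Fin (N + 1) → M) →ₗ[K] (Fin N → M) := LinearMap.funLeft K M Fin.castSucc
    have hq : ∀ Φ : V, q Φ = 0 → Φ.1 (Fin.last N) = 0 := fun Φ h => congrArg Subtype.val h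
    have inj : Function.Injective (R.comp (V.subtype.comp (LinearMap.ker q).subtype)) := by
      refine (injective_iff_map_eq_zero _).2 ?_
      rintro ⟨⟨Φ, hΦ⟩, hk⟩ h
      apply Subtype.ext; apply Subtype.ext
      funext i
      refine Fin.lastCases ?_ (fun i => ?_) i
      · exact hq _ hk
      · exact congrFun h i
    have h1 := LinearMap.rank_range_add_rank_ker q
    have h2 : Module.rank K (LinearMap.range q) ≤ (z : Cardinal) := (Submodule.rank_le _).trans hZ
    have h3 : Module.rank K (LinearMap.ker q) ≤ ((N * z : ℕ) : Cardinal) := by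
      rw [(LinearEquiv.ofInjective _ inj).rank_eq]
      apply ih
      rintro _ ⟨⟨⟨Φ, hΦ⟩, hk⟩, rfl⟩ i hi
      refine hV Φ hΦ i.castSucc fun k hk' => ?_
      revert hk'
      refine Fin.lastCases (fun _ => hq _ hk) (fun k hk' => hi k (by simpa using hk')) k
    rw [← h1]
    refine (add_le_add h2 h3).trans ?_
    rw [← Nat.cast_add]
    exact_mod_cast (by rw [Nat.succ_mul]; omega)

/-- Cocycles for the representation `F ↦ m(γ) F m'(γ)ᵀ` on square matrices. -/
def CocMat {R : Type*} [CommRing R] {S : Type*} [Group S] (Q Q' : S →* Matrix.SpecialLinearGroup (Fin 2) R) (d : ℕ) :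
    Submodule R (S → Matrix (Fin (d + 1)) (Fin (d + 1)) R) where
  carrier := {F | ∀ g h, F (g * h) = F g + symMat d ((Q g)⁻¹).1 * F h * (symMat d ((Q' g)⁻¹).1).transpose}
  add_mem' := fun {a b} ha hb g h => by
    simp only [Pi.add_apply, ha g h, hb g h, Matrix.mul_add, Matrix.add_mul]; abel
  zero_mem' := fun g h => by simp
  smul_mem' := fun c a ha g h => by
    simp only [Pi.smul_apply, ha g h, smul_add, Matrix.mul_smul, Matrix.smul_mul]

/-- Reduction of a vector modulo `3 ^ n`. -/
def redv (n : ℕ) (v : Fin 2 → ℤ_[3]) : Fin 2 → ZMod (3 ^ n) := fun i => PadicInt.toZModPow n (v i)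

lemma redv_surjective (n : ℕ) : Function.Surjective (redv n) := fun v =>
  ⟨fun i => ((v i).val : ℤ_[3]), by funext i; simp [redv]⟩

lemma redv_eq (n : ℕ) (v w : Fin 2 → ℤ_[3]) (h : redv n v = redv n w) : ∃ x, w = v + (3 ^ n : ℤ_[3]) • x := by
  have : ∀ i, ∃ y, w i - v i = 3 ^ n * y := fun i => by
    have h1 : w i - v i ∈ RingHom.ker (PadicInt.toZModPow (p := 3) n) := by
      rw [RingHom.mem_ker, map_sub, sub_eq_zero]; exact (congrFun h i).symm
    rw [PadicInt.ker_toZModPow, Ideal.mem_span_singleton] at h1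
    exact_mod_cast h1
  choose y hy using this
  exact ⟨y, by funext i; simp only [Pi.add_apply, Pi.smul_apply, smul_eq_mul, ← hy]; ring⟩

lemma redv_mulVec (n : ℕ) (A : Matrix (Fin 2) (Fin 2) ℤ_[3]) (v : Fin 2 → ℤ_[3]) :
    redv n (A.mulVec v) = (A.map (PadicInt.toZModPow n)).mulVec (redv n v) := by
  funext i; simp [redv, Matrix.mulVec, dotProduct, Fin.sum_univ_two]

lemma formVal_add (d : ℕ) (a b : Fin (d + 1) → ℚ_[3]) (v) : formVal d (a + b) v = formVal d a v + formVal d b v :=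
  dotProduct_add _ _ _
lemma formVal_smul' (d : ℕ) (a : ℚ_[3]) (b : Fin (d + 1) → ℚ_[3]) (v) : formVal d (a • b) v = a * formVal d b v :=
  dotProduct_smul _ _ _

lemma toZMod_surj (c : ZMod 3) : ∃ a : ℤ_[3], PadicInt.toZMod a = c :=
  ⟨(c.val : ℤ_[3]), by simp⟩

/-- Reductions modulo `3` of binary forms of degree `d` taking integral values. -/
def Lbar (d n : ℕ) : Submodule (ZMod 3) ((Fin 2 → ZMod (3 ^ n)) → ZMod 3) where
  carrier := {φ | ∃ (c : Fin (d + 1) → ℚ_[3]) (g : (Fin 2 → ℤ_[3]) → ℤ_[3]),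
    (∀ v, (g v : ℚ_[3]) = formVal d c v) ∧ ∀ v, φ (redv n v) = PadicInt.toZMod (g v)}
  add_mem' := by
    rintro a b ⟨c, g, h1, h2⟩ ⟨c', g', h1', h2'⟩
    exact ⟨c + c', g + g', fun v => by simp [h1, h1', formVal_add], fun v => by simp [h2, h2']⟩
  zero_mem' := ⟨0, 0, fun v => by simp [formVal], fun v => by simp⟩
  smul_mem' := by
    rintro s a ⟨c, g, h1, h2⟩
    obtain ⟨e, rfl⟩ := toZMod_surj s
    exact ⟨(e : ℚ_[3]) • c, fun v => e * g v, fun v => by simp [h1, formVal_smul'], fun v => by simp [h2]⟩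

lemma Lbar_le (d n : ℕ) (hd : 1 ≤ d) : Lbar d n ≤ USub n := by
  rintro φ ⟨c, g, h1, h2⟩
  have key : ∀ (a : ℤ_[3]) (v : Fin 2 → ℤ_[3]), φ (PadicInt.toZModPow n a • redv n v) = PadicInt.toZMod a ^ d * φ (redv n v) := by
    intro a v
    have : PadicInt.toZModPow n a • redv n v = redv n (a • v) := by
      funext i; simp [redv]
    rw [this, h2, h2, ← map_pow, ← map_mul]
    congr 1
    apply Subtype.ext
    show ((g (a • v) : ℤ_[3]) : ℚ_[3]) = ((a ^ d * g v : ℤ_[3]) : ℚ_[3])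
    rw [h1, formVal_smul, ← h1]
    simp
  refine ⟨fun v => ?_, fun v μ => ?_⟩
  · obtain ⟨v, rfl⟩ := redv_surjective n v
    have := key 3 v
    rw [map_ofNat, map_ofNat] at this
    rw [this, show (OfNat.ofNat 3 : ZMod 3) = 0 from rfl, zero_pow (by omega), zero_mul]
  · obtain ⟨v, rfl⟩ := redv_surjective n v
    obtain ⟨e, he⟩ : ∃ e : ℤ_[3], PadicInt.toZModPow n e = μ := ⟨(μ.val : ℤ_[3]), by simp⟩
    have := key (1 + 3 * e) v
    rw [map_add, map_mul, map_one, map_ofNat, he, map_add, map_mul, map_one, map_ofNat] at this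
    rw [this, show (OfNat.ofNat 3 : ZMod 3) = 0 from rfl, zero_mul, add_zero, one_pow, one_mul]

lemma finrank_Lbar (d n : ℕ) : Module.finrank (ZMod 3) (Lbar d n) ≤ d + 1 := by
  let b := Module.finBasis (ZMod 3) (Lbar d n)
  choose c g h1 h2 using fun i => (b i).2
  have i1 : LinearIndependent (ZMod 3) (fun i v => PadicInt.toZMod (g i v)) := by
    have : LinearIndependent (ZMod 3) (fun i => (b i).1) :=
      b.linearIndependent.map' (Lbar d n).subtype (Submodule.ker_subtype _)
    have := this.map' (LinearMap.funLeft (ZMod 3) (ZMod 3) (redv n))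
      (LinearMap.ker_eq_bot.2 (LinearMap.funLeft_injective_of_surjective _ _ _ (redv_surjective n)))
    have e : (fun i v => PadicInt.toZMod (g i v)) = LinearMap.funLeft (ZMod 3) (ZMod 3) (redv n) ∘ fun i => (b i).1 := by
      funext i v
      exact (h2 i v).symm
    rw [e]
    exact this
  have i2 := linearIndependent_of_reduction g i1
  let T : (Fin (d + 1) → ℚ_[3]) →ₗ[ℚ_[3]] ((Fin 2 → ℤ_[3]) → ℚ_[3]) :=
    { toFun := fun c v => formVal d c v
      map_add' := fun a b => by funext v; exact formVal_add _ _ _ _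
      map_smul' := fun a b => by funext v; exact formVal_smul' _ _ _ _ }
  have i3 : LinearIndependent ℚ_[3] c := by
    refine LinearIndependent.of_comp T ?_
    convert i2 using 1
    funext i v
    exact (h1 i v).symm
  have := i3.fintype_card_le_finrank
  simpa using this

/-! ### Reduction of 3-adic cocycles -/

section padicbound
variable {S : Type} [Group S] (P P' : S →* Matrix.SpecialLinearGroup (Fin 2) ℤ_[3]) (d m : ℕ)

/-- The homomorphism to `SL₂(ℚ₃)`. -/
def toQp (P : S →* Matrix.SpecialLinearGroup (Fin 2) ℤ_[3]) : S →* Matrix.SpecialLinearGroup (Fin 2) ℚ_[3] :=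
  (Matrix.SpecialLinearGroup.map PadicInt.Coe.ringHom).comp P

/-- Reduction modulo `3 ^ n`. -/
def toMod (n : ℕ) (P : S →* Matrix.SpecialLinearGroup (Fin 2) ℤ_[3]) : S →* Matrix.SpecialLinearGroup (Fin 2) (ZMod (3 ^ n)) :=
  (Matrix.SpecialLinearGroup.map (PadicInt.toZModPow n)).comp P

lemma toQp_inv (P : S →* Matrix.SpecialLinearGroup (Fin 2) ℤ_[3]) (γ : S) :
    ((toQp P γ)⁻¹).1 = ((P γ)⁻¹).1.map PadicInt.Coe.ringHom := by
  rw [toQp, MonoidHom.comp_apply, ← map_inv]; rfl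

lemma toMod_inv (n : ℕ) (P : S →* Matrix.SpecialLinearGroup (Fin 2) ℤ_[3]) (γ : S) :
    ((toMod n P γ)⁻¹).1 = ((P γ)⁻¹).1.map (PadicInt.toZModPow n) := by
  rw [toMod, MonoidHom.comp_apply, ← map_inv]; rfl

/-- The values of a cocycle as form-valued vectors satisfy the twisted cocycle relation. -/
lemma CocMat_val {F : S → Matrix (Fin (d + 1)) (Fin (d + 1)) ℚ_[3]} (hF : F ∈ CocMat (toQp P) (toQp P') d)
    (γ δ : S) (v : Fin 2 → ℤ_[3]) (j : Fin (d + 1)) :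
    formVal d (fun i => F (γ * δ) i j) v = formVal d (fun i => F γ i j) v +
      ∑ k, formVal d (fun i => F δ i k) (((P γ)⁻¹).1.mulVec v) * ((symMat d ((P' γ)⁻¹).1 j k : ℤ_[3]) : ℚ_[3]) := by
  have h0 := hF γ δ
  have e : ∀ (M : Matrix (Fin (d + 1)) (Fin (d + 1)) ℚ_[3]) (v : Fin 2 → ℤ_[3]) k,
      formVal d (fun i => M i k) v = Matrix.vecMul (mon d (fun i => (v i : ℚ_[3]))) M k := fun _ _ _ => rfl
  have e2 : (fun i => (((((P γ)⁻¹).1.mulVec v) i : ℤ_[3]) : ℚ_[3])) =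
      ((toQp P γ)⁻¹).1.mulVec (fun i => (v i : ℚ_[3])) := by
    rw [toQp_inv]
    funext i
    simp [Matrix.mulVec, dotProduct, Fin.sum_univ_two]
    rfl
  simp only [e, e2, h0]
  rw [Matrix.vecMul_add, Pi.add_apply, ← mon_symMat, Matrix.vecMul_vecMul, ← Matrix.vecMul_vecMul]
  congr 1
  rw [Matrix.vecMul_transpose, toQp_inv, ← symMat_map]
  simp only [Matrix.mulVec, dotProduct]
  refine Finset.sum_congr rfl fun k _ => ?_
  rw [mul_comm]
  rfl

/-- Reductions modulo `3` of cocycles with integral values. -/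
def RedCoc (n : ℕ) : Submodule (ZMod 3) (Fin (d + 1) → S → (Fin 2 → ZMod (3 ^ n)) → ZMod 3) where
  carrier := {Φ | ∃ F ∈ CocMat (toQp P) (toQp P') d, ∃ g : S → (Fin 2 → ℤ_[3]) → Fin (d + 1) → ℤ_[3],
    (∀ γ v j, (g γ v j : ℚ_[3]) = formVal d (fun i => F γ i j) v) ∧
    ∀ γ v j, Φ j γ (redv n v) = PadicInt.toZMod (g γ v j)}
  add_mem' := by
    rintro a b ⟨F, hF, g, h1, h2⟩ ⟨F', hF', g', h1', h2'⟩
    exact ⟨F + F', add_mem hF hF', g + g', fun γ v j => by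
      simp only [Pi.add_apply, PadicInt.coe_add, h1, h1', ← formVal_add]; rfl,
      fun γ v j => by simp [h2, h2']⟩
  zero_mem' := ⟨0, zero_mem _, 0, fun γ v j => by simp [formVal, dotProduct], fun γ v j => by simp⟩
  smul_mem' := by
    rintro s a ⟨F, hF, g, h1, h2⟩
    obtain ⟨e, rfl⟩ := toZMod_surj s
    exact ⟨(e : ℚ_[3]) • F, Submodule.smul_mem _ _ hF, fun γ v j => e * g γ v j, fun γ v j => by
      simp only [PadicInt.coe_mul, h1, ← formVal_smul']; rfl, fun γ v j => by simp [h2]⟩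

lemma RedCoc_lead (hup : ∀ γ, ∃ b, ((P' γ)⁻¹).1.map PadicInt.toZMod = !![1, b; 0, 1])
    {Φ} (hΦ : Φ ∈ RedCoc P P' d (m + 1)) (i : Fin (d + 1)) (hi : ∀ k, i < k → Φ k = 0) :
    Φ i ∈ CocL (toMod (m + 1) P) (Lbar d (m + 1)) := by
  obtain ⟨F, hF, g, h1, h2⟩ := hΦ
  refine ⟨fun γ δ v => ?_, fun γ => ⟨fun k => F γ k i, fun v => g γ v i, fun v => h1 _ _ _, fun v => h2 _ _ _⟩⟩
  obtain ⟨v, rfl⟩ := redv_surjective _ v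
  have h3 : g (γ * δ) v i = g γ v i + ∑ k, g δ (((P γ)⁻¹).1.mulVec v) k * symMat d ((P' γ)⁻¹).1 i k := by
    have inj : ∀ a b : ℤ_[3], PadicInt.Coe.ringHom a = PadicInt.Coe.ringHom b → a = b := fun a b h => Subtype.ext h
    apply inj
    rw [map_add, map_sum]
    simp only [map_mul]
    show ((g (γ * δ) v i : ℤ_[3]) : ℚ_[3]) = (g γ v i : ℚ_[3]) + ∑ k, ((g δ (((P γ)⁻¹).1.mulVec v) k : ℤ_[3]) : ℚ_[3]) * ((symMat d ((P' γ)⁻¹).1 i k : ℤ_[3]) : ℚ_[3])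
    simp only [h1]
    exact CocMat_val P P' d hF γ δ v i
  rw [h2, h2, h3, map_add, map_sum]
  congr 1
  obtain ⟨b, hb⟩ := hup γ
  have h4 : ∀ k, PadicInt.toZMod (symMat d ((P' γ)⁻¹).1 i k) = symMat d (!![1, b; 0, 1] : Matrix (Fin 2) (Fin 2) (ZMod 3)) i k := by
    intro k
    rw [← hb, ← symMat_map]; rfl
  rw [Finset.sum_eq_single i]
  · rw [map_mul, h4, symMat_upper d b i i le_rfl, if_pos rfl, mul_one, ← h2, redv_mulVec, toMod_inv]
  · intro k _ hk
    rw [map_mul]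
    rcases lt_or_gt_of_ne hk with h | h
    · rw [h4, symMat_upper d b i k h.le, if_neg (Ne.symm hk), mul_zero]
    · rw [← h2, hi k h]; simp
  · intro h; exact absurd (Finset.mem_univ _) h
end padicbound

/-! ### The bound for 3-adic cocycles -/

lemma norm_sum_le' {ι : Type*} (s : Finset ι) (f : ι → ℚ_[3]) (B : ℝ) (hB : 0 ≤ B) (h : ∀ i, ‖f i‖ ≤ B) :
    ‖∑ i ∈ s, f i‖ ≤ B :=
  IsUltrametricDist.norm_sum_le_of_forall_le_of_nonneg hB fun i _ => h i

lemma formVal_bound (d : ℕ) (c : Fin (d + 1) → ℚ_[3]) (B : ℝ) (hB : 0 ≤ B) (h : ∀ i, ‖c i‖ ≤ B) (v : Fin 2 → ℤ_[3]) :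
    ‖formVal d c v‖ ≤ B := by
  rw [formVal, dotProduct]
  refine norm_sum_le' _ _ B hB fun i => ?_
  rw [norm_mul]
  have : ‖mon d (fun i => (v i : ℚ_[3])) i‖ ≤ 1 := by
    have e : mon d (fun i => (v i : ℚ_[3])) i = ((v 0 ^ (i : ℕ) * v 1 ^ (d - i) : ℤ_[3]) : ℚ_[3]) := by simp [mon]
    rw [e]; exact PadicInt.norm_le_one _
  calc _ ≤ 1 * ‖c i‖ := mul_le_mul_of_nonneg_right this (norm_nonneg _)
    _ ≤ B := by rw [one_mul]; exact h i

lemma formVal_eq_zero (d : ℕ) (c : Fin (d + 1) → ℚ_[3]) (h : ∀ v, formVal d c v = 0) : c = 0 := by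
  let p : Polynomial ℚ_[3] := ∑ i : Fin (d + 1), Polynomial.C (c i) * Polynomial.X ^ (i : ℕ)
  have hp : p = 0 := by
    refine Polynomial.eq_zero_of_infinite_isRoot p (Set.Infinite.mono ?_ (Set.infinite_range_of_injective (Nat.cast_injective (R := ℚ_[3]))))
    rintro _ ⟨s, rfl⟩
    have := h ![(s : ℤ_[3]), 1]
    simp only [Set.mem_setOf_eq, Polynomial.IsRoot, p, Polynomial.eval_finset_sum]
    rw [← this]
    simp only [formVal, dotProduct, mon]
    refine Finset.sum_congr rfl fun i _ => ?_
    simp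
    ring
  funext i
  have := congrArg (fun q => Polynomial.coeff q (i : ℕ)) hp
  simp only [p, Polynomial.finset_sum_coeff, Polynomial.coeff_C_mul_X_pow, Polynomial.coeff_zero] at this
  rw [Finset.sum_eq_single i] at this
  · simpa using this
  · intro k _ hk; rw [if_neg]; exact fun h => hk (Fin.ext h.symm)
  · intro hh; exact absurd (Finset.mem_univ _) hh

section padicbound2
variable {S : Type} [Group S] (P P' : S →* Matrix.SpecialLinearGroup (Fin 2) ℤ_[3]) (d m : ℕ)

lemma entry_bound (A A' : Matrix (Fin (d + 1)) (Fin (d + 1)) ℤ_[3]) (F : Matrix (Fin (d + 1)) (Fin (d + 1)) ℚ_[3])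
    (B : ℝ) (hB : 0 ≤ B) (h : ∀ i j, ‖F i j‖ ≤ B) (i j) :
    ‖(A.map PadicInt.Coe.ringHom * F * (A'.map PadicInt.Coe.ringHom).transpose) i j‖ ≤ B := by
  have hl : ∀ (a : ℤ_[3]) (x : ℚ_[3]), ‖x‖ ≤ B → ‖PadicInt.Coe.ringHom a * x‖ ≤ B := fun a x hx => by
    rw [norm_mul]
    calc _ ≤ 1 * ‖x‖ := mul_le_mul_of_nonneg_right (PadicInt.norm_le_one a) (norm_nonneg _)
      _ ≤ B := by rwa [one_mul]
  rw [Matrix.mul_apply]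
  refine norm_sum_le' _ _ B hB fun k => ?_
  rw [mul_comm]
  refine hl _ _ ?_
  rw [Matrix.mul_apply]
  exact norm_sum_le' _ _ B hB fun l => hl _ _ (h _ _)

/-- Cocycles on a finitely generated group are bounded, because the action is integral. -/
lemma CocMat_bound (T : Set S) (hT : T.Finite) (hgen : Subgroup.closure T = ⊤)
    {F : S → Matrix (Fin (d + 1)) (Fin (d + 1)) ℚ_[3]} (hF : F ∈ CocMat (toQp P) (toQp P') d) :
    ∃ B : ℝ, 0 ≤ B ∧ ∀ γ i j, ‖F γ i j‖ ≤ B := by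
  obtain ⟨B, hB⟩ := (hT.image (fun γ => ∑ i, ∑ j, ‖F γ i j‖)).bddAbove
  refine ⟨max B 0, le_max_right _ _, ?_⟩
  have hm : ∀ (Q : S →* Matrix.SpecialLinearGroup (Fin 2) ℤ_[3]) g, symMat d ((toQp Q g)⁻¹).1 = (symMat d ((Q g)⁻¹).1).map PadicInt.Coe.ringHom := by
    intro Q g; rw [toQp_inv, symMat_map]
  have h1 : F 1 = 0 := by
    have := hF 1 1
    have e : symMat d (1 : Matrix (Fin 2) (Fin 2) ℚ_[3]) = 1 := by
      ext i k
      have : (1 : Matrix (Fin 2) (Fin 2) ℚ_[3]) = !![1, 0; 0, 1] := Matrix.one_fin_two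
      rw [this, Matrix.one_apply]
      simp only [symMat, Matrix.of_apply]
      simp [Polynomial.coeff_X_pow, Fin.ext_iff]
    simp only [mul_one, map_one, inv_one, Matrix.SpecialLinearGroup.coe_one, e, one_mul, Matrix.transpose_one] at this
    simpa using this
  have key : ∀ g h : S, (∀ i j, ‖F h i j‖ ≤ max B 0) → ∀ i j, ‖(F (g * h) - F g) i j‖ ≤ max B 0 := by
    intro g h hh i j
    rw [hF g h, add_sub_cancel_left, hm, hm]
    exact entry_bound d _ _ _ _ (le_max_right _ _) hh i j
  let G : Subgroup S :=
    { carrier := {γ | ∀ i j, ‖F γ i j‖ ≤ max B 0}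
      one_mem' := fun i j => by rw [h1]; simp
      mul_mem' := fun {a b} ha hb i j => by
        have e : F (a * b) i j = (F (a * b) - F a) i j + F a i j := by simp
        rw [e]
        exact (Padic.nonarchimedean _ _).trans (max_le (key a b hb i j) (ha i j))
      inv_mem' := fun {a} ha i j => by
        have := key a⁻¹ a ha i j
        rw [inv_mul_cancel, h1, zero_sub, Matrix.neg_apply, norm_neg] at this
        exact this }
  have hG : G = ⊤ := by
    rw [eq_top_iff, ← hgen, Subgroup.closure_le]
    intro γ hγ i j
    refine le_trans ?_ (le_max_left _ _)
    refine le_trans ?_ (hB ⟨γ, hγ, rfl⟩)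
    exact (Finset.single_le_sum (f := fun j => ‖F γ i j‖) (fun _ _ => norm_nonneg _) (Finset.mem_univ j)).trans
      (Finset.single_le_sum (f := fun i => ∑ j, ‖F γ i j‖) (fun _ _ => Finset.sum_nonneg fun _ _ => norm_nonneg _) (Finset.mem_univ i))
  intro γ
  have : γ ∈ G := hG ▸ Subgroup.mem_top γ
  exact this

/-- If the cocycles with values in the reductions of forms of degree `d` span at most `z` dimensions,
there are at most `(d + 1) z` independent `3`-adic cocycles. Independent cocycles have independent
reductions by `exists_reduction`; as the second factor acts modulo `3` by upper unipotents, the space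
of reductions is filtered with `d + 1` graded pieces, each made of cocycles of the first factor. -/
theorem padic_bound (z : ℕ) (hz : Module.rank (ZMod 3) (CocL (toMod (m + 1) P) (Lbar d (m + 1))) ≤ (z : Cardinal))
    (hdn : d < 3 ^ (m + 1)) (hup : ∀ γ, ∃ b, ((P' γ)⁻¹).1.map PadicInt.toZMod = !![1, b; 0, 1])
    (T : Set S) (hT : T.Finite) (hgen : Subgroup.closure T = ⊤)
    (r : ℕ) (F : Fin r → S → Matrix (Fin (d + 1)) (Fin (d + 1)) ℚ_[3]) (hF : ∀ i, F i ∈ CocMat (toQp P) (toQp P') d)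
    (hli : LinearIndependent ℚ_[3] F) : r ≤ (d + 1) * z := by
  let E : (S → Matrix (Fin (d + 1)) (Fin (d + 1)) ℚ_[3]) →ₗ[ℚ_[3]] (S × (Fin 2 → ℤ_[3]) × Fin (d + 1) → ℚ_[3]) :=
    { toFun := fun F x => formVal d (fun i => F x.1 i x.2.2) x.2.1
      map_add' := fun a b => by funext x; exact formVal_add _ _ _ _
      map_smul' := fun a b => by funext x; exact formVal_smul' _ _ _ _ }
  have hE : LinearMap.ker E = ⊥ := by
    refine LinearMap.ker_eq_bot'.2 fun F h => ?_
    funext γ; ext i j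
    exact congrFun (formVal_eq_zero d (fun i => F γ i j) fun v => congrFun h (γ, v, j)) i
  have i1 := hli.map' E hE
  let V : Submodule ℚ_[3] (S × (Fin 2 → ℤ_[3]) × Fin (d + 1) → ℚ_[3]) := Submodule.span ℚ_[3] (Set.range (E ∘ F))
  have hV : ∀ v ∈ V, ∃ F ∈ CocMat (toQp P) (toQp P') d, v = E F := by
    intro v hv
    have : V ≤ (CocMat (toQp P) (toQp P') d).map E := by
      rw [Submodule.span_le]
      rintro _ ⟨i, rfl⟩
      exact ⟨F i, hF i, rfl⟩
    obtain ⟨F, h, rfl⟩ := this hv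
    exact ⟨F, h, rfl⟩
  haveI : FiniteDimensional ℚ_[3] V := FiniteDimensional.span_of_finite _ (Set.finite_range _)
  have hr : Module.finrank ℚ_[3] V = r := by rw [finrank_span_eq_card i1, Fintype.card_fin]
  obtain ⟨g, hg, hgl⟩ := exists_reduction r V hr fun v hv => by
    obtain ⟨F, h, rfl⟩ := hV v hv
    obtain ⟨B, hB, h1⟩ := CocMat_bound P P' d T hT hgen h
    exact ⟨B, fun x => formVal_bound d _ B hB (fun i => h1 _ _ _) _⟩
  let lift := Function.surjInv (redv_surjective (m + 1))
  let Φ : Fin r → Fin (d + 1) → S → (Fin 2 → ZMod (3 ^ (m + 1))) → ZMod 3 := fun i j γ v =>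
    PadicInt.toZMod (g i (γ, lift v, j))
  have hΦ : ∀ i γ v j, Φ i j γ (redv (m + 1) v) = PadicInt.toZMod (g i (γ, v, j)) := by
    intro i γ v j
    obtain ⟨F', h, hF'⟩ := hV _ (hg i)
    obtain ⟨x, hx⟩ := redv_eq (m + 1) v (lift (redv (m + 1) v)) (Function.surjInv_eq (redv_surjective (m + 1)) _).symm
    show PadicInt.toZMod (g i (γ, lift (redv (m + 1) v), j)) = _
    rw [hx]
    exact form_cong d (m + 1) hdn (fun i => F' γ i j) (fun v => g i (γ, v, j)) (fun v => congrFun hF' (γ, v, j)) v x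
  have hR : ∀ i, Φ i ∈ RedCoc P P' d (m + 1) := fun i => by
    obtain ⟨F', h, hF'⟩ := hV _ (hg i)
    exact ⟨F', h, fun γ v j => g i (γ, v, j), fun γ v j => congrFun hF' (γ, v, j), fun γ v j => hΦ i γ v j⟩
  let Ψ : (Fin (d + 1) → S → (Fin 2 → ZMod (3 ^ (m + 1))) → ZMod 3) →ₗ[ZMod 3] (S × (Fin 2 → ℤ_[3]) × Fin (d + 1) → ZMod 3) :=
    { toFun := fun Φ x => Φ x.2.2 x.1 (redv (m + 1) x.2.1)
      map_add' := fun _ _ => rfl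
      map_smul' := fun _ _ => rfl }
  have i2 : LinearIndependent (ZMod 3) Φ := by
    refine LinearIndependent.of_comp Ψ ?_
    have e : Ψ ∘ Φ = fun i x => PadicInt.toZMod (g i x) := by
      funext i x; exact hΦ i x.1 x.2.1 x.2.2
    rw [e]; exact hgl
  have i3 : LinearIndependent (ZMod 3) (fun i => (⟨Φ i, hR i⟩ : RedCoc P P' d (m + 1))) :=
    LinearIndependent.of_comp (RedCoc P P' d (m + 1)).subtype i2
  have := i3.cardinal_le_rank
  have := this.trans (rank_filtration _ z hz (d + 1) (RedCoc P P' d (m + 1)) fun Φ h i hi => RedCoc_lead P P' d m hup h i hi)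
  rw [Cardinal.mk_fin] at this
  exact_mod_cast this
end padicbound2

/-! ### The subgroup generated by four unipotents -/

/-- `√-2` in `ℤ[√-2]`. -/
abbrev om : ℤ√(-2 : ℤ) := ⟨0, 1⟩
/-- Translation by `1`. -/
def gt : Bianchi2 := ⟨!![1, 1; 0, 1], by simp [Matrix.det_fin_two]⟩
/-- Translation by `√-2`. -/
def gu : Bianchi2 := ⟨!![1, om; 0, 1], by simp [Matrix.det_fin_two]⟩
/-- The lower unipotent matrix with entry `1 + √-2`. -/
def gl : Bianchi2 := ⟨!![1, 0; 1 + om, 1], by simp [Matrix.det_fin_two]⟩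
/-- The lower unipotent matrix with entry `(1 + √-2) √-2`. -/
def gx : Bianchi2 := ⟨!![1, 0; (1 + om) * om, 1], by simp [Matrix.det_fin_two]⟩

lemma g_rel1 : gt * gu = gu * gt := by decide
lemma g_rel2 : gl * gx = gx * gl := by decide
lemma g_rel3 : (gl * (gu * gt⁻¹)) ^ 3 = 1 := by decide
lemma g_rel4 : (gt * (gx * gl⁻¹)) ^ 3 = 1 := by decide
lemma g_rel0 : gl * gu * gl = gt * gx * gt := by decide

/-- The subgroup generated by the four unipotents. -/
def SS : Subgroup Bianchi2 := Subgroup.closure {gt, gu, gl, gx}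

/-- `gt` as an element of `SS`. -/
def st : SS := ⟨gt, Subgroup.subset_closure (by simp)⟩
/-- `gu` as an element of `SS`. -/
def su : SS := ⟨gu, Subgroup.subset_closure (by simp)⟩
/-- `gl` as an element of `SS`. -/
def sl : SS := ⟨gl, Subgroup.subset_closure (by simp)⟩
/-- `gx` as an element of `SS`. -/
def sx : SS := ⟨gx, Subgroup.subset_closure (by simp)⟩

lemma SS_gen : Subgroup.closure {st, su, sl, sx} = ⊤ := by
  have := Subgroup.closure_closure_coe_preimage (k := ({gt, gu, gl, gx} : Set Bianchi2))
  refine Eq.trans ?_ this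
  congr 1
  ext ⟨y, hy⟩
  show ((⟨y, hy⟩ : SS) = st ∨ (⟨y, hy⟩ : SS) = su ∨ (⟨y, hy⟩ : SS) = sl ∨ (⟨y, hy⟩ : SS) = sx) ↔
    (y = gt ∨ y = gu ∨ y = gl ∨ y = gx)
  simp only [Subtype.ext_iff]
  rfl

lemma upper_pow {R : Type*} [CommRing R] (g : Matrix.SpecialLinearGroup (Fin 2) R) (b : R) (hg : g.1 = !![1, b; 0, 1]) (k : ℕ) :
    (g ^ k).1 = !![1, k * b; 0, 1] := by
  induction k with
  | zero => simp [Matrix.one_fin_two]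
  | succ k ih =>
    rw [pow_succ, Matrix.SpecialLinearGroup.coe_mul, ih, hg, Matrix.mul_fin_two]
    simp [add_mul, add_comm]

lemma lower_pow {R : Type*} [CommRing R] (g : Matrix.SpecialLinearGroup (Fin 2) R) (b : R) (hg : g.1 = !![1, 0; b, 1]) (k : ℕ) :
    (g ^ k).1 = !![1, 0; k * b, 1] := by
  induction k with
  | zero => simp [Matrix.one_fin_two]
  | succ k ih =>
    rw [pow_succ, Matrix.SpecialLinearGroup.coe_mul, ih, hg, Matrix.mul_fin_two]
    simp [add_mul]

/-- The homomorphism attached to a ring homomorphism from `ℤ[√-2]`. -/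
def homS {R : Type*} [CommRing R] (φ : ℤ√(-2 : ℤ) →+* R) : SS →* Matrix.SpecialLinearGroup (Fin 2) R :=
  (Matrix.SpecialLinearGroup.map φ).comp SS.subtype

lemma homS_st {R : Type*} [CommRing R] (φ : ℤ√(-2 : ℤ) →+* R) : (homS φ st).1 = !![1, 1; 0, 1] := by
  ext i j
  show φ (gt.1 i j) = _
  fin_cases i <;> fin_cases j <;> simp [gt]

lemma homS_su {R : Type*} [CommRing R] (φ : ℤ√(-2 : ℤ) →+* R) : (homS φ su).1 = !![1, φ om; 0, 1] := by
  ext i j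
  show φ (gu.1 i j) = _
  fin_cases i <;> fin_cases j <;> simp [gu]

lemma homS_sl {R : Type*} [CommRing R] (φ : ℤ√(-2 : ℤ) →+* R) : (homS φ sl).1 = !![1, 0; 1 + φ om, 1] := by
  ext i j
  show φ (gl.1 i j) = _
  fin_cases i <;> fin_cases j <;> simp [gl]

lemma homS_sx {R : Type*} [CommRing R] (φ : ℤ√(-2 : ℤ) →+* R) : (homS φ sx).1 = !![1, 0; (1 + φ om) * φ om, 1] := by
  ext i j
  show φ (gx.1 i j) = _
  fin_cases i <;> fin_cases j <;> simp [gx]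

lemma homS_upper (φ : ℤ√(-2 : ℤ) →+* ZMod 3) (h : φ om = -1) (γ : SS) :
    ∃ b, (homS φ γ).1 = !![1, b; 0, 1] := by
  let G : Subgroup (Matrix.SpecialLinearGroup (Fin 2) (ZMod 3)) :=
    { carrier := {g | ∃ b, g.1 = !![1, b; 0, 1]}
      one_mem' := ⟨0, Matrix.one_fin_two⟩
      mul_mem' := by
        rintro a b ⟨x, hx⟩ ⟨y, hy⟩
        exact ⟨y + x, by rw [Matrix.SpecialLinearGroup.coe_mul, hx, hy, Matrix.mul_fin_two]; simp⟩
      inv_mem' := by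
        rintro a ⟨x, hx⟩
        exact ⟨-x, by rw [Matrix.SpecialLinearGroup.coe_inv, hx, Matrix.adjugate_fin_two]; simp⟩ }
  have hG : (⊤ : Subgroup SS) ≤ G.comap (homS φ) := by
    rw [← SS_gen, Subgroup.closure_le]
    rintro y hy
    simp only [Set.mem_insert_iff, Set.mem_singleton_iff] at hy
    rcases hy with rfl | rfl | rfl | rfl
    · exact ⟨1, homS_st φ⟩
    · exact ⟨φ om, homS_su φ⟩
    · refine ⟨0, ?_⟩
      rw [homS_sl, h]; simp
    · refine ⟨0, ?_⟩
      rw [homS_sx, h]; simp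
  exact hG (Subgroup.mem_top γ)

lemma three_dvd_of_toZMod (z : ℤ_[3]) (h : PadicInt.toZMod z = 0) : ∃ q, z = 3 * q := by
  have : z ∈ RingHom.ker (PadicInt.toZMod (p := 3)) := h
  rw [PadicInt.ker_toZMod, PadicInt.maximalIdeal_eq_span_p, Ideal.mem_span_singleton] at this
  exact_mod_cast this

lemma theta_mod_nine (θ : ℤ_[3]) (h : θ * θ = -2) (h1 : PadicInt.toZMod θ = 1) : ∃ q, θ = 4 + 9 * q := by
  obtain ⟨a, ha⟩ := three_dvd_of_toZMod (θ - 1) (by rw [map_sub, h1, map_one, sub_self])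
  have e : θ = 1 + 3 * a := by linear_combination ha
  subst e
  have h3 : (3 : ℤ_[3]) ≠ 0 := by norm_num
  have h2 : 1 + 2 * a + 3 * a * a = 0 := by
    apply mul_left_cancel₀ h3
    linear_combination h
  obtain ⟨b, hb⟩ := three_dvd_of_toZMod (a - 1) (by
    have := congrArg PadicInt.toZMod h2
    simp only [map_add, map_mul, map_one, map_ofNat, map_zero] at this
    rw [map_sub, map_one]
    generalize PadicInt.toZMod a = y at *
    revert this
    revert y
    decide)
  exact ⟨b, by linear_combination 3 * hb⟩

/-- The bound for `3`-adic cocycles of `SS`, with `√-2 ≡ 1` modulo `3` in the first factor and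
`√-2 ≡ -1` in the second, so that the lower unipotents become trivial modulo `3` in the latter. -/
theorem SS_bound (φ : ℤ√(-2 : ℤ) →+* ℤ_[3]) (hφ : PadicInt.toZMod (φ om) = 1) (d p : ℕ) (hd : 1 ≤ d) (hp : 1 ≤ p)
    (hdp : d < 3 ^ (2 * p)) (r : ℕ) (F : Fin r → SS → Matrix (Fin (d + 1)) (Fin (d + 1)) ℚ_[3])
    (hF : ∀ i, F i ∈ CocMat (toQp (homS φ)) (toQp (homS (φ.comp (starRingEnd _)))) d)
    (hli : LinearIndependent ℚ_[3] F) : r ≤ (d + 1) * ((d + 1) + 3 * (3 * 3 ^ p) + 3) := by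
  obtain ⟨m, hm⟩ : ∃ m, 2 * p = m + 1 := ⟨2 * p - 1, by omega⟩
  have hθ : φ om * φ om = -2 := by
    rw [← map_mul, show om * om = -2 from rfl, map_neg, map_ofNat]
  obtain ⟨q, hq⟩ := theta_mod_nine _ hθ hφ
  set R := PadicInt.toZModPow (p := 3) (m + 1) with hR
  have hpc : toMod (m + 1) (homS φ) = homS (R.comp φ) := rfl
  have hw : (R.comp φ) om = ((4 + 9 * (R q).val : ℕ) : ZMod (3 ^ (m + 1))) := by
    rw [RingHom.comp_apply, hq, map_add, map_mul, map_ofNat, map_ofNat]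
    push_cast
    rw [ZMod.natCast_zmod_val]
  obtain ⟨μ, hμ⟩ := one_add_three_inv (m + 1) (-(1 + (R.comp φ) om))
  have hϖ : 1 + (R.comp φ) om = -1 + 3 * (2 + 3 * R q) := by
    rw [RingHom.comp_apply, hq, map_add, map_mul, map_ofNat, map_ofNat]; ring
  have hunit : IsUnit (1 + (R.comp φ) om) := by
    obtain ⟨ν, hν⟩ := one_add_three_inv (m + 1) (-(2 + 3 * R q))
    rw [hϖ]
    exact IsUnit.of_mul_eq_one (-(1 + 3 * ν)) (by linear_combination hν)
  have hz := rank_CocL (homS (R.comp φ)) (Lbar d (m + 1)) (Lbar_le d _ hd) SS_gen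
    (t := st) (u := su) (l := sl) (x := sx) (k := (R q).val)
    (Subtype.ext g_rel1) (Subtype.ext g_rel2) (Subtype.ext g_rel3) (Subtype.ext g_rel4) (Subtype.ext g_rel0)
    (1 + (R.comp φ) om) (2 + 3 * R q) hϖ (homS_st _) (homS_sl _)
    (by
      apply Subtype.ext
      rw [homS_su, upper_pow _ 1 (homS_st _), hw, mul_one])
    (by
      apply Subtype.ext
      rw [homS_sx, lower_pow _ _ (homS_sl _), hw, mul_comm])
    ((1 + 3 * μ) * (1 + (R.comp φ) om)).val
    (by
      rw [ZMod.natCast_zmod_val]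
      linear_combination (1 + (R.comp φ) om) * hμ)
    (3 * 3 ^ p) (3 * 3 ^ p)
    (by
      have := finrank_UInv_upper p hp
      rw [hm] at this; exact this)
    (by
      have := finrank_UInv_lower p hp
      rw [hm] at this; exact this _ hunit)
  have hL := finrank_Lbar d (m + 1)
  refine padic_bound (homS φ) (homS (φ.comp (starRingEnd _))) d m _ (hz.trans ?_) (by rw [← hm]; exact hdp) ?_
    {st, su, sl, sx} (by simp) SS_gen r F hF hli
  · exact_mod_cast (by omega)
  · intro γ
    obtain ⟨b, hb⟩ := homS_upper ((PadicInt.toZMod (p := 3)).comp (φ.comp (starRingEnd _))) (by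
      rw [RingHom.comp_apply, RingHom.comp_apply, show (starRingEnd (ℤ√(-2 : ℤ))) om = -om from rfl, map_neg, map_neg, hφ]) γ⁻¹
    refine ⟨b, ?_⟩
    rw [← hb, ← map_inv]
    rfl

/-! ### Transfer from the complex to the 3-adic numbers -/

/-- A finite-dimensional space of functions has a basis dual to evaluation at suitable points. -/
lemma exists_dual_points {K I : Type} [Field K] {r : ℕ} (v : Fin r → I → K) (hv : LinearIndependent K v) :
    ∃ (κ : Type) (_ : Fintype κ) (_ : DecidableEq κ) (a : κ → I) (w : κ → I → K), Fintype.card κ = r ∧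
      (∀ k, w k ∈ Submodule.span K (Set.range v)) ∧ ∀ k l, w k (a l) = if k = l then 1 else 0 := by
  classical
  let V := Submodule.span K (Set.range v)
  haveI : FiniteDimensional K V := FiniteDimensional.span_of_finite _ (Set.finite_range _)
  have hr : Module.finrank K V = r := by rw [finrank_span_eq_card hv, Fintype.card_fin]
  let e : I → Module.Dual K V := fun x => (LinearMap.proj x).comp V.subtype
  obtain ⟨κ, a, -, hspan, hli⟩ := exists_linearIndependent' K e
  haveI : Finite κ := hli.finite
  haveI := Fintype.ofFinite κ
  have h1 : Fintype.card κ ≤ r := by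
    have := hli.fintype_card_le_finrank
    rwa [Subspace.dual_finrank_eq, hr] at this
  let Ev : V →ₗ[K] (κ → K) := LinearMap.pi fun k => e (a k)
  have inj : Function.Injective Ev := by
    refine (injective_iff_map_eq_zero Ev).2 fun w hw => ?_
    have h2 : Submodule.span K (Set.range (e ∘ a)) ≤ LinearMap.ker (Module.Dual.eval K V w) := by
      rw [Submodule.span_le]
      rintro _ ⟨k, rfl⟩
      exact congrFun hw k
    rw [hspan] at h2
    apply Subtype.ext
    funext x
    exact h2 (Submodule.subset_span ⟨x, rfl⟩)
  have h3 : r ≤ Fintype.card κ := by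
    have := LinearMap.finrank_le_finrank_of_injective inj
    rwa [hr, Module.finrank_fintype_fun_eq_card] at this
  have sur : Function.Surjective Ev :=
    (LinearMap.injective_iff_surjective_of_finrank_eq_finrank (by rw [hr, Module.finrank_fintype_fun_eq_card]; omega)).1 inj
  choose w hw using fun k : κ => sur (Pi.single k 1)
  refine ⟨κ, inferInstance, inferInstance, a, fun k => (w k).1, by omega, fun k => (w k).2, fun k l => ?_⟩
  have := congrFun (hw k) l
  rw [Pi.single_apply] at this
  rw [show (if k = l then (1 : K) else 0) = if l = k then 1 else 0 from by simp [eq_comm]]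
  exact this

lemma homS_inv {R : Type*} [CommRing R] (φ : ℤ√(-2 : ℤ) →+* R) (γ : SS) :
    ((homS φ γ)⁻¹).1 = (γ.1⁻¹).1.map φ := by
  rw [homS, MonoidHom.comp_apply, ← map_inv]; rfl

lemma embedBar_eq : sqrtm2EmbedBar = sqrtm2Embed.comp (starRingEnd _) := by
  ext
  have : (starRingEnd (ℤ√(-2 : ℤ))) Zsqrtd.sqrtd = -Zsqrtd.sqrtd := rfl
  simp [sqrtm2EmbedBar, sqrtm2Embed, this]

/-- Transfer of complex cocycles to `ℚ₃` along an additive map compatible with the embeddings. -/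
lemma CocMat_transfer (φ : ℤ√(-2 : ℤ) →+* ℤ_[3]) (ρ : ℂ →+ ℚ_[3])
    (hρ : ∀ x z, ρ (sqrtm2Embed x * z) = (φ x : ℚ_[3]) * ρ z) (d : ℕ)
    (F : SS → Matrix (Fin (d + 1)) (Fin (d + 1)) ℂ) (hF : F ∈ CocMat (homS sqrtm2Embed) (homS sqrtm2EmbedBar) d) :
    (fun γ => (F γ).map ρ) ∈ CocMat (toQp (homS φ)) (toQp (homS (φ.comp (starRingEnd _)))) d := by
  intro γ δ
  have h := hF γ δ
  have e1 : symMat d ((toQp (homS φ) γ)⁻¹).1 = (symMat d (γ.1⁻¹).1).map (PadicInt.Coe.ringHom.comp φ) := by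
    rw [toQp_inv, homS_inv, symMat_map]; rfl
  have e2 : symMat d ((toQp (homS (φ.comp (starRingEnd _))) γ)⁻¹).1 =
      (symMat d ((γ.1⁻¹).1.map (starRingEnd _))).map (PadicInt.Coe.ringHom.comp φ) := by
    rw [toQp_inv, homS_inv, symMat_map]; rfl
  have e3 : symMat d ((homS sqrtm2Embed γ)⁻¹).1 = (symMat d (γ.1⁻¹).1).map sqrtm2Embed := by
    rw [homS_inv, symMat_map]
  have e4 : symMat d ((homS sqrtm2EmbedBar γ)⁻¹).1 =
      (symMat d ((γ.1⁻¹).1.map (starRingEnd _))).map sqrtm2Embed := by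
    rw [embedBar_eq, homS_inv, symMat_map]; rfl
  rw [e1, e2]
  rw [e3, e4] at h
  have hρ' : ∀ z x, ρ (z * sqrtm2Embed x) = ρ z * (φ x : ℚ_[3]) := fun z x => by rw [mul_comm, hρ, mul_comm]
  ext i j
  simp only [Matrix.map_apply, h, Matrix.add_apply, map_add]
  congr 1
  simp only [Matrix.mul_apply, map_sum, Matrix.transpose_apply, Matrix.map_apply, hρ', hρ]
  rfl

/-- The same bound for complex cocycles of `SS`, which are transferred to `ℚ₃` so that independence is
preserved. -/
theorem SS_bound_C (d p : ℕ) (hd : 1 ≤ d) (hp : 1 ≤ p)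
    (hdp : d < 3 ^ (2 * p)) (r : ℕ) (F : Fin r → SS → Matrix (Fin (d + 1)) (Fin (d + 1)) ℂ)
    (hF : ∀ i, F i ∈ CocMat (homS sqrtm2Embed) (homS sqrtm2EmbedBar) d)
    (hli : LinearIndependent ℂ F) : r ≤ (d + 1) * ((d + 1) + 3 * (3 * 3 ^ p) + 3) := by
  obtain ⟨φ, ρ, h1, h2, h3⟩ := exists_proj
  let U : (SS → Matrix (Fin (d + 1)) (Fin (d + 1)) ℂ) →ₗ[ℂ] (SS × Fin (d + 1) × Fin (d + 1) → ℂ) :=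
    { toFun := fun F x => F x.1 x.2.1 x.2.2
      map_add' := fun _ _ => rfl
      map_smul' := fun _ _ => rfl }
  have hU : LinearMap.ker U = ⊥ := LinearMap.ker_eq_bot'.2 fun F h => by
    funext γ; ext i j; exact congrFun h (γ, i, j)
  obtain ⟨κ, _, _, a, w, hc, hw, hd'⟩ := exists_dual_points (U ∘ F) (hli.map' U hU)
  have hw' : ∀ k, ∃ G ∈ CocMat (homS sqrtm2Embed) (homS sqrtm2EmbedBar) d, U G = w k := fun k => by
    have : Submodule.span ℂ (Set.range (U ∘ F)) ≤ (CocMat (homS sqrtm2Embed) (homS sqrtm2EmbedBar) d).map U := by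
      rw [Submodule.span_le]
      rintro _ ⟨i, rfl⟩
      exact ⟨F i, hF i, rfl⟩
    exact this (hw k)
  choose G hG hGw using hw'
  let eq := (Fintype.equivFinOfCardEq hc).symm
  refine SS_bound φ h1 d p hd hp hdp r (fun i γ => (G (eq i) γ).map ρ)
    (fun i => CocMat_transfer φ ρ h3 d _ (hG (eq i))) ?_
  rw [Fintype.linearIndependent_iff]
  intro c hc i
  have h4 := congrFun hc (a (eq i)).1
  have h5 := congrFun (congrFun h4 (a (eq i)).2.1) (a (eq i)).2.2
  simp only [Finset.sum_apply, Pi.smul_apply, Matrix.sum_apply, Matrix.smul_apply, Matrix.map_apply, smul_eq_mul] at h5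
  have h6 : ∀ k l, G k (a l).1 (a l).2.1 (a l).2.2 = if k = l then 1 else 0 := fun k l => by
    rw [← hd' k l, ← hGw k]; rfl
  simp only [h6] at h5
  rw [Finset.sum_eq_single i] at h5
  · simpa [h2] using h5
  · intro k _ hk
    rw [if_neg (fun h => hk (eq.injective h)), map_zero, mul_zero]
  · intro h; exact absurd (Finset.mem_univ _) h

/-! ### Dimension of H¹ and bihomogeneous forms -/

open groupCohomology in
/-- Dimension count for `H¹ = Z¹/B¹` with `B¹ ≅ V/V^G`. -/
lemma finrank_H1 {G V : Type} [Group G] [AddCommGroup V] [Module ℂ V] [FiniteDimensional ℂ V]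
    (ρ : Representation ℂ G V) [FiniteDimensional ℂ (cocycles₁ (Rep.of ρ))] :
    Module.finrank ℂ (groupCohomology (Rep.of ρ) 1) + Module.finrank ℂ V =
      Module.finrank ℂ (cocycles₁ (Rep.of ρ)) + Module.finrank ℂ ρ.invariants := by
  have h1 := LinearMap.finrank_range_add_finrank_ker (H1π (Rep.of ρ)).hom
  have hs : Function.Surjective (H1π (Rep.of ρ)).hom :=
    (ModuleCat.epi_iff_surjective _).1 inferInstance
  rw [LinearMap.range_eq_top.2 hs, finrank_top] at h1
  have h2 := LinearMap.finrank_range_add_finrank_ker (d₀₁ (Rep.of ρ)).hom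
  have hk : LinearMap.ker (d₀₁ (Rep.of ρ)).hom = ρ.invariants := d₀₁_ker_eq_invariants _
  have hr : LinearMap.range (d₀₁ (Rep.of ρ)).hom ≤ cocycles₁ (Rep.of ρ) := by
    rintro _ ⟨x, rfl⟩
    exact d₀₁_apply_mem_cocycles₁ (A := Rep.of ρ) x
  have h3 : LinearMap.ker (H1π (Rep.of ρ)).hom =
      (LinearMap.range (d₀₁ (Rep.of ρ)).hom).comap (cocycles₁ (Rep.of ρ)).subtype := by
    ext x
    exact H1π_eq_zero_iff x
  have h4 := LinearEquiv.finrank_eq (Submodule.comapSubtypeEquivOfLe hr)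
  have h5 : Module.finrank ℂ (LinearMap.ker (H1π (Rep.of ρ)).hom) =
      Module.finrank ℂ (LinearMap.range (d₀₁ (Rep.of ρ)).hom) := by
    rw [h3]; exact h4
  have h6 : Module.finrank ℂ (LinearMap.ker (d₀₁ (Rep.of ρ)).hom) = Module.finrank ℂ ρ.invariants := by
    rw [hk]
  have h2' : Module.finrank ℂ (LinearMap.range (d₀₁ (Rep.of ρ)).hom) +
      Module.finrank ℂ (LinearMap.ker (d₀₁ (Rep.of ρ)).hom) = Module.finrank ℂ V := h2
  have h1' : Module.finrank ℂ (groupCohomology (Rep.of ρ) 1) +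
      Module.finrank ℂ (LinearMap.ker (H1π (Rep.of ρ)).hom) =
        Module.finrank ℂ (cocycles₁ (Rep.of ρ)) := h1
  omega

/-- A polynomial vanishing at all points of an infinite field is zero, in dehomogenised form. -/
lemma mon_ext1 {K : Type*} [Field K] [Infinite K] (d : ℕ) (c e : Fin (d + 1) → K)
    (h : ∀ s, mon d ![s, 1] ⬝ᵥ c = mon d ![s, 1] ⬝ᵥ e) : c = e := by
  let p : Polynomial K := ∑ i : Fin (d + 1), Polynomial.C (c i - e i) * Polynomial.X ^ (i : ℕ)
  have hp : p = 0 := by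
    refine Polynomial.funext fun s => ?_
    have := h s
    simp only [p, Polynomial.eval_finset_sum]
    simp only [dotProduct, mon] at this
    rw [← sub_eq_zero, ← Finset.sum_sub_distrib] at this
    simp only [Polynomial.eval_mul, Polynomial.eval_C, Polynomial.eval_pow, Polynomial.eval_X, Polynomial.eval_zero]
    rw [← this]
    refine Finset.sum_congr rfl fun i _ => ?_
    simp
    ring
  funext i
  have h2 : p.coeff i = 0 := by rw [hp]; simp
  rw [Polynomial.finset_sum_coeff] at h2
  simp only [Polynomial.coeff_C_mul, Polynomial.coeff_X_pow] at h2
  rw [Finset.sum_eq_single i] at h2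
  · simpa [sub_eq_zero] using h2
  · intro j _ hj
    rw [if_neg (fun h => hj (Fin.ext h.symm)), mul_zero]
  · simp

lemma mon_ext {K : Type*} [Field K] [Infinite K] (d : ℕ) (c e : Fin (d + 1) → K)
    (h : ∀ v, mon d v ⬝ᵥ c = mon d v ⬝ᵥ e) : c = e := mon_ext1 d c e fun _ => h _

/-- The bihomogeneous form with coefficient matrix `F`. -/
def bfm {K : Type*} [CommRing K] (d : ℕ) (F : Matrix (Fin (d + 1)) (Fin (d + 1)) K) (v w : Fin 2 → K) : K :=
  mon d v ⬝ᵥ F.mulVec (mon d w)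

lemma bfm_ext {K : Type*} [Field K] [Infinite K] (d : ℕ) (F F' : Matrix (Fin (d + 1)) (Fin (d + 1)) K)
    (h : ∀ v w, bfm d F v w = bfm d F' v w) : F = F' := by
  have h1 : ∀ w, F.mulVec (mon d w) = F'.mulVec (mon d w) := fun w =>
    mon_ext d _ _ fun v => h v w
  ext i j
  have := mon_ext d (F i) (F' i) fun w => by
    have := congrFun (h1 w) i
    rw [dotProduct_comm, dotProduct_comm (mon d w)]
    exact this
  exact congrFun this j

lemma bfm_act {K : Type*} [CommRing K] (d : ℕ) (F : Matrix (Fin (d + 1)) (Fin (d + 1)) K)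
    (A B : Matrix (Fin 2) (Fin 2) K) (v w : Fin 2 → K) :
    bfm d (symMat d A * F * (symMat d B).transpose) v w = bfm d F (A.mulVec v) (B.mulVec w) := by
  simp only [bfm]
  rw [← mon_symMat, ← mon_symMat, Matrix.dotProduct_mulVec, Matrix.dotProduct_mulVec,
    ← Matrix.vecMul_vecMul, ← Matrix.vecMul_vecMul, Matrix.vecMul_transpose, ← Matrix.dotProduct_mulVec,
    ← Matrix.mulVec_transpose (symMat d B) (mon d w), Matrix.mulVec_transpose, dotProduct_comm,
    Matrix.dotProduct_mulVec, dotProduct_comm, Matrix.dotProduct_mulVec]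

lemma symMat_mul (d : ℕ) (A B : Matrix (Fin 2) (Fin 2) ℂ) :
    symMat d (A * B) = symMat d B * symMat d A := by
  ext i j
  have := mon_ext d (fun i => symMat d (A * B) i j) (fun i => (symMat d B * symMat d A) i j) fun v => by
    have h1 := congrFun (mon_symMat d (A * B) v) j
    have h2 := congrFun (mon_symMat d A (B.mulVec v)) j
    rw [← mon_symMat d B v, Matrix.vecMul_vecMul, Matrix.mulVec_mulVec] at h2
    exact h1.trans h2.symm
  exact congrFun this i

lemma symMat_one (d : ℕ) : symMat d (1 : Matrix (Fin 2) (Fin 2) ℂ) = 1 := by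
  ext i j
  have := mon_ext d (fun i => symMat d (1 : Matrix (Fin 2) (Fin 2) ℂ) i j) (fun i => (1 : Matrix (Fin (d+1)) (Fin (d+1)) ℂ) i j) fun v => by
    have h1 := congrFun (mon_symMat d 1 v) j
    rw [Matrix.one_mulVec] at h1
    refine h1.trans ?_
    exact (congrFun (Matrix.vecMul_one (mon d v)) j).symm
  exact congrFun this i

/-! ### The representation on coefficient matrices -/

/-- The complex matrix of `γ⁻¹`. -/
def invC (γ : Bianchi2) : Matrix (Fin 2) (Fin 2) ℂ := (γ⁻¹).1.map sqrtm2Embed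

/-- The complex conjugate of the matrix of `γ⁻¹`. -/
def invCbar (γ : Bianchi2) : Matrix (Fin 2) (Fin 2) ℂ := (γ⁻¹).1.map sqrtm2EmbedBar

lemma invC_mul (γ δ : Bianchi2) : invC (γ * δ) = invC δ * invC γ := by
  simp only [invC, mul_inv_rev]
  exact Matrix.map_mul

lemma invCbar_mul (γ δ : Bianchi2) : invCbar (γ * δ) = invCbar δ * invCbar γ := by
  simp only [invCbar, mul_inv_rev]
  exact Matrix.map_mul

lemma invC_one : invC 1 = 1 := by
  simp only [invC, inv_one]
  exact Matrix.map_one _ (map_zero _) (map_one _)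

lemma invCbar_one : invCbar 1 = 1 := by
  simp only [invCbar, inv_one]
  exact Matrix.map_one _ (map_zero _) (map_one _)

/-- Coefficient matrices of bihomogeneous forms. -/
abbrev Mat (d : ℕ) : Type := Matrix (Fin (d + 1)) (Fin (d + 1)) ℂ

/-- `F ↦ A F Bᵀ`. -/
def actL (d : ℕ) (A B : Mat d) : Mat d →ₗ[ℂ] Mat d where
  toFun F := A * F * B.transpose
  map_add' F G := by rw [Matrix.mul_add, Matrix.add_mul]
  map_smul' c F := by simp

/-- The representation `E_d` in terms of coefficient matrices. -/
def MatRep (d : ℕ) : Representation ℂ Bianchi2 (Mat d) where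
  toFun γ := actL d (symMat d (invC γ)) (symMat d (invCbar γ))
  map_one' := by
    ext1 F
    show _ * F * _ = F
    rw [invC_one, invCbar_one, symMat_one, Matrix.transpose_one, Matrix.one_mul, Matrix.mul_one]
  map_mul' γ δ := by
    ext1 F
    show _ * F * _ = _ * (_ * F * _) * _
    rw [invC_mul, invCbar_mul, symMat_mul, symMat_mul, Matrix.transpose_mul]
    simp only [Matrix.mul_assoc]

lemma MatRep_apply (d : ℕ) (γ : Bianchi2) (F : Mat d) :
    MatRep d γ F = symMat d (invC γ) * F * (symMat d (invCbar γ)).transpose := rfl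

lemma bfm_MatRep (d : ℕ) (γ : Bianchi2) (F : Mat d) (v w : Fin 2 → ℂ) :
    bfm d (MatRep d γ F) v w = bfm d F ((invC γ).mulVec v) ((invCbar γ).mulVec w) := bfm_act d F _ _ v w

/-- The form with given coefficients, as a polynomial in four variables. -/
def toPoly (d : ℕ) : Mat d →ₗ[ℂ] MvPolynomial (Fin 4) ℂ where
  toFun F := ∑ i, ∑ j, C (F i j) * (X 0 ^ (i : ℕ) * X 1 ^ (d - i) * (X 2 ^ (j : ℕ) * X 3 ^ (d - j)))
  map_add' F G := by
    simp only [Matrix.add_apply, map_add, add_mul, Finset.sum_add_distrib]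
  map_smul' c F := by
    simp only [Matrix.smul_apply, smul_eq_mul, map_mul, Finset.smul_sum, RingHom.id_apply, smul_eq_C_mul, mul_assoc]

lemma eval_toPoly (d : ℕ) (F : Mat d) (p : Fin 4 → ℂ) :
    eval p (toPoly d F) = bfm d F ![p 0, p 1] ![p 2, p 3] := by
  simp only [toPoly, LinearMap.coe_mk, AddHom.coe_mk, map_sum, map_mul, eval_C, eval_X, map_pow,
    bfm, dotProduct, Matrix.mulVec, mon, Finset.mul_sum]
  refine Finset.sum_congr rfl fun i _ => Finset.sum_congr rfl fun j _ => ?_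
  simp
  ring

lemma toPoly_mem (d : ℕ) (F : Mat d) : toPoly d F ∈ Ed d := by
  refine Submodule.sum_mem (Ed d) fun i _ => Submodule.sum_mem (Ed d) fun j _ => ?_
  have hX : ∀ (k : Fin 4) n, IsWeightedHomogeneous biWeight (X k ^ n : MvPolynomial (Fin 4) ℂ) (n • biWeight k) :=
    fun k n => pow_isWeightedHomogeneous (isWeightedHomogeneous_X ℂ biWeight k) n
  have := (isWeightedHomogeneous_C biWeight (F i j)).mul (((hX 0 i).mul (hX 1 (d - i))).mul ((hX 2 j).mul (hX 3 (d - j))))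
  have e : 0 + ((i : ℕ) • biWeight 0 + (d - i : ℕ) • biWeight 1 + ((j : ℕ) • biWeight 2 + (d - j : ℕ) • biWeight 3)) = ((d, d) : ℕ × ℕ) := by
    have := i.2
    have := j.2
    simp [biWeight]
    omega
  rw [e] at this
  exact this

lemma toPoly_injective (d : ℕ) : Function.Injective (toPoly d) := by
  intro F G h
  refine bfm_ext d F G fun v w => ?_
  have h1 := congrArg (eval ![v 0, v 1, w 0, w 1]) h
  rw [eval_toPoly, eval_toPoly] at h1
  have e1 : (![v 0, v 1] : Fin 2 → ℂ) = v := by ext i; fin_cases i <;> rfl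
  have e2 : (![w 0, w 1] : Fin 2 → ℂ) = w := by ext i; fin_cases i <;> rfl
  simpa [e1, e2] using h1

lemma toPoly_surjective (d : ℕ) (f : MvPolynomial (Fin 4) ℂ) (hf : f ∈ Ed d) : ∃ F, toPoly d F = f := by
  suffices f ∈ LinearMap.range (toPoly d) from this
  rw [f.as_sum]
  refine Submodule.sum_mem _ fun m hm => ?_
  have hw : Finsupp.weight biWeight m = (d, d) := hf (by simpa using hm)
  rw [Finsupp.weight_apply, Finsupp.sum_fintype _ _ (fun i => zero_smul ℕ (biWeight i)), Fin.sum_univ_four] at hw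
  have h0 : m 0 + m 1 = d ∧ m 2 + m 3 = d := by
    simpa [biWeight] using hw
  refine ⟨Matrix.single ⟨m 0, by omega⟩ ⟨m 2, by omega⟩ (coeff m f), ?_⟩
  simp only [toPoly, LinearMap.coe_mk, AddHom.coe_mk]
  rw [Finset.sum_eq_single ⟨m 0, by omega⟩, Finset.sum_eq_single ⟨m 2, by omega⟩]
  · rw [Matrix.single_apply_same, monomial_eq, Finsupp.prod_fintype _ _ (fun _ => pow_zero _), Fin.prod_univ_four]
    have e1 : d - m 0 = m 1 := by omega
    have e2 : d - m 2 = m 3 := by omega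
    simp only [e1, e2]
    ring
  · intro j _ hj
    rw [Matrix.single_apply_of_ne (h := by rintro ⟨-, h⟩; exact hj h.symm), C_0, zero_mul]
  · simp
  · intro i _ hi
    refine Finset.sum_eq_zero fun j _ => ?_
    rw [Matrix.single_apply_of_ne (h := by rintro ⟨h, -⟩; exact hi h.symm), C_0, zero_mul]
  · simp

/-- `E_d` is the space of coefficient matrices. -/
def matEquiv (d : ℕ) : Mat d ≃ₗ[ℂ] Ed d :=
  LinearEquiv.ofBijective ((toPoly d).codRestrict (Ed d) (toPoly_mem d))
    ⟨fun F G h => toPoly_injective d (congrArg Subtype.val h),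
     fun f => by obtain ⟨F, hF⟩ := toPoly_surjective d f.1 f.2; exact ⟨F, Subtype.ext hF⟩⟩

lemma toPoly_MatRep (d : ℕ) (γ : Bianchi2) (F : Mat d) :
    toPoly d (MatRep d γ F) = aeval (bianchiSubst γ) (toPoly d F) := by
  refine MvPolynomial.funext fun p => ?_
  rw [eval_toPoly, bfm_MatRep]
  have h1 : eval p (aeval (bianchiSubst γ) (toPoly d F)) =
      eval (fun i => eval p (bianchiSubst γ i)) (toPoly d F) := by
    rw [aeval_def, algebraMap_eq, eval_eval₂]
    have : (eval p).comp C = RingHom.id ℂ := by ext x <;> simp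
    rw [this]
    rfl
  rw [h1, eval_toPoly]
  have i1 : ((Matrix.SpecialLinearGroup.map sqrtm2Embed γ)⁻¹ : Matrix.SpecialLinearGroup (Fin 2) ℂ).1 = invC γ := by
    rw [← map_inv]; rfl
  have i2 : ((Matrix.SpecialLinearGroup.map sqrtm2EmbedBar γ)⁻¹ : Matrix.SpecialLinearGroup (Fin 2) ℂ).1 = invCbar γ := by
    rw [← map_inv]; rfl
  congr 1
  · ext i
    simp only [bianchiSubst, i1, i2]
    fin_cases i <;> simp [Matrix.mulVec, dotProduct, Fin.sum_univ_two]
  · ext i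
    simp only [bianchiSubst, i1, i2]
    fin_cases i <;> simp [Matrix.mulVec, dotProduct, Fin.sum_univ_two]

/-- The action on coefficient matrices is the action on bihomogeneous polynomials. -/
def matRepEquiv (d : ℕ) : (MatRep d).Equiv (EdRep d) :=
  Representation.Equiv.mk (matEquiv d) fun γ => by
    ext1 F
    exact Subtype.ext (toPoly_MatRep d γ F)

lemma finrank_H1_mat (d : ℕ) : Module.finrank ℂ (groupCohomology (Rep.of (EdRep d)) 1) =
    Module.finrank ℂ (groupCohomology (Rep.of (MatRep d)) 1) :=
  (LinearEquiv.finrank_eq ((groupCohomology.functor ℂ Bianchi2 1).mapIso (Rep.mkIso (matRepEquiv d))).toLinearEquiv).symm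

/-! ### The Euclidean algorithm -/

/-- The order-four element `[[0,-1],[1,0]]`. -/
def ga : Bianchi2 := ⟨!![0, -1; 1, 0], by simp [Matrix.det_fin_two]⟩

/-- Translation by `q`. -/
def tq (q : ℤ√(-2 : ℤ)) : Bianchi2 := ⟨!![1, q; 0, 1], by simp [Matrix.det_fin_two]⟩

lemma ga_col0 (γ : Bianchi2) : (ga * γ).1 0 0 = -γ.1 1 0 := by
  show (ga.1 * γ.1) 0 0 = _
  simp [Matrix.mul_apply, Fin.sum_univ_two, ga]

lemma ga_col1 (γ : Bianchi2) : (ga * γ).1 1 0 = γ.1 0 0 := by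
  show (ga.1 * γ.1) 1 0 = _
  simp [Matrix.mul_apply, Fin.sum_univ_two, ga]

lemma tq_col0 (q : ℤ√(-2 : ℤ)) (γ : Bianchi2) : (tq q * γ).1 0 0 = γ.1 0 0 + q * γ.1 1 0 := by
  show ((tq q).1 * γ.1) 0 0 = _
  simp [Matrix.mul_apply, Fin.sum_univ_two, tq]

lemma tq_col1 (q : ℤ√(-2 : ℤ)) (γ : Bianchi2) : (tq q * γ).1 1 0 = γ.1 1 0 := by
  show ((tq q).1 * γ.1) 1 0 = _
  simp [Matrix.mul_apply, Fin.sum_univ_two, tq]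

lemma tq_row (q : ℤ√(-2 : ℤ)) (γ : Bianchi2) : (tq q * γ).1 0 1 = γ.1 0 1 + q * γ.1 1 1 := by
  show ((tq q).1 * γ.1) 0 1 = _
  simp [Matrix.mul_apply, Fin.sum_univ_two, tq]

lemma tq_add (q r : ℤ√(-2 : ℤ)) : tq (q + r) = tq q * tq r := by
  apply Subtype.ext
  show _ = (tq q).1 * (tq r).1
  refine Matrix.ext fun i j => ?_
  fin_cases i <;> fin_cases j <;> simp [tq, Matrix.mul_apply, Fin.sum_univ_two, add_comm]

lemma tq_zero : tq 0 = 1 := by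
  apply Subtype.ext
  refine Matrix.ext fun i j => ?_
  fin_cases i <;> fin_cases j <;> simp [tq]

lemma tq_neg (q : ℤ√(-2 : ℤ)) : tq (-q) = (tq q)⁻¹ := by
  rw [eq_inv_iff_mul_eq_one, ← tq_add, neg_add_cancel, tq_zero]

lemma gaga : ga * ga = -1 := by decide

lemma neg_eq (γ : Bianchi2) : ga * (ga * γ) = -γ := by
  rw [← mul_assoc, gaga, neg_one_mul]

/-- The image `T^re U^im` of translation by `q`. -/
def tau {H : Type*} [Group H] (T U : H) (q : ℤ√(-2 : ℤ)) : H := T ^ q.re * U ^ q.im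

/-- `Lift A T U γ h` means that some run of the Euclidean algorithm on the first column of `γ` writes
`γ`, up to sign, as a word in `a, t, u`, and that `h` is that word evaluated at `A, T, U`. Every choice
of quotient with a smaller remainder is allowed. -/
inductive Lift {H : Type*} [Group H] (A T U : H) : Bianchi2 → H → Prop
  | base (γ : Bianchi2) (h : γ.1 1 0 = 0) : Lift A T U γ (tau T U (γ.1 0 1 * γ.1 0 0))
  | step (γ : Bianchi2) (q : ℤ√(-2 : ℤ)) (k : H)
      (hq : (γ.1 0 0 - q * γ.1 1 0).norm < (γ.1 1 0).norm)
      (hk : Lift A T U (ga * (tq (-q) * γ)) k) : Lift A T U γ (tau T U q * A * k)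

lemma znorm_def (z : ℤ√(-2 : ℤ)) : z.norm = z.re * z.re + 2 * (z.im * z.im) := by
  rw [Zsqrtd.norm]; ring

lemma znorm_nonneg (z : ℤ√(-2 : ℤ)) : 0 ≤ z.norm := by
  rw [znorm_def]; nlinarith [mul_self_nonneg z.re, mul_self_nonneg z.im]

lemma euclid (p c : ℤ√(-2 : ℤ)) (hc : c ≠ 0) : ∃ q, (p - q * c).norm < c.norm := by
  have hn : 0 < c.norm := by
    rcases (znorm_nonneg c).lt_or_eq with h | h
    · exact h
    · exact absurd ((Zsqrtd.norm_eq_zero_iff (by norm_num) c).1 h.symm) hc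
  obtain ⟨x, hx⟩ : ∃ x : ℤ, |2 * ((p * star c).re - x * c.norm)| ≤ c.norm := by
    refine ⟨(2 * (p * star c).re + c.norm) / (2 * c.norm), ?_⟩
    have h1 := Int.emod_add_mul_ediv (2 * (p * star c).re + c.norm) (2 * c.norm)
    have h2 := Int.emod_nonneg (2 * (p * star c).re + c.norm) (show 2 * c.norm ≠ 0 by omega)
    have h3 := Int.emod_lt_of_pos (2 * (p * star c).re + c.norm) (show 0 < 2 * c.norm by omega)
    rw [abs_le]
    constructor <;> linarith
  obtain ⟨y, hy⟩ : ∃ y : ℤ, |2 * ((p * star c).im - y * c.norm)| ≤ c.norm := by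
    refine ⟨(2 * (p * star c).im + c.norm) / (2 * c.norm), ?_⟩
    have h1 := Int.emod_add_mul_ediv (2 * (p * star c).im + c.norm) (2 * c.norm)
    have h2 := Int.emod_nonneg (2 * (p * star c).im + c.norm) (show 2 * c.norm ≠ 0 by omega)
    have h3 := Int.emod_lt_of_pos (2 * (p * star c).im + c.norm) (show 0 < 2 * c.norm by omega)
    rw [abs_le]
    constructor <;> linarith
  refine ⟨⟨x, y⟩, ?_⟩
  have e : (p - ⟨x, y⟩ * c).norm * c.norm = ((p * star c).re - x * c.norm) ^ 2 + 2 * ((p * star c).im - y * c.norm) ^ 2 := by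
    simp only [znorm_def, Zsqrtd.re_sub, Zsqrtd.im_sub, Zsqrtd.re_mul, Zsqrtd.im_mul, Zsqrtd.re_star, Zsqrtd.im_star]
    ring
  have h1 : (2 * ((p * star c).re - x * c.norm)) ^ 2 ≤ c.norm ^ 2 := sq_le_sq' (by linarith [(abs_le.1 hx).1]) (abs_le.1 hx).2
  have h2 : (2 * ((p * star c).im - y * c.norm)) ^ 2 ≤ c.norm ^ 2 := sq_le_sq' (by linarith [(abs_le.1 hy).1]) (abs_le.1 hy).2
  by_contra hcon
  nlinarith

section
variable {H : Type*} [Group H] {A T U : H}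

lemma Lift_exists (γ : Bianchi2) : ∃ h, Lift A T U γ h := by
  induction hn : (γ.1 1 0).norm.toNat using Nat.strong_induction_on generalizing γ with
  | _ n ih =>
    by_cases hc : γ.1 1 0 = 0
    · exact ⟨_, Lift.base γ hc⟩
    · obtain ⟨q, hq⟩ := euclid (γ.1 0 0) (γ.1 1 0) hc
      have e : (ga * (tq (-q) * γ)).1 1 0 = γ.1 0 0 - q * γ.1 1 0 := by
        rw [ga_col1, tq_col0]; ring
      obtain ⟨k, hk⟩ := ih (γ.1 0 0 - q * γ.1 1 0).norm.toNat (by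
        have := znorm_nonneg (γ.1 0 0 - q * γ.1 1 0)
        rw [← hn]; omega) (ga * (tq (-q) * γ)) (by rw [e])
      exact ⟨_, Lift.step γ q k hq hk⟩

lemma neg_apply' (γ : Bianchi2) (i j : Fin 2) : (-γ).1 i j = -γ.1 i j := rfl

lemma Lift_neg {γ : Bianchi2} {h : H} (hl : Lift A T U γ h) : Lift A T U (-γ) h := by
  induction hl with
  | base γ h0 =>
    have := Lift.base (A := A) (T := T) (U := U) (-γ) (by rw [neg_apply', h0, neg_zero])
    simpa [neg_apply'] using this
  | step γ q k hq hk ih =>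
    refine Lift.step (-γ) q k ?_ ?_
    · simp only [neg_apply']
      have : -γ.1 0 0 - q * -γ.1 1 0 = -(γ.1 0 0 - q * γ.1 1 0) := by ring
      rw [this, Zsqrtd.norm_neg, Zsqrtd.norm_neg]
      exact hq
    · rw [mul_neg, mul_neg]; exact ih

variable (hTU : T * U = U * T)
include hTU

lemma tau_add (q r : ℤ√(-2 : ℤ)) : tau T U (q + r) = tau T U q * tau T U r := by
  have h : Commute T U := hTU
  simp only [tau, Zsqrtd.re_add, Zsqrtd.im_add, zpow_add]
  rw [mul_assoc, mul_assoc, ← mul_assoc (U ^ q.im), ← (h.zpow_zpow r.re q.im).eq, mul_assoc]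

lemma Lift_tq {γ : Bianchi2} {h : H} (hl : Lift A T U γ h) (q : ℤ√(-2 : ℤ)) :
    Lift A T U (tq q * γ) (tau T U q * h) := by
  induction hl with
  | base γ h0 =>
    have hd : γ.1 0 0 * γ.1 1 1 = 1 := by
      have := γ.2
      rw [Matrix.det_fin_two] at this
      have h0' : γ.1 1 0 = 0 := h0
      rw [h0'] at this
      simpa using this
    have := Lift.base (A := A) (T := T) (U := U) (tq q * γ) (by rw [tq_col1, h0])
    rw [tq_row, tq_col0, h0, mul_zero, add_zero, add_mul, mul_assoc q, mul_comm (γ.1 1 1), hd, mul_one,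
      add_comm, tau_add hTU] at this
    exact this
  | step γ r k hq hk ih =>
    rw [← mul_assoc, ← mul_assoc, ← tau_add hTU]
    refine Lift.step (tq q * γ) (q + r) k ?_ ?_
    · rw [tq_col0, tq_col1]
      have : γ.1 0 0 + q * γ.1 1 0 - (q + r) * γ.1 1 0 = γ.1 0 0 - r * γ.1 1 0 := by ring
      rwa [this]
    · rw [← mul_assoc (tq _), ← tq_add]
      have : -(q + r) + q = -r := by ring
      rwa [this]

end

/-! ### Presentation of the Bianchi group -/

section
variable {H : Type*} [Group H] {A T U : H}

lemma tau_neg (hTU : T * U = U * T) (q : ℤ√(-2 : ℤ)) : tau T U (-q) = (tau T U q)⁻¹ := by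
  rw [eq_inv_iff_mul_eq_one, ← tau_add hTU, neg_add_cancel]
  simp [tau]

lemma tau_re (e : ℤ) : tau T U ⟨e, 0⟩ = T ^ e := by simp [tau]

lemma tau_im (e : ℤ) : tau T U ⟨0, e⟩ = U ^ e := by simp [tau]

lemma rel_T (hA : A * A = 1) (hT : (T * A) * (T * A) * (T * A) = 1) (e : ℤ) (he : e = 1 ∨ e = -1) :
    A * T ^ e * A = T ^ (-e) * A * T ^ (-e) := by
  have hA' : A⁻¹ = A := inv_eq_of_mul_eq_one_left hA
  have h1 : T * (A * T * A) * T * A = 1 := by rw [← hT]; simp only [mul_assoc]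
  have h2 : A * T * A = T⁻¹ * A * T⁻¹ := by
    have : T * (A * T * A) * T = A := (eq_inv_of_mul_eq_one_left h1).trans hA'
    nth_rewrite 3 [← this]
    simp [mul_assoc]
  rcases he with rfl | rfl
  · simpa using h2
  · have := congrArg (·⁻¹) h2
    simp only [mul_inv_rev, inv_inv, hA'] at this
    simp only [zpow_neg, zpow_one, neg_neg]
    rw [mul_assoc, this, mul_assoc]

lemma rel_U (hA : A * A = 1) (hU : (U⁻¹ * A * U * A) * (U⁻¹ * A * U * A) = 1) (e : ℤ) (he : e = 1 ∨ e = -1) :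
    A * U ^ e * A = U ^ e * A * U ^ (-e) * A * U ^ e := by
  have hA' : A⁻¹ = A := inv_eq_of_mul_eq_one_left hA
  have h1 : U⁻¹ * A * U * A = A * U⁻¹ * A * U := by
    rw [← inv_eq_of_mul_eq_one_left hU]
    simp only [mul_inv_rev, hA', inv_inv, mul_assoc]
  have h2 : A * U * A = U * A * U⁻¹ * A * U := by
    have := congrArg (U * ·) h1
    simpa [mul_assoc] using this
  have h3 : A * U⁻¹ * A = U⁻¹ * A * U * A * U⁻¹ := by
    rw [h1]
    simp [mul_assoc]
  rcases he with rfl | rfl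
  · simpa using h2
  · simpa using h3

lemma mat_T (e : ℤ) (he : e = 1 ∨ e = -1) :
    ga = tq ⟨-e, 0⟩ * ga * tq ⟨-e, 0⟩ * ga * tq ⟨-e, 0⟩ ∨ ga = -(tq ⟨-e, 0⟩ * ga * tq ⟨-e, 0⟩ * ga * tq ⟨-e, 0⟩) := by
  rcases he with rfl | rfl <;> decide

lemma mat_U (e : ℤ) (he : e = 1 ∨ e = -1) :
    ga = tq ⟨0, e⟩ * ga * tq ⟨0, -e⟩ * ga * tq ⟨0, e⟩ * ga * tq ⟨0, -e⟩ ∨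
    ga = -(tq ⟨0, e⟩ * ga * tq ⟨0, -e⟩ * ga * tq ⟨0, e⟩ * ga * tq ⟨0, -e⟩) := by
  rcases he with rfl | rfl <;> decide

lemma Lift_pm {γ : Bianchi2} {h : H} (g : Bianchi2) (e : γ = g ∨ γ = -g) (δ : Bianchi2)
    (hl : Lift A T U (g * δ) h) : Lift A T U (γ * δ) h := by
  rcases e with rfl | rfl
  · exact hl
  · rw [neg_mul]; exact Lift_neg hl

/-- Uniqueness of lifts for lower left entries of norm `< n`. -/
def UU (A T U : H) (n : ℤ) : Prop := ∀ γ h k, (γ.1 1 0).norm < n → Lift A T U γ h → Lift A T U γ k → h = k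

/-- Equivariance under `a` for columns of norm `< n`. -/
def AA (A T U : H) (n : ℤ) : Prop := ∀ γ h, (γ.1 0 0).norm < n → (γ.1 1 0).norm < n →
  Lift A T U γ h → Lift A T U (ga * γ) (A * h)

variable (hTU : T * U = U * T) (hA : A * A = 1) (hT : (T * A) * (T * A) * (T * A) = 1)
  (hU : (U⁻¹ * A * U * A) * (U⁻¹ * A * U * A) = 1)
include hTU hA

include hT in
/-- Two first steps of the algorithm with quotients `0` and `e = ±1` lead to the same element, by the
relation `(T A)³ = 1`. -/
lemma edge_T {n : ℤ} (hu : UU A T U n) (ha : AA A T U n) (γ : Bianchi2) (e : ℤ) (he : e = 1 ∨ e = -1)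
    (h0 : (γ.1 0 0).norm < n) (h1 : (γ.1 0 0 - ⟨e, 0⟩ * γ.1 1 0).norm < n) (k k' : H)
    (hk : Lift A T U (ga * γ) k) (hk' : Lift A T U (ga * (tq (-⟨e, 0⟩) * γ)) k') :
    A * k = T ^ e * A * k' := by
  have hm : (-⟨e, 0⟩ : ℤ√(-2 : ℤ)) = ⟨-e, 0⟩ := by ext <;> simp
  have hee : (⟨e, 0⟩ * ⟨e, 0⟩ : ℤ√(-2 : ℤ)) = 1 := by rcases he with rfl | rfl <;> decide
  have l1 := Lift_tq hTU hk' ⟨-e, 0⟩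
  have l2 := ha _ _ (by
    rw [tq_col0, ga_col0, ga_col1, tq_col0, tq_col1, ← hm]
    have : -γ.1 1 0 + -⟨e, 0⟩ * (γ.1 0 0 + -⟨e, 0⟩ * γ.1 1 0) = -(⟨e, 0⟩ * γ.1 0 0) + (⟨e, 0⟩ * ⟨e, 0⟩ - 1) * γ.1 1 0 := by ring
    rw [this, hee, sub_self, zero_mul, add_zero, Zsqrtd.norm_neg, Zsqrtd.norm_mul]
    rcases he with rfl | rfl <;> simpa [znorm_def] using h0) (by
    rw [tq_col1, ga_col1, tq_col0]
    have : γ.1 0 0 + -⟨e, 0⟩ * γ.1 1 0 = γ.1 0 0 - ⟨e, 0⟩ * γ.1 1 0 := by ring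
    rwa [this]) l1
  have l3 := Lift_tq hTU l2 ⟨-e, 0⟩
  have l4 : Lift A T U (ga * γ) _ := Lift_pm _ (mat_T e he) γ (by
    rw [hm] at l3
    simp only [mul_assoc]
    exact l3)
  rw [hu _ _ _ (by rw [ga_col1]; exact h0) hk l4, tau_re]
  have r := rel_T hA hT e he
  calc A * (T ^ (-e) * (A * (T ^ (-e) * k'))) = A * (T ^ (-e) * A * T ^ (-e)) * k' := by
        simp only [mul_assoc]
    _ = (A * A) * (T ^ e * A * k') := by rw [← r]; simp only [mul_assoc]
    _ = _ := by rw [hA, one_mul]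

include hU in
/-- Two first steps of the algorithm with quotients `0` and `e √-2`, `e = ±1`, lead to the same element,
by the relation `(U⁻¹ A U A)² = 1`. -/
lemma edge_U {n : ℤ} (hu : UU A T U n) (ha : AA A T U n) (γ : Bianchi2) (e : ℤ) (he : e = 1 ∨ e = -1)
    (h0 : (γ.1 0 0).norm < n) (hn : (γ.1 0 0).norm < (γ.1 1 0).norm)
    (h1 : (γ.1 0 0 - ⟨0, e⟩ * γ.1 1 0).norm < n) (k k' : H)
    (hk : Lift A T U (ga * γ) k) (hk' : Lift A T U (ga * (tq (-⟨0, e⟩) * γ)) k') :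
    A * k = U ^ e * A * k' := by
  have hm : (-⟨0, e⟩ : ℤ√(-2 : ℤ)) = ⟨0, -e⟩ := by ext <;> simp
  have hee : e * e = 1 := by rcases he with rfl | rfl <;> rfl
  have l1 := Lift_tq hTU hk' ⟨0, e⟩
  have hN : (γ.1 1 0 + ⟨0, e⟩ * γ.1 0 0).norm < n := by
    have : (γ.1 1 0 + ⟨0, e⟩ * γ.1 0 0).norm = (γ.1 0 0 - ⟨0, e⟩ * γ.1 1 0).norm + ((e * e) * 2 - 1) * ((γ.1 0 0).norm - (γ.1 1 0).norm) := by
      simp only [znorm_def, Zsqrtd.re_sub, Zsqrtd.im_sub, Zsqrtd.re_mul, Zsqrtd.im_mul, Zsqrtd.re_add, Zsqrtd.im_add]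
      ring
    rw [this, hee]
    linarith
  have h1' : (γ.1 0 0 + ⟨0, -e⟩ * γ.1 1 0).norm < n := by
    rw [← hm]
    have : γ.1 0 0 + -⟨0, e⟩ * γ.1 1 0 = γ.1 0 0 - ⟨0, e⟩ * γ.1 1 0 := by ring
    rwa [this]
  have hp2 : (⟨0, e⟩ * ⟨0, e⟩ : ℤ√(-2 : ℤ)) = -2 := by rcases he with rfl | rfl <;> decide
  have c0 : (tq ⟨0, e⟩ * (ga * (tq (-⟨0, e⟩) * γ))).1 0 0 = γ.1 1 0 + ⟨0, e⟩ * γ.1 0 0 := by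
    rw [tq_col0, ga_col0, ga_col1, tq_col0, tq_col1]
    have : -γ.1 1 0 + ⟨0, e⟩ * (γ.1 0 0 + -⟨0, e⟩ * γ.1 1 0) = -γ.1 1 0 + ⟨0, e⟩ * γ.1 0 0 - (⟨0, e⟩ * ⟨0, e⟩) * γ.1 1 0 := by ring
    rw [this, hp2]; ring
  have c1 : (tq ⟨0, e⟩ * (ga * (tq (-⟨0, e⟩) * γ))).1 1 0 = γ.1 0 0 + ⟨0, -e⟩ * γ.1 1 0 := by
    rw [tq_col1, ga_col1, tq_col0, hm]
  have l2 := Lift_tq hTU (ha _ _ (by rwa [c0]) (by rwa [c1]) l1) ⟨0, -e⟩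
  have l3 := Lift_tq hTU (ha _ _ (by
    rw [tq_col0, ga_col0, ga_col1, c0, c1, ← hm]
    have : -(γ.1 0 0 + -⟨0, e⟩ * γ.1 1 0) + -⟨0, e⟩ * (γ.1 1 0 + ⟨0, e⟩ * γ.1 0 0) = - γ.1 0 0 - (⟨0, e⟩ * ⟨0, e⟩) * γ.1 0 0 := by ring
    rw [this, hp2]
    have : - γ.1 0 0 - (-2) * γ.1 0 0 = γ.1 0 0 := by ring
    rwa [this]) (by rw [tq_col1, ga_col1, c0]; exact hN) l2) ⟨0, e⟩
  have l4 : Lift A T U (ga * γ) _ := Lift_pm _ (mat_U e he) γ (by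
    rw [hm] at l3
    simp only [mul_assoc]
    exact l3)
  rw [hu _ _ _ (by rw [ga_col1]; exact h0) hk l4, tau_im, tau_im]
  calc A * (U ^ e * (A * (U ^ (-e) * (A * (U ^ e * k'))))) = A * (U ^ e * A * U ^ (-e) * A * U ^ e) * k' := by
        simp only [mul_assoc]
    _ = (A * A) * (U ^ e * A * k') := by rw [← rel_U hA hU e he]; simp only [mul_assoc]
    _ = _ := by rw [hA, one_mul]

include hT hU

/-- Two first steps of the algorithm lead to the same element. The difference `δ` of the quotients has
norm less than `4`, and is reached through differences `±1` and `±√-2`. -/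
lemma edge_all {n : ℤ} (hu : UU A T U n) (ha : AA A T U n) (γ : Bianchi2) (δ : ℤ√(-2 : ℤ))
    (hn : (γ.1 1 0).norm = n) (h0 : (γ.1 0 0).norm < n)
    (h1 : (γ.1 0 0 - δ * γ.1 1 0).norm < n) (k k' : H)
    (hk : Lift A T U (ga * γ) k) (hk' : Lift A T U (ga * (tq (-δ) * γ)) k') :
    A * k = tau T U δ * A * k' := by
  obtain ⟨e, f⟩ := δ
  have hnn : 0 < n := lt_of_le_of_lt (znorm_nonneg _) h0
  have hb : e * e + 2 * (f * f) < 4 := by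
    have i1 : (e * e + 2 * (f * f)) * (γ.1 1 0).norm + (2 * γ.1 0 0 - ⟨e, f⟩ * γ.1 1 0).norm
        = 2 * (γ.1 0 0).norm + 2 * (γ.1 0 0 - ⟨e, f⟩ * γ.1 1 0).norm := by
      have : (2 : ℤ√(-2 : ℤ)) * γ.1 0 0 = γ.1 0 0 + γ.1 0 0 := by ring
      rw [this]
      simp only [znorm_def, Zsqrtd.re_sub, Zsqrtd.im_sub, Zsqrtd.re_mul, Zsqrtd.im_mul, Zsqrtd.re_add, Zsqrtd.im_add]
      ring
    have i2 := znorm_nonneg (2 * γ.1 0 0 - ⟨e, f⟩ * γ.1 1 0)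
    rw [hn] at i1
    by_contra hcon
    nlinarith
  have he : e = 0 ∨ e = 1 ∨ e = -1 := by
    have : e < 2 := by nlinarith [mul_self_nonneg f]
    have : -2 < e := by nlinarith [mul_self_nonneg f]
    omega
  have hf : f = 0 ∨ f = 1 ∨ f = -1 := by
    have : f < 2 := by nlinarith [mul_self_nonneg e]
    have : -2 < f := by nlinarith [mul_self_nonneg e]
    omega
  by_cases e0 : e = 0
  · subst e0
    by_cases f0 : f = 0
    · subst f0
      have hz : (-⟨0, 0⟩ : ℤ√(-2 : ℤ)) = 0 := by decide
      rw [hz, tq_zero, one_mul] at hk'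
      rw [hu _ _ _ (by rw [ga_col1]; exact h0) hk hk', tau_re]
      simp
    · rw [tau_im]
      exact edge_U hTU hA hU hu ha γ f (by tauto) h0 (by omega) h1 k k' hk hk'
  have he' : e = 1 ∨ e = -1 := by tauto
  by_cases f0 : f = 0
  · subst f0
    rw [tau_re]
    exact edge_T hTU hA hT hu ha γ e he' h0 h1 k k' hk hk'
  have hf' : f = 1 ∨ f = -1 := by tauto
  have hsum : (γ.1 0 0 - ⟨e, 0⟩ * γ.1 1 0).norm + (γ.1 0 0 - ⟨0, f⟩ * γ.1 1 0).norm
      = (γ.1 0 0).norm + (γ.1 0 0 - ⟨e, f⟩ * γ.1 1 0).norm := by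
    simp only [znorm_def, Zsqrtd.re_sub, Zsqrtd.im_sub, Zsqrtd.re_mul, Zsqrtd.im_mul]
    ring
  have s1 : (-⟨0, f⟩ + -⟨e, 0⟩ : ℤ√(-2 : ℤ)) = -⟨e, f⟩ := by ext <;> simp
  have s2 : (-⟨e, 0⟩ + -⟨0, f⟩ : ℤ√(-2 : ℤ)) = -⟨e, f⟩ := by ext <;> simp
  have s3 : (⟨e, f⟩ : ℤ√(-2 : ℤ)) = ⟨e, 0⟩ + ⟨0, f⟩ := by ext <;> simp
  have s4 : (⟨e, f⟩ : ℤ√(-2 : ℤ)) = ⟨0, f⟩ + ⟨e, 0⟩ := by ext <;> simp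
  -- one of the two other corners of the rectangle with diagonal `0, δ` lies in the open disc
  rcases lt_or_ge (γ.1 0 0 - ⟨e, 0⟩ * γ.1 1 0).norm n with h | h
  · obtain ⟨k3, hk3⟩ := Lift_exists (A := A) (T := T) (U := U) (ga * (tq (-⟨e, 0⟩) * γ))
    have j1 := edge_T hTU hA hT hu ha γ e he' h0 h k k3 hk hk3
    have c : (tq (-⟨e, 0⟩) * γ).1 0 0 = γ.1 0 0 - ⟨e, 0⟩ * γ.1 1 0 := by rw [tq_col0]; ring
    have j2 := edge_U hTU hA hU hu ha (tq (-⟨e, 0⟩) * γ) f hf' (by rwa [c]) (by rw [c, tq_col1]; omega)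
      (by rw [c, tq_col1, sub_sub, ← add_mul, ← s3]; exact h1) k3 k' hk3
      (by rw [← mul_assoc (tq _), ← tq_add, s1]; exact hk')
    rw [j1, mul_assoc, j2, s3, tau_add hTU, tau_re, tau_im]
    simp only [mul_assoc]
  · have h : (γ.1 0 0 - ⟨0, f⟩ * γ.1 1 0).norm < n := by omega
    obtain ⟨k3, hk3⟩ := Lift_exists (A := A) (T := T) (U := U) (ga * (tq (-⟨0, f⟩) * γ))
    have j1 := edge_U hTU hA hU hu ha γ f hf' h0 (by omega) h k k3 hk hk3
    have c : (tq (-⟨0, f⟩) * γ).1 0 0 = γ.1 0 0 - ⟨0, f⟩ * γ.1 1 0 := by rw [tq_col0]; ring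
    have j2 := edge_T hTU hA hT hu ha (tq (-⟨0, f⟩) * γ) e he' (by rwa [c])
      (by rw [c, tq_col1, sub_sub, ← add_mul, ← s4]; exact h1) k3 k' hk3
      (by rw [← mul_assoc (tq _), ← tq_add, s2]; exact hk')
    rw [j1, mul_assoc, j2, s4, tau_add hTU, tau_re, tau_im]
    simp only [mul_assoc]

lemma UU_succ {n : ℤ} (hu : UU A T U n) (ha : AA A T U n) : UU A T U (n + 1) := by
  intro γ h h' hc L1 L2
  rcases lt_or_ge (γ.1 1 0).norm n with hlt | hge
  · exact hu γ h h' hlt L1 L2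
  have hn : (γ.1 1 0).norm = n := by omega
  cases L1 with
  | base _ h0 =>
    cases L2 with
    | base _ _ => rfl
    | step _ q k hq hk =>
      rw [h0, Zsqrtd.norm_zero] at hq
      exact absurd (znorm_nonneg _) (not_le.2 hq)
  | step _ q k hq hk =>
    cases L2 with
    | base _ h0 =>
      rw [h0, Zsqrtd.norm_zero] at hq
      exact absurd (znorm_nonneg _) (not_le.2 hq)
    | step _ q' k' hq' hk' =>
      have c : (tq (-q) * γ).1 0 0 = γ.1 0 0 - q * γ.1 1 0 := by rw [tq_col0]; ring
      have := edge_all hTU hA hT hU hu ha (tq (-q) * γ) (q' - q) (by rw [tq_col1, hn])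
        (by rw [c, ← hn]; exact hq) (by
          rw [c, tq_col1, ← hn]
          have : γ.1 0 0 - q * γ.1 1 0 - (q' - q) * γ.1 1 0 = γ.1 0 0 - q' * γ.1 1 0 := by ring
          rwa [this]) k k' hk (by
          rw [← mul_assoc (tq _), ← tq_add]
          have : -(q' - q) + -q = -q' := by ring
          rwa [this])
      have e : tau T U q' = tau T U q * tau T U (q' - q) := by
        rw [← tau_add hTU]; congr 1; ring
      rw [mul_assoc, this, e]
      simp only [mul_assoc]

lemma AA_succ {n : ℤ} (hu : UU A T U (n + 1)) (ha : AA A T U n) : AA A T U (n + 1) := by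
  intro γ h hp hc hl
  have l0 : tau T U 0 = 1 := by simp [tau]
  rcases lt_trichotomy (γ.1 0 0).norm (γ.1 1 0).norm with hlt | heq | hgt
  · obtain ⟨k, hk⟩ := Lift_exists (A := A) (T := T) (U := U) (ga * γ)
    have := Lift.step γ 0 k (by simpa using hlt) (by rw [neg_zero, tq_zero, one_mul]; exact hk)
    rw [hu γ h _ hc hl this, l0, one_mul, ← mul_assoc, hA, one_mul]
    exact hk
  · rcases lt_or_ge (γ.1 0 0).norm n with h' | h'
    · exact ha γ h h' (by omega) hl
    have hpn : (γ.1 0 0).norm = n := by omega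
    have hcn : (γ.1 1 0).norm = n := by omega
    have hn0 : 0 ≤ n := by rw [← hpn]; exact znorm_nonneg _
    have hn1 : n ≠ 0 := by
      intro h0
      rw [h0, Zsqrtd.norm_eq_zero_iff (by norm_num)] at hpn hcn
      have := γ.2
      rw [Matrix.det_fin_two] at this
      have a1 : γ.1 0 0 = 0 := hpn
      have a2 : γ.1 1 0 = 0 := hcn
      rw [a1, a2] at this
      simp at this
    have hN : ∀ e f : ℤ, (γ.1 0 0 - ⟨e, f⟩ * γ.1 1 0).norm = n + (e * e + 2 * (f * f)) * n
        - 2 * (e * (γ.1 0 0 * star (γ.1 1 0)).re + 2 * f * (γ.1 0 0 * star (γ.1 1 0)).im) := by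
      intro e f
      conv_rhs => rw [show n + (e * e + 2 * (f * f)) * n = (γ.1 0 0).norm + (e * e + 2 * (f * f)) * (γ.1 1 0).norm by rw [hpn, hcn]]
      simp only [znorm_def, Zsqrtd.re_sub, Zsqrtd.im_sub, Zsqrtd.re_mul, Zsqrtd.im_mul, Zsqrtd.re_star, Zsqrtd.im_star]
      ring
    have hxy : (γ.1 0 0 * star (γ.1 1 0)).re ^ 2 + 2 * (γ.1 0 0 * star (γ.1 1 0)).im ^ 2 = n * n := by
      calc _ = (γ.1 0 0).norm * (γ.1 1 0).norm := by
            simp only [znorm_def, Zsqrtd.re_mul, Zsqrtd.im_mul, Zsqrtd.re_star, Zsqrtd.im_star]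
            ring
        _ = n * n := by rw [hpn, hcn]
    have key : ∃ e : ℤ, (e = 1 ∨ e = -1) ∧ ((γ.1 0 0 - ⟨e, 0⟩ * γ.1 1 0).norm < n ∨ (γ.1 0 0 - ⟨0, e⟩ * γ.1 1 0).norm < n) := by
      simp only [hN]
      generalize (γ.1 0 0 * star (γ.1 1 0)).re = x at *
      generalize (γ.1 0 0 * star (γ.1 1 0)).im = y at *
      by_contra hcon
      push Not at hcon
      have b1 := hcon 1 (Or.inl rfl)
      have b2 := hcon (-1) (Or.inr rfl)
      ring_nf at b1 b2
      obtain ⟨b1, b3⟩ := b1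
      obtain ⟨b2, b4⟩ := b2
      have q1 : (2 * x) ^ 2 ≤ n ^ 2 := sq_le_sq' (by linarith) (by linarith)
      have q2 : (2 * y) ^ 2 ≤ n ^ 2 := sq_le_sq' (by linarith) (by linarith)
      have : 0 < n * n := by positivity
      nlinarith
    obtain ⟨e, he, hor⟩ := key
    have hee : e * e = 1 := by rcases he with rfl | rfl <;> rfl
    rcases hor with hlt | hlt
    · have hm : (-⟨e, 0⟩ : ℤ√(-2 : ℤ)) = ⟨-e, 0⟩ := by ext <;> simp
      have hm' : (-⟨-e, 0⟩ : ℤ√(-2 : ℤ)) = ⟨e, 0⟩ := by ext <;> simp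
      obtain ⟨k, hk⟩ := Lift_exists (A := A) (T := T) (U := U) (ga * (tq (-⟨e, 0⟩) * γ))
      rw [hu γ h _ hc hl (Lift.step γ ⟨e, 0⟩ k (by rw [hcn]; exact hlt) hk), tau_re, ← mul_assoc, ← mul_assoc,
        rel_T hA hT e he]
      have l1 := Lift_tq hTU hk ⟨-e, 0⟩
      have : T ^ (-e) * A * T ^ (-e) * k = tau T U ⟨-e, 0⟩ * A * (tau T U ⟨-e, 0⟩ * k) := by
        rw [tau_re]; simp only [mul_assoc]
      rw [this]
      refine Lift.step _ _ _ ?_ ?_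
      · rw [ga_col0, ga_col1, hpn]
        have : -γ.1 1 0 - ⟨-e, 0⟩ * γ.1 0 0 = ⟨e, 0⟩ * (γ.1 0 0 - ⟨e, 0⟩ * γ.1 1 0) := by
          have hq : (⟨e, 0⟩ * ⟨e, 0⟩ : ℤ√(-2 : ℤ)) = 1 := by rcases he with rfl | rfl <;> decide
          rw [← hm]
          linear_combination (γ.1 1 0) * hq
        rw [this, Zsqrtd.norm_mul]
        have h1 : (⟨e, 0⟩ : ℤ√(-2 : ℤ)).norm = 1 := by rcases he with rfl | rfl <;> decide
        rw [h1, one_mul]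
        exact hlt
      · have l2 := Lift_pm (g := tq ⟨-e, 0⟩ * ga * tq ⟨-e, 0⟩) (γ := ga * tq ⟨e, 0⟩ * ga)
          (by rcases he with rfl | rfl <;> decide) γ (by
            rw [hm] at l1
            simpa only [mul_assoc] using l1)
        rw [hm']
        simpa only [mul_assoc] using l2
    · have hm : (-⟨0, e⟩ : ℤ√(-2 : ℤ)) = ⟨0, -e⟩ := by ext <;> simp
      obtain ⟨k, hk⟩ := Lift_exists (A := A) (T := T) (U := U) (ga * (tq (-⟨0, e⟩) * γ))
      rw [hu γ h _ hc hl (Lift.step γ ⟨0, e⟩ k (by rw [hcn]; exact hlt) hk), tau_im, ← mul_assoc, ← mul_assoc,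
        rel_U hA hU e he]
      have l1 := Lift_tq hTU hk ⟨0, e⟩
      have hp2 : (⟨0, e⟩ * ⟨0, e⟩ : ℤ√(-2 : ℤ)) = -2 := by rcases he with rfl | rfl <;> decide
      have hsw : (γ.1 1 0 + ⟨0, e⟩ * γ.1 0 0).norm = (γ.1 0 0 - ⟨0, e⟩ * γ.1 1 0).norm := by
        have : (γ.1 1 0 + ⟨0, e⟩ * γ.1 0 0).norm = (γ.1 0 0 - ⟨0, e⟩ * γ.1 1 0).norm + ((e * e) * 2 - 1) * ((γ.1 0 0).norm - (γ.1 1 0).norm) := by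
          simp only [znorm_def, Zsqrtd.re_sub, Zsqrtd.im_sub, Zsqrtd.re_mul, Zsqrtd.im_mul, Zsqrtd.re_add, Zsqrtd.im_add]
          ring
        rw [this, hpn, hcn]; ring
      have c0 : (tq ⟨0, e⟩ * (ga * (tq (-⟨0, e⟩) * γ))).1 0 0 = γ.1 1 0 + ⟨0, e⟩ * γ.1 0 0 := by
        rw [tq_col0, ga_col0, ga_col1, tq_col0, tq_col1]
        linear_combination (-γ.1 1 0) * hp2
      have c1 : (tq ⟨0, e⟩ * (ga * (tq (-⟨0, e⟩) * γ))).1 1 0 = γ.1 0 0 - ⟨0, e⟩ * γ.1 1 0 := by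
        rw [tq_col1, ga_col1, tq_col0]; ring
      have l2 := Lift_tq hTU (ha _ _ (by rw [c0, hsw]; exact hlt) (by rw [c1]; exact hlt) l1) ⟨0, -e⟩
      have : U ^ e * A * U ^ (-e) * A * U ^ e * k = tau T U ⟨0, e⟩ * A * (tau T U ⟨0, -e⟩ * (A * (tau T U ⟨0, e⟩ * k))) := by
        rw [tau_im, tau_im]; simp only [mul_assoc]
      rw [this]
      refine Lift.step _ _ _ ?_ ?_
      · rw [ga_col0, ga_col1, hpn]
        have : -γ.1 1 0 - ⟨0, e⟩ * γ.1 0 0 = -(γ.1 1 0 + ⟨0, e⟩ * γ.1 0 0) := by ring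
        rw [this, Zsqrtd.norm_neg, hsw]
        exact hlt
      · have l3 := Lift_pm (γ := ga * tq ⟨0, -e⟩ * ga) (g := tq ⟨0, -e⟩ * ga * tq ⟨0, e⟩ * ga * tq ⟨0, -e⟩)
          (by rcases he with rfl | rfl <;> decide) γ (by
            rw [hm] at l2
            simpa only [mul_assoc] using l2)
        rw [hm]
        simpa only [mul_assoc] using l3
  · have := Lift.step (ga * γ) 0 h (by rw [ga_col0, ga_col1]; simpa using hgt) (by
      rw [neg_zero, tq_zero, one_mul, neg_eq]; exact Lift_neg hl)
    rw [l0, one_mul] at this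
    exact this

/-- Uniqueness of lifts and equivariance under `a`, by simultaneous induction on the norm. -/
lemma UU_AA (n : ℕ) : UU A T U n ∧ AA A T U n := by
  induction n with
  | zero =>
    refine ⟨fun γ _ _ h => ?_, fun γ _ h => ?_⟩
    · exact absurd (znorm_nonneg (γ.1 1 0)) (by simpa using h)
    · exact absurd (znorm_nonneg (γ.1 0 0)) (by simpa using h)
  | succ n ih =>
    have hu := UU_succ hTU hA hT hU ih.1 ih.2
    push_cast
    exact ⟨hu, AA_succ hTU hA hT hU hu ih.2⟩

lemma Lift_unique {γ : Bianchi2} {h h' : H} (l : Lift A T U γ h) (l' : Lift A T U γ h') : h = h' :=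
  (UU_AA hTU hA hT hU ((γ.1 1 0).norm.toNat + 1)).1 γ h h' (by push_cast; omega) l l'

lemma Lift_ga {γ : Bianchi2} {h : H} (l : Lift A T U γ h) : Lift A T U (ga * γ) (A * h) :=
  (UU_AA hTU hA hT hU ((γ.1 0 0).norm.toNat + (γ.1 1 0).norm.toNat + 1)).2 γ h
    (by push_cast; omega) (by push_cast; omega) l
end

lemma tq_one : tq 1 = gt := by decide
lemma tq_om : tq ⟨0, 1⟩ = gu := by decide

lemma tq_zpow (q : ℤ√(-2 : ℤ)) (n : ℤ) : tq (n * q) = tq q ^ n := by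
  induction n using Int.induction_on with
  | zero => simp [tq_zero]
  | succ n ih =>
    rw [zpow_add_one, ← ih, ← tq_add]; congr 1; push_cast; ring
  | pred n ih =>
    rw [zpow_sub_one, ← ih, ← tq_neg, ← tq_add]; congr 1; push_cast; ring

lemma tq_eq (q : ℤ√(-2 : ℤ)) : tq q = gt ^ q.re * gu ^ q.im := by
  rw [← tq_one, ← tq_om, ← tq_zpow, ← tq_zpow, ← tq_add]
  congr 1
  ext <;> simp

lemma Lift_mem {H : Type*} [Group H] {A T U : H} {γ : Bianchi2} {h : H} (l : Lift A T U γ h) :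
    γ ∈ Subgroup.closure ({ga, gt, gu} : Set Bianchi2) := by
  have ma : ga ∈ Subgroup.closure ({ga, gt, gu} : Set Bianchi2) := Subgroup.subset_closure (by simp)
  have mt : gt ∈ Subgroup.closure ({ga, gt, gu} : Set Bianchi2) := Subgroup.subset_closure (by simp)
  have mu : gu ∈ Subgroup.closure ({ga, gt, gu} : Set Bianchi2) := Subgroup.subset_closure (by simp)
  have mq : ∀ q, tq q ∈ Subgroup.closure ({ga, gt, gu} : Set Bianchi2) := fun q => by
    rw [tq_eq]; exact mul_mem (zpow_mem mt _) (zpow_mem mu _)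
  induction l with
  | base γ h0 =>
    have hd := γ.2
    rw [Matrix.det_fin_two, h0, mul_zero, sub_zero] at hd
    have key : γ.1 0 0 = 1 ∧ γ.1 1 1 = 1 ∨ γ.1 0 0 = -1 ∧ γ.1 1 1 = -1 := by
      have hu : (γ.1 0 0).norm * (γ.1 1 1).norm = 1 := by
        rw [← Zsqrtd.norm_mul]; rw [hd]; rfl
      have h1 : (γ.1 0 0).norm = 1 := by
        have a1 := znorm_nonneg (γ.1 0 0)
        have a2 := znorm_nonneg (γ.1 1 1)
        exact Int.eq_one_of_mul_eq_one_right a1 hu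
      rw [znorm_def] at h1
      have i0 : (γ.1 0 0).im = 0 := by nlinarith [mul_self_nonneg (γ.1 0 0).re]
      rw [i0] at h1
      have r0 : (γ.1 0 0).re = 1 ∨ (γ.1 0 0).re = -1 := mul_self_eq_one_iff.1 (by linarith)
      rcases r0 with r | r
      · have e : γ.1 0 0 = 1 := Zsqrtd.ext_iff.2 ⟨r, i0⟩
        have hd' := hd
        rw [e, one_mul] at hd'
        exact Or.inl ⟨e, hd'⟩
      · have e : γ.1 0 0 = -1 := Zsqrtd.ext_iff.2 ⟨by simpa using r, by simpa using i0⟩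
        have hd' := hd
        rw [e] at hd'
        exact Or.inr ⟨e, by linear_combination -hd'⟩
    rcases key with ⟨e, e'⟩ | ⟨e, e'⟩
    · have : γ = tq (γ.1 0 1) := by
        apply Subtype.ext
        refine Matrix.ext fun i j => ?_
        fin_cases i <;> fin_cases j <;> simp [tq, h0, e, e']
      rw [this]; exact mq _
    · have : γ = ga * ga * tq (-γ.1 0 1) := by
        rw [gaga, neg_one_mul]
        apply Subtype.ext
        refine Matrix.ext fun i j => ?_
        rw [neg_apply']
        fin_cases i <;> fin_cases j <;> simp [tq, h0, e, e']
      rw [this]; exact mul_mem (mul_mem ma ma) (mq _)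
  | step γ q k hq hk ih =>
    have : γ = tq q * ga⁻¹ * (ga * (tq (-q) * γ)) := by rw [tq_neg]; simp [mul_assoc]
    rw [this]
    exact mul_mem (mul_mem (mq _) (inv_mem ma)) ih

lemma ga_gen : Subgroup.closure ({ga, gt, gu} : Set Bianchi2) = ⊤ := by
  rw [eq_top_iff]
  intro γ _
  obtain ⟨h, l⟩ := Lift_exists (A := (1 : Unit)) (T := 1) (U := 1) γ
  exact Lift_mem l

/-- Presentation of `PSL(2, ℤ[√-2])`: elements `A, T, U` of a group satisfying the relations
`[T,U] = A² = (T A)³ = (U⁻¹ A U A)² = 1` are the images of `a, t, u` under a homomorphism. -/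
theorem lifting {H : Type*} [Group H] (A T U : H) (hTU : T * U = U * T) (hA : A * A = 1)
    (hT : (T * A) * (T * A) * (T * A) = 1) (hU : (U⁻¹ * A * U * A) * (U⁻¹ * A * U * A) = 1) :
    ∃ f : Bianchi2 →* H, f ga = A ∧ f gt = T ∧ f gu = U := by
  choose L hL using Lift_exists (A := A) (T := T) (U := U)
  have uq : ∀ {γ h h'}, Lift A T U γ h → Lift A T U γ h' → h = h' := fun l l' => Lift_unique hTU hA hT hU l l'
  have La : ∀ γ, L (ga * γ) = A * L γ := fun γ => uq (hL _) (Lift_ga hTU hA hT hU (hL γ))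
  have Lq : ∀ q γ, L (tq q * γ) = tau T U q * L γ := fun q γ => uq (hL _) (Lift_tq hTU (hL γ) q)
  have Lt : ∀ γ, L (gt * γ) = T * L γ := fun γ => by
    rw [← tq_one, Lq]; simp [tau]
  have Lu : ∀ γ, L (gu * γ) = U * L γ := fun γ => by
    rw [← tq_om, Lq]; simp [tau]
  have L1 : L 1 = 1 := uq (hL 1) (by simpa [tau] using Lift.base (A := A) (T := T) (U := U) 1 (by simp))
  have hm : ∀ γ δ, L (γ * δ) = L γ * L δ := by
    intro γ
    have hγ : γ ∈ Subgroup.closure ({ga, gt, gu} : Set Bianchi2) := by rw [ga_gen]; trivial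
    have gen : ∀ x ∈ ({ga, gt, gu} : Set Bianchi2), ∀ δ, L (x * δ) = L x * L δ := by
      rintro x (rfl | rfl | rfl) δ
      · rw [La]; congr 1; have := La 1; rw [mul_one, L1, mul_one] at this; exact this.symm
      · rw [Lt]; congr 1; have := Lt 1; rw [mul_one, L1, mul_one] at this; exact this.symm
      · rw [Lu]; congr 1; have := Lu 1; rw [mul_one, L1, mul_one] at this; exact this.symm
    induction hγ using Subgroup.closure_induction with
    | mem x hx => exact gen x hx
    | one => intro δ; rw [L1, one_mul, one_mul]
    | mul x y _ _ hx hy => intro δ; rw [mul_assoc, hx, hy, hx, mul_assoc]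
    | inv x _ hx =>
      intro δ
      have h1 := hx (x⁻¹ * δ)
      have h2 := hx x⁻¹
      rw [mul_inv_cancel_left] at h1
      rw [mul_inv_cancel, L1] at h2
      rw [← inv_eq_of_mul_eq_one_right h2.symm, h1, inv_mul_cancel_left]
  refine ⟨⟨⟨L, L1⟩, hm⟩, ?_, ?_, ?_⟩
  · have := La 1; rw [mul_one, L1, mul_one] at this; exact this
  · have := Lt 1; rw [mul_one, L1, mul_one] at this; exact this
  · have := Lu 1; rw [mul_one, L1, mul_one] at this; exact this

/-! ### The upper bound -/

lemma embBar_ne : sqrtm2EmbedBar (1 + om) ≠ 0 := by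
  intro h
  have : sqrtm2EmbedBar (1 + om) * sqrtm2EmbedBar (1 - om) = sqrtm2EmbedBar 3 := by
    rw [← map_mul]; congr 1
  rw [h, zero_mul, map_ofNat] at this
  norm_num at this

lemma invCbar_gl : invCbar gl = !![1, 0; -sqrtm2EmbedBar (1 + om), 1] := by
  have : (gl⁻¹).1 = !![1, 0; -(1 + om), 1] := by decide
  rw [invCbar, this]
  ext i j
  fin_cases i <;> fin_cases j <;> simp

/-- A form fixed by the lower unipotent element `gl` is determined by its restriction to
`w = (1, 0)`: the vectors `γ̄⁻ⁿ (1, 0)` are pairwise independent. -/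
lemma fix_gl (d : ℕ) (F : Mat d) (h : MatRep d gl F = F) (h0 : F.mulVec (mon d ![1, 0]) = 0) : F = 0 := by
  have step : ∀ w, F.mulVec (mon d w) = 0 → F.mulVec (mon d ((invCbar gl).mulVec w)) = 0 := by
    intro w hw
    refine mon_ext d _ _ fun v => ?_
    have e : (invC gl).mulVec ((invC gl⁻¹).mulVec v) = v := by
      rw [Matrix.mulVec_mulVec, ← invC_mul, inv_mul_cancel, invC_one, Matrix.one_mulVec]
    have h1 := bfm_MatRep d gl F ((invC gl⁻¹).mulVec v) w
    rw [h, e] at h1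
    rw [dotProduct_zero]
    refine h1.symm.trans ?_
    rw [bfm, hw, dotProduct_zero]
  have all : ∀ n : ℕ, F.mulVec (mon d ![1, -(n * sqrtm2EmbedBar (1 + om))]) = 0 := by
    intro n
    induction n with
    | zero => simpa using h0
    | succ n ih =>
      have := step _ ih
      rw [invCbar_gl] at this
      have e : (!![1, 0; -sqrtm2EmbedBar (1 + om), 1] : Matrix (Fin 2) (Fin 2) ℂ).mulVec ![1, -(n * sqrtm2EmbedBar (1 + om))]
          = ![1, -((n + 1 : ℕ) * sqrtm2EmbedBar (1 + om))] := by
        ext i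
        fin_cases i
        · simp [Matrix.mulVec, dotProduct, Fin.sum_univ_two]
        · simp [Matrix.mulVec, dotProduct, Fin.sum_univ_two]; ring
      rwa [e] at this
  ext i j
  let p : Polynomial ℂ := ∑ j : Fin (d + 1), Polynomial.C (F i j) * Polynomial.X ^ (d - j : ℕ)
  have hp : p = 0 := by
    refine Polynomial.eq_zero_of_infinite_isRoot p (Set.Infinite.mono (s := Set.range fun n : ℕ => -(n * sqrtm2EmbedBar (1 + om))) ?_ (Set.infinite_range_of_injective ?_))
    · rintro _ ⟨n, rfl⟩
      have := congrFun (all n) i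
      simp only [Matrix.mulVec, dotProduct, mon, Pi.zero_apply] at this
      simp only [p, Set.mem_setOf_eq, Polynomial.IsRoot, Polynomial.eval_finset_sum, Polynomial.eval_mul, Polynomial.eval_C, Polynomial.eval_pow, Polynomial.eval_X]
      rw [← this]
      refine Finset.sum_congr rfl fun j _ => ?_
      simp
    · intro a b hab
      have := mul_right_cancel₀ embBar_ne (neg_injective hab)
      exact_mod_cast this
  have h2 : p.coeff (d - j) = 0 := by rw [hp]; simp
  rw [Polynomial.finset_sum_coeff] at h2
  simp only [Polynomial.coeff_C_mul, Polynomial.coeff_X_pow] at h2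
  rw [Finset.sum_eq_single j] at h2
  · simpa using h2
  · intro k _ hk
    rw [if_neg (fun h => hk (Fin.ext (by omega))), mul_zero]
  · simp

/-- The forms fixed by `gl`. -/
def FixGl (d : ℕ) : Submodule ℂ (Mat d) := LinearMap.ker (MatRep d gl - 1)

lemma mem_FixGl (d : ℕ) (F : Mat d) : F ∈ FixGl d ↔ MatRep d gl F = F := by
  rw [FixGl, LinearMap.mem_ker, LinearMap.sub_apply, sub_eq_zero]; rfl

lemma FixGl_finrank (d : ℕ) : Module.finrank ℂ (FixGl d) ≤ d + 1 := by
  let ev : FixGl d →ₗ[ℂ] (Fin (d + 1) → ℂ) :=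
    { toFun := fun F => F.1.mulVec (mon d ![1, 0])
      map_add' := fun F G => Matrix.add_mulVec _ _ _
      map_smul' := fun c F => Matrix.smul_mulVec _ _ _ }
  have inj : Function.Injective ev := (injective_iff_map_eq_zero ev).2 fun F hF =>
    Subtype.ext (fix_gl d F.1 ((mem_FixGl d F.1).1 F.2) hF)
  have := LinearMap.finrank_le_finrank_of_injective inj
  simpa using this

lemma inv_finrank (d : ℕ) : Module.finrank ℂ (MatRep d).invariants ≤ d + 1 := by
  refine le_trans (Submodule.finrank_mono fun F hF => ?_) (FixGl_finrank d)
  exact (mem_FixGl d F).2 (hF gl)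

open groupCohomology in
lemma coc_mul {G V : Type} [Group G] [AddCommGroup V] [Module ℂ V] {ρ : Representation ℂ G V}
    (f : cocycles₁ (Rep.of ρ)) (g h : G) : f.1 (g * h) = ρ g (f.1 h) + f.1 g :=
  (mem_cocycles₁_iff f.1).1 f.2 g h

open groupCohomology in
/-- Restriction of cocycles to the subgroup `SS`. -/
def resSS (d : ℕ) : cocycles₁ (Rep.of (MatRep d)) →ₗ[ℂ] CocMat (homS sqrtm2Embed) (homS sqrtm2EmbedBar) d where
  toFun f := ⟨fun s => f.1 s.1, fun g h => by
    rw [homS_inv, homS_inv]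
    exact (coc_mul f g.1 h.1).trans (add_comm _ _)⟩
  map_add' f g := rfl
  map_smul' c f := rfl

lemma rank_bound (d p : ℕ) (hd : 1 ≤ d) (hp : 1 ≤ p) (hdp : d < 3 ^ (2 * p)) :
    Module.rank ℂ (CocMat (homS sqrtm2Embed) (homS sqrtm2EmbedBar) d) ≤
      ((d + 1) * ((d + 1) + 3 * (3 * 3 ^ p) + 3) : ℕ) := by
  refine rank_le fun s hs => ?_
  have e := Fintype.equivFin s
  have h1 := (hs.comp e.symm e.symm.injective).map' (Submodule.subtype _) (Submodule.ker_subtype _)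
  have := SS_bound_C d p hd hp hdp (Fintype.card s) _ (fun i => (e.symm i).1.2) h1
  simpa using this

open groupCohomology in
lemma coc_zero_of_gen {V : Type} [AddCommGroup V] [Module ℂ V] {ρ : Representation ℂ Bianchi2 V}
    (f : cocycles₁ (Rep.of ρ)) (ha : f.1 ga = 0) (ht : f.1 gt = 0) (hu : f.1 gu = 0) : f = 0 := by
  have h1 : f.1 1 = 0 := cocycles₁_map_one f
  let S : Subgroup Bianchi2 :=
    { carrier := {γ | f.1 γ = 0}
      one_mem' := h1
      mul_mem' := fun {a b} (hx : f.1 a = 0) (hy : f.1 b = 0) => by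
        show f.1 (a * b) = 0
        rw [coc_mul f, hx, hy, map_zero, add_zero]
      inv_mem' := fun {a} (hx : f.1 a = 0) => by
        show f.1 a⁻¹ = 0
        have := coc_mul f a⁻¹ a
        rw [inv_mul_cancel, h1, hx, map_zero, zero_add] at this
        exact this.symm }
  have hS : S = ⊤ := by
    rw [eq_top_iff, ← ga_gen, Subgroup.closure_le]
    rintro x (rfl | rfl | rfl)
    · exact ha
    · exact ht
    · exact hu
  apply Subtype.ext
  funext γ
  have : γ ∈ S := by rw [hS]; trivial
  exact this

open groupCohomology in
/-- A cocycle vanishing on `SS` is determined by its value at `ga`; as `gl * ga = ga * gt⁻¹ * gu⁻¹`, this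
value is fixed by `gl`. -/
lemma ker_res (d : ℕ) (f : cocycles₁ (Rep.of (MatRep d))) (hf : resSS d f = 0) : f.1 ga ∈ FixGl d := by
  have z : ∀ s : SS, f.1 s.1 = 0 := fun s => congrFun (congrArg Subtype.val hf) s
  have r : gl * ga = ga * (gt⁻¹ * gu⁻¹) := by decide
  have h1 := coc_mul f gl ga
  have h2 := coc_mul f ga (gt⁻¹ * gu⁻¹)
  have z1 : f.1 (gt⁻¹ * gu⁻¹) = 0 := z (st⁻¹ * su⁻¹)
  have z2 : f.1 gl = 0 := z sl
  rw [r, h2, z1, z2, map_zero, zero_add, add_zero] at h1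
  exact (mem_FixGl d _).2 h1.symm

open groupCohomology in
/-- The dimension of `Z¹` of the full group: the bound for `SS` plus `dim FixGl ≤ d + 1` for the kernel
of restriction. -/
lemma coc_finrank (d p : ℕ) (hd : 1 ≤ d) (hp : 1 ≤ p) (hdp : d < 3 ^ (2 * p)) :
    FiniteDimensional ℂ (cocycles₁ (Rep.of (MatRep d))) ∧
    Module.finrank ℂ (cocycles₁ (Rep.of (MatRep d))) ≤ (d + 1) * ((d + 1) + 3 * (3 * 3 ^ p) + 3) + (d + 1) := by
  have rb := rank_bound d p hd hp hdp
  haveI : FiniteDimensional ℂ (CocMat (homS sqrtm2Embed) (homS sqrtm2EmbedBar) d) :=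
    Module.rank_lt_aleph0_iff.1 (rb.trans_lt (Cardinal.nat_lt_aleph0 _))
  have fb := Module.finrank_le_of_rank_le rb
  let ea : cocycles₁ (Rep.of (MatRep d)) →ₗ[ℂ] Mat d :=
    { toFun := fun f => f.1 ga
      map_add' := fun _ _ => rfl
      map_smul' := fun _ _ => rfl }
  have inj : Function.Injective ((resSS d).prod ea) := (injective_iff_map_eq_zero _).2 fun f hf => by
    have h1 : resSS d f = 0 := congrArg Prod.fst hf
    have h2 : f.1 ga = 0 := congrArg Prod.snd hf
    exact coc_zero_of_gen f h2 (congrFun (congrArg Subtype.val h1) st) (congrFun (congrArg Subtype.val h1) su)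
  haveI fd : FiniteDimensional ℂ (cocycles₁ (Rep.of (MatRep d))) := FiniteDimensional.of_injective _ inj
  refine ⟨fd, ?_⟩
  have rn := LinearMap.finrank_range_add_finrank_ker (resSS d)
  have h1 := Submodule.finrank_le (LinearMap.range (resSS d))
  let ek : LinearMap.ker (resSS d) →ₗ[ℂ] FixGl d :=
    (ea.comp (Submodule.subtype _)).codRestrict (FixGl d) fun f => ker_res d f.1 f.2
  have injk : Function.Injective ek := (injective_iff_map_eq_zero _).2 fun f hf => by
    have h2 : f.1.1 ga = 0 := congrArg Subtype.val hf
    have h1 : resSS d f.1 = 0 := f.2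
    exact Subtype.ext (coc_zero_of_gen f.1 h2 (congrFun (congrArg Subtype.val h1) st) (congrFun (congrArg Subtype.val h1) su))
  have h2 := LinearMap.finrank_le_finrank_of_injective injk
  have h3 := FixGl_finrank d
  omega

lemma exists_p (d : ℕ) (hd : 1 ≤ d) : ∃ p, 1 ≤ p ∧ d < 3 ^ (2 * p) ∧ 3 ^ (2 * p) ≤ 9 * d := by
  classical
  have ex : ∃ p, d < 3 ^ (2 * p) := ⟨d, lt_of_lt_of_le (Nat.lt_pow_self (by norm_num : 1 < 3)) (Nat.pow_le_pow_right (by norm_num) (by omega))⟩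
  have h1 := Nat.find_spec ex
  have hp : 1 ≤ Nat.find ex := by
    by_contra h0
    have : Nat.find ex = 0 := by omega
    rw [this] at h1
    simp at h1
    omega
  refine ⟨Nat.find ex, hp, h1, ?_⟩
  have h2 := Nat.find_min ex (m := Nat.find ex - 1) (by omega)
  have e : 2 * Nat.find ex = 2 * (Nat.find ex - 1) + 2 := by omega
  rw [e, pow_add]
  omega

/-- In `dim H¹ = dim Z¹ - dim E_d + dim E_d^Γ` the terms `(d + 1)²` cancel, which leaves a bound of
order `d · 3^p` with `3^p` of order `√d`. -/
lemma upper_nat (d : ℕ) (hd : 1 ≤ d) : ∃ p, 1 ≤ p ∧ 3 ^ (2 * p) ≤ 9 * d ∧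
    Module.finrank ℂ (groupCohomology (Rep.of (EdRep d)) 1) ≤ (d + 1) * (9 * 3 ^ p + 5) := by
  obtain ⟨p, hp, h1, h2⟩ := exists_p d hd
  refine ⟨p, hp, h2, ?_⟩
  obtain ⟨fd, hf⟩ := coc_finrank d p hd hp h1
  have h3 := finrank_H1 (MatRep d)
  have h4 := inv_finrank d
  have h5 : Module.finrank ℂ (Mat d) = (d + 1) * (d + 1) := by
    rw [Module.finrank_matrix]; simp
  rw [finrank_H1_mat]
  nlinarith

lemma upper_real (d : ℕ) (hd : 1 ≤ d) :
    (Module.finrank ℂ (groupCohomology (Rep.of (EdRep d)) 1) : ℝ) ≤ 64 * (d : ℝ) ^ ((15 : ℝ) / 8) := by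
  obtain ⟨p, hp, h2, h3⟩ := upper_nat d hd
  have hd' : (1 : ℝ) ≤ d := by exact_mod_cast hd
  have hd0 : (0 : ℝ) ≤ d := by linarith
  have s1 : (1 : ℝ) ≤ Real.sqrt d := Real.one_le_sqrt.2 hd'
  have h4 : (3 : ℝ) ^ p ≤ 3 * Real.sqrt d := by
    refine abs_le_of_sq_le_sq' ?_ (by positivity) |>.2
    rw [mul_pow, Real.sq_sqrt hd0, ← pow_mul, mul_comm p 2]
    have : ((3 ^ (2 * p) : ℕ) : ℝ) ≤ ((9 * d : ℕ) : ℝ) := by exact_mod_cast h2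
    push_cast at this
    linarith
  have h5 : (Module.finrank ℂ (groupCohomology (Rep.of (EdRep d)) 1) : ℝ) ≤ (d + 1) * (9 * 3 ^ p + 5) := by
    exact_mod_cast h3
  refine h5.trans ?_
  calc ((d : ℝ) + 1) * (9 * 3 ^ p + 5) ≤ (2 * d) * (32 * Real.sqrt d) := by
        refine mul_le_mul (by linarith) (by linarith) (by positivity) (by positivity)
    _ = 64 * (d : ℝ) ^ ((3 : ℝ) / 2) := by
        rw [Real.sqrt_eq_rpow, show (3 : ℝ) / 2 = 1 + 1 / 2 by norm_num, Real.rpow_add (by linarith), Real.rpow_one]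
        ring
    _ ≤ _ := by
        refine mul_le_mul_of_nonneg_left (Real.rpow_le_rpow_of_exponent_le hd' (by norm_num)) (by norm_num)

/-! ### Traces on symmetric powers -/

/-- The Chebyshev recursion: `chi t d` is the trace of `Sym^d A` for `det A = 1`, `tr A = t`. -/
def chi (t : ℤ) : ℕ → ℤ
  | 0 => 1
  | 1 => t
  | n + 2 => t * chi t (n + 1) - chi t n

lemma chi_two (d : ℕ) : chi 2 d = d + 1 := by
  induction d using Nat.twoStepInduction with
  | zero => rfl
  | one => rfl
  | more n h1 h2 => rw [chi, h1, h2]; push_cast; ring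

lemma chi_neg (t : ℤ) (d : ℕ) : chi (-t) d = (-1) ^ d * chi t d := by
  induction d using Nat.twoStepInduction with
  | zero => simp [chi]
  | one => simp [chi]
  | more n h1 h2 => rw [chi, chi, h1, h2]; ring

lemma chi_zero (d : ℕ) : |chi 0 d| ≤ 1 := by
  induction d using Nat.twoStepInduction with
  | zero => simp [chi]
  | one => simp [chi]
  | more n h1 h2 => rw [chi, zero_mul, zero_sub, abs_neg]; exact h1

lemma chi_one (d : ℕ) : |chi 1 d| ≤ 1 := by
  have : chi 1 d = 1 ∧ chi 1 (d + 1) = 1 ∨ chi 1 d = 1 ∧ chi 1 (d + 1) = 0 ∨ chi 1 d = 0 ∧ chi 1 (d + 1) = -1 ∨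
      chi 1 d = -1 ∧ chi 1 (d + 1) = -1 ∨ chi 1 d = -1 ∧ chi 1 (d + 1) = 0 ∨ chi 1 d = 0 ∧ chi 1 (d + 1) = 1 := by
    induction d with
    | zero => left; simp [chi]
    | succ n ih =>
      have : chi 1 (n + 1 + 1) = 1 * chi 1 (n + 1) - chi 1 n := rfl
      omega
  rw [abs_le]; omega

lemma chi_sum (l m : ℂ) (t : ℤ) (h1 : l * m = 1) (h2 : l + m = t) (d : ℕ) :
    ∑ k ∈ Finset.range (d + 1), l ^ k * m ^ (d - k) = chi t d := by
  have step : ∀ d, ∑ k ∈ Finset.range (d + 1 + 1), l ^ k * m ^ (d + 1 - k) =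
      m * ∑ k ∈ Finset.range (d + 1), l ^ k * m ^ (d - k) + l ^ (d + 1) := by
    intro d
    rw [Finset.sum_range_succ, Finset.mul_sum]
    congr 1
    · refine Finset.sum_congr rfl fun k hk => ?_
      rw [Nat.succ_sub (Nat.lt_succ_iff.1 (Finset.mem_range.1 hk)), pow_succ]; ring
    · simp
  induction d using Nat.twoStepInduction with
  | zero => simp [chi]
  | one => rw [step]; simp [chi, ← h2]; ring
  | more n i1 i2 =>
    have s1 := step n
    rw [step (n + 1), i2]
    rw [i1, i2] at s1
    rw [chi]
    push_cast
    rw [← h2]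
    have : l ^ (n + 1 + 1) = l * ((chi t (n + 1) : ℂ) - m * chi t n) := by rw [s1]; ring
    rw [this]
    linear_combination (-(chi t n : ℂ)) * h1

lemma trace_upper (d : ℕ) (l b m : ℂ) :
    (symMat d !![l, b; 0, m]).trace = ∑ k ∈ Finset.range (d + 1), l ^ k * m ^ (d - k) := by
  rw [Matrix.trace, Finset.sum_range]
  refine Finset.sum_congr rfl fun k _ => ?_
  simp only [Matrix.diag_apply, symMat, Matrix.of_apply, Matrix.cons_val', Matrix.cons_val_zero, Matrix.cons_val_fin_one,
    Matrix.cons_val_one, Polynomial.C_0, zero_mul, zero_add]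
  rw [← Polynomial.C_pow, Polynomial.coeff_mul_C]
  congr 1
  have := Polynomial.coeff_pow_of_natDegree_le (p := Polynomial.C l * Polynomial.X + Polynomial.C b) (m := k) (n := 1)
    (Polynomial.natDegree_linear_le)
  rw [mul_one] at this
  rw [this]
  simp

/-- The trace of the symmetric power of a unimodular matrix; the matrix is first made triangular. -/
lemma trace_symMat (d : ℕ) (A : Matrix (Fin 2) (Fin 2) ℂ) (t : ℤ) (hd : A.det = 1) (ht : A.trace = t) :
    (symMat d A).trace = chi t d := by
  rw [Matrix.det_fin_two] at hd
  rw [Matrix.trace_fin_two] at ht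
  have e : A = !![A 0 0, A 0 1; A 1 0, A 1 1] := Matrix.eta_fin_two A
  by_cases h0 : A 1 0 = 0
  · rw [h0] at e
    rw [e, trace_upper]
    rw [h0, mul_zero, sub_zero] at hd
    exact chi_sum _ _ t hd ht d
  obtain ⟨r, hr⟩ := IsAlgClosed.exists_pow_nat_eq ((t : ℂ) ^ 2 - 4) (n := 2) (by norm_num)
  set l : ℂ := (t + r) / 2
  set m : ℂ := (t - r) / 2
  have h1 : l * m = 1 := by simp only [l, m]; linear_combination (-1 / 4) * hr
  have h2 : l + m = t := by simp only [l, m]; ring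
  let P : Matrix (Fin 2) (Fin 2) ℂ := !![l - A 1 1, -(A 1 0)⁻¹; A 1 0, 0]
  let Q : Matrix (Fin 2) (Fin 2) ℂ := !![0, (A 1 0)⁻¹; -A 1 0, l - A 1 1]
  have hPQ : P * Q = 1 := by
    simp only [P, Q, Matrix.mul_fin_two, Matrix.one_fin_two]
    congr 1
    ext i j
    fin_cases i <;> fin_cases j <;> simp <;> field_simp <;> ring
  have hQP := mul_eq_one_comm.1 hPQ
  have hA : A * P = P * !![l, -(A 1 0)⁻¹; 0, m] := by
    rw [e]
    simp only [P, Matrix.mul_fin_two]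
    ext i j
    fin_cases i <;> fin_cases j <;> simp
    · linear_combination -hd + h1 + l * ht - l * h2
    · field_simp
      linear_combination -ht - h2
    · ring
  have hS : symMat d Q * symMat d P = 1 := by rw [← symMat_mul, hPQ, symMat_one]
  have h3 : A = P * !![l, -(A 1 0)⁻¹; 0, m] * Q := by rw [← hA, mul_assoc, hPQ, mul_one]
  rw [h3, symMat_mul, symMat_mul, Matrix.trace_mul_comm, mul_assoc, ← symMat_mul, hQP, symMat_one, mul_one, trace_upper]
  exact chi_sum l m t h1 h2 d

lemma trace_Mat (d : ℕ) (f : Mat d →ₗ[ℂ] Mat d) :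
    LinearMap.trace ℂ (Mat d) f = ∑ i, ∑ j, f (Matrix.single i j 1) i j := by
  rw [LinearMap.trace_eq_matrix_trace ℂ (Matrix.stdBasis ℂ (Fin (d + 1)) (Fin (d + 1))), Matrix.trace, Fintype.sum_prod_type]
  refine Finset.sum_congr rfl fun i _ => Finset.sum_congr rfl fun j _ => ?_
  rw [Matrix.diag_apply, LinearMap.toMatrix_apply, Matrix.stdBasis_eq_single]
  simp [Matrix.stdBasis]

lemma trace_actL (d : ℕ) (A B : Mat d) : LinearMap.trace ℂ (Mat d) (actL d A B) = A.trace * B.trace := by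
  rw [trace_Mat, Matrix.trace, Matrix.trace, Finset.sum_mul_sum]
  refine Finset.sum_congr rfl fun i _ => Finset.sum_congr rfl fun j _ => ?_
  show (A * _ * B.transpose) i j = _
  simp [Matrix.mul_assoc, Matrix.mul_apply, Matrix.single_apply, Finset.sum_ite_eq, ite_and]

/-- The swap of the two pairs of variables. -/
def swp (d : ℕ) : Mat d →ₗ[ℂ] Mat d where
  toFun F := F.transpose
  map_add' _ _ := rfl
  map_smul' _ _ := rfl

lemma trace_actL_swp (d : ℕ) (A B : Mat d) : LinearMap.trace ℂ (Mat d) (actL d A B ∘ₗ swp d) = (A * B).trace := by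
  rw [trace_Mat, Matrix.trace]
  refine Finset.sum_congr rfl fun i _ => ?_
  rw [Matrix.diag_apply, Matrix.mul_apply]
  refine Finset.sum_congr rfl fun j _ => ?_
  show (A * (Matrix.single i j (1 : ℂ)).transpose * B.transpose) i j = _
  simp [Matrix.mul_assoc, Matrix.mul_apply, Matrix.single_apply, Finset.sum_ite_eq, ite_and]

/-! ### Fixed spaces and the twisted swap -/

/-- The subspace of vectors fixed by `S` on which the involution `σ` acts by `ε`. -/
def fixW {G V : Type*} [Monoid G] [AddCommGroup V] [Module ℂ V] (ρ : Representation ℂ G V) (σ : V →ₗ[ℂ] V)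
    (S : Finset G) (ε : ℂ) : Submodule ℂ V where
  carrier := {x | (∀ g ∈ S, ρ g x = x) ∧ σ x = ε • x}
  add_mem' := by
    rintro x y ⟨h1, h2⟩ ⟨h3, h4⟩
    exact ⟨fun g hg => by rw [map_add, h1 g hg, h3 g hg], by rw [map_add, h2, h4, smul_add]⟩
  zero_mem' := ⟨fun g _ => map_zero _, by simp⟩
  smul_mem' := by
    rintro c x ⟨h1, h2⟩
    exact ⟨fun g hg => by rw [map_smul, h1 g hg], by rw [map_smul, h2, smul_comm]⟩

/-- The averaging formula for the dimension of `fixW`. -/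
lemma fixW_trace {G V : Type*} [Group G] [DecidableEq G] [AddCommGroup V] [Module ℂ V] [FiniteDimensional ℂ V]
    (ρ : Representation ℂ G V) (σ : V →ₗ[ℂ] V) (S : Finset G) (ε : ℂ) (φ : G → G) (hε : ε * ε = 1)
    (hσ : ∀ x, σ (σ x) = x) (hφ : ∀ g x, σ (ρ g x) = ρ (φ g) (σ x)) (hi : Function.Injective φ)
    (h1 : 1 ∈ S) (hm : ∀ g ∈ S, ∀ h ∈ S, g * h ∈ S) (hφS : ∀ g ∈ S, φ g ∈ S) :
    (2 * S.card : ℂ) * Module.finrank ℂ (fixW ρ σ S ε) =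
      ∑ g ∈ S, LinearMap.trace ℂ V (ρ g) + ε * ∑ g ∈ S, LinearMap.trace ℂ V (ρ g ∘ₗ σ) := by
  have hc : (2 * S.card : ℂ) ≠ 0 := by
    have : S.card ≠ 0 := Finset.card_ne_zero_of_mem h1
    exact mul_ne_zero two_ne_zero (Nat.cast_ne_zero.2 this)
  let Q : V →ₗ[ℂ] V := ∑ g ∈ S, (ρ g + ε • (ρ g ∘ₗ σ))
  have hQ : ∀ x, Q x = ∑ g ∈ S, ρ g (x + ε • σ x) := by
    intro x
    simp only [Q, LinearMap.sum_apply, LinearMap.add_apply, LinearMap.smul_apply, LinearMap.comp_apply, map_add, map_smul]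
  have hP : LinearMap.IsProj (fixW ρ σ S ε) ((2 * S.card : ℂ)⁻¹ • Q) := by
    refine ⟨fun x => Submodule.smul_mem _ _ ?_, fun x hx => ?_⟩
    · rw [hQ]
      refine ⟨fun h hh => ?_, ?_⟩
      · rw [map_sum]
        have himg : S.image (h * ·) = S :=
          Finset.eq_of_subset_of_card_le (fun k hk => by
            obtain ⟨g, hg, rfl⟩ := Finset.mem_image.1 hk
            exact hm h hh g hg) (by rw [Finset.card_image_of_injective _ (mul_right_injective h)])
        conv_rhs => rw [← himg, Finset.sum_image (fun a _ b _ hab => mul_right_injective h hab)]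
        refine Finset.sum_congr rfl fun g _ => ?_
        rw [map_mul]; rfl
      · have himg : S.image φ = S :=
          Finset.eq_of_subset_of_card_le (fun k hk => by
            obtain ⟨g, hg, rfl⟩ := Finset.mem_image.1 hk
            exact hφS g hg) (by rw [Finset.card_image_of_injective _ hi])
        conv_rhs => rw [← himg, Finset.sum_image (fun a _ b _ hab => hi hab)]
        rw [map_sum, Finset.smul_sum]
        refine Finset.sum_congr rfl fun g _ => ?_
        rw [hφ, map_add, map_smul, hσ, ← map_smul, smul_add, smul_smul, hε, one_smul, add_comm]
    · rw [LinearMap.smul_apply, hQ]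
      have : ∀ g ∈ S, ρ g (x + ε • σ x) = (2 : ℂ) • x := by
        intro g hg
        rw [hx.2, smul_smul, hε, one_smul, map_add, hx.1 g hg, two_smul]
      rw [Finset.sum_congr rfl this, Finset.sum_const, ← Nat.cast_smul_eq_nsmul ℂ, smul_smul, smul_smul,
        mul_assoc, mul_comm (S.card : ℂ) 2, inv_mul_cancel₀ hc, one_smul]
  have := hP.trace
  rw [map_smul, smul_eq_mul, inv_mul_eq_iff_eq_mul₀ hc] at this
  rw [← this]
  simp only [Q, map_sum, map_add, map_smul, Finset.sum_add_distrib, Finset.mul_sum, smul_eq_mul]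

/-- Entrywise conjugation. -/
def cj : Bianchi2 →* Bianchi2 := Matrix.SpecialLinearGroup.map (starRingEnd (ℤ√(-2 : ℤ)))

lemma cj_cj (γ : Bianchi2) : cj (cj γ) = γ := by
  refine Subtype.ext (Matrix.ext fun i j => ?_)
  show star (star (γ.1 i j)) = _
  exact star_star _

lemma embBar_star (z : ℤ√(-2 : ℤ)) : sqrtm2EmbedBar (star z) = sqrtm2Embed z := by
  have : (sqrtm2EmbedBar.comp (starRingEnd (ℤ√(-2 : ℤ)))) = sqrtm2Embed := by
    refine Zsqrtd.hom_ext _ _ ?_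
    have h : starRingEnd (ℤ√(-2 : ℤ)) Zsqrtd.sqrtd = -Zsqrtd.sqrtd := by decide
    rw [RingHom.comp_apply, h, map_neg]
    simp [sqrtm2EmbedBar, sqrtm2Embed, Zsqrtd.lift, Zsqrtd.sqrtd]
  exact RingHom.congr_fun this z

lemma invCbar_cj (γ : Bianchi2) : invCbar (cj γ) = invC γ := by
  rw [invCbar, invC, ← map_inv]
  refine Matrix.ext fun i j => ?_
  exact embBar_star _

lemma invC_cj (γ : Bianchi2) : invC (cj γ) = invCbar γ := by
  conv_rhs => rw [← cj_cj γ, invCbar_cj]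

lemma swp_MatRep (d : ℕ) (γ : Bianchi2) (F : Mat d) : swp d (MatRep d γ F) = MatRep d (cj γ) (swp d F) := by
  rw [MatRep_apply, MatRep_apply, invC_cj, invCbar_cj]
  show (_ : Mat d).transpose = _ * F.transpose * _
  rw [Matrix.transpose_mul, Matrix.transpose_mul, Matrix.transpose_transpose, mul_assoc]

lemma swp_swp (d : ℕ) (F : Mat d) : swp d (swp d F) = F := rfl

/-- The trace of `γ⁻¹`. -/
def trI (γ : Bianchi2) : ℤ√(-2 : ℤ) := (γ⁻¹).1 0 0 + (γ⁻¹).1 1 1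

lemma trace_symC (d : ℕ) (γ : Bianchi2) (h : (trI γ).im = 0) : (symMat d (invC γ)).trace = chi (trI γ).re d := by
  refine trace_symMat d _ _ ?_ ?_
  · have := (RingHom.map_det sqrtm2Embed (γ⁻¹).1).symm
    rw [(γ⁻¹).2, map_one] at this
    exact this
  · rw [Matrix.trace_fin_two]
    show sqrtm2Embed _ + sqrtm2Embed _ = _
    rw [← map_add]
    have : (γ⁻¹).1 0 0 + (γ⁻¹).1 1 1 = ((trI γ).re : ℤ√(-2 : ℤ)) := Zsqrtd.ext rfl (h.trans (Zsqrtd.im_intCast _).symm)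
    rw [this, map_intCast]

lemma trI_cj (γ : Bianchi2) : trI (cj γ) = star (trI γ) := by
  rw [trI, ← map_inv, trI, star_add]; rfl

lemma trace_MatRep (d : ℕ) (γ : Bianchi2) (h : (trI γ).im = 0) :
    LinearMap.trace ℂ (Mat d) (MatRep d γ) = ((chi (trI γ).re d ^ 2 : ℤ) : ℂ) := by
  show LinearMap.trace ℂ (Mat d) (actL d _ _) = _
  rw [trace_actL, ← invC_cj, trace_symC d γ h, trace_symC d (cj γ) (by rw [trI_cj, Zsqrtd.im_star, h, neg_zero]), trI_cj]
  push_cast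
  rw [Zsqrtd.re_star, sq]

lemma trace_MatRep_swp (d : ℕ) (γ : Bianchi2) (h : (trI (γ * cj γ)).im = 0) :
    LinearMap.trace ℂ (Mat d) (MatRep d γ ∘ₗ swp d) = chi (trI (γ * cj γ)).re d := by
  show LinearMap.trace ℂ (Mat d) (actL d _ _ ∘ₗ swp d) = _
  rw [trace_actL_swp, ← symMat_mul, ← invC_cj, ← invC_mul, trace_symC _ _ h]

/-- `F ↦ θ · (swap F)`. -/
def tw (d : ℕ) (θ : Bianchi2) : Mat d →ₗ[ℂ] Mat d := MatRep d θ ∘ₗ swp d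

/-- The fixed vectors of the finite set `LS` of eigenvalue `ε` under the twisted swap. -/
abbrev FW (d : ℕ) (LS : List Bianchi2) (θ : Bianchi2) (ε : ℤ) : Submodule ℂ (Mat d) :=
  fixW (MatRep d) (tw d θ) LS.toFinset (ε : ℂ)

lemma tw_tw (d : ℕ) (θ : Bianchi2) (hθ : θ * cj θ = 1) (x : Mat d) : tw d θ (tw d θ x) = x := by
  show MatRep d θ (swp d (MatRep d θ (swp d x))) = x
  rw [swp_MatRep, swp_swp, ← Module.End.mul_apply, ← map_mul, hθ, map_one]; rfl

lemma tw_MatRep (d : ℕ) (θ g : Bianchi2) (x : Mat d) :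
    tw d θ (MatRep d g x) = MatRep d (θ * cj g * θ⁻¹) (tw d θ x) := by
  show MatRep d θ (swp d (MatRep d g x)) = MatRep d _ (MatRep d θ (swp d x))
  have e : MatRep d (θ * cj g * θ⁻¹) (MatRep d θ (swp d x)) = MatRep d (θ * cj g * θ⁻¹ * θ) (swp d x) := by
    rw [map_mul (MatRep d) (θ * cj g * θ⁻¹) θ]; rfl
  rw [swp_MatRep, e, inv_mul_cancel_right, map_mul]; rfl

/-- A decidable condition for the averaging formula. -/
def LSgood (LS : List Bianchi2) (θ : Bianchi2) : Prop :=
  θ * cj θ = 1 ∧ LS.Nodup ∧ 1 ∈ LS ∧ (∀ g ∈ LS, ∀ h ∈ LS, g * h ∈ LS) ∧ (∀ g ∈ LS, θ * cj g * θ⁻¹ ∈ LS) ∧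
    (∀ g ∈ LS, (trI g).im = 0) ∧ (∀ g ∈ LS, (trI (g * θ * cj (g * θ))).im = 0)

lemma FW_finrank (d : ℕ) (LS : List Bianchi2) (θ : Bianchi2) (ε : ℤ) (hε : ε * ε = 1) (h : LSgood LS θ) :
    (2 * LS.length : ℤ) * Module.finrank ℂ (FW d LS θ ε) =
      ((LS.map fun g => (trI g).re).map fun t => chi t d ^ 2).sum +
      ε * ((LS.map fun g => (trI (g * θ * cj (g * θ))).re).map fun t => chi t d).sum := by
  obtain ⟨h0, hn, h1, hm, hφ, hi1, hi2⟩ := h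
  have := fixW_trace (MatRep d) (tw d θ) LS.toFinset (ε : ℂ) (fun g => θ * cj g * θ⁻¹) (by exact_mod_cast hε)
    (tw_tw d θ h0) (tw_MatRep d θ) (fun a b hab => by
      have : cj a = cj b := by simpa using hab
      rw [← cj_cj a, this, cj_cj]) (by simpa using h1)
    (fun g hg h hh => by rw [List.mem_toFinset] at *; exact hm g hg h hh)
    (fun g hg => by rw [List.mem_toFinset] at *; exact hφ g hg)
  rw [List.toFinset_card_of_nodup hn] at this
  rw [Finset.sum_congr rfl (fun g hg => trace_MatRep d g (hi1 g (List.mem_toFinset.1 hg))),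
    Finset.sum_congr rfl (fun g hg => (show LinearMap.trace ℂ (Mat d) (MatRep d g ∘ₗ tw d θ) =
      chi (trI (g * θ * cj (g * θ))).re d by
        rw [← trace_MatRep_swp d (g * θ) (hi2 g (List.mem_toFinset.1 hg)), map_mul]; rfl))] at this
  rw [← Int.cast_sum, ← Int.cast_sum, List.sum_toFinset _ hn, List.sum_toFinset _ hn] at this
  rw [List.map_map, List.map_map]
  exact_mod_cast this

/-! ### Fixed spaces of finite subgroups -/

instance (LS : List Bianchi2) (θ : Bianchi2) : Decidable (LSgood LS θ) := by
  unfold LSgood; infer_instance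

/-- The conjugate of `ga` by `gu⁻¹`, of order `4`. -/
def gs : Bianchi2 := gu⁻¹ * ga * gu

/-- The element `t a`, of order `6`. -/
def gv : Bianchi2 := gt * ga

/-- The conjugate of `gv` by `gu⁻¹`. -/
def gw : Bianchi2 := gu⁻¹ * gv * gu

/-- The product of `gs` and `ga`, of order `4`; its order is `2` modulo `±1`. -/
def gk : Bianchi2 := gs * ga

/-- The conjugate of `gk` by `gv`. -/
def gk' : Bianchi2 := gv * gk * gv⁻¹

/-- The subgroup generated by `gv` and `gk`, of order `24`. -/
def LA : List Bianchi2 :=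
  (List.range 4).flatMap fun i => (List.range 2).flatMap fun j => (List.range 3).map fun l => gk ^ i * gk' ^ j * gv ^ l

/-- The subgroup generated by `ga` and `gs`, a quaternion group. -/
def LV : List Bianchi2 := [1, -1, ga, -ga, gs, -gs, gk, -gk]

/-- The cyclic group of order `4` generated by `gk`. -/
def Lk : List Bianchi2 := [1, -1, gk, -gk]

/-- The cyclic group of order `4` generated by `ga`. -/
def La : List Bianchi2 := [1, -1, ga, -ga]

/-- The cyclic group of order `6` generated by `gv`. -/
def Lv : List Bianchi2 := [1, -1, gv, -gv, gv * gv, -(gv * gv)]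

/-- The group `{±1}`. -/
def L1 : List Bianchi2 := [1, -1]

set_option maxRecDepth 10000

lemma L1_good : LSgood L1 1 := by decide +kernel
lemma La_good : LSgood La 1 := by decide +kernel
lemma Lv_good : LSgood Lv 1 := by decide +kernel
lemma Lk_good : LSgood Lk gu⁻¹ := by decide +kernel
lemma LV_good : LSgood LV gu⁻¹ := by decide +kernel
/-- Stability of `LA` under right multiplication by `gk`, `gk'`, `gv`, from which closure under all products follows. -/
lemma LA_mul_gen : ∀ g ∈ LA, g * gk ∈ LA ∧ g * gk' ∈ LA ∧ g * gv ∈ LA := by decide +kernel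

lemma LA_good : LSgood LA gu⁻¹ := by
  refine ⟨by decide +kernel, by decide +kernel, by decide +kernel, fun g hg h hh => ?_, by decide +kernel,
    by decide +kernel, by decide +kernel⟩
  have hpow : ∀ x, (∀ g ∈ LA, g * x ∈ LA) → ∀ (n : ℕ), ∀ g ∈ LA, g * x ^ n ∈ LA := fun x hx n => by
    induction n with
    | zero => intro g hg; rwa [pow_zero, mul_one]
    | succ n ih => intro g hg; rw [pow_succ, ← mul_assoc]; exact hx _ (ih g hg)
  obtain ⟨i, -, hh⟩ := List.mem_flatMap.1 hh
  obtain ⟨j, -, hh⟩ := List.mem_flatMap.1 hh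
  obtain ⟨l, -, hh⟩ := List.mem_map.1 hh
  rw [← hh, ← mul_assoc, ← mul_assoc]
  exact hpow gv (fun g hg => (LA_mul_gen g hg).2.2) l _
    (hpow gk' (fun g hg => (LA_mul_gen g hg).2.1) j _ (hpow gk (fun g hg => (LA_mul_gen g hg).1) i g hg))

lemma L1_tr : L1.map (fun g => (trI g).re) = [2, -2] ∧
    L1.map (fun g => (trI (g * 1 * cj (g * 1))).re) = [2, 2] := by decide +kernel
lemma La_tr : La.map (fun g => (trI g).re) = [2, -2, 0, 0] ∧
    La.map (fun g => (trI (g * 1 * cj (g * 1))).re) = [2, 2, -2, -2] := by decide +kernel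
lemma Lv_tr : Lv.map (fun g => (trI g).re) = [2, -2, 1, -1, -1, 1] ∧
    Lv.map (fun g => (trI (g * 1 * cj (g * 1))).re) = [2, 2, -1, -1, -1, -1] := by decide +kernel
lemma Lk_tr : Lk.map (fun g => (trI g).re) = [2, -2, 0, 0] ∧
    Lk.map (fun g => (trI (g * gu⁻¹ * cj (g * gu⁻¹))).re) = [2, 2, 2, 2] := by decide +kernel
lemma LV_tr : LV.map (fun g => (trI g).re) = [2, -2, 0, 0, 0, 0, 0, 0] ∧
    LV.map (fun g => (trI (g * gu⁻¹ * cj (g * gu⁻¹))).re) = [2, 2, 0, 0, 0, 0, 2, 2] := by decide +kernel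
lemma LA_tr : LA.map (fun g => (trI g).re) =
      [2, 1, -1, 0, 1, 1, 0, 1, 1, 0, -1, -1, -2, -1, 1, 0, -1, -1, 0, -1, -1, 0, 1, 1] ∧
    LA.map (fun g => (trI (g * gu⁻¹ * cj (g * gu⁻¹))).re) =
      [2, 1, 1, 2, 1, 1, 2, 1, 1, -2, 1, 1, 2, 1, 1, 2, 1, 1, 2, 1, 1, -2, 1, 1] := by decide +kernel

section dims

variable (d : ℕ) (ε : ℤ) (hε : ε * ε = 1)

lemma pow_sq_one : ((-1 : ℤ) ^ d) ^ 2 = 1 := by rw [← pow_mul, mul_comm, pow_mul]; norm_num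

lemma chi_m2 : chi (-2) d = (-1) ^ d * (d + 1) := by rw [chi_neg, chi_two]

lemma chi_m1 : chi (-1) d = (-1) ^ d * chi 1 d := chi_neg 1 d

include hε

lemma dim_1 : (4 : ℤ) * Module.finrank ℂ (FW d L1 1 ε) = 2 * (d + 1) ^ 2 + ε * (2 * (d + 1)) := by
  have h := FW_finrank d L1 1 ε hε L1_good
  rw [L1_tr.1, L1_tr.2, show (L1.length : ℤ) = 2 from rfl] at h
  simp only [List.map_cons, List.map_nil, List.sum_cons, List.sum_nil, chi_two, chi_m2, chi_m1] at h
  linear_combination h + (d + 1) ^ 2 * pow_sq_one d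

lemma dim_a : (8 : ℤ) * Module.finrank ℂ (FW d La 1 ε) =
    2 * chi 0 d ^ 2 + 2 * (d + 1) ^ 2 + ε * (2 * (-1) ^ d * (d + 1) + 2 * (d + 1)) := by
  have h := FW_finrank d La 1 ε hε La_good
  rw [La_tr.1, La_tr.2, show (La.length : ℤ) = 4 from rfl] at h
  simp only [List.map_cons, List.map_nil, List.sum_cons, List.sum_nil, chi_two, chi_m2, chi_m1] at h
  linear_combination h + (d + 1) ^ 2 * pow_sq_one d

lemma dim_v : (12 : ℤ) * Module.finrank ℂ (FW d Lv 1 ε) =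
    4 * chi 1 d ^ 2 + 2 * (d + 1) ^ 2 + ε * (4 * (-1) ^ d * chi 1 d + 2 * (d + 1)) := by
  have h := FW_finrank d Lv 1 ε hε Lv_good
  rw [Lv_tr.1, Lv_tr.2, show (Lv.length : ℤ) = 6 from rfl] at h
  simp only [List.map_cons, List.map_nil, List.sum_cons, List.sum_nil, chi_two, chi_m2, chi_m1] at h
  linear_combination h + ((d + 1) ^ 2 + 2 * chi 1 d ^ 2) * pow_sq_one d

lemma dim_k : (8 : ℤ) * Module.finrank ℂ (FW d Lk gu⁻¹ ε) =
    2 * chi 0 d ^ 2 + 2 * (d + 1) ^ 2 + ε * (4 * (d + 1)) := by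
  have h := FW_finrank d Lk gu⁻¹ ε hε Lk_good
  rw [Lk_tr.1, Lk_tr.2, show (Lk.length : ℤ) = 4 from rfl] at h
  simp only [List.map_cons, List.map_nil, List.sum_cons, List.sum_nil, chi_two, chi_m2, chi_m1] at h
  linear_combination h + (d + 1) ^ 2 * pow_sq_one d

lemma dim_V : (16 : ℤ) * Module.finrank ℂ (FW d LV gu⁻¹ ε) =
    6 * chi 0 d ^ 2 + 2 * (d + 1) ^ 2 + ε * (4 * (d + 1) + 4 * chi 0 d) := by
  have h := FW_finrank d LV gu⁻¹ ε hε LV_good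
  rw [LV_tr.1, LV_tr.2, show (LV.length : ℤ) = 8 from rfl] at h
  simp only [List.map_cons, List.map_nil, List.sum_cons, List.sum_nil, chi_two, chi_m2, chi_m1] at h
  linear_combination h + (d + 1) ^ 2 * pow_sq_one d

lemma dim_A : (48 : ℤ) * Module.finrank ℂ (FW d LA gu⁻¹ ε) =
    16 * chi 1 d ^ 2 + 6 * chi 0 d ^ 2 + 2 * (d + 1) ^ 2 +
      ε * (16 * chi 1 d + 6 * (d + 1) + 2 * (-1) ^ d * (d + 1)) := by
  have h := FW_finrank d LA gu⁻¹ ε hε LA_good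
  rw [LA_tr.1, LA_tr.2, show (LA.length : ℤ) = 24 from rfl] at h
  simp only [List.map_cons, List.map_nil, List.sum_cons, List.sum_nil, chi_two, chi_m2, chi_m1] at h
  linear_combination h + ((d + 1) ^ 2 + 8 * chi 1 d ^ 2) * pow_sq_one d

end dims

/-- For a suitable sign `ε`, the dimension count leaves at least `(d - 10) / 12` classes. -/
lemma dim_ineq (d : ℕ) : ∃ ε : ℤ, ε * ε = 1 ∧
    12 * ((Module.finrank ℂ (FW d L1 1 (-ε)) : ℤ) + Module.finrank ℂ (FW d LA gu⁻¹ ε) + Module.finrank ℂ (FW d LV gu⁻¹ ε)) + d ≤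
    12 * ((Module.finrank ℂ (FW d Lk gu⁻¹ ε) : ℤ) + Module.finrank ℂ (FW d La 1 (-ε)) + Module.finrank ℂ (FW d Lv 1 (-ε))) + 10 := by
  have h0 := abs_le.1 (chi_zero d)
  have h1 := abs_le.1 (chi_one d)
  rcases Nat.even_or_odd d with he | ho
  · refine ⟨-1, by norm_num, ?_⟩
    have a1 := dim_1 d (-(-1)) (by norm_num)
    have a2 := dim_a d (-(-1)) (by norm_num)
    have a3 := dim_v d (-(-1)) (by norm_num)
    have a4 := dim_k d (-1) (by norm_num)
    have a5 := dim_V d (-1) (by norm_num)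
    have a6 := dim_A d (-1) (by norm_num)
    rw [he.neg_one_pow] at a2 a3 a6
    linarith
  · refine ⟨1, by norm_num, ?_⟩
    have a1 := dim_1 d (-1) (by norm_num)
    have a2 := dim_a d (-1) (by norm_num)
    have a3 := dim_v d (-1) (by norm_num)
    have a4 := dim_k d 1 (by norm_num)
    have a5 := dim_V d 1 (by norm_num)
    have a6 := dim_A d 1 (by norm_num)
    rw [ho.neg_one_pow] at a2 a3 a6
    linarith

/-! ### Forms invariant under SL(2, ℤ) -/

lemma mon_smul {R : Type*} [CommRing R] (d : ℕ) (c : R) (v : Fin 2 → R) : mon d (c • v) = c ^ d • mon d v := by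
  funext i
  have : c ^ d = c ^ (i : ℕ) * c ^ (d - i) := by rw [← pow_add, Nat.add_sub_cancel' (Nat.lt_succ_iff.1 i.2)]
  simp only [mon, Pi.smul_apply, smul_eq_mul, mul_pow, this]
  ring

lemma bfm_smul (d : ℕ) (F : Mat d) (a b : ℂ) (v w : Fin 2 → ℂ) :
    bfm d F (a • v) (b • w) = a ^ d * b ^ d * bfm d F v w := by
  rw [bfm, mon_smul, mon_smul, Matrix.mulVec_smul, dotProduct_smul, smul_dotProduct, bfm]
  simp only [smul_eq_mul]; ring

/-- The dehomogenized form. -/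
def dhf (d : ℕ) (F : Mat d) (x y : ℂ) : ℂ := bfm d F ![x, 1] ![y, 1]

lemma dhf_ext (d : ℕ) (F F' : Mat d) (h : ∀ x y, dhf d F x y = dhf d F' x y) : F = F' := by
  have h1 : ∀ y, F.mulVec (mon d ![y, 1]) = F'.mulVec (mon d ![y, 1]) := fun w =>
    mon_ext1 d _ _ fun v => h v w
  ext i j
  have := mon_ext1 d (F i) (F' i) fun w => by
    have := congrFun (h1 w) i
    rw [dotProduct_comm, dotProduct_comm (mon d ![w, 1])]
    exact this
  exact congrFun this j

lemma dhf_poly (d : ℕ) (F : Mat d) (x y : ℂ) :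
    ∃ p : Polynomial ℂ, ∀ c, p.eval c = dhf d F (x + c) (y + c) := by
  refine ⟨∑ i, ∑ j, Polynomial.C (F i j) * (Polynomial.C x + Polynomial.X) ^ (i : ℕ) * (Polynomial.C y + Polynomial.X) ^ (j : ℕ), fun c => ?_⟩
  simp only [dhf, bfm, dotProduct, Matrix.mulVec, mon, Polynomial.eval_finset_sum, Finset.mul_sum]
  refine Finset.sum_congr rfl fun i _ => Finset.sum_congr rfl fun j _ => ?_
  simp
  ring

lemma invC_gt : invC gt = !![1, -1; 0, 1] := by
  have : (gt⁻¹).1 = !![1, -1; 0, 1] := by decide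
  rw [invC, this]
  ext i j
  fin_cases i <;> fin_cases j <;> simp

lemma invC_ga : invC ga = !![0, 1; -1, 0] := by
  have : (ga⁻¹).1 = !![0, 1; -1, 0] := by decide
  rw [invC, this]
  ext i j
  fin_cases i <;> fin_cases j <;> simp

lemma invC_gu : invC gu = !![1, -sqrtm2Embed om; 0, 1] := by
  have : (gu⁻¹).1 = !![1, -om; 0, 1] := by decide
  rw [invC, this]
  ext i j
  fin_cases i <;> fin_cases j <;> simp

lemma invCbar_gt : invCbar gt = !![1, -1; 0, 1] := by
  rw [← invC_cj, show cj gt = gt by decide, invC_gt]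

lemma invCbar_ga : invCbar ga = !![0, 1; -1, 0] := by
  rw [← invC_cj, show cj ga = ga by decide, invC_ga]

lemma invCbar_gu : invCbar gu = !![1, sqrtm2Embed om; 0, 1] := by
  have : (gu⁻¹).1 = !![1, -om; 0, 1] := by decide
  rw [← invC_cj, show cj gu = gu⁻¹ by decide, invC, inv_inv, show gu.1 = !![1, om; 0, 1] by decide]
  ext i j
  fin_cases i <;> fin_cases j <;> simp

lemma dhf_gu (d : ℕ) (F : Mat d) (x y : ℂ) :
    dhf d (MatRep d gu F) x y = dhf d F (x - sqrtm2Embed om) (y + sqrtm2Embed om) := by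
  rw [dhf, bfm_MatRep, invC_gu, invCbar_gu, dhf]
  congr 1
  · ext i; fin_cases i <;> simp [Matrix.mulVec, dotProduct, Fin.sum_univ_two, sub_eq_add_neg]
  · ext i; fin_cases i <;> simp [Matrix.mulVec, dotProduct, Fin.sum_univ_two]

/-- Forms invariant under `SL(2, ℤ)` are multiples of the power of the determinant. -/
lemma dhf_inv (d : ℕ) (hd : 1 ≤ d) (F : Mat d) (ha : MatRep d ga F = F) (ht : MatRep d gt F = F) :
    ∃ c, ∀ x y, dhf d F x y = c * (x - y) ^ d := by
  have t1 : ∀ x y, dhf d F (x - 1) (y - 1) = dhf d F x y := by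
    intro x y
    conv_rhs => rw [dhf, ← ht, bfm_MatRep, invC_gt, invCbar_gt]
    rw [dhf]
    congr 1
    · ext i; fin_cases i <;> simp [Matrix.mulVec, dotProduct, Fin.sum_univ_two, sub_eq_add_neg]
    · ext i; fin_cases i <;> simp [Matrix.mulVec, dotProduct, Fin.sum_univ_two, sub_eq_add_neg]
  have t2 : ∀ x y c, dhf d F (x + c) (y + c) = dhf d F x y := by
    intro x y
    obtain ⟨p, hp⟩ := dhf_poly d F x y
    have hn : ∀ n : ℕ, p.eval (n : ℂ) = dhf d F x y := by
      intro n
      rw [hp]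
      induction n with
      | zero => simp
      | succ n ih =>
        rw [← ih, ← t1 (x + (n + 1 : ℕ))]
        congr 1 <;> push_cast <;> ring
    have : p = Polynomial.C (dhf d F x y) := by
      refine Polynomial.eq_of_infinite_eval_eq _ _ (Set.Infinite.mono ?_ (Set.infinite_range_of_injective (Nat.cast_injective (R := ℂ))))
      rintro _ ⟨n, rfl⟩
      simp only [Set.mem_setOf_eq, Polynomial.eval_C, hn]
    intro c
    rw [← hp, this, Polynomial.eval_C]
  have t3 : ∀ x y, dhf d F x y = dhf d F (x - y) 0 := by
    intro x y
    rw [← t2 x y (-y)]; congr 1; ring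
  have a1 : ∀ x y, x ≠ 0 → y ≠ 0 → dhf d F x y = (x * y) ^ d * dhf d F ((x - y) / (x * y)) 0 := by
    intro x y hx hy
    have e1 : (invC ga).mulVec ![x, 1] = (-x) • ![-1 / x, 1] := by
      rw [invC_ga]; ext i; fin_cases i <;> simp [Matrix.mulVec, dotProduct, Fin.sum_univ_two]
      field_simp
    have e2 : (invCbar ga).mulVec ![y, 1] = (-y) • ![-1 / y, 1] := by
      rw [invCbar_ga]; ext i; fin_cases i <;> simp [Matrix.mulVec, dotProduct, Fin.sum_univ_two]
      field_simp
    conv_lhs => rw [dhf, ← ha, bfm_MatRep, e1, e2, bfm_smul]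
    rw [← mul_pow, neg_mul_neg]
    congr 1
    refine (t3 _ _).trans ?_
    congr 1
    field_simp
    ring
  refine ⟨dhf d F 1 0, fun x y => ?_⟩
  rw [t3]
  set z := x - y
  by_cases hz : z = 0
  · have := a1 2 2 two_ne_zero two_ne_zero
    rw [t3, sub_self, zero_div] at this
    have h4 : ((2 * 2 : ℂ)) ^ d ≠ 1 := by
      have : (4 : ℕ) ^ d ≠ 1 := (Nat.one_lt_pow (by omega) (by norm_num)).ne'
      intro h
      exact this (by exact_mod_cast (show ((4 : ℂ)) ^ d = 1 by rw [← h]; norm_num))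
    have h5 : dhf d F 0 0 = 0 := by
      have : (((2 * 2 : ℂ)) ^ d - 1) * dhf d F 0 0 = 0 := by linear_combination -this
      exact (mul_eq_zero.1 this).resolve_left (sub_ne_zero.2 h4)
    rw [hz, h5, zero_pow (by omega), mul_zero]
  · obtain ⟨r, hr⟩ := IsAlgClosed.exists_pow_nat_eq (z ^ 2 + 4 * z) (n := 2) (by norm_num)
    -- `(z + r) / 2` and `(r - z) / 2` have difference and product equal to `z`
    have hp : (z + r) / 2 * ((r - z) / 2) = z := by linear_combination hr / 4
    have hx : (z + r) / 2 ≠ 0 := fun h => hz (by rw [← hp, h, zero_mul])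
    have hy : (r - z) / 2 ≠ 0 := fun h => hz (by rw [← hp, h, mul_zero])
    have := a1 _ _ hx hy
    rw [t3, hp, show (z + r) / 2 - (r - z) / 2 = z by ring, div_self hz] at this
    rw [this, mul_comm]

lemma om_ne : sqrtm2Embed om ≠ 0 := by
  intro h
  have : sqrtm2Embed (om * om) = 0 := by rw [map_mul, h, zero_mul]
  rw [show om * om = ((-2 : ℤ) : ℤ√(-2 : ℤ)) by decide, map_intCast] at this
  norm_num at this

/-- No nonzero form is fixed by `ga`, `gt` and `gs`. -/
lemma EB_zero (d : ℕ) (hd : 1 ≤ d) (F : Mat d) (ha : MatRep d ga F = F) (ht : MatRep d gt F = F)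
    (hs : MatRep d gs F = F) : F = 0 := by
  obtain ⟨c, hc⟩ := dhf_inv d hd F ha ht
  obtain ⟨c', hc'⟩ := dhf_inv d hd (MatRep d gu F)
    (by
      have : MatRep d ga (MatRep d gu F) = MatRep d (ga * gu) F := by rw [map_mul]; rfl
      rw [this, show ga * gu = gu * gs by decide, map_mul, Module.End.mul_apply, hs])
    (by
      have : MatRep d gt (MatRep d gu F) = MatRep d (gt * gu) F := by rw [map_mul]; rfl
      rw [this, show gt * gu = gu * gt by decide, map_mul, Module.End.mul_apply, ht])
  set ω := sqrtm2Embed om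
  have h : ∀ z, c * (z - 2 * ω) ^ d = c' * z ^ d := by
    intro z
    have := hc' z 0
    rw [dhf_gu, hc] at this
    rw [sub_zero] at this
    rw [← this]; congr 2; ring
  have h2 : (2 * ω) ≠ 0 := mul_ne_zero two_ne_zero om_ne
  have hc'0 : c' = 0 := by
    have := h (2 * ω)
    rw [sub_self, zero_pow (by omega), mul_zero] at this
    exact (mul_eq_zero.1 this.symm).resolve_right (pow_ne_zero _ h2)
  have hc0 : c = 0 := by
    have := h 0
    rw [hc'0, zero_mul] at this
    exact (mul_eq_zero.1 this).resolve_right (pow_ne_zero _ (by simpa using h2))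
  refine dhf_ext d F 0 fun x y => ?_
  rw [hc, hc0, zero_mul]
  simp [dhf, bfm]

/-! ### Construction of cocycles -/

section affine

variable {V : Type} [AddCommGroup V] [Module ℂ V] (ρ : Representation ℂ Bianchi2 V)

lemma rep_inv_apply (g : Bianchi2) (x : V) : ρ g⁻¹ (ρ g x) = x := by
  rw [← Module.End.mul_apply, ← map_mul, inv_mul_cancel, map_one]; rfl

lemma rep_apply_inv (g : Bianchi2) (x : V) : ρ g (ρ g⁻¹ x) = x := by
  rw [← Module.End.mul_apply, ← map_mul, mul_inv_cancel, map_one]; rfl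

lemma rep_mul (g h : Bianchi2) (x : V) : ρ (g * h) x = ρ g (ρ h x) := by
  rw [map_mul]; rfl

/-- The affine permutation `x ↦ γ x + b`. -/
def affP (γ : Bianchi2) (b : V) : Equiv.Perm V where
  toFun x := ρ γ x + b
  invFun x := ρ γ⁻¹ (x - b)
  left_inv x := by
    show ρ γ⁻¹ (ρ γ x + b - b) = x
    rw [add_sub_cancel_right, rep_inv_apply]
  right_inv x := by
    show ρ γ (ρ γ⁻¹ (x - b)) + b = x
    rw [rep_apply_inv, sub_add_cancel]

lemma affP_apply (γ : Bianchi2) (b x : V) : affP ρ γ b x = ρ γ x + b := rfl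

lemma affP_mul (γ δ : Bianchi2) (b c : V) : affP ρ γ b * affP ρ δ c = affP ρ (γ * δ) (ρ γ c + b) := by
  ext x
  show ρ γ (ρ δ x + c) + b = ρ (γ * δ) x + (ρ γ c + b)
  rw [rep_mul, map_add, add_assoc]

lemma affP_inv (γ : Bianchi2) (b : V) : (affP ρ γ b)⁻¹ = affP ρ γ⁻¹ (-ρ γ⁻¹ b) := by
  ext x
  show ρ γ⁻¹ (x - b) = ρ γ⁻¹ x + -ρ γ⁻¹ b
  rw [map_sub, sub_eq_add_neg]

lemma affP_congr {γ δ : Bianchi2} {b c : V} (h : ∀ x, ρ γ x = ρ δ x) (hb : b = c) : affP ρ γ b = affP ρ δ c := by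
  ext x
  rw [affP_apply, affP_apply, h, hb]

lemma affP_one : affP ρ 1 0 = 1 := by
  ext x
  rw [affP_apply, map_one, add_zero]; rfl

variable (hm : ∀ x, ρ (-1) x = x)

include hm in
lemma rep_neg (γ : Bianchi2) (x : V) : ρ (-γ) x = ρ γ x := by
  rw [← neg_one_mul γ, rep_mul, hm]

include hm in
/-- If `e` is fixed by `gk`, then `gu` and `gv` commute on `e`. -/
lemma rep_vu (e : V) (he : ρ gk e = e) : ρ gv (ρ gu e) = ρ gu (ρ gv e) := by
  have h : gv * gu * gk = -(gu * gv) := by decide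
  rw [← rep_mul, ← rep_mul, ← rep_neg ρ hm (gu * gv), ← h, rep_mul _ _ gk, he]

open groupCohomology in
include hm in
/-- A cocycle from `e` fixed by `gk` and `y` fixed by `gv` such that `y + e - gu e` is fixed by `ga`:
the conditions are the defining relations of the group for the affine maps attached to the
generators. -/
lemma cocycle_exists (e y : V) (he : ρ gk e = e) (hy : ρ gv y = y)
    (hb : ρ ga (y + e - ρ gu e) = y + e - ρ gu e) :
    ∃ f : cocycles₁ (Rep.of ρ), f.1 ga = ρ ga e - e ∧ f.1 gt = ρ gv (ρ ga e - e) ∧ f.1 gu = y := by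
  have haa : ∀ x, ρ ga (ρ ga x) = x := fun x => by rw [← rep_mul, gaga, hm]
  have hvg : gv * ga = -gt := by decide
  have htv : ∀ x, ρ gt x = ρ gv (ρ ga x) := fun x => by rw [← rep_mul, hvg, rep_neg ρ hm]
  obtain ⟨p, hp⟩ : ∃ p, p = ρ ga e - e := ⟨_, rfl⟩
  rw [← hp]
  have hap : ρ ga p = -p := by rw [hp, map_sub, haa, neg_sub]
  have hb' : ρ ga y + p - y = ρ ga (ρ gu e) - ρ gu e := by
    rw [map_sub, map_add] at hb
    have : ρ ga y = y + e - ρ gu e + ρ ga (ρ gu e) - ρ ga e := by rw [← hb]; abel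
    rw [this]; rw [hp]; abel
  have eA : affP ρ ga p * affP ρ ga p = 1 := by
    rw [affP_mul, ← affP_one ρ]
    refine affP_congr ρ (fun x => by rw [gaga, hm, map_one]; rfl) (by rw [hap]; abel)
  have eV : affP ρ gv 0 * affP ρ gv 0 * affP ρ gv 0 = 1 := by
    rw [affP_mul, affP_mul, ← affP_one ρ]
    refine affP_congr ρ (fun x => ?_) (by simp)
    rw [show gv * gv * gv = -1 by decide, hm, map_one]; rfl
  have eT : affP ρ gv 0 * affP ρ ga p = affP ρ gt (ρ gv p) := by
    rw [affP_mul]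
    exact affP_congr ρ (fun x => by rw [hvg, rep_neg ρ hm]) (add_zero _)
  obtain ⟨Ψ, h1, h2, h3⟩ := lifting (affP ρ ga p) (affP ρ gv 0 * affP ρ ga p) (affP ρ gu y)
    (by
      rw [eT, affP_mul, affP_mul]
      refine affP_congr ρ (fun x => by rw [show gt * gu = gu * gt by decide]) ?_
      have c1 : ρ gu (ρ gv (ρ ga e)) = ρ gt (ρ gu e) := by
        rw [← htv, ← rep_mul, ← rep_mul, show gt * gu = gu * gt by decide]
      have c2 := rep_vu ρ hm e he
      have c3 : ρ gt y + ρ gv p - y = ρ gv (ρ ga (ρ gu e)) - ρ gv (ρ gu e) := by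
        rw [htv, ← map_sub, ← hb', map_sub, map_add, hy]
      rw [show ρ gu (ρ gv p) = ρ gv (ρ ga (ρ gu e)) - ρ gv (ρ gu e) by
        rw [hp, map_sub, map_sub, c1, htv, c2], ← c3]
      abel)
    eA (by simp only [mul_assoc _ (affP ρ ga p) (affP ρ ga p), eA, mul_one, eV])
    (by
      have e1 : (affP ρ gu y)⁻¹ * affP ρ ga p * affP ρ gu y * affP ρ ga p = affP ρ gk 0 := by
        rw [affP_inv, affP_mul, affP_mul, affP_mul]
        refine affP_congr ρ (fun x => rfl) ?_
        have : ρ gu⁻¹ (ρ ga y + p - y) = ρ gs e - e := by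
          rw [hb', map_sub, rep_inv_apply, gs, rep_mul, rep_mul]
        have h2 : ρ (gu⁻¹ * ga) y + (ρ gu⁻¹ p + -ρ gu⁻¹ y) = ρ gs e - e := by
          rw [← this, rep_mul, map_sub, map_add]; abel
        rw [h2]
        have h3 : ρ (gu⁻¹ * ga * gu) p = e - ρ gs e := by
          rw [← gs, hp]
          rw [map_sub, ← rep_mul]
          show ρ gk e - _ = _
          rw [he]
        rw [h3]; abel
      rw [e1, affP_mul, ← affP_one ρ]
      exact affP_congr ρ (fun x => by rw [show gk * gk = -1 by decide, hm, map_one]; rfl) (by simp))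
  rw [eT] at h2
  have lin : ∀ γ x, Ψ γ x = ρ γ x + Ψ γ 0 := by
    let S : Subgroup Bianchi2 :=
      { carrier := {γ | ∀ x, Ψ γ x = ρ γ x + Ψ γ 0}
        one_mem' := fun x => by simp
        mul_mem' := fun {a b} (hx : ∀ x, Ψ a x = ρ a x + Ψ a 0) (hy : ∀ x, Ψ b x = ρ b x + Ψ b 0) x => by
          rw [map_mul, Equiv.Perm.mul_apply, Equiv.Perm.mul_apply, hx, hy, hx (Ψ b 0), map_add, rep_mul, add_assoc]
        inv_mem' := fun {a} (hx : ∀ x, Ψ a x = ρ a x + Ψ a 0) x => by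
          have key : ∀ z, Ψ a⁻¹ z = ρ a⁻¹ (z - Ψ a 0) := fun z => by
            have := hx (Ψ a⁻¹ z)
            rw [← Equiv.Perm.mul_apply, ← map_mul, mul_inv_cancel, map_one, Equiv.Perm.one_apply] at this
            conv_rhs => rw [this]
            rw [add_sub_cancel_right, rep_inv_apply]
          rw [key, key, zero_sub, map_sub, map_neg, sub_eq_add_neg] }
    have hS : S = ⊤ := by
      rw [eq_top_iff, ← ga_gen, Subgroup.closure_le]
      rintro g (rfl | rfl | rfl)
      · intro x; rw [h1]; simp [affP_apply]
      · intro x; rw [h2]; simp [affP_apply]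
      · intro x; rw [h3]; simp [affP_apply]
    intro γ
    exact (by rw [hS]; trivial : γ ∈ S)
  refine ⟨⟨fun γ => Ψ γ 0, (mem_cocycles₁_iff _).2 fun g h => ?_⟩, ?_, ?_, ?_⟩
  · show Ψ (g * h) 0 = ρ g (Ψ h 0) + Ψ g 0
    rw [map_mul, Equiv.Perm.mul_apply, lin]
  · show Ψ ga 0 = _
    rw [h1, affP_apply, map_zero, zero_add]
  · show Ψ gt 0 = _
    rw [h2, affP_apply, map_zero, zero_add]
  · show Ψ gu 0 = _
    rw [h3, affP_apply, map_zero, zero_add]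

end affine

/-! ### Coboundaries among the constructed cocycles -/

lemma MatRep_neg_one (d : ℕ) (x : Mat d) : MatRep d (-1) x = x := by
  refine bfm_ext d _ _ fun v w => ?_
  have e1 : invC (-1) = (-1 : ℂ) • 1 := by
    rw [invC, show ((-1 : Bianchi2)⁻¹).1 = !![-1, 0; 0, -1] by decide]
    ext i j
    fin_cases i <;> fin_cases j <;> simp
  have e2 : invCbar (-1) = (-1 : ℂ) • 1 := by rw [← invC_cj, show cj (-1) = -1 by decide, e1]
  rw [bfm_MatRep, e1, e2, Matrix.smul_mulVec, Matrix.smul_mulVec, Matrix.one_mulVec, Matrix.one_mulVec,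
    bfm_smul, ← mul_pow]
  norm_num

open groupCohomology in
/-- A cocycle of the constructed shape that is a coboundary comes from a decomposition `e = x + x'`. -/
lemma coc_kernel {V : Type} [AddCommGroup V] [Module ℂ V] {ρ : Representation ℂ Bianchi2 V} (hm : ∀ x, ρ (-1) x = x)
    (e y z : V) (hy : ρ gv y = y) (hz : ρ ga z = z) (hyz : y + e - ρ gu e = z) (f : cocycles₁ (Rep.of ρ))
    (ha : f.1 ga = ρ ga e - e) (ht : f.1 gt = ρ gv (ρ ga e - e)) (hu : f.1 gu = y) (hf : H1π (Rep.of ρ) f = 0) :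
    ∃ x x' : V, e = x + x' ∧ y = ρ gu x - x ∧ z = x' - ρ gu x' ∧ ρ gv x = x ∧ ρ gw x = x ∧ ρ gk x = x ∧
      ρ ga x' = x' ∧ ρ gs x' = x' := by
  obtain ⟨x, hx⟩ := (H1π_eq_zero_iff f).1 hf
  have hx : ∀ γ, f.1 γ = ρ γ x - x := fun γ => (congrFun hx γ).symm
  have htv : ∀ x, ρ gt x = ρ gv (ρ ga x) := fun x => by
    rw [← rep_mul, show gv * ga = -gt by decide, rep_neg ρ hm]
  have h1 : ρ ga (e - x) = e - x := by
    have := (hx ga).symm.trans ha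
    rw [map_sub, sub_eq_sub_iff_add_eq_add]
    rw [sub_eq_sub_iff_add_eq_add] at this
    rw [add_comm e]; exact this.symm
  have hap : ρ ga e - e = ρ ga x - x := by rw [← ha, hx]
  have hvx : ρ gv x = x := by
    have := (hx gt).symm.trans ht
    rw [hap, map_sub, ← htv] at this
    exact (sub_right_injective this).symm
  have hyx : y = ρ gu x - x := by rw [← hu, hx]
  have hvu : ρ gv (ρ gu x) = ρ gu x := by
    have := hy
    rw [hyx, map_sub, hvx] at this
    exact sub_left_injective this
  have hwx : ρ gw x = x := by rw [gw, rep_mul, rep_mul, hvu, rep_inv_apply]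
  have hz' : z = (e - x) - ρ gu (e - x) := by rw [← hyz, hyx, map_sub]; abel
  refine ⟨x, e - x, by abel, hyx, hz', hvx, hwx, ?_, h1, ?_⟩
  · have : gw * gk = -gv := by decide
    have h2 : ρ gw (ρ gk x) = ρ gw x := by rw [← rep_mul, this, rep_neg ρ hm, hvx, hwx]
    have := congrArg (ρ gw⁻¹) h2
    rwa [rep_inv_apply, rep_inv_apply] at this
  · have h2 : ρ ga (ρ gu (e - x)) = ρ gu (e - x) := by
      have := hz
      rw [hz', map_sub, h1] at this
      exact sub_right_injective this
    rw [gs, rep_mul, rep_mul, h2, rep_inv_apply]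

/-- In the eigenspace of `τ = gu⁻¹ ∘ swap`, both parts of the decomposition are eigenvectors. -/
lemma tw_parts (d : ℕ) (hd : 1 ≤ d) (ε : ℂ) (x x' : Mat d) (hτ : tw d gu⁻¹ (x + x') = ε • (x + x'))
    (hv : MatRep d gv x = x) (hw : MatRep d gw x = x) (ha : MatRep d ga x' = x') (hs : MatRep d gs x' = x') :
    tw d gu⁻¹ x = ε • x ∧ tw d gu⁻¹ x' = ε • x' := by
  have h0 : tw d gu⁻¹ x - ε • x = -(tw d gu⁻¹ x' - ε • x') := by
    rw [map_add, smul_add] at hτ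
    have : tw d gu⁻¹ x = ε • x + ε • x' - tw d gu⁻¹ x' := by rw [← hτ]; abel
    rw [this]; abel
  have key : ∀ g h : Bianchi2, gu⁻¹ * cj g * gu⁻¹⁻¹ = h → ∀ z, MatRep d g z = z → MatRep d h (tw d gu⁻¹ z) = tw d gu⁻¹ z := by
    rintro g h rfl z hz
    rw [← tw_MatRep, hz]
  have hra : MatRep d ga (tw d gu⁻¹ x - ε • x) = tw d gu⁻¹ x - ε • x := by
    rw [h0, map_neg, map_sub, map_smul, ha, key gs ga (by decide) x' hs]
  have hrs : MatRep d gs (tw d gu⁻¹ x - ε • x) = tw d gu⁻¹ x - ε • x := by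
    rw [h0, map_neg, map_sub, map_smul, hs, key ga gs (by decide) x' ha]
  have hrv : MatRep d gv (tw d gu⁻¹ x - ε • x) = tw d gu⁻¹ x - ε • x := by
    rw [map_sub, map_smul, hv, key gw gv (by decide) x hw]
  have hrt : MatRep d gt (tw d gu⁻¹ x - ε • x) = tw d gu⁻¹ x - ε • x := by
    rw [← rep_neg (MatRep d) (MatRep_neg_one d) gt, show -gt = gv * ga by decide, rep_mul, hra, hrv]
  have hr := EB_zero d hd _ hra hrt hrs
  exact ⟨sub_eq_zero.1 hr, sub_eq_zero.1 (neg_eq_zero.1 (h0.symm.trans hr))⟩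

lemma mem_FW_of_gens (d : ℕ) (LS : List Bianchi2) (θ : Bianchi2) (ε : ℤ) (x : Mat d) (gens : Set Bianchi2)
    (hL : ∀ g ∈ LS, g ∈ Subgroup.closure gens) (hg : ∀ g ∈ gens, MatRep d g x = x) (hτ : tw d θ x = (ε : ℂ) • x) :
    x ∈ FW d LS θ ε := by
  refine ⟨fun g hgS => ?_, hτ⟩
  have : Subgroup.closure gens ≤
      { carrier := {γ | MatRep d γ x = x}
        one_mem' := by simp
        mul_mem' := fun {a b} (h1 : _ = _) (h2 : _ = _) => by
          show MatRep d (a * b) x = x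
          rw [rep_mul, h2, h1]
        inv_mem' := fun {a} (h1 : _ = _) => by
          show MatRep d a⁻¹ x = x
          conv_lhs => rw [← h1, rep_inv_apply] } := (Subgroup.closure_le _).2 hg
  exact this (hL g (List.mem_toFinset.1 hgS))

lemma mem_FW_LA (d : ℕ) (ε : ℤ) (x : Mat d) (hv : MatRep d gv x = x) (hk : MatRep d gk x = x)
    (hτ : tw d gu⁻¹ x = (ε : ℂ) • x) : x ∈ FW d LA gu⁻¹ ε := by
  refine mem_FW_of_gens d LA _ ε x {gv, gk} (fun g hg => ?_) (fun g hg => by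
    rcases Set.mem_insert_iff.1 hg with h | h
    · rw [h]; exact hv
    · rw [Set.mem_singleton_iff.1 h]; exact hk) hτ
  have h1 : gv ∈ Subgroup.closure {gv, gk} := Subgroup.subset_closure (by simp)
  have h2 : gk ∈ Subgroup.closure {gv, gk} := Subgroup.subset_closure (by simp)
  have h3 : gk' ∈ Subgroup.closure {gv, gk} := mul_mem (mul_mem h1 h2) (inv_mem h1)
  simp only [LA, List.mem_flatMap, List.mem_map] at hg
  obtain ⟨i, -, j, -, l, -, rfl⟩ := hg
  exact mul_mem (mul_mem (pow_mem h2 i) (pow_mem h3 j)) (pow_mem h1 l)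

lemma mem_FW_LV (d : ℕ) (ε : ℤ) (x : Mat d) (ha : MatRep d ga x = x) (hs : MatRep d gs x = x)
    (hτ : tw d gu⁻¹ x = (ε : ℂ) • x) : x ∈ FW d LV gu⁻¹ ε := by
  refine mem_FW_of_gens d LV _ ε x {ga, gs} (fun g hg => ?_) (fun g hg => by
    rcases Set.mem_insert_iff.1 hg with h | h
    · rw [h]; exact ha
    · rw [Set.mem_singleton_iff.1 h]; exact hs) hτ
  have h1 : ga ∈ Subgroup.closure {ga, gs} := Subgroup.subset_closure (by simp)
  have h2 : gs ∈ Subgroup.closure {ga, gs} := Subgroup.subset_closure (by simp)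
  have h3 : gk ∈ Subgroup.closure {ga, gs} := mul_mem h2 h1
  have hn : -1 ∈ Subgroup.closure {ga, gs} := by rw [← gaga]; exact mul_mem h1 h1
  have neg : ∀ g ∈ Subgroup.closure {ga, gs}, -g ∈ Subgroup.closure {ga, gs} := fun g hg => by
    rw [← neg_one_mul g]; exact mul_mem hn hg
  simp only [LV, List.mem_cons, List.not_mem_nil, or_false] at hg
  rcases hg with rfl | rfl | rfl | rfl | rfl | rfl | rfl | rfl
  exacts [one_mem _, hn, h1, neg _ h1, h2, neg _ h2, h3, neg _ h3]

/-! ### Counting classes -/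

lemma tw_one (d : ℕ) (x : Mat d) : tw d 1 x = swp d x := by
  show MatRep d 1 (swp d x) = _
  rw [map_one]; rfl

open groupCohomology in
/-- Cocycles given by linear data on the generators depend linearly on the data. -/
lemma coc_linear {D V : Type} [AddCommGroup D] [Module ℂ D] [AddCommGroup V] [Module ℂ V]
    {ρ : Representation ℂ Bianchi2 V} (e y : D →ₗ[ℂ] V)
    (h : ∀ p, ∃ f : cocycles₁ (Rep.of ρ), f.1 ga = ρ ga (e p) - e p ∧ f.1 gt = ρ gv (ρ ga (e p) - e p) ∧ f.1 gu = y p) :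
    ∃ Φ : D →ₗ[ℂ] cocycles₁ (Rep.of ρ), ∀ p, (Φ p).1 ga = ρ ga (e p) - e p ∧
      (Φ p).1 gt = ρ gv (ρ ga (e p) - e p) ∧ (Φ p).1 gu = y p := by
  choose F h1 h2 h3 using h
  refine ⟨{ toFun := F, map_add' := fun p q => ?_, map_smul' := fun c p => ?_ }, fun p => ⟨h1 p, h2 p, h3 p⟩⟩
  · refine sub_eq_zero.1 (coc_zero_of_gen _ ?_ ?_ ?_)
    · show (F (p + q)).1 ga - ((F p).1 ga + (F q).1 ga) = 0
      rw [h1, h1, h1, map_add, map_add]; abel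
    · show (F (p + q)).1 gt - ((F p).1 gt + (F q).1 gt) = 0
      rw [h2, h2, h2]
      simp only [map_add, map_sub]; abel
    · show (F (p + q)).1 gu - ((F p).1 gu + (F q).1 gu) = 0
      rw [h3, h3, h3, map_add, sub_self]
  · refine sub_eq_zero.1 (coc_zero_of_gen _ ?_ ?_ ?_)
    · show (F (c • p)).1 ga - c • (F p).1 ga = 0
      rw [h1, h1, map_smul, map_smul, smul_sub, sub_self]
    · show (F (c • p)).1 gt - c • (F p).1 gt = 0
      rw [h2, h2]
      simp only [map_smul, map_sub, smul_sub, sub_self]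
    · show (F (c • p)).1 gu - c • (F p).1 gu = 0
      rw [h3, h3, map_smul, sub_self]

section count

variable {V : Type} [AddCommGroup V] [Module ℂ V] {ρ : Representation ℂ Bianchi2 V}

/-- The map `(e, z, y) ↦ y + e - gu e - z`, whose kernel consists of the triples to which
`cocycle_exists` attaches a cocycle. -/
def obsMap (ρ : Representation ℂ Bianchi2 V) (K A W : Submodule ℂ V) : (K × A × W) →ₗ[ℂ] V :=
  (W.subtype ∘ₗ LinearMap.snd ℂ _ _ ∘ₗ LinearMap.snd ℂ _ _) +
      ((LinearMap.id - ρ gu) ∘ₗ K.subtype ∘ₗ LinearMap.fst ℂ _ _) -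
      (A.subtype ∘ₗ LinearMap.fst ℂ _ _ ∘ₗ LinearMap.snd ℂ _ _)

/-- The map `(x, x') ↦ (x + x', x' - gu x', gu x - x)`; by `coc_kernel` its range contains the triples
`(e, z, y)` whose cocycle is a coboundary. -/
def degMap (ρ : Representation ℂ Bianchi2 V) (P Q : Submodule ℂ V) : (P × Q) →ₗ[ℂ] V × V × V :=
  ((P.subtype ∘ₗ LinearMap.fst ℂ _ _) + (Q.subtype ∘ₗ LinearMap.snd ℂ _ _)).prod
      (((LinearMap.id - ρ gu) ∘ₗ Q.subtype ∘ₗ LinearMap.snd ℂ _ _).prod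
        ((ρ gu - LinearMap.id) ∘ₗ P.subtype ∘ₗ LinearMap.fst ℂ _ _))

open groupCohomology in
/-- The dimension count for `H¹`: `K × A × W` maps to `B` by `obsMap`, the kernel maps to `H¹`, and
the kernel of the latter map is contained in the range of `degMap`. -/
lemma H1_count [FiniteDimensional ℂ V] [FiniteDimensional ℂ (cocycles₁ (Rep.of ρ))]
    (hm : ∀ x, ρ (-1) x = x) (K A W B P Q : Submodule ℂ V)
    (hK : ∀ e ∈ K, ρ gk e = e) (hA : ∀ z ∈ A, ρ ga z = z) (hW : ∀ y ∈ W, ρ gv y = y)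
    (hB : ∀ e ∈ K, ∀ z ∈ A, ∀ y ∈ W, y + (e - ρ gu e) - z ∈ B)
    (hPQ : ∀ e ∈ K, ∀ x x', e = x + x' → ρ gv x = x → ρ gw x = x → ρ gk x = x →
      ρ ga x' = x' → ρ gs x' = x' → x ∈ P ∧ x' ∈ Q) :
    Module.finrank ℂ K + Module.finrank ℂ A + Module.finrank ℂ W ≤
    Module.finrank ℂ (groupCohomology (Rep.of ρ) 1) + Module.finrank ℂ B +
      Module.finrank ℂ P + Module.finrank ℂ Q := by
  obtain ⟨Θ, hΘ⟩ : ∃ Θ : (K × A × W) →ₗ[ℂ] B, ∀ p, (Θ p).1 = p.2.2.1 + (p.1.1 - ρ gu p.1.1) - p.2.1.1 :=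
    ⟨(obsMap ρ K A W).codRestrict B fun p => hB _ p.1.2 _ p.2.1.2 _ p.2.2.2, fun p => rfl⟩
  have hD : ∀ p : LinearMap.ker Θ, p.1.2.2.1 + p.1.1.1 - ρ gu p.1.1.1 = p.1.2.1.1 := by
    intro p
    have := congrArg Subtype.val (LinearMap.mem_ker.1 p.2)
    rw [hΘ] at this
    rw [add_sub_assoc]
    exact sub_eq_zero.1 this
  have hex : ∀ p : LinearMap.ker Θ, ∃ f : cocycles₁ (Rep.of ρ), f.1 ga = ρ ga p.1.1.1 - p.1.1.1 ∧
      f.1 gt = ρ gv (ρ ga p.1.1.1 - p.1.1.1) ∧ f.1 gu = p.1.2.2.1 := fun p =>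
    cocycle_exists ρ hm p.1.1.1 p.1.2.2.1 (hK _ p.1.1.2) (hW _ p.1.2.2.2)
      (by rw [hD p]; exact hA _ p.1.2.1.2)
  obtain ⟨Φ, hΦ⟩ := coc_linear (ρ := ρ) (K.subtype ∘ₗ LinearMap.fst ℂ _ _ ∘ₗ (LinearMap.ker Θ).subtype)
    (W.subtype ∘ₗ LinearMap.snd ℂ _ _ ∘ₗ LinearMap.snd ℂ _ _ ∘ₗ (LinearMap.ker Θ).subtype) hex
  obtain ⟨π, hπ⟩ : ∃ π : LinearMap.ker Θ →ₗ[ℂ] groupCohomology (Rep.of ρ) 1,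
      ∀ p, π p = H1π (Rep.of ρ) (Φ p) := ⟨(H1π (Rep.of ρ)).hom ∘ₗ Φ, fun p => rfl⟩
  obtain ⟨J, hJv⟩ : ∃ J : LinearMap.ker Θ →ₗ[ℂ] V × V × V, ∀ p, J p = (p.1.1.1, p.1.2.1.1, p.1.2.2.1) :=
    ⟨(LinearMap.prodMap K.subtype (LinearMap.prodMap A.subtype W.subtype)) ∘ₗ (LinearMap.ker Θ).subtype, fun p => rfl⟩
  have hJ : Function.Injective J := by
    intro p q h
    rw [hJv, hJv] at h
    obtain ⟨h1, h2⟩ := Prod.ext_iff.1 h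
    obtain ⟨h2, h3⟩ := Prod.ext_iff.1 h2
    exact Subtype.ext (Prod.ext (Subtype.ext h1) (Prod.ext (Subtype.ext h2) (Subtype.ext h3)))
  have hker : (LinearMap.ker π).map J ≤ LinearMap.range (degMap ρ P Q) := by
    rintro _ ⟨p, hp, rfl⟩
    obtain ⟨x, x', he, hy, hz, hvx, hwx, hkx, hax, hsx⟩ := coc_kernel hm p.1.1.1 p.1.2.2.1 p.1.2.1.1
      (hW _ p.1.2.2.2) (hA _ p.1.2.1.2) (hD p) (Φ p) (hΦ p).1 (hΦ p).2.1 (hΦ p).2.2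
      ((hπ p).symm.trans (LinearMap.mem_ker.1 hp))
    obtain ⟨t1, t2⟩ := hPQ _ p.1.1.2 x x' he hvx hwx hkx hax hsx
    refine ⟨(⟨x, t1⟩, ⟨x', t2⟩), ?_⟩
    rw [hJv]
    exact Prod.ext he.symm (Prod.ext hz.symm hy.symm)
  haveI : FiniteDimensional ℂ (groupCohomology (Rep.of ρ) 1) :=
    FiniteDimensional.of_surjective (H1π (Rep.of ρ)).hom ((ModuleCat.epi_iff_surjective _).1 inferInstance)
  have r1 := LinearMap.finrank_range_add_finrank_ker Θ
  have r2 := LinearMap.finrank_range_add_finrank_ker π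
  have r3 := (LinearMap.range Θ).finrank_le
  have r4 := (LinearMap.range π).finrank_le
  have r5 := (Submodule.equivMapOfInjective J hJ (LinearMap.ker π)).finrank_eq
  have r6 := Submodule.finrank_mono hker
  have r7 := LinearMap.finrank_range_le (degMap ρ P Q)
  rw [Module.finrank_prod] at r7
  rw [Module.finrank_prod, Module.finrank_prod] at r1
  omega

end count

open groupCohomology in
/-- The count of `H1_count` in twisted swap eigenspaces. On the whole spaces the two sides agree
to leading order; on eigenspaces they differ by a multiple of `ε d`, see `dim_ineq`. -/
lemma H1_lower (d : ℕ) (hd : 1 ≤ d) (ε : ℤ) (hε : ε * ε = 1) [FiniteDimensional ℂ (cocycles₁ (Rep.of (MatRep d)))] :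
    Module.finrank ℂ (FW d Lk gu⁻¹ ε) + Module.finrank ℂ (FW d La 1 (-ε)) + Module.finrank ℂ (FW d Lv 1 (-ε)) ≤
    Module.finrank ℂ (groupCohomology (Rep.of (MatRep d)) 1) + Module.finrank ℂ (FW d L1 1 (-ε)) +
      Module.finrank ℂ (FW d LA gu⁻¹ ε) + Module.finrank ℂ (FW d LV gu⁻¹ ε) := by
  have hm := MatRep_neg_one d
  refine H1_count hm _ _ _ _ _ _ (fun e he => he.1 gk (List.mem_toFinset.2 ?_)) (fun e he => he.1 ga (List.mem_toFinset.2 ?_))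
    (fun e he => he.1 gv (List.mem_toFinset.2 ?_)) ?_ ?_
  · simp only [Lk, List.mem_cons, true_or, or_true]
  · simp only [La, List.mem_cons, true_or, or_true]
  · simp only [Lv, List.mem_cons, true_or, or_true]
  · intro e he z hz y hy
    refine ⟨fun g hg => ?_, ?_⟩
    · have hg := List.mem_toFinset.1 hg
      simp only [L1, List.mem_cons, List.not_mem_nil, or_false] at hg
      rcases hg with h | h
      · rw [h, map_one]; rfl
      · rw [h, hm]
    · rw [map_sub, map_add, hz.2, hy.2, smul_sub, smul_add]
      congr 2
      -- `swap e = ε gu e` and `swap (gu e) = ε e`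
      have h1 : MatRep d gu⁻¹ (swp d e) = (ε : ℂ) • e := he.2
      have h2 : swp d e = (ε : ℂ) • MatRep d gu e := by
        rw [← map_smul, ← h1, rep_apply_inv]
      rw [tw_one, map_sub, swp_MatRep, show cj gu = gu⁻¹ by decide, h1, h2, Int.cast_neg, neg_smul, smul_sub]
      abel
  · intro e hek x x' he hvx hwx hkx hax hsx
    obtain ⟨t1, t2⟩ := tw_parts d hd ε x x' (by rw [← he]; exact hek.2) hvx hwx hax hsx
    exact ⟨mem_FW_LA d ε x hvx hkx t1, mem_FW_LV d ε x' hax hsx t2⟩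

/-! ### A nonzero class and the lower bound -/

/-- The coefficient matrix of the pairing form `(v₀ w₁ - v₁ w₀)^d`. -/
def detForm (d : ℕ) : Mat d := fun i j =>
  if (j : ℕ) = d - i then (-1) ^ (d - i) * (d.choose i : ℂ) else 0

lemma bfm_detForm (d : ℕ) (v w : Fin 2 → ℂ) : bfm d (detForm d) v w = (v 0 * w 1 - v 1 * w 0) ^ d := by
  rw [sub_eq_add_neg, add_pow, ← Fin.sum_univ_eq_sum_range
    (fun m => (v 0 * w 1) ^ m * (-(v 1 * w 0)) ^ (d - m) * (d.choose m : ℂ))]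
  unfold bfm
  simp only [dotProduct, Matrix.mulVec, mon]
  refine Finset.sum_congr rfl fun i _ => ?_
  have hi : (i : ℕ) ≤ d := Nat.lt_succ_iff.1 i.2
  rw [Finset.sum_eq_single (⟨d - i, by omega⟩ : Fin (d + 1))]
  · simp only [detForm, if_true]
    rw [Nat.sub_sub_self hi, neg_pow (v 1 * w 0), mul_pow, mul_pow]
    ring
  · intro j _ hj
    rw [detForm, if_neg fun h => hj (Fin.ext h), zero_mul]
  · intro h; exact absurd (Finset.mem_univ _) h

lemma detForm_ga (d : ℕ) : MatRep d ga (detForm d) = detForm d := by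
  refine bfm_ext d _ _ fun v w => ?_
  rw [bfm_MatRep, bfm_detForm, bfm_detForm, invC_ga, invCbar_ga]
  congr 1
  simp [Matrix.mulVec, dotProduct, Fin.sum_univ_two]
  ring

lemma detForm_gt (d : ℕ) : MatRep d gt (detForm d) = detForm d := by
  refine bfm_ext d _ _ fun v w => ?_
  rw [bfm_MatRep, bfm_detForm, bfm_detForm, invC_gt, invCbar_gt]
  congr 1
  simp [Matrix.mulVec, dotProduct, Fin.sum_univ_two]
  ring

lemma detForm_ne_zero (d : ℕ) : detForm d ≠ 0 := by
  intro h
  have := bfm_detForm d ![1, 0] ![0, 1]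
  rw [h] at this
  simp [bfm] at this

open groupCohomology in
/-- The cocycle attached to the triple `(0, detForm, detForm)` is not a coboundary, so `H¹` is nonzero
for `d ≥ 1`; this covers the small `d` for which the dimension count is vacuous. -/
lemma one_le_H1 (d : ℕ) (hd : 1 ≤ d) [FiniteDimensional ℂ (cocycles₁ (Rep.of (MatRep d)))] :
    1 ≤ Module.finrank ℂ (groupCohomology (Rep.of (MatRep d)) 1) := by
  have hm := MatRep_neg_one d
  have hv : MatRep d gv (detForm d) = detForm d := by
    rw [gv, rep_mul, detForm_ga, detForm_gt]
  have hyz : detForm d + 0 - MatRep d gu 0 = detForm d := by rw [map_zero, add_zero, sub_zero]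
  obtain ⟨f, h1, h2, h3⟩ := cocycle_exists (MatRep d) hm 0 (detForm d) (map_zero _) hv
    (by rw [hyz, detForm_ga])
  have hf : H1π (Rep.of (MatRep d)) f ≠ 0 := by
    intro hf
    obtain ⟨x, x', he, hy, -, hvx, -, -, hax, hsx⟩ :=
      coc_kernel hm 0 (detForm d) (detForm d) hv (detForm_ga d) hyz f h1 h2 h3 hf
    have hx : x = -x' := eq_neg_of_add_eq_zero_left he.symm
    have ha : MatRep d ga x = x := by rw [hx, map_neg, hax]
    have hs : MatRep d gs x = x := by rw [hx, map_neg, hsx]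
    have ht : MatRep d gt x = x := by
      rw [← rep_neg (MatRep d) hm gt, show -gt = gv * ga by decide, rep_mul, ha, hvx]
    have h0 := EB_zero d hd x ha ht hs
    exact detForm_ne_zero d (by rw [hy, h0, map_zero, sub_zero])
  haveI : FiniteDimensional ℂ (groupCohomology (Rep.of (MatRep d)) 1) :=
    FiniteDimensional.of_surjective (H1π (Rep.of (MatRep d))).hom ((ModuleCat.epi_iff_surjective _).1 inferInstance)
  haveI : Nontrivial (groupCohomology (Rep.of (MatRep d)) 1) := ⟨⟨_, _, hf⟩⟩
  exact Module.finrank_pos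

lemma lower_nat (d : ℕ) (hd : 1 ≤ d) : d ≤ 22 * Module.finrank ℂ (groupCohomology (Rep.of (EdRep d)) 1) := by
  obtain ⟨p, hp, h2, -⟩ := exists_p d hd
  haveI := (coc_finrank d p hd hp h2).1
  rw [finrank_H1_mat]
  have h1 := one_le_H1 d hd
  obtain ⟨ε, hε, h⟩ := dim_ineq d
  have h3 := H1_lower d hd ε hε
  omega

/-- Corollary of Section 4.1 of the paper. For the Bianchi group
`Γ = SL(2, ℤ[√-2])` and the representations `E_d ≅ Sym^d ⊗ conj(Sym^d)`, there are
constants `c, C > 0` with `c·d ≤ dim_ℂ H¹(Γ, E_d) ≤ C·d^{15/8}` for all `d ≥ 1`. -/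
theorem stmt11 :
    ∃ c : ℝ, 0 < c ∧ ∃ C : ℝ, 0 < C ∧ ∀ d : ℕ, 1 ≤ d →
      c * (d : ℝ) ≤ (Module.finrank ℂ (groupCohomology (Rep.of (EdRep d)) 1) : ℝ) ∧
      (Module.finrank ℂ (groupCohomology (Rep.of (EdRep d)) 1) : ℝ) ≤
        C * (d : ℝ) ^ ((15 : ℝ) / 8) := by
  refine ⟨1 / 22, by norm_num, 64, by norm_num, fun d hd => ⟨?_, upper_real d hd⟩⟩
  have : (d : ℝ) ≤ 22 * (Module.finrank ℂ (groupCohomology (Rep.of (EdRep d)) 1) : ℝ) := by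
    exact_mod_cast lower_nat d hd
  linarith

end
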